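/- There are infinitely many primes r such that Ω(r^2 − 1) ≤ 21, i.e. the set of primes r with Ω(r^2 − 1) ≤ 21 is infinite. -/

import Mathlib

/-!
A weighted sieve is applied to `n ^ 2 - 1` as `n` runs over the primes `n ≡ 29` modulo `72`. For such `n` one has
`n ^ 2 - 1 = 24 m` with `m` coprime to `6`, and `Ω(24) = 4`, so it is enough to find infinitely many of them with
`Ω(m) ≤ 17`. Throughout, primes are counted by `Λ(n)` against the smooth weight
`wt f L n = n ^ (-1 - 1/L) f(log n - L)`, which lives at `n ≍ exp L`.

*Level of distribution.* The lemma `mean_value` is a theorem of Bombieri–Vinogradov type: for arbitrarily large `L`, the sums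
`Psi f L χ = ∑ Λ(n) χ(n) wt f L n` over the nonprincipal characters `χ` to moduli up to `exp (0.33 L)` are small on
average. Large conductors are treated by Vaughan's identity and the multiplicative large sieve (`large_sieve`,
`bilinear_block`, `sum_Psi_le`). For conductors up to a power of `L` the Fourier transform of `f` expresses `Psi`
through the derivatives of `L'/L` on a line `Re s > 1`, which are bounded by means of the `3-4-1` inequality
(`norm_tsum_vmChar_le_pow`). Siegel's theorem is not needed: two real characters with a small value at `1` repel each
other, hence there are arbitrarily large scales free of exceptional characters (`good_scales`), and infinitely many
scales suffice.

*Sieve.* By `abs_divMass_sub_le` the mass of the `n` with `d ∣ n ^ 2 - 1` is the expected one with density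
`dens d = 2 ^ ω(d) / φ(d)`, up to remainders controlled by `mean_value`. With `z = L / 25`, Selberg's weights of level
`exp z` over the primes `p ≥ 5` define a square `sqw z n`. Its mean value is diagonalized by `sum_lam_lam`; inside the
multiples of a prime `q` the quadratic form loses a factor `min (1, 9.1 (log q / z) ^ 2)` besides the density
(`sieveForm_prime_pow_le`, `GG_le_HH`). All moduli stay below `exp (2 z + 6 z) = exp (0.32 L)`
(`sieve_remainder`).

*Conclusion.* The prime `n` is detected by the positivity of
`bracket = 19/2 - ∑_{q ≤ exp (6 z), q ∣ n ^ 2 - 1} (1 - log q / (6 z)) - 18 #{q ≥ 5 : q ^ 2 ∣ n ^ 2 - 1}`.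
The mean of the first sum against `Λ(n) wt f L n sqw z n` is at most `8.7` times the total mass (`main_numeric`), while
the prime squares and the proper prime powers `n` are negligible, so `bracket` is positive at some prime `n`. Then `m` is
squarefree, and as `log m < 2 log n ≤ (17/2) (6 z)` it has fewer than `19/2 + 17/2 = 18` prime factors.
-/

namespace OmegaSq

open Finset

/-! ### Divisor function bounds -/

lemma card_divisors_mul_le (a b : ℕ) :
    (a * b).divisors.card ≤ a.divisors.card * b.divisors.card := by
  rw [Nat.divisors_mul]
  exact Finset.card_mul_le

lemma harmonic_Icc_le (D : ℕ) : ∑ m ∈ Icc 1 D, (1 : ℝ) / m ≤ 1 + Real.log D := by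
  have h := harmonic_le_one_add_log D
  rw [harmonic_eq_sum_Icc] at h
  push_cast at h
  simpa [one_div] using h

/-- Rewriting one factor of `τ(m)^(j+1)` as a sum over factorizations `m = a * b` and using
submultiplicativity of `τ` squares the bound at each step. -/
lemma sum_card_divisors_pow_div_le (j D : ℕ) :
    ∑ m ∈ Icc 1 D, ((m.divisors.card : ℝ)) ^ j / m ≤ (1 + Real.log D) ^ (2 ^ j) := by
  induction j with
  | zero => simpa using harmonic_Icc_le D
  | succ j ih =>
    have h1 : ∑ m ∈ Icc 1 D, ((m.divisors.card : ℝ)) ^ (j + 1) / m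
        = ∑ m ∈ Icc 1 D, ∑ p ∈ m.divisorsAntidiagonal,
          (((p.1 * p.2).divisors.card : ℝ)) ^ j / ((p.1 : ℝ) * p.2) := by
      refine Finset.sum_congr rfl fun m hm => ?_
      have : ∀ p ∈ m.divisorsAntidiagonal,
          (((p.1 * p.2).divisors.card : ℝ)) ^ j / ((p.1 : ℝ) * p.2)
            = ((m.divisors.card : ℝ)) ^ j / m := by
        intro p hp
        rw [Nat.mem_divisorsAntidiagonal] at hp
        rw [← Nat.cast_mul, hp.1]
      rw [Finset.sum_congr rfl this, Finset.sum_const, nsmul_eq_mul,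
        ← Nat.map_div_right_divisors, Finset.card_map]
      ring
    have h2 : ∑ m ∈ Icc 1 D, ∑ p ∈ m.divisorsAntidiagonal,
          (((p.1 * p.2).divisors.card : ℝ)) ^ j / ((p.1 : ℝ) * p.2)
        ≤ ∑ p ∈ (Icc 1 D) ×ˢ (Icc 1 D),
          (((p.1 * p.2).divisors.card : ℝ)) ^ j / ((p.1 : ℝ) * p.2) := by
      rw [← Finset.sum_biUnion]
      · refine Finset.sum_le_sum_of_subset_of_nonneg ?_ fun _ _ _ => by positivity
        intro p hp
        simp only [mem_biUnion, mem_Icc, Nat.mem_divisorsAntidiagonal, mem_product] at hp ⊢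
        obtain ⟨m, hm, rfl, h0⟩ := hp
        have h1 : p.1 ≠ 0 := by rintro h; simp [h] at h0
        have h2 : p.2 ≠ 0 := by rintro h; simp [h] at h0
        have := Nat.le_mul_of_pos_right p.1 (Nat.pos_of_ne_zero h2)
        have := Nat.le_mul_of_pos_left p.2 (Nat.pos_of_ne_zero h1)
        omega
      · intro a _ b _ hab
        simp only [Function.onFun]
        rw [Finset.disjoint_left]
        intro p hp hq
        rw [Nat.mem_divisorsAntidiagonal] at hp hq
        exact hab (hp.1.symm.trans hq.1)
    have h3 : ∑ p ∈ (Icc 1 D) ×ˢ (Icc 1 D),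
          (((p.1 * p.2).divisors.card : ℝ)) ^ j / ((p.1 : ℝ) * p.2)
        ≤ (∑ m ∈ Icc 1 D, ((m.divisors.card : ℝ)) ^ j / m) *
          (∑ m ∈ Icc 1 D, ((m.divisors.card : ℝ)) ^ j / m) := by
      rw [Finset.sum_mul_sum, ← Finset.sum_product']
      refine Finset.sum_le_sum fun p _ => ?_
      rw [div_mul_div_comm, ← mul_pow]
      gcongr
      exact_mod_cast card_divisors_mul_le p.1 p.2
    rw [h1]
    refine (h2.trans h3).trans ?_
    have h0 : 0 ≤ ∑ m ∈ Icc 1 D, ((m.divisors.card : ℝ)) ^ j / m :=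
      Finset.sum_nonneg fun _ _ => by positivity
    calc _ ≤ (1 + Real.log D) ^ (2 ^ j) * (1 + Real.log D) ^ (2 ^ j) :=
          mul_le_mul ih ih h0 (h0.trans ih)
      _ = _ := by rw [← pow_add]; congr 1; rw [pow_succ]; ring

/-- Powers of `1 + log` are dominated by any positive power. -/
lemma one_add_log_pow_le (k : ℕ) {ε : ℝ} (hε : 0 < ε) :
    ∃ C : ℝ, 1 ≤ C ∧ ∀ x : ℝ, 1 ≤ x → (1 + Real.log x) ^ k ≤ C * x ^ ε := by
  refine ⟨(max 1 ((k + 1) / ε)) ^ k * 1, ?_, fun x hx => ?_⟩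
  · rw [mul_one]; exact one_le_pow₀ (le_max_left _ _)
  · have hx0 : 0 < x := by linarith
    have h1 : 1 + Real.log x ≤ max 1 ((k + 1) / ε) * x ^ (ε / (k + 1)) := by
      set M := max 1 ((k + 1) / ε)
      have hM : 1 ≤ M := le_max_left _ _
      have hM' : (k + 1) / ε ≤ M := le_max_right _ _
      have h2 := Real.add_one_le_exp (Real.log x * (ε / (k + 1)))
      rw [← Real.rpow_def_of_pos hx0] at h2
      have hk : (0 : ℝ) < ε / (k + 1) := by positivity
      have hl := Real.log_nonneg hx
      have h3 : Real.log x ≤ M * (Real.log x * (ε / (k + 1))) := by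
        have : 1 ≤ M * (ε / (k + 1)) := by
          calc (1 : ℝ) = (k + 1) / ε * (ε / (k + 1)) := by field_simp
            _ ≤ _ := by gcongr
        nlinarith
      nlinarith
    calc (1 + Real.log x) ^ k ≤ (max 1 ((k + 1) / ε) * x ^ (ε / (k + 1))) ^ k := by
          have := Real.log_nonneg hx
          gcongr
      _ = (max 1 ((k + 1) / ε)) ^ k * x ^ (ε / (k + 1) * k) := by
          rw [mul_pow, ← Real.rpow_natCast (x ^ _), ← Real.rpow_mul hx0.le]
      _ ≤ _ := by
          rw [mul_one]
          gcongr
          rw [div_mul_eq_mul_div, div_le_iff₀ (by positivity)]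
          nlinarith

lemma card_divisors_pow_le (j : ℕ) {ε : ℝ} (hε : 0 < ε) :
    ∃ C : ℝ, 1 ≤ C ∧ ∀ n : ℕ, 1 ≤ n → ((n.divisors.card : ℝ)) ^ j ≤ C * (n : ℝ) ^ ε := by
  obtain ⟨i, hi⟩ := exists_nat_gt (2 / ε)
  have hi0 : 0 < i := by
    have : (0:ℝ) < i := lt_trans (by positivity) hi
    exact_mod_cast this
  have hiR : (0:ℝ) < i := by exact_mod_cast hi0
  obtain ⟨C, hC1, hC⟩ := one_add_log_pow_le (2 ^ (j * i)) (ε := 1) one_pos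
  refine ⟨C, hC1, fun n hn => ?_⟩
  have hnR : (1:ℝ) ≤ n := by exact_mod_cast hn
  have h1 : ((n.divisors.card : ℝ)) ^ (j * i) / n ≤ (1 + Real.log n) ^ (2 ^ (j * i)) :=
    le_trans (Finset.single_le_sum (f := fun m : ℕ => ((m.divisors.card : ℝ)) ^ (j * i) / m)
      (fun _ _ => by positivity) (by simp; omega)) (sum_card_divisors_pow_div_le (j * i) n)
  have h2 := h1.trans (hC n hnR)
  rw [div_le_iff₀ (by positivity), Real.rpow_one] at h2
  have h3 : (((n.divisors.card : ℝ)) ^ j) ^ i ≤ (C * (n : ℝ) ^ ε) ^ i := by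
    rw [← pow_mul, mul_pow, ← Real.rpow_natCast ((n:ℝ) ^ ε), ← Real.rpow_mul (by positivity)]
    refine h2.trans ?_
    have h4 : C ≤ C ^ i := le_self_pow₀ hC1 hi0.ne'
    have h5 : (n:ℝ) ^ (2:ℝ) ≤ (n:ℝ) ^ (ε * i) := by
      apply Real.rpow_le_rpow_of_exponent_le hnR
      rw [div_lt_iff₀ hε] at hi
      linarith
    calc C * n * n = C * (n:ℝ) ^ (2:ℝ) := by norm_cast; push_cast; ring
      _ ≤ _ := by gcongr
  exact le_of_pow_le_pow_left₀ hi0.ne' (by positivity) h3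

lemma le_card_divisors_mul_totient (k : ℕ) : k ≤ k.divisors.card * k.totient := by
  conv_lhs => rw [← Nat.sum_totient k]
  rcases Nat.eq_zero_or_pos k with rfl | hk
  · simp
  · refine (Finset.sum_le_card_nsmul _ _ k.totient fun d hd => ?_).trans_eq (by simp)
    exact Nat.le_of_dvd (Nat.totient_pos.2 hk) (Nat.totient_dvd_of_dvd (Nat.dvd_of_mem_divisors hd))

lemma inv_totient_le (k : ℕ) (hk : 1 ≤ k) :
    (1 : ℝ) / k.totient ≤ k.divisors.card / k := by
  have h1 : (0:ℝ) < k.totient := by exact_mod_cast Nat.totient_pos.2 hk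
  have h2 : (0:ℝ) < k := by exact_mod_cast hk
  rw [div_le_div_iff₀ h1 h2, one_mul]
  exact_mod_cast le_card_divisors_mul_totient k

/-! ### Incomplete character sums and partial summation -/

lemma norm_sum_range_char_le {k : ℕ} [NeZero k] {χ : DirichletCharacter ℂ k} (hχ : χ ≠ 1) (N : ℕ) :
    ‖∑ n ∈ range N, χ n‖ ≤ k := by
  have hper : ∀ M : ℕ, ∑ i ∈ range k, χ ((M + i : ℕ) : ZMod k) = 0 := by
    intro M
    induction M with
    | zero =>
      have h0 : ∑ a : ZMod k, χ a = 0 := MulChar.sum_eq_zero_of_ne_one hχ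
      rw [← h0]
      refine Finset.sum_bij' (fun i _ => (i : ZMod k)) (fun a _ => a.val) ?_ ?_ ?_ ?_ ?_
      · simp
      · intro a _; simpa using ZMod.val_lt a
      · intro a ha; exact ZMod.val_cast_of_lt (by simpa using ha)
      · intro a _; simp
      · intro a _; simp
    | succ M ih =>
      have h1 := Finset.sum_range_succ (fun i => χ ((M + i : ℕ) : ZMod k)) k
      have h2 := Finset.sum_range_succ' (fun i => χ ((M + i : ℕ) : ZMod k)) k
      have h3 : χ ((M + k : ℕ) : ZMod k) = χ ((M + 0 : ℕ) : ZMod k) := by simp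
      rw [h1, ih, h3] at h2
      have h4 := add_right_cancel h2
      rw [h4]
      refine Finset.sum_congr rfl fun i _ => ?_
      congr 2; omega
  induction N using Nat.strong_induction_on with
  | _ N ih =>
    by_cases hN : N < k
    · calc _ ≤ ∑ n ∈ range N, ‖χ n‖ := norm_sum_le _ _
        _ ≤ ∑ n ∈ range N, (1:ℝ) := Finset.sum_le_sum fun n _ => χ.norm_le_one _
        _ = N := by simp
        _ ≤ k := by exact_mod_cast hN.le
    · push Not at hN
      obtain ⟨M, rfl⟩ := Nat.exists_eq_add_of_le' hN
      rw [Finset.sum_range_add, hper, add_zero]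
      exact ih M (by have := NeZero.pos k; omega)

lemma sum_mul_Ico_by_parts (c φ : ℕ → ℂ) {a b : ℕ} (hab : a ≤ b) :
    ∑ n ∈ Ico a b, c n * φ n =
      ∑ n ∈ Ico a b, (∑ i ∈ range (n + 1), c i - ∑ i ∈ range a, c i) * (φ n - φ (n + 1))
        + (∑ i ∈ range b, c i - ∑ i ∈ range a, c i) * φ b := by
  induction b, hab using Nat.le_induction with
  | base => simp
  | succ b hb ih =>
    rw [Finset.sum_Ico_succ_top hb, Finset.sum_Ico_succ_top hb, ih, Finset.sum_range_succ c b]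
    ring

lemma norm_sum_Ico_mul_le {c : ℕ → ℂ} {K : ℝ} (hc : ∀ N, ‖∑ n ∈ range N, c n‖ ≤ K) (φ : ℕ → ℂ)
    {a b : ℕ} (hab : a ≤ b) :
    ‖∑ n ∈ Ico a b, c n * φ n‖ ≤ 2 * K * (∑ n ∈ Ico a b, ‖φ n - φ (n + 1)‖ + ‖φ b‖) := by
  have hd : ∀ N, ‖∑ i ∈ range N, c i - ∑ i ∈ range a, c i‖ ≤ 2 * K := fun N =>
    (norm_sub_le _ _).trans (by linarith [hc N, hc a])
  rw [sum_mul_Ico_by_parts c φ hab, mul_add, Finset.mul_sum]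
  refine (norm_add_le _ _).trans (add_le_add ((norm_sum_le _ _).trans ?_) ?_)
  · exact Finset.sum_le_sum fun n _ => by
      rw [norm_mul]; exact mul_le_mul_of_nonneg_right (hd _) (norm_nonneg _)
  · rw [norm_mul]; exact mul_le_mul_of_nonneg_right (hd _) (norm_nonneg _)

end OmegaSq

namespace OmegaSq

open Finset

/-! ### Mertens' first theorem -/

open ArithmeticFunction in
lemma log_factorial_eq (N : ℕ) :
    Real.log (N.factorial) = ∑ n ∈ Ioc 0 N, Λ n * (N / n : ℕ) := by
  rw [← ArithmeticFunction.sum_Ioc_mul_zeta_eq_sum, vonMangoldt_mul_zeta]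
  induction N with
  | zero => simp
  | succ N ih =>
    rw [Finset.sum_Ioc_succ_top (Nat.zero_le N), ← ih, Nat.factorial_succ, Nat.cast_mul,
      Real.log_mul (by positivity) (by positivity), add_comm]
    rfl

open ArithmeticFunction in
lemma mertens_vonMangoldt : ∃ C : ℝ, 0 < C ∧ ∀ N : ℕ, 1 ≤ N →
    |∑ n ∈ Ioc 0 N, Λ n / n - Real.log N| ≤ C := by
  refine ⟨Real.log 4 + 4 + 1, by positivity, fun N hN => ?_⟩
  have hN0 : (0:ℝ) < N := by exact_mod_cast hN
  have hup : N * ∑ n ∈ Ioc 0 N, Λ n / n ≤ Real.log (N.factorial) + Chebyshev.psi N := by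
    rw [log_factorial_eq, Chebyshev.psi, Nat.floor_natCast, ← Finset.sum_add_distrib,
      Finset.mul_sum]
    refine Finset.sum_le_sum fun n hn => ?_
    have h1 : ((N:ℝ) / n) ≤ (N / n : ℕ) + 1 := by
      rw [← Nat.floor_div_eq_div (K := ℝ)]; exact (Nat.lt_floor_add_one _).le
    have h2 := vonMangoldt_nonneg (n := n)
    calc (N:ℝ) * (Λ n / n) = Λ n * (N / n) := by ring
      _ ≤ Λ n * ((N / n : ℕ) + 1) := by gcongr
      _ = _ := by ring
  have hlow : Real.log (N.factorial) ≤ N * ∑ n ∈ Ioc 0 N, Λ n / n := by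
    rw [log_factorial_eq, Finset.mul_sum]
    refine Finset.sum_le_sum fun n hn => ?_
    have h1 : ((N / n : ℕ) : ℝ) ≤ (N:ℝ) / n := Nat.cast_div_le
    have h2 := vonMangoldt_nonneg (n := n)
    calc Λ n * ((N / n : ℕ) : ℝ) ≤ Λ n * (N / n) := by gcongr
      _ = _ := by ring
  have hpsi := Chebyshev.psi_le_const_mul_self hN0.le
  have hf1 : Real.log (N.factorial) ≤ N * Real.log N := by
    rw [← Real.log_pow]
    apply Real.log_le_log
    · exact_mod_cast N.factorial_pos
    · exact_mod_cast Nat.factorial_le_pow N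
  have hf2 := Stirling.le_log_factorial_stirling (n := N) (by omega)
  have hl := Real.log_nonneg (show (1:ℝ) ≤ N by exact_mod_cast hN)
  have hpi : 0 ≤ Real.log (2 * Real.pi) := Real.log_nonneg (by linarith [Real.pi_gt_three])
  set S := ∑ n ∈ Ioc 0 N, Λ n / n
  have h4 : 0 ≤ Real.log 4 := by positivity
  rw [abs_le]
  constructor
  · have : N * (Real.log N - 1) ≤ N * S := by linarith
    have := le_of_mul_le_mul_left this hN0
    linarith
  · have : N * S ≤ N * (Real.log N + (Real.log 4 + 4)) := by linarith
    have := le_of_mul_le_mul_left this hN0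
    linarith

open ArithmeticFunction in
/-- Proper prime powers contribute boundedly to `∑ Λ(n)/n`; partial summation against
`ψ - θ = O(√x)`. -/
lemma sum_vonMangoldt_not_prime_div : ∃ C : ℝ, 0 < C ∧ ∀ N : ℕ,
    ∑ n ∈ Ioc 0 N with ¬ n.Prime, Λ n / n ≤ C := by
  obtain ⟨C, hC⟩ := Chebyshev.psi_sub_theta_le_mul_sqrt
  have hs : Summable fun n : ℕ => (1:ℝ) / (n:ℝ) ^ (3/2 : ℝ) :=
    Real.summable_one_div_nat_rpow.2 (by norm_num)
  set K := ∑' n : ℕ, (1:ℝ) / (n:ℝ) ^ (3/2 : ℝ)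
  have hK : 0 ≤ K := tsum_nonneg fun n => by positivity
  set B : ℕ → ℝ := fun N => ∑ n ∈ Ioc 0 N with ¬ n.Prime, Λ n with hB
  have hBle : ∀ N : ℕ, B N ≤ |C| * √N := fun N => by
    have h1 := Chebyshev.psi_sub_theta_eq_sum_not_prime N
    rw [Nat.floor_natCast] at h1
    have h2 := hC N
    rw [h1] at h2
    refine h2.trans ?_
    gcongr
    exact le_abs_self C
  refine ⟨|C| + |C| * K + 1, by positivity, fun N => ?_⟩
  have hid : ∀ N : ℕ, ∑ n ∈ Ioc 0 N with ¬ n.Prime, Λ n / n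
      = B N / N + ∑ n ∈ range N, B n / (n * (n + 1)) := by
    intro N
    induction N with
    | zero => simp [hB]
    | succ N ih =>
      have hI : Ioc 0 (N + 1) = insert (N + 1) (Ioc 0 N) := by ext; simp; omega
      have hBs : B (N + 1) = B N + (if ¬ (N + 1).Prime then Λ (N + 1) else 0) := by
        simp only [hB, hI, Finset.filter_insert]
        split_ifs <;> simp [add_comm]
      have hTs : ∑ n ∈ Ioc 0 (N + 1) with ¬ n.Prime, Λ n / n
          = ∑ n ∈ Ioc 0 N with ¬ n.Prime, Λ n / n
            + (if ¬ (N + 1).Prime then Λ (N + 1) else 0) / (N + 1 : ℕ) := by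
        simp only [hI, Finset.filter_insert]
        split_ifs <;> simp [add_comm]
      rw [hTs, ih, Finset.sum_range_succ, hBs]
      rcases Nat.eq_zero_or_pos N with rfl | hN
      · simp [hB]
      · have : (N:ℝ) ≠ 0 := by positivity
        push_cast
        field_simp
        ring
  rw [hid]
  have h1 : B N / N ≤ |C| := by
    rcases Nat.eq_zero_or_pos N with rfl | hN
    · simp
    · have hN1 : (1:ℝ) ≤ N := by exact_mod_cast hN
      rw [div_le_iff₀ (by positivity)]
      refine (hBle N).trans ?_
      gcongr
      rw [Real.sqrt_le_left (by positivity)]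
      nlinarith
  have h2 : ∑ n ∈ range N, B n / (n * (n + 1)) ≤ |C| * K := by
    calc _ ≤ ∑ n ∈ range N, |C| * (1 / (n:ℝ) ^ (3/2 : ℝ)) := by
          refine Finset.sum_le_sum fun n _ => ?_
          rcases Nat.eq_zero_or_pos n with rfl | hn
          · simp
          · have hn0 : (0:ℝ) < n := by exact_mod_cast hn
            have hr : (n:ℝ) ^ (3/2 : ℝ) * √n = n * n := by
              rw [Real.sqrt_eq_rpow, ← Real.rpow_add hn0]; norm_num [sq]
            rw [mul_one_div, div_le_div_iff₀ (by positivity) (by positivity)]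
            calc B n * (n:ℝ) ^ (3/2 : ℝ) ≤ (|C| * √n) * (n:ℝ) ^ (3/2 : ℝ) := by
                  gcongr; exact hBle n
              _ = |C| * (n * n) := by rw [← hr]; ring
              _ ≤ _ := by gcongr; linarith
      _ = |C| * ∑ n ∈ range N, (1 / (n:ℝ) ^ (3/2 : ℝ)) := by rw [Finset.mul_sum]
      _ ≤ _ := by
          gcongr
          exact hs.sum_le_tsum _ fun _ _ => by positivity
  linarith

open ArithmeticFunction in
lemma mertens_prime_nat : ∃ C : ℝ, 0 < C ∧ ∀ N : ℕ, 1 ≤ N →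
    |∑ p ∈ Ioc 0 N with p.Prime, Real.log p / p - Real.log N| ≤ C := by
  obtain ⟨C1, hC1, h1⟩ := mertens_vonMangoldt
  obtain ⟨C2, hC2, h2⟩ := sum_vonMangoldt_not_prime_div
  refine ⟨C1 + C2, by positivity, fun N hN => ?_⟩
  have ha := h1 N hN
  have hb := h2 N
  have h0 : 0 ≤ ∑ n ∈ Ioc 0 N with ¬ n.Prime, Λ n / n :=
    Finset.sum_nonneg fun n _ => div_nonneg vonMangoldt_nonneg (by positivity)
  have hsplit := Finset.sum_filter_add_sum_filter_not (Ioc 0 N) Nat.Prime (fun n => Λ n / (n:ℝ))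
  have hp : ∑ n ∈ Ioc 0 N with n.Prime, Λ n / n
      = ∑ p ∈ Ioc 0 N with p.Prime, Real.log p / p := by
    refine Finset.sum_congr rfl fun p hp => ?_
    rw [vonMangoldt_apply_prime (Finset.mem_filter.1 hp).2]
  rw [hp] at hsplit
  rw [abs_le] at ha ⊢
  constructor <;> linarith

/-- Mertens' first theorem on an interval `(a, b]` with real end points. -/
lemma mertens_prime_Ioc : ∃ C : ℝ, 0 < C ∧ ∀ a b : ℝ, 1 ≤ a → a ≤ b →
    |∑ p ∈ Ioc ⌊a⌋₊ ⌊b⌋₊ with p.Prime, Real.log p / p - Real.log (b / a)| ≤ C := by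
  obtain ⟨C, hC, h⟩ := mertens_prime_nat
  have hfl : ∀ z : ℝ, 1 ≤ z → |Real.log ⌊z⌋₊ - Real.log z| ≤ 1 := by
    intro z hz
    have h1 : 1 ≤ ⌊z⌋₊ := Nat.one_le_floor_iff _ |>.2 hz
    have h1R : (1:ℝ) ≤ ⌊z⌋₊ := by exact_mod_cast h1
    have h2 := Nat.lt_floor_add_one z
    have h3 : Real.log ⌊z⌋₊ ≤ Real.log z :=
      Real.log_le_log (by linarith) (Nat.floor_le (by linarith))
    have h4 : Real.log z ≤ Real.log 2 + Real.log ⌊z⌋₊ := by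
      rw [← Real.log_mul (by norm_num) (by linarith)]
      exact Real.log_le_log (by linarith) (by linarith)
    have := Real.log_two_lt_d9
    rw [abs_le]; constructor <;> linarith
  refine ⟨2 * C + 2, by positivity, fun a b ha hab => ?_⟩
  have hb : 1 ≤ b := ha.trans hab
  have hA := h ⌊a⌋₊ (Nat.one_le_floor_iff _ |>.2 ha)
  have hB := h ⌊b⌋₊ (Nat.one_le_floor_iff _ |>.2 hb)
  have hfa := hfl a ha
  have hfb := hfl b hb
  have hfab : ⌊a⌋₊ ≤ ⌊b⌋₊ := Nat.floor_mono hab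
  have hU : ∑ p ∈ Ioc 0 ⌊b⌋₊ with p.Prime, Real.log p / p
      = ∑ p ∈ Ioc 0 ⌊a⌋₊ with p.Prime, Real.log p / p
        + ∑ p ∈ Ioc ⌊a⌋₊ ⌊b⌋₊ with p.Prime, Real.log p / p := by
    rw [Finset.sum_filter, Finset.sum_filter, Finset.sum_filter]
    exact (Finset.sum_Ioc_consecutive _ (Nat.zero_le _) hfab).symm
  rw [Real.log_div (by linarith) (by linarith)]
  rw [hU] at hB
  rw [abs_le] at *
  constructor <;> linarith

end OmegaSq

namespace OmegaSq

open Finset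

/-! ### The large sieve inequality -/

/-- The additive character `θ ↦ exp(2πiθ)` on `ℝ`. -/
noncomputable def eR (θ : ℝ) : ℂ := Complex.exp (Complex.I * ((2 * Real.pi * θ : ℝ) : ℂ))

lemma eR_add (a b : ℝ) : eR (a + b) = eR a * eR b := by
  rw [eR, eR, eR, ← Complex.exp_add]; congr 1; push_cast; ring

lemma norm_eR (a : ℝ) : ‖eR a‖ = 1 := by
  rw [eR, mul_comm]; exact Complex.norm_exp_ofReal_mul_I _

lemma eR_int (m : ℤ) : eR m = 1 := by
  rw [eR, Complex.exp_eq_one_iff]; exact ⟨m, by push_cast; ring⟩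

lemma conj_eR (a : ℝ) : (starRingEnd ℂ) (eR a) = eR (-a) := by
  rw [eR, eR, ← Complex.exp_conj]; congr 1
  rw [map_mul, Complex.conj_I, Complex.conj_ofReal]; push_cast; ring

lemma eR_nat_mul (n : ℕ) (a : ℝ) : eR (n * a) = eR a ^ n := by
  rw [eR, eR, ← Complex.exp_nat_mul]; congr 1; push_cast; ring

lemma norm_eR_sub_one_ge {θ : ℝ} (h0 : 0 ≤ θ) (h1 : θ ≤ 1) :
    4 * min θ (1 - θ) ≤ ‖eR θ - 1‖ := by
  rw [eR, Complex.norm_exp_I_mul_ofReal_sub_one]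
  have hs : 2 * Real.pi * θ / 2 = Real.pi * θ := by ring
  have hpi := Real.pi_pos
  rw [hs, Real.norm_eq_abs, abs_mul, abs_two]
  have key : ∀ t : ℝ, 0 ≤ t → t ≤ 1 / 2 → 2 * t ≤ Real.sin (Real.pi * t) := by
    intro t ht0 ht1
    have := Real.mul_le_sin (x := Real.pi * t) (by positivity) (by nlinarith)
    calc 2 * t = 2 / Real.pi * (Real.pi * t) := by field_simp
      _ ≤ _ := this
  rcases le_total θ (1 / 2) with h | h
  · have := key θ h0 h
    have h2 := le_abs_self (Real.sin (Real.pi * θ))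
    have := min_le_left θ (1 - θ)
    linarith
  · have := key (1 - θ) (by linarith) (by linarith)
    rw [show Real.pi * (1 - θ) = Real.pi - Real.pi * θ by ring, Real.sin_pi_sub] at this
    have h2 := le_abs_self (Real.sin (Real.pi * θ))
    have := min_le_right θ (1 - θ)
    linarith

lemma norm_sum_eR_le {θ : ℝ} (h0 : 0 < θ) (h1 : θ < 1) (M N : ℕ) :
    ‖∑ n ∈ Ico M (M + N), eR (n * θ)‖ ≤ 1 / (2 * θ) + 1 / (2 * (1 - θ)) := by
  have hm : 0 < min θ (1 - θ) := lt_min h0 (by linarith)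
  have hge := norm_eR_sub_one_ge h0.le h1.le
  have hne : eR θ ≠ 1 := by
    intro h; rw [h, sub_self, norm_zero] at hge; linarith
  have hgeom : ∑ n ∈ Ico M (M + N), eR (n * θ) = (eR θ ^ (M + N) - eR θ ^ M) / (eR θ - 1) := by
    simp_rw [eR_nat_mul]
    exact geom_sum_Ico hne (by omega)
  rw [hgeom, norm_div]
  have hnum : ‖eR θ ^ (M + N) - eR θ ^ M‖ ≤ 2 := by
    refine (norm_sub_le _ _).trans ?_
    rw [norm_pow, norm_pow, norm_eR]; norm_num
  calc _ ≤ 2 / (4 * min θ (1 - θ)) := by gcongr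
    _ = 1 / (2 * min θ (1 - θ)) := by field_simp; norm_num
    _ ≤ _ := by
      have p1 : 0 < 1 / (2 * θ) := by positivity
      have h1' : 0 < 1 - θ := by linarith
      have p2 : 0 < 1 / (2 * (1 - θ)) := by positivity
      rcases min_choice θ (1 - θ) with h | h <;> rw [h] <;> linarith

/-- The row sums of the Gram matrix of exponentials at points spaced by `1/K` modulo `1`: bucketing
the fractional parts of `α s - α r` into intervals of length `1/K` puts at most one point in
each bucket. -/
lemma sum_kernel_le {ι : Type*} (s : Finset ι) (α : ι → ℝ) (K : ℕ) (hK : 1 ≤ K)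
    (hα : ∀ i ∈ s, ∀ j ∈ s, i ≠ j → ∀ m : ℤ, 1 / (K : ℝ) ≤ |α i - α j - m|)
    (r : ι) (M N : ℕ) :
    ∑ i ∈ s, ‖∑ n ∈ Ico M (M + N), eR (n * (α i - α r))‖
      ≤ 2 * N + K * (1 + Real.log K) := by
  have hK0 : (0:ℝ) < K := by exact_mod_cast hK
  set θ : ι → ℝ := fun i => Int.fract (α i - α r) with hθ
  have hθ0 : ∀ i, 0 ≤ θ i := fun i => Int.fract_nonneg _
  have hθ1 : ∀ i, θ i < 1 := fun i => Int.fract_lt_one _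
  set b : ι → ℕ := fun i => ⌊K * θ i⌋₊ with hb
  have hblt : ∀ i, b i < K := fun i => by
    rw [hb]; simp only
    rw [Nat.floor_lt (by have := hθ0 i; positivity)]
    have := hθ1 i
    nlinarith
  have hble : ∀ i, (b i : ℝ) ≤ K * θ i := fun i => Nat.floor_le (by have := hθ0 i; positivity)
  have hbgt : ∀ i, K * θ i < b i + 1 := fun i => Nat.lt_floor_add_one _
  have hinj : Set.InjOn b s := by
    intro i hi j hj hij
    by_contra hne
    have h1 := hα i hi j hj hne (⌊α i - α r⌋ - ⌊α j - α r⌋)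
    have h2 : α i - α j - ((⌊α i - α r⌋ - ⌊α j - α r⌋ : ℤ) : ℝ) = θ i - θ j := by
      simp only [hθ, Int.fract]; push_cast; ring
    rw [h2] at h1
    have h3 : |K * θ i - K * θ j| < 1 := by
      have := hble i; have := hble j; have := hbgt i; have := hbgt j
      rw [hij] at *
      rw [abs_lt]; constructor <;> linarith
    rw [← mul_sub, abs_mul, abs_of_pos hK0] at h3
    rw [div_le_iff₀ hK0] at h1
    linarith
  set F : ℕ → ℝ := fun k => (if k = 0 then (N:ℝ) else 0) + (if k = K - 1 then (N:ℝ) else 0)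
    + ((K:ℝ) / 2 * (k:ℝ)⁻¹ + (K:ℝ) / 2 * ((K - 1 - k : ℕ) : ℝ)⁻¹) with hF
  have hF0 : ∀ k, 0 ≤ F k := fun k => by
    simp only [hF]
    have : (0:ℝ) ≤ if k = 0 then (N:ℝ) else 0 := by split_ifs <;> positivity
    have : (0:ℝ) ≤ if k = K - 1 then (N:ℝ) else 0 := by split_ifs <;> positivity
    positivity
  have hker : ∀ i ∈ s, ‖∑ n ∈ Ico M (M + N), eR (n * (α i - α r))‖ ≤ F (b i) := by
    intro i _
    have htriv : ‖∑ n ∈ Ico M (M + N), eR (n * (α i - α r))‖ ≤ N := by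
      refine (norm_sum_le _ _).trans ?_
      simp [norm_eR]
    have hfr : ∑ n ∈ Ico M (M + N), eR (n * (α i - α r)) = ∑ n ∈ Ico M (M + N), eR (n * θ i) := by
      refine Finset.sum_congr rfl fun n _ => ?_
      have : (n:ℝ) * (α i - α r) = n * θ i + ((n * ⌊α i - α r⌋ : ℤ) : ℝ) := by
        simp only [hθ, Int.fract]; push_cast; ring
      rw [this, eR_add, eR_int, mul_one]
    by_cases h0 : b i = 0
    · refine htriv.trans ?_
      have : (0:ℝ) ≤ if b i = K - 1 then (N:ℝ) else 0 := by split_ifs <;> positivity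
      simp only [hF, if_pos h0]
      have : (0:ℝ) ≤ (K:ℝ) / 2 * (b i:ℝ)⁻¹ + (K:ℝ) / 2 * ((K - 1 - b i : ℕ) : ℝ)⁻¹ := by positivity
      linarith
    by_cases h1 : b i = K - 1
    · refine htriv.trans ?_
      simp only [hF, if_pos h1, if_neg h0]
      have : (0:ℝ) ≤ (K:ℝ) / 2 * (b i:ℝ)⁻¹ + (K:ℝ) / 2 * ((K - 1 - b i : ℕ) : ℝ)⁻¹ := by positivity
      linarith
    simp only [hF, if_neg h1, if_neg h0, zero_add]
    have hb1 : (1:ℝ) ≤ b i := by exact_mod_cast Nat.one_le_iff_ne_zero.2 h0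
    have hb2' : 1 ≤ K - 1 - b i := by have := hblt i; omega
    have hb2 : (1:ℝ) ≤ ((K - 1 - b i : ℕ) : ℝ) := by exact_mod_cast hb2'
    have hcast : ((K - 1 - b i : ℕ) : ℝ) = K - 1 - b i := by
      have : (K - 1 - b i) + b i + 1 = K := by have := hblt i; omega
      have : (((K - 1 - b i) + b i + 1 : ℕ) : ℝ) = K := by rw [this]
      push_cast at this; linarith
    have hp : 0 < θ i := by
      by_contra h
      have : θ i = 0 := le_antisymm (not_lt.1 h) (hθ0 i)
      have := hble i
      simp_all
      linarith
    rw [hfr]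
    refine (norm_sum_eR_le hp (hθ1 i) M N).trans (add_le_add ?_ ?_)
    · rw [div_le_iff₀ (by positivity)]
      have := hble i
      have : (1:ℝ) = (b i) * (b i:ℝ)⁻¹ := by field_simp
      calc (1:ℝ) = (b i) * (b i:ℝ)⁻¹ := this
        _ ≤ (K * θ i) * (b i:ℝ)⁻¹ := by gcongr
        _ = _ := by ring
    · have hq : 0 < 1 - θ i := by linarith [hθ1 i]
      rw [div_le_iff₀ (by positivity)]
      have h5 : ((K - 1 - b i : ℕ) : ℝ) ≤ K * (1 - θ i) := by
        rw [hcast]; linarith [hbgt i]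
      calc (1:ℝ) = ((K - 1 - b i : ℕ) : ℝ) * (((K - 1 - b i : ℕ) : ℝ))⁻¹ := by field_simp
        _ ≤ (K * (1 - θ i)) * (((K - 1 - b i : ℕ) : ℝ))⁻¹ := by gcongr
        _ = _ := by ring
  have hharm : ∑ k ∈ range K, (k:ℝ)⁻¹ ≤ 1 + Real.log K := by
    refine le_trans ?_ (harmonic_Icc_le K)
    simp_rw [one_div]
    calc ∑ k ∈ range K, (k:ℝ)⁻¹ ≤ ∑ k ∈ insert 0 (Icc 1 K), (k:ℝ)⁻¹ := by
          refine Finset.sum_le_sum_of_subset_of_nonneg ?_ fun _ _ _ => by positivity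
          intro k hk; simp at hk ⊢; omega
      _ = _ := by rw [Finset.sum_insert (by simp)]; simp
  calc _ ≤ ∑ i ∈ s, F (b i) := Finset.sum_le_sum hker
    _ = ∑ k ∈ s.image b, F k := (Finset.sum_image hinj).symm
    _ ≤ ∑ k ∈ range K, F k := by
      refine Finset.sum_le_sum_of_subset_of_nonneg ?_ fun _ _ _ => hF0 _
      intro k hk
      obtain ⟨i, _, rfl⟩ := Finset.mem_image.1 hk
      exact Finset.mem_range.2 (hblt i)
    _ = N + N + ((K:ℝ) / 2 * ∑ k ∈ range K, (k:ℝ)⁻¹ + (K:ℝ) / 2 * ∑ k ∈ range K, (k:ℝ)⁻¹) := by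
      simp only [hF]
      rw [Finset.sum_add_distrib, Finset.sum_add_distrib, Finset.sum_add_distrib,
        Finset.sum_ite_eq', Finset.sum_ite_eq', if_pos (by simp; omega), if_pos (by simp; omega),
        ← Finset.mul_sum, ← Finset.mul_sum,
        ← Finset.sum_range_reflect (fun k : ℕ => (k:ℝ)⁻¹) K]
    _ ≤ _ := by nlinarith

/-- Additive large sieve, by duality. -/
lemma additive_large_sieve {ι : Type*} (s : Finset ι) (α : ι → ℝ) (K : ℕ) (hK : 1 ≤ K)
    (hα : ∀ i ∈ s, ∀ j ∈ s, i ≠ j → ∀ m : ℤ, 1 / (K : ℝ) ≤ |α i - α j - m|)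
    (a : ℕ → ℂ) (M N : ℕ) :
    ∑ i ∈ s, ‖∑ n ∈ Ico M (M + N), a n * eR (n * α i)‖ ^ 2
      ≤ (2 * N + K * (1 + Real.log K)) * ∑ n ∈ Ico M (M + N), ‖a n‖ ^ 2 := by
  set B := 2 * (N:ℝ) + K * (1 + Real.log K) with hB
  have hB0 : 0 ≤ B := by
    have := Real.log_nonneg (show (1:ℝ) ≤ K by exact_mod_cast hK)
    positivity
  set S : ι → ℂ := fun i => ∑ n ∈ Ico M (M + N), a n * eR (n * α i) with hS
  set T := ∑ i ∈ s, ‖S i‖ ^ 2 with hT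
  set A := ∑ n ∈ Ico M (M + N), ‖a n‖ ^ 2 with hA
  have hT0 : 0 ≤ T := Finset.sum_nonneg fun _ _ => by positivity
  have hA0 : 0 ≤ A := Finset.sum_nonneg fun _ _ => by positivity
  set U : ℕ → ℂ := fun n => ∑ i ∈ s, (starRingEnd ℂ) (S i) * eR (n * α i) with hU
  have h1 : (T : ℂ) = ∑ n ∈ Ico M (M + N), a n * U n := by
    simp only [hT, hU, Finset.mul_sum]
    rw [Finset.sum_comm]
    push_cast
    refine Finset.sum_congr rfl fun i _ => ?_
    rw [← Complex.conj_mul']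
    conv_lhs => rw [hS]; simp only
    rw [Finset.mul_sum]
    refine Finset.sum_congr rfl fun n _ => ?_
    simp only [hS]; ring
  have h2 : T ≤ ∑ n ∈ Ico M (M + N), ‖a n‖ * ‖U n‖ := by
    calc T = ‖(T:ℂ)‖ := by rw [Complex.norm_real, Real.norm_of_nonneg hT0]
      _ ≤ _ := by rw [h1]; exact (norm_sum_le _ _).trans (by simp)
  have h3 : T ^ 2 ≤ A * ∑ n ∈ Ico M (M + N), ‖U n‖ ^ 2 :=
    (pow_le_pow_left₀ hT0 h2 2).trans (Finset.sum_mul_sq_le_sq_mul_sq _ _ _)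
  have h4 : ∑ n ∈ Ico M (M + N), ‖U n‖ ^ 2 ≤ B * T := by
    have e1 : ((∑ n ∈ Ico M (M + N), ‖U n‖ ^ 2 : ℝ) : ℂ)
        = ∑ i ∈ s, ∑ j ∈ s, (starRingEnd ℂ) (S i) * S j *
          ∑ n ∈ Ico M (M + N), eR (n * (α i - α j)) := by
      push_cast
      simp_rw [Finset.mul_sum]
      have : ∀ n ∈ Ico M (M + N), ((‖U n‖ : ℂ)) ^ 2 = ∑ i ∈ s, ∑ j ∈ s,
          (starRingEnd ℂ) (S i) * S j * eR (n * (α i - α j)) := by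
        intro n _
        rw [← Complex.mul_conj', hU]
        simp only [map_sum, map_mul, Complex.conj_conj, conj_eR]
        rw [Finset.sum_mul_sum]
        refine Finset.sum_congr rfl fun i _ => Finset.sum_congr rfl fun j _ => ?_
        rw [show (n:ℝ) * (α i - α j) = n * α i + -(n * α j) by ring, eR_add]
        ring
      rw [Finset.sum_congr rfl this, Finset.sum_comm]
      refine Finset.sum_congr rfl fun i _ => ?_
      rw [Finset.sum_comm]
    have e2 : ∑ n ∈ Ico M (M + N), ‖U n‖ ^ 2 ≤ ∑ i ∈ s, ∑ j ∈ s, (‖S i‖ ^ 2 / 2 + ‖S j‖ ^ 2 / 2) *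
          ‖∑ n ∈ Ico M (M + N), eR (n * (α i - α j))‖ := by
      have hnn : 0 ≤ ∑ n ∈ Ico M (M + N), ‖U n‖ ^ 2 := Finset.sum_nonneg fun _ _ => by positivity
      rw [← Real.norm_of_nonneg hnn, ← Complex.norm_real, e1]
      refine (norm_sum_le _ _).trans (Finset.sum_le_sum fun i _ => (norm_sum_le _ _).trans
        (Finset.sum_le_sum fun j _ => ?_))
      rw [norm_mul, norm_mul, RCLike.norm_conj]
      gcongr
      nlinarith [sq_nonneg (‖S i‖ - ‖S j‖)]
    have hsym : ∀ i j, ‖∑ n ∈ Ico M (M + N), eR (n * (α i - α j))‖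
        = ‖∑ n ∈ Ico M (M + N), eR (n * (α j - α i))‖ := by
      intro i j
      rw [← RCLike.norm_conj, map_sum]
      congr 1
      refine Finset.sum_congr rfl fun n _ => ?_
      rw [conj_eR]; congr 1; ring
    refine e2.trans ?_
    simp_rw [add_mul, Finset.sum_add_distrib]
    have e3 : ∑ i ∈ s, ∑ j ∈ s, ‖S j‖ ^ 2 / 2 * ‖∑ n ∈ Ico M (M + N), eR (n * (α i - α j))‖
        ≤ ∑ j ∈ s, ‖S j‖ ^ 2 / 2 * B := by
      rw [Finset.sum_comm]
      refine Finset.sum_le_sum fun j _ => ?_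
      rw [← Finset.mul_sum]
      gcongr
      exact sum_kernel_le s α K hK hα j M N
    have e4 : ∑ i ∈ s, ∑ j ∈ s, ‖S i‖ ^ 2 / 2 * ‖∑ n ∈ Ico M (M + N), eR (n * (α i - α j))‖
        ≤ ∑ j ∈ s, ‖S j‖ ^ 2 / 2 * B := by
      refine Finset.sum_le_sum fun i _ => ?_
      rw [← Finset.mul_sum]
      gcongr
      simp_rw [hsym i]
      exact sum_kernel_le s α K hK hα i M N
    have e5 : ∑ j ∈ s, ‖S j‖ ^ 2 / 2 * B = B * T / 2 := by
      rw [← Finset.sum_mul, ← Finset.sum_div]; ring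
    linarith
  have h5 : T ^ 2 ≤ (B * A) * T := h3.trans (by nlinarith)
  rcases hT0.eq_or_lt with h | h
  · rw [← h]; positivity
  · rw [sq] at h5
    exact le_of_mul_le_mul_right h5 h

end OmegaSq

namespace OmegaSq

open Finset

open Classical in
/-- The primitive Dirichlet characters modulo `q`. -/
noncomputable def primChars (q : ℕ) : Finset (DirichletCharacter ℂ q) :=
  univ.filter fun χ => χ.IsPrimitive

lemma mem_primChars {q : ℕ} {χ : DirichletCharacter ℂ q} : χ ∈ primChars q ↔ χ.IsPrimitive := by
  simp [primChars]

lemma norm_gaussSum_sq {q : ℕ} [NeZero q] {χ : DirichletCharacter ℂ q} (hχ : χ.IsPrimitive) :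
    ‖gaussSum χ (ZMod.stdAddChar (N := q))‖ ^ 2 = q := by
  set τ := gaussSum χ (ZMod.stdAddChar (N := q)) with hτ
  have h1 := congrFun (ZMod.dft_dft (χ : ZMod q → ℂ)) (-1)
  simp only [neg_neg, map_one, smul_eq_mul, mul_one] at h1
  rw [ZMod.dft_apply] at h1
  have h2 : ∑ j : ZMod q, ZMod.stdAddChar (-(j * -1)) • ZMod.dft (χ : ZMod q → ℂ) j
      = τ * (starRingEnd ℂ) τ := by
    have h3 : (starRingEnd ℂ) τ = ∑ j : ZMod q, ZMod.stdAddChar j * χ⁻¹ (-j) := by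
      rw [starRingEnd_apply, hτ, star_gaussSum_eq, gaussSum, ← Equiv.sum_comp (Equiv.neg (ZMod q))]
      refine Finset.sum_congr rfl fun j _ => ?_
      simp only [Equiv.neg_apply, AddChar.inv_apply, neg_neg]
      ring
    rw [h3, Finset.mul_sum]
    refine Finset.sum_congr rfl fun j _ => ?_
    rw [hχ.fourierTransform_eq_inv_mul_gaussSum]
    simp only [mul_neg, mul_one, neg_neg, smul_eq_mul]
    ring
  rw [h2, Complex.mul_conj'] at h1
  exact_mod_cast h1

lemma char_inv_eq_conj {q : ℕ} (χ : DirichletCharacter ℂ q) (a : ZMod q) :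
    χ⁻¹ a = (starRingEnd ℂ) (χ a) := by
  rw [starRingEnd_apply, MulChar.star_apply']

lemma sum_char_mul_conj {q : ℕ} [NeZero q] (b c : ZMod q) :
    ∑ χ : DirichletCharacter ℂ q, χ b * (starRingEnd ℂ) (χ c)
      = if b = c ∧ IsUnit b then (q.totient : ℂ) else 0 := by
  by_cases hc : IsUnit c
  · have h := DirichletCharacter.sum_char_inv_mul_char_eq ℂ hc b
    have e : ∀ χ : DirichletCharacter ℂ q, χ b * (starRingEnd ℂ) (χ c) = χ c⁻¹ * χ b := by
      intro χ
      rw [mul_comm, ← char_inv_eq_conj, MulChar.inv_apply]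
      congr 2
      obtain ⟨u, rfl⟩ := hc
      simp
    simp_rw [e, h]
    by_cases hbc : b = c
    · subst hbc; simp [hc]
    · rw [if_neg (fun h => hbc h.symm), if_neg (fun h => hbc h.1)]
  · rw [if_neg (by rintro ⟨rfl, h⟩; exact hc h)]
    exact Finset.sum_eq_zero fun χ _ => by rw [χ.map_nonunit hc]; simp

lemma sum_char_norm_sq {q : ℕ} [NeZero q] (S : ZMod q → ℂ) :
    ∑ χ : DirichletCharacter ℂ q, ‖∑ b : ZMod q, χ b * S b‖ ^ 2
      = q.totient * ∑ b ∈ (univ : Finset (ZMod q)).filter IsUnit, ‖S b‖ ^ 2 := by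
  have h : ((∑ χ : DirichletCharacter ℂ q, ‖∑ b : ZMod q, χ b * S b‖ ^ 2 : ℝ) : ℂ)
      = ((q.totient * ∑ b ∈ (univ : Finset (ZMod q)).filter IsUnit, ‖S b‖ ^ 2 : ℝ) : ℂ) := by
    push_cast
    have e1 : ∀ χ : DirichletCharacter ℂ q, ((‖∑ b : ZMod q, χ b * S b‖ : ℂ)) ^ 2
        = ∑ b : ZMod q, ∑ c : ZMod q, (S b * (starRingEnd ℂ) (S c)) *
          (χ b * (starRingEnd ℂ) (χ c)) := by
      intro χ
      rw [← Complex.mul_conj', map_sum, Finset.sum_mul_sum]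
      refine Finset.sum_congr rfl fun b _ => Finset.sum_congr rfl fun c _ => ?_
      rw [map_mul]; ring
    simp_rw [e1]
    rw [Finset.sum_comm]
    have e2 : ∀ b : ZMod q, ∑ χ : DirichletCharacter ℂ q, ∑ c : ZMod q,
        (S b * (starRingEnd ℂ) (S c)) * (χ b * (starRingEnd ℂ) (χ c))
        = if IsUnit b then (q.totient : ℂ) * (‖S b‖ : ℂ) ^ 2 else 0 := by
      intro b
      rw [Finset.sum_comm]
      simp_rw [← Finset.mul_sum, sum_char_mul_conj]
      rw [Finset.sum_eq_single b]
      · by_cases hb : IsUnit b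
        · simp only [hb, and_self, if_true]
          rw [Complex.mul_conj']; ring
        · simp [hb]
      · intro c _ hc
        rw [if_neg (fun h => hc h.1.symm), mul_zero]
      · simp
    simp_rw [e2]
    rw [← Finset.sum_filter, Finset.mul_sum]
  exact_mod_cast h

/-- Primitive characters of a fixed modulus, reduced to additive characters by Gauss sums. -/
lemma sum_primitive_le {q : ℕ} [NeZero q] (a : ℕ → ℂ) (s : Finset ℕ) :
    ∑ χ ∈ primChars q, ‖∑ n ∈ s, a n * χ⁻¹ n‖ ^ 2
      ≤ ∑ b ∈ (univ : Finset (ZMod q)).filter IsUnit,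
        ‖∑ n ∈ s, a n * ZMod.stdAddChar (b * (n : ZMod q))‖ ^ 2 := by
  have hq : (0:ℝ) < q := by exact_mod_cast NeZero.pos q
  set S : ZMod q → ℂ := fun b => ∑ n ∈ s, a n * ZMod.stdAddChar (b * (n : ZMod q)) with hS
  have h1 : ∀ χ : DirichletCharacter ℂ q, χ.IsPrimitive →
      q * ‖∑ n ∈ s, a n * χ⁻¹ n‖ ^ 2 = ‖∑ b : ZMod q, χ b * S b‖ ^ 2 := by
    intro χ hχ
    rw [← norm_gaussSum_sq hχ, ← mul_pow, ← norm_mul]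
    congr 2
    simp only [hS, Finset.mul_sum]
    rw [Finset.sum_comm]
    refine Finset.sum_congr rfl fun n _ => ?_
    have := gaussSum_mulShift_of_isPrimitive (ZMod.stdAddChar (N := q)) hχ (n : ZMod q)
    calc _ = a n * (χ⁻¹ n * gaussSum χ (ZMod.stdAddChar (N := q))) := by ring
      _ = _ := by
        rw [← this, gaussSum, Finset.mul_sum]
        refine Finset.sum_congr rfl fun b _ => ?_
        rw [AddChar.mulShift_apply, mul_comm b]
        ring
  have h2 : (q:ℝ) * ∑ χ ∈ primChars q, ‖∑ n ∈ s, a n * χ⁻¹ n‖ ^ 2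
      ≤ q * ∑ b ∈ (univ : Finset (ZMod q)).filter IsUnit, ‖S b‖ ^ 2 := by
    calc _ = ∑ χ ∈ primChars q, ‖∑ b : ZMod q, χ b * S b‖ ^ 2 := by
          rw [Finset.mul_sum]
          exact Finset.sum_congr rfl fun χ hχ => h1 χ (mem_primChars.1 hχ)
      _ ≤ ∑ χ : DirichletCharacter ℂ q, ‖∑ b : ZMod q, χ b * S b‖ ^ 2 :=
          Finset.sum_le_sum_of_subset_of_nonneg (Finset.subset_univ _)
            fun _ _ _ => by positivity
      _ = _ := sum_char_norm_sq S
      _ ≤ _ := by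
          gcongr
          exact Nat.totient_le q
  exact le_of_mul_le_mul_left h2 hq

/-- Reduced fractions of height at most `Q` are `1/Q²`-spaced modulo `1`. -/
lemma farey_spacing {Q q q' b b' : ℕ} (hq : 1 ≤ q) (hq' : 1 ≤ q') (hqQ : q ≤ Q) (hqQ' : q' ≤ Q)
    (hb : b < q) (hb' : b' < q') (hc : b.Coprime q) (hc' : b'.Coprime q')
    (hne : (q, b) ≠ (q', b')) (m : ℤ) :
    1 / ((Q ^ 2 : ℕ) : ℝ) ≤ |(b:ℝ) / q - (b':ℝ) / q' - m| := by
  have h0 : (0:ℝ) < q := by exact_mod_cast hq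
  have h0' : (0:ℝ) < q' := by exact_mod_cast hq'
  have hz : (b:ℤ) * q' - b' * q - m * q * q' ≠ 0 := by
    intro h
    have d1 : (q:ℤ) ∣ (b:ℤ) * q' := ⟨b' + m * q', by linear_combination h⟩
    have d2 : (q':ℤ) ∣ (b':ℤ) * q := ⟨b - m * q, by linear_combination -h⟩
    have e1 : q ∣ q' := by
      refine Nat.Coprime.dvd_of_dvd_mul_left hc.symm ?_
      exact_mod_cast d1
    have e2 : q' ∣ q := by
      refine Nat.Coprime.dvd_of_dvd_mul_left hc'.symm ?_
      exact_mod_cast d2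
    have e3 := Nat.dvd_antisymm e1 e2
    subst e3
    have h3 : (q:ℤ) * (b - b' - m * q) = 0 := by linear_combination h
    have hqz : (q:ℤ) ≠ 0 := by exact_mod_cast (by omega : q ≠ 0)
    have h4 : (b:ℤ) - b' - m * q = 0 := (mul_eq_zero.1 h3).resolve_left hqz
    have hm : m = 0 := by
      have hbz : (b:ℤ) < q := by exact_mod_cast hb
      have hbz' : (b':ℤ) < q := by exact_mod_cast hb'
      have : 0 ≤ (b:ℤ) := by positivity
      have : 0 ≤ (b':ℤ) := by positivity
      by_contra hm
      rcases lt_or_gt_of_ne hm with hm | hm <;> nlinarith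
    rw [hm] at h4
    apply hne
    have : b = b' := by omega
    rw [this]
  have h1 : (1:ℝ) ≤ |(((b:ℤ) * q' - b' * q - m * q * q' : ℤ) : ℝ)| := by
    exact_mod_cast Int.one_le_abs hz
  have h2 : (b:ℝ) / q - (b':ℝ) / q' - m
      = (((b:ℤ) * q' - b' * q - m * q * q' : ℤ) : ℝ) / (q * q') := by
    push_cast; field_simp
  rw [h2, abs_div, abs_of_pos (by positivity : (0:ℝ) < q * q')]
  have h3 : (q:ℝ) * q' ≤ ((Q ^ 2 : ℕ) : ℝ) := by
    rw [sq]; exact_mod_cast Nat.mul_le_mul hqQ hqQ'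
  apply div_le_div₀ (by positivity) h1 (by positivity) h3

/-- Multiplicative large sieve for primitive characters. -/
theorem large_sieve (Q : ℕ) (hQ : 1 ≤ Q) (a : ℕ → ℂ) (M N : ℕ) :
    ∑ q ∈ Icc 1 Q, ∑ χ ∈ primChars q,
        ‖∑ n ∈ Ico M (M + N), a n * χ n‖ ^ 2
      ≤ (2 * N + Q ^ 2 * (1 + 2 * Real.log Q)) * ∑ n ∈ Ico M (M + N), ‖a n‖ ^ 2 := by
  set a' : ℕ → ℂ := fun n => (starRingEnd ℂ) (a n) with ha'
  set P : Finset (ℕ × ℕ) := ((Icc 1 Q) ×ˢ (range Q)).filter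
    fun p => p.2 < p.1 ∧ p.2.Coprime p.1 with hP
  set α : ℕ × ℕ → ℝ := fun p => (p.2 : ℝ) / p.1 with hαd
  have hadd := additive_large_sieve P α (Q ^ 2) (Nat.one_le_pow _ _ hQ) (by
    intro p hp r hr hne m
    simp only [hP, mem_filter, mem_product, mem_Icc, mem_range] at hp hr
    exact farey_spacing hp.1.1.1 hr.1.1.1 hp.1.1.2 hr.1.1.2 hp.2.1 hr.2.1 hp.2.2 hr.2.2 hne m)
    a' M N
  have hnorm : ∀ n, ‖a' n‖ = ‖a n‖ := fun n => RCLike.norm_conj _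
  simp_rw [hnorm] at hadd
  have hlog : ((Q ^ 2 : ℕ) : ℝ) * (1 + Real.log ((Q ^ 2 : ℕ) : ℝ))
      = Q ^ 2 * (1 + 2 * Real.log Q) := by
    push_cast; rw [Real.log_pow]; push_cast; ring
  rw [hlog] at hadd
  refine le_trans ?_ hadd
  have hq : ∀ q ∈ Icc 1 Q, ∑ χ ∈ primChars q,
        ‖∑ n ∈ Ico M (M + N), a n * χ n‖ ^ 2
      ≤ ∑ b ∈ (range Q).filter (fun b => b < q ∧ b.Coprime q),
        ‖∑ n ∈ Ico M (M + N), a' n * eR (n * α (q, b))‖ ^ 2 := by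
    intro q hq
    rw [mem_Icc] at hq
    have : NeZero q := ⟨by omega⟩
    have h1 : ∀ χ : DirichletCharacter ℂ q, ‖∑ n ∈ Ico M (M + N), a n * χ n‖
        = ‖∑ n ∈ Ico M (M + N), a' n * χ⁻¹ n‖ := by
      intro χ
      rw [← RCLike.norm_conj, map_sum]
      simp_rw [map_mul, char_inv_eq_conj]
      rfl
    simp_rw [h1]
    refine (sum_primitive_le a' _).trans_eq ?_
    symm
    refine Finset.sum_bij' (fun b _ => (b : ZMod q)) (fun b _ => b.val) ?_ ?_ ?_ ?_ ?_
    · intro b hb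
      simp only [mem_filter] at hb
      simp only [mem_filter, mem_univ, true_and]
      exact (ZMod.isUnit_iff_coprime b q).2 hb.2.2
    · intro b hb
      simp only [mem_filter, mem_univ, true_and] at hb
      have hlt := ZMod.val_lt b
      simp only [mem_filter, mem_range]
      refine ⟨by omega, hlt, ?_⟩
      rw [← ZMod.isUnit_iff_coprime]; simpa using hb
    · intro b hb
      simp only [mem_filter] at hb
      exact ZMod.val_cast_of_lt hb.2.1
    · intro b _; simp
    · intro b _
      congr 2
      refine Finset.sum_congr rfl fun n _ => ?_
      congr 1
      have := ZMod.stdAddChar_coe (N := q) ((b * n : ℕ) : ℤ)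
      rw [Int.cast_natCast] at this
      rw [← Nat.cast_mul, this, eR]
      congr 1
      simp only [hαd]; push_cast; ring
  refine (Finset.sum_le_sum hq).trans_eq ?_
  rw [hP, Finset.sum_filter, Finset.sum_product]
  refine Finset.sum_congr rfl fun q _ => ?_
  rw [Finset.sum_filter]

end OmegaSq

namespace OmegaSq

open Finset

/-! ### Bounds for Dirichlet series to the right of the line `Re s = 1` -/

lemma hasDerivAt_cpow_neg {y : ℝ} (hy : 0 < y) (s : ℂ) :
    HasDerivAt (fun y : ℝ => (y : ℂ) ^ (-s)) (-s * (y : ℂ) ^ (-s - 1)) y := by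
  have h1 : HasDerivAt (fun z : ℂ => z ^ (-s)) (-s * (y : ℂ) ^ (-s - 1)) (y : ℂ) := by
    simpa using (hasDerivAt_id (y : ℂ)).cpow_const (c := -s) (Or.inl (by simpa using hy))
  exact h1.comp_ofReal

lemma norm_cpow_neg {y : ℝ} (hy : 0 < y) (s : ℂ) : ‖(y : ℂ) ^ (-s)‖ = y ^ (-s.re) := by
  rw [Complex.norm_cpow_eq_rpow_re_of_pos hy]; simp

/-- `χ(n) (log n)^j`, the coefficients of the `j`-th derivative of `L(s, χ)` up to sign. -/
noncomputable def logChar {k : ℕ} (χ : DirichletCharacter ℂ k) (j : ℕ) (n : ℕ) : ℂ :=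
  χ n * (Real.log n : ℂ) ^ j

lemma log_pow_le_rpow (j : ℕ) {ε : ℝ} (hε : 0 < ε) :
    ∃ C : ℝ, 1 ≤ C ∧ ∀ n : ℕ, n ≠ 0 → Real.log n ^ j ≤ C * (n:ℝ) ^ ε := by
  obtain ⟨C, hC1, hC⟩ := one_add_log_pow_le j hε
  refine ⟨C, hC1, fun n hn => ?_⟩
  have hn1 : (1:ℝ) ≤ n := by exact_mod_cast Nat.one_le_iff_ne_zero.2 hn
  refine le_trans ?_ (hC n hn1)
  have := Real.log_nonneg hn1
  gcongr
  linarith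

lemma norm_logChar_le {k : ℕ} (χ : DirichletCharacter ℂ k) (j n : ℕ) :
    ‖logChar χ j n‖ ≤ Real.log n ^ j := by
  rw [logChar, norm_mul, norm_pow, Complex.norm_real, Real.norm_of_nonneg (Real.log_natCast_nonneg n)]
  exact mul_le_of_le_one_left (pow_nonneg (Real.log_natCast_nonneg n) _) (χ.norm_le_one _)

lemma summable_logChar {k : ℕ} (χ : DirichletCharacter ℂ k) (j : ℕ) {s : ℂ} (hs : 1 < s.re) :
    LSeriesSummable (logChar χ j) s := by
  obtain ⟨C, _, hC⟩ := log_pow_le_rpow j (ε := (s.re - 1) / 2) (by linarith)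
  refine LSeriesSummable_of_le_const_mul_rpow (x := 1 + (s.re - 1) / 2) (by linarith)
    ⟨C, fun n hn => ?_⟩
  rw [add_sub_cancel_left]
  exact (norm_logChar_le χ j n).trans (hC n hn)

lemma LSeries_norm_le_of_partial {f : ℕ → ℂ} {s : ℂ} (hf : LSeriesSummable f s) {B : ℝ}
    (N0 : ℕ) (h : ∀ N, N0 ≤ N → ‖∑ n ∈ range N, LSeries.term f s n‖ ≤ B) : ‖LSeries f s‖ ≤ B := by
  refine le_of_tendsto (hf.hasSum.tendsto_sum_nat.norm) ?_
  filter_upwards [Filter.eventually_ge_atTop N0] with N hN using h N hN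

lemma sum_rpow_three_halves_le {a b : ℕ} (ha : 1 ≤ a) (hab : a ≤ b) :
    ∑ n ∈ Ico a b, ((n:ℝ) ^ (3/2 : ℝ))⁻¹ ≤ 6 / √a := by
  have key : ∑ n ∈ Ico a b, ((n:ℝ) ^ (3/2 : ℝ))⁻¹ ≤ 6 * (1 / √a - 1 / √b) := by
    induction b, hab using Nat.le_induction with
    | base => simp
    | succ b hb ih =>
      rw [Finset.sum_Ico_succ_top hb]
      have hb0 : (1:ℝ) ≤ b := by exact_mod_cast ha.trans hb
      have hstep : ((b:ℝ) ^ (3/2 : ℝ))⁻¹ ≤ 6 * (1 / √b - 1 / √(b + 1 : ℕ)) := by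
        set u := √(b:ℝ) with hu
        set w := √((b + 1 : ℕ):ℝ) with hw
        have hu2 : u ^ 2 = b := Real.sq_sqrt (by positivity)
        have hw2 : w ^ 2 = b + 1 := by rw [hw, Real.sq_sqrt (by positivity)]; push_cast; ring
        have hu1 : 1 ≤ u := by rw [hu]; exact Real.one_le_sqrt.2 hb0
        have hwu : u ≤ w := Real.sqrt_le_sqrt (by push_cast; linarith)
        have hw0 : 0 < w := by linarith
        have h32 : (b:ℝ) ^ (3/2 : ℝ) = u ^ 3 := by
          rw [hu, Real.sqrt_eq_rpow, ← Real.rpow_natCast, ← Real.rpow_mul (by positivity)]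
          norm_num
        rw [h32]
        have hd : 1 / u - 1 / w = 1 / (u * w * (u + w)) := by
          have : (w - u) * (w + u) = 1 := by nlinarith
          field_simp
          nlinarith
        rw [hd, inv_eq_one_div, mul_one_div, div_le_div_iff₀ (by positivity) (by positivity)]
        have hw15 : w ≤ 3 / 2 * u := by nlinarith
        have hu0 : 0 < u := by linarith
        have : u * w * (u + w) ≤ u * (3 / 2 * u) * (u + 3 / 2 * u) := by gcongr
        nlinarith [pow_pos hu0 3]
      linarith
  refine key.trans ?_
  have : 0 ≤ 1 / √(b:ℝ) := by positivity
  rw [mul_sub, mul_one_div]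
  linarith

/-- `‖P_j(s)‖ ≪ (|t|+1)(1+log k)^(j+1)`: trivial bound for `n < k²`, partial summation beyond. -/
lemma norm_LSeries_logChar_le (j : ℕ) : ∃ C : ℝ, 1 ≤ C ∧ ∀ (k : ℕ) [NeZero k]
    (χ : DirichletCharacter ℂ k), χ ≠ 1 → ∀ s : ℂ, 1 < s.re → s.re ≤ 2 →
    ‖LSeries (logChar χ j) s‖ ≤ C * (|s.im| + 1) * (1 + Real.log k) ^ (j + 1) := by
  obtain ⟨C, hC1, hC⟩ := one_add_log_pow_le j (ε := 1/2) (by norm_num)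
  refine ⟨2 ^ (j + 1) + 14 * (j + 2) * C, by
    have : (1:ℝ) ≤ 2 ^ (j + 1) := one_le_pow₀ (by norm_num)
    have : 0 ≤ 14 * ((j:ℝ) + 2) * C := by positivity
    linarith, fun k _ χ hχ s hs1 hs2 => ?_⟩
  have hk : 1 ≤ k := NeZero.one_le
  have hkR : (1:ℝ) ≤ k := by exact_mod_cast hk
  have hlk := Real.log_nonneg hkR
  set φ : ℝ → ℂ := fun y => ((Real.log y : ℝ) : ℂ) ^ j * (y : ℂ) ^ (-s) with hφ
  have hsn : ‖s‖ ≤ 2 * (|s.im| + 1) := by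
    refine (Complex.norm_le_abs_re_add_abs_im s).trans ?_
    rw [abs_of_pos (by linarith)]
    have := abs_nonneg s.im
    linarith
  have hterm : ∀ n : ℕ, n ≠ 0 → LSeries.term (logChar χ j) s n = χ n * φ n := by
    intro n hn
    rw [LSeries.term_of_ne_zero hn, logChar, hφ]
    simp only [Complex.ofReal_natCast]
    rw [Complex.cpow_neg]
    field_simp
  -- derivative bound for the smooth weight
  have hdiff : ∀ n : ℕ, 1 ≤ n → ‖φ n - φ (n + 1 : ℕ)‖
      ≤ (j + 2) * C * (|s.im| + 1) * ((n:ℝ) ^ (3/2 : ℝ))⁻¹ := by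
    intro n hn
    have hn0 : (1:ℝ) ≤ n := by exact_mod_cast hn
    have hder : ∀ y ∈ Set.Icc (n:ℝ) (n + 1 : ℕ), HasDerivWithinAt φ
        ((j * ((Real.log y : ℝ) : ℂ) ^ (j - 1) * ((y⁻¹ : ℝ) : ℂ)) * (y : ℂ) ^ (-s)
          + ((Real.log y : ℝ) : ℂ) ^ j * (-s * (y : ℂ) ^ (-s - 1)))
        (Set.Icc (n:ℝ) (n + 1 : ℕ)) y := by
      intro y hy
      have hy0 : 0 < y := by linarith [hy.1]
      have h1 : HasDerivAt (fun y : ℝ => ((Real.log y : ℝ) : ℂ)) ((y⁻¹ : ℝ) : ℂ) y :=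
        (Real.hasDerivAt_log hy0.ne').ofReal_comp
      exact ((h1.pow j).mul (hasDerivAt_cpow_neg hy0 s)).hasDerivWithinAt
    have hbd : ∀ y ∈ Set.Icc (n:ℝ) (n + 1 : ℕ),
        ‖(j * ((Real.log y : ℝ) : ℂ) ^ (j - 1) * ((y⁻¹ : ℝ) : ℂ)) * (y : ℂ) ^ (-s)
          + ((Real.log y : ℝ) : ℂ) ^ j * (-s * (y : ℂ) ^ (-s - 1))‖
        ≤ (j + 2) * C * (|s.im| + 1) * ((n:ℝ) ^ (3/2 : ℝ))⁻¹ := by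
      intro y hy
      have hy1 : 1 ≤ y := by linarith [hy.1]
      have hy0 : 0 < y := by linarith
      have hly := Real.log_nonneg hy1
      have hT : 1 ≤ |s.im| + 1 := by linarith [abs_nonneg s.im]
      have e1 : ‖(y : ℂ) ^ (-s)‖ ≤ y⁻¹ := by
        rw [norm_cpow_neg hy0, ← Real.rpow_neg_one]
        exact Real.rpow_le_rpow_of_exponent_le hy1 (by linarith)
      have e2 : ‖(y : ℂ) ^ (-s - 1)‖ ≤ y⁻¹ * y⁻¹ := by
        rw [show -s - 1 = -(s + 1) by ring, norm_cpow_neg hy0, ← Real.rpow_neg_one,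
          ← Real.rpow_add hy0]
        exact Real.rpow_le_rpow_of_exponent_le hy1 (by simp; linarith)
      have e3 : (Real.log y) ^ (j - 1) ≤ (1 + Real.log y) ^ j := by
        calc (Real.log y) ^ (j - 1) ≤ (1 + Real.log y) ^ (j - 1) := by gcongr; linarith
          _ ≤ _ := pow_le_pow_right₀ (by linarith) (by omega)
      have e4 : (Real.log y) ^ j ≤ (1 + Real.log y) ^ j := by gcongr; linarith
      have e5 : (1 + Real.log y) ^ j * (y⁻¹ * y⁻¹) ≤ C * ((n:ℝ) ^ (3/2 : ℝ))⁻¹ := by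
        calc (1 + Real.log y) ^ j * (y⁻¹ * y⁻¹) ≤ (C * y ^ (1/2:ℝ)) * (y⁻¹ * y⁻¹) := by
              gcongr; exact hC y hy1
          _ = C * (y ^ (3/2 : ℝ))⁻¹ := by
              rw [← Real.rpow_neg hy0.le, ← Real.rpow_neg_one, mul_assoc, ← Real.rpow_add hy0,
                ← Real.rpow_add hy0]
              norm_num
          _ ≤ _ := by
              gcongr
              exact hy.1
      refine (norm_add_le _ _).trans ?_
      rw [norm_mul, norm_mul, norm_mul, norm_mul, norm_mul, norm_neg, norm_pow, norm_pow,
        Complex.norm_real, Complex.norm_real, Real.norm_of_nonneg hly,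
        Real.norm_of_nonneg (by positivity : 0 ≤ y⁻¹), Complex.norm_natCast]
      calc _ ≤ (j * (1 + Real.log y) ^ j * y⁻¹) * y⁻¹
            + (1 + Real.log y) ^ j * ((2 * (|s.im| + 1)) * (y⁻¹ * y⁻¹)) := by gcongr
        _ = (j + 2 * (|s.im| + 1)) * ((1 + Real.log y) ^ j * (y⁻¹ * y⁻¹)) := by ring
        _ ≤ ((j + 2) * (|s.im| + 1)) * (C * ((n:ℝ) ^ (3/2 : ℝ))⁻¹) := by
            gcongr
            nlinarith [Nat.cast_nonneg (α := ℝ) j]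
        _ = _ := by ring
    have := Convex.norm_image_sub_le_of_norm_hasDerivWithin_le hder hbd (convex_Icc _ _)
      (Set.left_mem_Icc.2 (by push_cast; linarith)) (Set.right_mem_Icc.2 (by push_cast; linarith))
    rw [norm_sub_rev]
    refine this.trans_eq ?_
    push_cast
    rw [add_sub_cancel_left, norm_one, mul_one]
  have hφn : ∀ n : ℕ, 1 ≤ n → ‖φ n‖ ≤ Real.log n ^ j * (1 / n) := by
    intro n hn
    have hn0 : (1:ℝ) ≤ n := by exact_mod_cast hn
    rw [hφ]; simp only
    rw [norm_mul, norm_pow, Complex.norm_real, Real.norm_of_nonneg (Real.log_nonneg hn0),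
      norm_cpow_neg (by linarith)]
    have := Real.log_nonneg hn0
    gcongr
    rw [one_div, ← Real.rpow_neg_one]
    exact Real.rpow_le_rpow_of_exponent_le hn0 (by linarith)
  refine LSeries_norm_le_of_partial (summable_logChar χ j hs1) (k ^ 2) fun N hN => ?_
  have hk2 : 1 ≤ k ^ 2 := Nat.one_le_pow _ _ hk
  have hk2R : ((k ^ 2 : ℕ) : ℝ) = (k:ℝ) ^ 2 := by push_cast; ring
  have hlog2 : Real.log ((k ^ 2 : ℕ) : ℝ) = 2 * Real.log k := by
    rw [hk2R, Real.log_pow]; push_cast; ring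
  rw [Finset.range_eq_Ico, ← Finset.sum_Ico_consecutive _ (Nat.zero_le _) hN]
  have hhead : ‖∑ n ∈ Ico 0 (k ^ 2), LSeries.term (logChar χ j) s n‖
      ≤ 2 ^ (j + 1) * (1 + Real.log k) ^ (j + 1) := by
    refine (norm_sum_le _ _).trans ?_
    calc _ ≤ ∑ n ∈ insert 0 (Icc 1 (k ^ 2)), ‖LSeries.term (logChar χ j) s n‖ := by
          refine Finset.sum_le_sum_of_subset_of_nonneg ?_ fun _ _ _ => norm_nonneg _
          intro n hn; simp only [mem_Ico, mem_insert, mem_Icc] at hn ⊢; omega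
      _ = ∑ n ∈ Icc 1 (k ^ 2), ‖LSeries.term (logChar χ j) s n‖ := by
          rw [Finset.sum_insert (by simp)]; simp
      _ ≤ ∑ n ∈ Icc 1 (k ^ 2), (2 * Real.log k) ^ j * (1 / (n:ℝ)) := by
          refine Finset.sum_le_sum fun n hn => ?_
          rw [mem_Icc] at hn
          rw [hterm n (by omega), norm_mul]
          have hn0 : (1:ℝ) ≤ n := by exact_mod_cast hn.1
          have := Real.log_nonneg hn0
          calc _ ≤ 1 * ‖φ n‖ := by gcongr; exact χ.norm_le_one _
            _ ≤ Real.log n ^ j * (1 / n) := by rw [one_mul]; exact hφn n hn.1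
            _ ≤ _ := by
              gcongr
              rw [← hlog2]
              exact Real.log_le_log (by linarith) (by exact_mod_cast hn.2)
      _ ≤ (2 * Real.log k) ^ j * (1 + 2 * Real.log k) := by
          rw [← Finset.mul_sum, ← hlog2]
          gcongr
          exact harmonic_Icc_le _
      _ ≤ (2 * (1 + Real.log k)) ^ j * (2 * (1 + Real.log k)) := by
          gcongr <;> linarith
      _ = _ := by rw [← pow_succ, mul_pow]
  have htail : ‖∑ n ∈ Ico (k ^ 2) N, LSeries.term (logChar χ j) s n‖
      ≤ 14 * (j + 2) * C * (|s.im| + 1) := by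
    have e0 : ∑ n ∈ Ico (k ^ 2) N, LSeries.term (logChar χ j) s n
        = ∑ n ∈ Ico (k ^ 2) N, χ n * φ n := by
      refine Finset.sum_congr rfl fun n hn => hterm n ?_
      rw [mem_Ico] at hn; omega
    rw [e0]
    refine (norm_sum_Ico_mul_le (c := fun n => χ n) (φ := fun n => φ n)
      (norm_sum_range_char_le hχ) hN).trans ?_
    have hsq : √((k ^ 2 : ℕ) : ℝ) = k := by rw [hk2R]; exact Real.sqrt_sq (by linarith)
    have e1 : ∑ n ∈ Ico (k ^ 2) N, ‖φ n - φ (n + 1 : ℕ)‖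
        ≤ (j + 2) * C * (|s.im| + 1) * (6 / k) := by
      calc _ ≤ ∑ n ∈ Ico (k ^ 2) N, (j + 2) * C * (|s.im| + 1) * ((n:ℝ) ^ (3/2 : ℝ))⁻¹ :=
            Finset.sum_le_sum fun n hn => hdiff n (by rw [mem_Ico] at hn; omega)
        _ = (j + 2) * C * (|s.im| + 1) * ∑ n ∈ Ico (k ^ 2) N, ((n:ℝ) ^ (3/2 : ℝ))⁻¹ := by
            rw [Finset.mul_sum]
        _ ≤ _ := by
            rw [← hsq]
            gcongr
            exact sum_rpow_three_halves_le hk2 hN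
    have hN1 : 1 ≤ N := hk2.trans hN
    have hNR : (1:ℝ) ≤ N := by exact_mod_cast hN1
    have e2 : ‖φ N‖ ≤ C * (1 / k) := by
      refine (hφn N hN1).trans ?_
      have hl := Real.log_nonneg hNR
      calc Real.log N ^ j * (1 / N) ≤ (C * (N:ℝ) ^ (1/2:ℝ)) * (1 / N) := by
            gcongr
            refine le_trans ?_ (hC N hNR)
            gcongr
            linarith
        _ = C * (1 / √N) := by
            rw [← Real.sqrt_eq_rpow, mul_assoc]
            congr 1
            rw [mul_one_div, Real.sqrt_div_self', ]
        _ ≤ _ := by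
            gcongr
            rw [← hsq]
            exact Real.sqrt_le_sqrt (by exact_mod_cast hN)
    calc _ ≤ 2 * (k:ℝ) * ((j + 2) * C * (|s.im| + 1) * (6 / k) + C * (1 / k)) := by gcongr
      _ = 12 * (j + 2) * C * (|s.im| + 1) + 2 * C := by field_simp; ring
      _ ≤ _ := by
          have hT : 1 ≤ |s.im| + 1 := by linarith [abs_nonneg s.im]
          have : 1 ≤ ((j:ℝ) + 2) * (|s.im| + 1) := by nlinarith [Nat.cast_nonneg (α := ℝ) j]
          nlinarith
  have hY : 1 ≤ (1 + Real.log k) ^ (j + 1) := one_le_pow₀ (by linarith)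
  have hT : 1 ≤ |s.im| + 1 := by linarith [abs_nonneg s.im]
  calc _ ≤ 2 ^ (j + 1) * (1 + Real.log k) ^ (j + 1) + 14 * (j + 2) * C * (|s.im| + 1) :=
        (norm_add_le _ _).trans (add_le_add hhead htail)
    _ ≤ 2 ^ (j + 1) * (|s.im| + 1) * (1 + Real.log k) ^ (j + 1)
        + 14 * (j + 2) * C * (|s.im| + 1) * (1 + Real.log k) ^ (j + 1) := by
        refine add_le_add ?_ (le_mul_of_one_le_right (by positivity) hY)
        gcongr
        exact le_mul_of_one_le_right (by positivity) hT
    _ = _ := by ring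

end OmegaSq

namespace OmegaSq

open Finset

/-! ### A lower bound for `L(s, χ)` to the right of the line `Re s = 1` -/

/-- Comparison of `∑ n ^ (-s)` with the integral of `y ^ (-s)` over unit intervals. -/
lemma norm_LSeries_one_le {s : ℂ} (hs : 1 < s.re) :
    ‖LSeries 1 s‖ ≤ 2 / ‖s - 1‖ + 2 * ‖s‖ := by
  have hs1 : 1 - s ≠ 0 := by
    intro h
    have := congrArg Complex.re h
    simp at this; linarith
  have hs1' : 0 < ‖s - 1‖ := by
    rw [norm_sub_rev]; exact norm_pos_iff.2 hs1
  set Φ : ℝ → ℂ := fun y => (y : ℂ) ^ (-(s - 1)) / (1 - s) with hΦ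
  have hΦd : ∀ y : ℝ, 0 < y → HasDerivAt Φ ((y : ℂ) ^ (-s)) y := by
    intro y hy
    have h := (hasDerivAt_cpow_neg hy (s - 1)).div_const (1 - s)
    have e : -(s - 1) * (y:ℂ) ^ (-(s - 1) - 1) / (1 - s) = (y:ℂ) ^ (-s) := by
      rw [show -(s - 1) - 1 = -s by ring, neg_sub, mul_div_right_comm, div_self hs1, one_mul]
    rw [e] at h; exact h
  have hΦn : ∀ y : ℝ, 1 ≤ y → ‖Φ y‖ ≤ 1 / ‖s - 1‖ := by
    intro y hy
    rw [hΦ, norm_div, norm_cpow_neg (by linarith), norm_sub_rev]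
    gcongr
    apply Real.rpow_le_one_of_one_le_of_nonpos hy
    simp; linarith
  have hstep : ∀ n : ℕ, 1 ≤ n →
      ‖(n : ℂ) ^ (-s) - (Φ (n + 1 : ℕ) - Φ n)‖ ≤ ‖s‖ * (1 / (n:ℝ) ^ 2) := by
    intro n hn
    have hn1 : (1:ℝ) ≤ n := by exact_mod_cast hn
    have hvar : ∀ y ∈ Set.Icc (n:ℝ) (n + 1), ‖(y:ℂ) ^ (-s) - (n:ℂ) ^ (-s)‖ ≤ ‖s‖ * (1 / (n:ℝ) ^ 2) := by
      intro y hy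
      have := norm_image_sub_le_of_norm_deriv_le_segment' (f := fun y : ℝ => (y : ℂ) ^ (-s))
        (f' := fun y : ℝ => -s * (y : ℂ) ^ (-s - 1)) (C := ‖s‖ * (1 / (n:ℝ) ^ 2)) (a := n) (b := n + 1)
        (fun x hx => (hasDerivAt_cpow_neg (by linarith [hx.1]) s).hasDerivWithinAt)
        (fun x hx => ?_) y hy
      · refine this.trans (mul_le_of_le_one_right (by positivity) (by linarith [hy.2]))
      · have hx0 : (0:ℝ) < x := by linarith [hx.1]
        rw [norm_mul, norm_neg, show -s - 1 = -(s + 1) by ring, norm_cpow_neg hx0]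
        gcongr
        rw [one_div, ← Real.rpow_natCast, ← Real.rpow_neg (by positivity)]
        refine (Real.rpow_le_rpow_of_nonpos (by positivity) hx.1 (by simp; linarith)).trans ?_
        apply Real.rpow_le_rpow_of_exponent_le hn1
        simp; linarith
    have := norm_image_sub_le_of_norm_deriv_le_segment' (f := fun y : ℝ => y * (n : ℂ) ^ (-s) - Φ y)
        (f' := fun y : ℝ => (n:ℂ) ^ (-s) - (y : ℂ) ^ (-s)) (C := ‖s‖ * (1 / (n:ℝ) ^ 2)) (a := n) (b := n + 1)
        (fun x hx => ?_) (fun x hx => ?_) (n + 1) (by simp)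
    · convert this using 1
      · congr 1; push_cast; ring
      · ring
    · have h1 : HasDerivAt (fun y : ℝ => (y : ℂ) * (n : ℂ) ^ (-s)) ((n:ℂ) ^ (-s)) x := by
        simpa using (hasDerivAt_id (x:ℝ)).ofReal_comp.mul_const ((n:ℂ) ^ (-s))
      exact (h1.sub (hΦd x (by linarith [hx.1]))).hasDerivWithinAt
    · rw [norm_sub_rev]; exact hvar x ⟨hx.1, hx.2.le⟩
  refine LSeries_norm_le_of_partial (LSeriesSummable_one_iff.2 hs) 1 fun N hN => ?_
  have h1 : ∑ n ∈ range N, LSeries.term 1 s n = ∑ n ∈ Ico 1 N, (n : ℂ) ^ (-s) := by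
    rw [range_eq_Ico, Finset.sum_eq_sum_Ico_succ_bot hN]
    simp only [LSeries.term_zero, zero_add]
    refine Finset.sum_congr rfl fun n hn => ?_
    rw [LSeries.term_of_ne_zero (by have := (mem_Ico.1 hn).1; omega), Complex.cpow_neg]
    simp
  have hsq : ∑ n ∈ Ico 1 N, 1 / (n:ℝ) ^ 2 ≤ 2 := by
    have := sum_Ioo_inv_sq_le (α := ℝ) 0 N
    simp only [Nat.cast_zero, zero_add, div_one] at this
    refine le_trans (le_of_eq ?_) this
    refine Finset.sum_congr ?_ fun n _ => by rw [one_div]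
    ext n; simp [Nat.one_le_iff_ne_zero, Nat.pos_iff_ne_zero]
  have h2 : ∑ n ∈ Ico 1 N, (n : ℂ) ^ (-s) =
      ∑ n ∈ Ico 1 N, ((n : ℂ) ^ (-s) - (Φ (n + 1 : ℕ) - Φ n)) + (Φ N - Φ 1) := by
    rw [Finset.sum_sub_distrib, Finset.sum_Ico_sub (fun n : ℕ => Φ n) hN]
    simp
  rw [h1, h2]
  refine (norm_add_le _ _).trans ?_
  have h3 : ‖∑ n ∈ Ico 1 N, ((n : ℂ) ^ (-s) - (Φ (n + 1 : ℕ) - Φ n))‖ ≤ ‖s‖ * 2 := by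
    refine (norm_sum_le_of_le _ fun n hn => hstep n (mem_Ico.1 hn).1).trans ?_
    rw [← Finset.mul_sum]; gcongr
  have h4 := norm_sub_le (Φ N) (Φ 1)
  have h5 := hΦn N (by exact_mod_cast hN)
  have h6 := hΦn 1 le_rfl
  have : (2:ℝ) / ‖s - 1‖ = 1 / ‖s-1‖ + 1 / ‖s-1‖ := by ring
  linarith

lemma norm_LSeries_one_real_le {η : ℝ} (h0 : 0 < η) (h1 : η ≤ 1) :
    ‖LSeries 1 (1 + η : ℂ)‖ ≤ 6 / η := by
  have h := norm_LSeries_one_le (s := (1 + η : ℂ)) (by simp [h0])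
  have e1 : ‖(1 + η : ℂ) - 1‖ = η := by
    rw [add_sub_cancel_left, Complex.norm_real, Real.norm_of_nonneg h0.le]
  have e2 : ‖(1 + η : ℂ)‖ = 1 + η := by
    rw [show (1 + η : ℂ) = ((1 + η : ℝ) : ℂ) by push_cast; rfl, Complex.norm_real, Real.norm_of_nonneg]
    linarith
  rw [e1, e2] at h
  refine h.trans ?_
  rw [le_div_iff₀ h0, add_mul, div_mul_cancel₀ _ h0.ne']
  nlinarith

lemma prod_one_add_inv_le {k : ℕ} (hk : k ≠ 0) :
    ∏ p ∈ k.primeFactors, (1 + 1 / (p:ℝ)) ≤ 1 + Real.log k := by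
  rw [Finset.prod_one_add]
  refine le_trans ?_ (harmonic_Icc_le k)
  have hinj : Set.InjOn (fun t : Finset ℕ => ∏ p ∈ t, p) (k.primeFactors.powerset : Set (Finset ℕ)) := by
    intro t ht t' ht' h
    have key : ∀ t ⊆ k.primeFactors, (∏ p ∈ t, p).primeFactors = t := fun t ht =>
      Nat.primeFactors_prod fun p hp => Nat.prime_of_mem_primeFactors (ht hp)
    rw [← key t (by simpa using ht), ← key t' (by simpa using ht')]
    exact congrArg _ h
  have : ∑ t ∈ k.primeFactors.powerset, ∏ p ∈ t, 1 / (p:ℝ) =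
      ∑ m ∈ k.primeFactors.powerset.image (fun t : Finset ℕ => ∏ p ∈ t, p), 1 / (m:ℝ) := by
    rw [Finset.sum_image hinj]
    refine Finset.sum_congr rfl fun t _ => ?_
    rw [Finset.prod_div_distrib]; push_cast; simp
  rw [this]
  refine Finset.sum_le_sum_of_subset_of_nonneg ?_ fun _ _ _ => by positivity
  intro m hm
  obtain ⟨t, ht, rfl⟩ := Finset.mem_image.1 hm
  rw [mem_powerset] at ht
  rw [mem_Icc]
  refine ⟨Finset.prod_pos fun p hp => (Nat.prime_of_mem_primeFactors (ht hp)).pos, ?_⟩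
  refine Nat.le_of_dvd (Nat.pos_of_ne_zero hk) ?_
  exact (Finset.prod_dvd_prod_of_subset _ _ _ ht).trans (Nat.prod_primeFactors_dvd k)

lemma norm_LSeries_trivChar_le {k : ℕ} [NeZero k] {s : ℂ} (hs : 1 < s.re) :
    ‖LSeries (fun n => (1 : DirichletCharacter ℂ k) n) s‖ ≤
      (1 + Real.log k) * (2 / ‖s - 1‖ + 2 * ‖s‖) := by
  have h := DirichletCharacter.LSeries_changeLevel (one_dvd k) (1 : DirichletCharacter ℂ 1) hs
  rw [map_one] at h
  rw [h, norm_mul, mul_comm]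
  have h1 : (fun n : ℕ => (1 : DirichletCharacter ℂ 1) n) = 1 := by
    ext n
    simp [Subsingleton.elim (n : ZMod 1) 1]
  rw [h1]
  gcongr
  · refine le_trans ?_ (prod_one_add_inv_le (NeZero.ne k))
    rw [norm_prod]
    refine Finset.prod_le_prod (fun _ _ => norm_nonneg _) fun p hp => ?_
    have hp := (Nat.prime_of_mem_primeFactors hp)
    refine (norm_sub_le _ _).trans ?_
    rw [norm_one, norm_mul]
    have h2 := norm_cpow_neg (y := p) (by exact_mod_cast hp.pos) s
    have h3 : ((p:ℝ)) ^ (-s.re) ≤ 1 / p := by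
      rw [one_div, ← Real.rpow_neg_one]
      apply Real.rpow_le_rpow_of_exponent_le (by exact_mod_cast hp.one_le); linarith
    have h4 := DirichletCharacter.norm_le_one (1 : DirichletCharacter ℂ 1) (p : ZMod 1)
    rw [Complex.ofReal_natCast] at h2
    rw [h2]
    have := mul_le_of_le_one_left (Real.rpow_nonneg (Nat.cast_nonneg p) (-s.re)) h4
    linarith
  · exact norm_LSeries_one_le hs

end OmegaSq

namespace OmegaSq

open Finset

lemma logChar_zero {k : ℕ} (χ : DirichletCharacter ℂ k) : logChar χ 0 = fun n : ℕ => χ n := by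
  ext n; simp [logChar]

lemma LSeries_char_hasDerivAt {k : ℕ} (χ : DirichletCharacter ℂ k) {s : ℂ} (hs : 1 < s.re) :
    HasDerivAt (LSeries (fun n => χ n)) (-LSeries (logChar χ 1) s) s := by
  have habs : LSeries.abscissaOfAbsConv (fun n => χ n) < s.re := by
    refine lt_of_le_of_lt ?_ (EReal.coe_lt_coe_iff.2 hs)
    refine LSeries.abscissaOfAbsConv_le_of_forall_lt_LSeriesSummable' fun y hy => ?_
    have := summable_logChar χ 0 (s := (y:ℂ)) (by simpa using EReal.coe_lt_coe_iff.1 hy)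
    rwa [logChar_zero] at this
  have h := LSeries_hasDerivAt habs
  convert h using 3
  ext n
  simp [logChar, LSeries.logMul, mul_comm]

/-- Lipschitz bound for `L(s, χ)` in the strip `1 < Re s ≤ 2`. -/
lemma norm_LSeries_sub_le : ∃ C : ℝ, 1 ≤ C ∧ ∀ (k : ℕ) [NeZero k]
    (χ : DirichletCharacter ℂ k), χ ≠ 1 → ∀ (t : ℝ) (s s' : ℂ), 1 < s.re → s.re ≤ 2 → 1 < s'.re →
    s'.re ≤ 2 → |s.im| ≤ |t| → |s'.im| ≤ |t| →
    ‖LSeries (fun n => χ n) s - LSeries (fun n => χ n) s'‖ ≤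
      C * (|t| + 1) * (1 + Real.log k) ^ 2 * ‖s - s'‖ := by
  obtain ⟨C, hC1, hC⟩ := norm_LSeries_logChar_le 1
  refine ⟨C, hC1, fun k _ χ hχ t s s' h1 h2 h3 h4 h5 h6 => ?_⟩
  have hk1 : (1:ℝ) ≤ k := by exact_mod_cast NeZero.one_le
  have hlk := Real.log_nonneg hk1
  have hconv : Convex ℝ ({s : ℂ | 1 < s.re} ∩ {s | s.re ≤ 2} ∩ {s | -|t| ≤ s.im} ∩ {s | s.im ≤ |t|}) :=
    (((convex_halfSpace_re_gt 1).inter (convex_halfSpace_re_le 2)).inter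
      (convex_halfSpace_im_ge _)).inter (convex_halfSpace_im_le _)
  rw [abs_le] at h5 h6
  refine hconv.norm_image_sub_le_of_norm_hasDerivWithin_le (f' := fun s => -LSeries (logChar χ 1) s)
    (fun z hz => (LSeries_char_hasDerivAt χ hz.1.1.1).hasDerivWithinAt) (fun z hz => ?_)
    ⟨⟨⟨h3, h4⟩, h6.1⟩, h6.2⟩ ⟨⟨⟨h1, h2⟩, h5.1⟩, h5.2⟩
  rw [norm_neg]
  refine (hC k χ hχ z hz.1.1.1 hz.1.1.2).trans ?_
  have : |z.im| ≤ |t| := abs_le.2 ⟨hz.1.2, hz.2⟩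
  norm_num
  gcongr

lemma norm_LSeries_char_le {k : ℕ} (χ : DirichletCharacter ℂ k) {η : ℝ} (h0 : 0 < η) (h1 : η ≤ 1) :
    ‖LSeries (fun n => χ n) (1 + η : ℂ)‖ ≤ 6 / η := by
  refine le_trans ?_ (norm_LSeries_one_real_le h0 h1)
  have hsum1 : LSeriesSummable 1 (1 + η : ℂ) := LSeriesSummable_one_iff.2 (by simp [h0])
  have hsum2 := summable_logChar χ 0 (s := (1 + η : ℂ)) (by simp [h0])
  rw [logChar_zero] at hsum2
  have e1 : ∀ n, LSeries.term 1 (1 + η : ℂ) n = ((LSeries.term 1 (1 + η : ℂ) n).re : ℂ) ∧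
      (LSeries.term 1 (1 + η : ℂ) n).re = ‖LSeries.term 1 (1 + η : ℂ) n‖ := by
    intro n
    rcases Nat.eq_zero_or_pos n with rfl | hn
    · simp
    · have : LSeries.term 1 (1 + η : ℂ) n = (((n:ℝ) ^ (1 + η))⁻¹ : ℝ) := by
        rw [LSeries.term_of_ne_zero hn.ne']
        push_cast
        rw [Complex.ofReal_cpow (by positivity)]
        simp
      rw [this]
      refine ⟨by simp, ?_⟩
      rw [Complex.norm_real, Complex.ofReal_re, Real.norm_of_nonneg (by positivity)]
  have e2 : ‖LSeries 1 (1 + η : ℂ)‖ = ∑' n, ‖LSeries.term 1 (1 + η : ℂ) n‖ := by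
    have : LSeries 1 (1 + η : ℂ) = ((∑' n, ‖LSeries.term 1 (1 + η : ℂ) n‖ : ℝ) : ℂ) := by
      rw [LSeries, Complex.ofReal_tsum]
      exact tsum_congr fun n => by rw [← (e1 n).2]; exact (e1 n).1
    rw [this, Complex.norm_real, Real.norm_of_nonneg (tsum_nonneg fun _ => norm_nonneg _)]
  rw [e2]
  refine (norm_tsum_le_tsum_norm hsum2.norm).trans ?_
  refine hsum2.norm.tsum_le_tsum (fun n => ?_) hsum1.norm
  refine LSeries.norm_term_le _ ?_
  simpa using DirichletCharacter.norm_le_one χ (n : ZMod k)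

set_option maxHeartbeats 800000 in
/-- The `3-4-1` inequality combined with the upper bounds for the factors at `1` and `χ ^ 2`.
The hypothesis `hm` keeps track of a possible real zero near `1` through its size `m`, and is only
needed for real characters. -/
lemma norm_LSeries_ge : ∃ c : ℝ, 0 < c ∧ c ≤ 1 ∧ ∀ (k : ℕ) [NeZero k]
    (χ : DirichletCharacter ℂ k), χ ≠ 1 → ∀ m : ℝ, 0 < m → m ≤ 1 →
    (χ ^ 2 = 1 → ∀ δ : ℝ, 0 < δ → δ ≤ 1 → m ≤ ‖LSeries (fun n => χ n) (1 + δ : ℂ)‖) →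
    ∀ s : ℂ, 1 < s.re → s.re ≤ 2 →
    c ≤ ‖LSeries (fun n => χ n) s‖ * ((|s.im| + 1) * ((1 + Real.log k) ^ 3 / m)) ^ 4 := by
  obtain ⟨C, hC1, hC⟩ := norm_LSeries_sub_le
  obtain ⟨C₀, hC01, hC0⟩ := norm_LSeries_logChar_le 0
  obtain ⟨C', hC'⟩ : ∃ y, y = 8 * C + 8 * C₀ + 8 := ⟨_, rfl⟩
  have hC'1 : 1 ≤ C' := by linarith
  refine ⟨1 / (3456 * C' * C ^ 4), by positivity, ?_, ?_⟩
  · rw [div_le_one (by positivity)]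
    nlinarith [one_le_pow₀ hC1 (n := 4)]
  intro k _ χ hχ m hm0 hm1 hm s hs1 hs2
  have hk1 : (1:ℝ) ≤ k := by exact_mod_cast NeZero.one_le
  have hlk := Real.log_nonneg hk1
  obtain ⟨Y, hY⟩ : ∃ y, y = 1 + Real.log k := ⟨_, rfl⟩
  have hY1 : 1 ≤ Y := by linarith
  obtain ⟨t, ht⟩ : ∃ y, y = s.im := ⟨_, rfl⟩
  obtain ⟨T, hT⟩ : ∃ y, y = |t| + 1 := ⟨_, rfl⟩
  have hT1 : 1 ≤ T := by have := abs_nonneg t; linarith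
  obtain ⟨Z, hZ⟩ : ∃ y, y = T * (Y ^ 3 / m) := ⟨_, rfl⟩
  rw [← ht, ← hT, ← hY]
  rw [← hZ]
  replace hC := hC k χ hχ
  have hC0' := hC0 k (χ ^ 2)
  have htriv := fun (s : ℂ) (hs : 1 < s.re) => norm_LSeries_trivChar_le (k := k) hs
  simp only [← hY] at hC hC0' htriv
  have hZm : Z * m = T * Y ^ 3 := by rw [hZ]; field_simp
  have hY3 : (1:ℝ) ≤ Y ^ 3 := one_le_pow₀ hY1
  have hYm : Y ^ 3 ≤ Y ^ 3 / m := by rw [le_div_iff₀ hm0]; nlinarith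
  have hZT : T * Y ^ 3 ≤ Z := by rw [hZ]; gcongr
  have hZ1 : 1 ≤ Z := by nlinarith
  have hY23 : Y ^ 2 ≤ Y ^ 3 := pow_le_pow_right₀ hY1 (by norm_num)
  have hY13 : Y ≤ Y ^ 3 := by nlinarith [pow_le_pow_right₀ hY1 (show 1 ≤ 3 by norm_num)]
  have hZ4 : (1:ℝ) ≤ Z ^ 4 := one_le_pow₀ hZ1
  have hc4 : 1 / (3456 * C' * C ^ 4) ≤ 1 / 2 := by
    rw [div_le_div_iff₀ (by positivity) (by norm_num)]
    nlinarith [one_le_pow₀ hC1 (n := 4)]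
  by_cases hcase : χ ^ 2 = 1 ∧ |t| < m / (8 * C * Y ^ 2)
  · -- near the real axis: compare with the value at `Re s`
    obtain ⟨h2, htau⟩ := hcase
    have hd := hC t s (1 + (s.re - 1 : ℝ)) hs1 hs2 (by simpa using hs1) (by simpa using hs2)
      (by rw [ht]) (by simp)
    have hn : ‖s - (1 + (s.re - 1 : ℝ))‖ = |t| := by
      have : s - (1 + (s.re - 1 : ℝ)) = t * Complex.I := by
        apply Complex.ext <;> simp [ht]
      rw [this, norm_mul, Complex.norm_I, mul_one, Complex.norm_real, Real.norm_eq_abs]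
    rw [hn] at hd
    have hmr := hm h2 (s.re - 1) (by linarith) (by linarith)
    rw [lt_div_iff₀ (by positivity)] at htau
    have ht1 : |t| ≤ 1 := by
      by_contra! h
      nlinarith [one_le_pow₀ hY1 (n := 2), mul_pos (by linarith : (0:ℝ) < |t| - 1 + 1) (by positivity : (0:ℝ) < C * Y ^ 2), mul_le_mul hC1 (one_le_pow₀ hY1 (n := 2)) (by norm_num) (by linarith)]
    have hd2 : C * (|t| + 1) * Y ^ 2 * |t| ≤ m / 4 := by
      have : C * (|t| + 1) * Y ^ 2 * |t| ≤ C * 2 * Y ^ 2 * |t| := by gcongr; linarith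
      nlinarith
    have hrev := norm_sub_norm_le (LSeries (fun n => χ n) (1 + (s.re - 1 : ℝ)))
      (LSeries (fun n => χ n) s)
    rw [norm_sub_rev] at hrev
    have hlow : m / 2 ≤ ‖LSeries (fun n => χ n) s‖ := by linarith
    calc 1 / (3456 * C' * C ^ 4) ≤ 1 / 2 := hc4
      _ ≤ m / 2 * Z := by nlinarith
      _ ≤ m / 2 * Z ^ 4 := by gcongr; exact le_self_pow₀ hZ1 (by norm_num)
      _ ≤ _ := by gcongr
  · have hB : ∀ η : ℝ, 0 < η → η ≤ 1 →
        ‖LSeries (fun n => (χ ^ 2) n) (1 + η + 2 * Complex.I * t)‖ ≤ C' * Z := by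
      intro η h0 h1
      have hre : (1 + η + 2 * Complex.I * t : ℂ).re = 1 + η := by simp
      have him : (1 + η + 2 * Complex.I * t : ℂ).im = 2 * t := by simp
      by_cases h2 : χ ^ 2 = 1
      · have htau : m / (8 * C * Y ^ 2) ≤ |t| := by
          by_contra! h; exact hcase ⟨h2, h⟩
        rw [h2]
        refine (htriv _ (by rw [hre]; linarith)).trans ?_
        rw [div_le_iff₀ (by positivity)] at htau
        have ht0 : 0 < |t| := by
          by_contra! h
          have : |t| = 0 := le_antisymm h (abs_nonneg _)
          rw [this] at htau; linarith
        have n1 : 2 * |t| ≤ ‖(1 + η + 2 * Complex.I * t : ℂ) - 1‖ := by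
          have := Complex.abs_im_le_norm ((1 + η + 2 * Complex.I * t : ℂ) - 1)
          rw [Complex.sub_im, him] at this
          simpa [abs_mul] using this
        have n2 : ‖(1 + η + 2 * Complex.I * t : ℂ)‖ ≤ 2 * T := by
          refine (Complex.norm_le_abs_re_add_abs_im _).trans ?_
          rw [hre, him, abs_of_pos (by linarith), abs_mul, abs_two]; linarith
        have n3 : 2 / ‖(1 + η + 2 * Complex.I * t : ℂ) - 1‖ ≤ 8 * C * (Y ^ 2 / m) := by
          rw [div_le_iff₀ (by linarith)]
          calc 2 = 2 * (Y ^ 2 / m) * (m / Y ^ 2) := by field_simp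
            _ ≤ 2 * (Y ^ 2 / m) * (8 * C * |t|) := by
              gcongr
              rw [div_le_iff₀ (by positivity)]; linarith
            _ = 8 * C * (Y ^ 2 / m) * (2 * |t|) := by ring
            _ ≤ _ := by gcongr
        have n4 : Y * (Y ^ 2 / m) ≤ Z := by
          rw [hZ, ← mul_div_assoc, ← pow_succ']
          exact le_mul_of_one_le_left (by positivity) hT1
        calc Y * (2 / ‖(1 + η + 2 * Complex.I * t : ℂ) - 1‖ + 2 * ‖(1 + η + 2 * Complex.I * t : ℂ)‖)
            ≤ Y * (8 * C * (Y ^ 2 / m) + 2 * (2 * T)) := by gcongr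
          _ = 8 * C * (Y * (Y ^ 2 / m)) + 4 * (T * Y) := by ring
          _ ≤ 8 * C * Z + 4 * Z := by
            gcongr
            exact le_trans (by gcongr) hZT
          _ ≤ C' * Z := by rw [hC']; nlinarith
      · have h := hC0' h2 (1 + η + 2 * Complex.I * t) (by rw [hre]; linarith) (by rw [hre]; linarith)
        rw [logChar_zero, him, zero_add, pow_one] at h
        refine h.trans ?_
        have : |2 * t| + 1 ≤ 2 * T := by rw [abs_mul, abs_two]; linarith
        calc C₀ * (|2 * t| + 1) * Y ≤ C₀ * (2 * T) * Y ^ 3 := by gcongr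
          _ = 2 * C₀ * (T * Y ^ 3) := by ring
          _ ≤ 2 * C₀ * Z := by gcongr
          _ ≤ C' * Z := by rw [hC']; nlinarith
    have h341 : ∀ η : ℝ, 0 < η → η ≤ 1 →
        η ^ 3 ≤ 216 * C' * Z * ‖LSeries (fun n => χ n) (1 + η + Complex.I * t)‖ ^ 4 := by
      intro η h0 h1
      have h := DirichletCharacter.norm_LSeries_product_ge_one χ h0 t
      rw [norm_mul, norm_mul, norm_pow, norm_pow] at h
      have hz := norm_LSeries_char_le (1 : DirichletCharacter ℂ k) h0 h1
      have h3 : 1 ≤ (6 / η) ^ 3 * ‖LSeries (fun n => χ n) (1 + η + Complex.I * t)‖ ^ 4 * (C' * Z) := by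
        refine h.trans ?_
        gcongr
        exact hB η h0 h1
      rw [div_pow, div_mul_eq_mul_div, div_mul_eq_mul_div, le_div_iff₀ (by positivity)] at h3
      linarith
    obtain ⟨η₀, hη⟩ : ∃ y, y = 1 / (3456 * C' * C ^ 4 * Z ^ 5) := ⟨_, rfl⟩
    have hη0 : 0 < η₀ := by rw [hη]; positivity
    have hηeq : η₀ * (3456 * C' * C ^ 4 * Z ^ 5) = 1 := by rw [hη]; field_simp
    have hη1 : η₀ ≤ 1 := by
      rw [hη, div_le_one (by positivity)]
      have a1 : (1:ℝ) ≤ C' * C ^ 4 := one_le_mul_of_one_le_of_one_le hC'1 (one_le_pow₀ hC1)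
      have a2 : (1:ℝ) ≤ C' * C ^ 4 * Z ^ 5 := one_le_mul_of_one_le_of_one_le a1 (one_le_pow₀ hZ1)
      nlinarith
    have hbig : ∀ η : ℝ, η₀ ≤ η → η ≤ 1 →
        2 * (η₀ * C * Z) ≤ ‖LSeries (fun n => χ n) (1 + η + Complex.I * t)‖ := by
      intro η h0 h1
      have h := h341 η (by linarith) h1
      refine le_of_pow_le_pow_left₀ (n := 4) (by norm_num) (norm_nonneg _) ?_
      have hp : η₀ ^ 3 ≤ η ^ 3 := by gcongr
      have e : (2 * (η₀ * C * Z)) ^ 4 * (216 * C' * Z) = η₀ ^ 3 * (η₀ * (3456 * C' * C ^ 4 * Z ^ 5)) := by ring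
      rw [hηeq, mul_one] at e
      have hpos : 0 < 216 * C' * Z := by positivity
      refine le_of_mul_le_mul_right ?_ hpos
      linarith
    have hs' : s = 1 + (s.re - 1 : ℝ) + Complex.I * t := by
      apply Complex.ext <;> simp [ht]
    have hlow : η₀ * C * Z ≤ ‖LSeries (fun n => χ n) s‖ := by
      rcases le_or_gt η₀ (s.re - 1) with h | h
      · have := hbig (s.re - 1) h (by linarith)
        rw [← hs'] at this
        have : 0 < η₀ * C * Z := by positivity
        linarith
      · have h1 := hbig η₀ le_rfl hη1
        have hd := hC t (1 + η₀ + Complex.I * t) s (by simp [hη0]) (by simp; linarith) hs1 hs2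
          (by simp) (by rw [ht])
        rw [← hT] at hd
        have hn : ‖(1 + η₀ + Complex.I * t) - s‖ ≤ η₀ := by
          have : (1 + η₀ + Complex.I * t) - s = ((η₀ - (s.re - 1) : ℝ) : ℂ) := by
            conv_lhs => rw [hs']
            push_cast; ring
          rw [this, Complex.norm_real, Real.norm_of_nonneg (by linarith)]; linarith
        have hb : C * T * Y ^ 2 ≤ C * Z := by
          rw [mul_assoc]; gcongr
          exact le_trans (by gcongr) hZT
        have hd2 : C * T * Y ^ 2 * ‖(1 + η₀ + Complex.I * t) - s‖ ≤ C * Z * η₀ := by gcongr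
        have hrev := norm_sub_norm_le (LSeries (fun n => χ n) (1 + η₀ + Complex.I * t))
          (LSeries (fun n => χ n) s)
        linarith
    calc 1 / (3456 * C' * C ^ 4) = η₀ * Z * Z ^ 4 := by rw [hη]; field_simp
      _ ≤ (η₀ * C * Z) * Z ^ 4 := by
        gcongr
        have : 0 < η₀ := hη0
        exact le_mul_of_one_le_right this.le hC1
      _ ≤ _ := by gcongr

end OmegaSq

namespace OmegaSq

open Finset FourierTransform
open scoped ContDiff

/-! ### Smoothly weighted sums of `Λ χ` for small conductors -/

/-- Smooth functions of compact support on the line. -/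
def TestFn (f : ℝ → ℝ) : Prop := ContDiff ℝ ∞ f ∧ HasCompactSupport f

lemma TestFn.mul_id {f : ℝ → ℝ} (hf : TestFn f) : TestFn (fun u => u * f u) :=
  ⟨contDiff_id.mul hf.1, hf.2.mul_left⟩

open MeasureTheory in
/-- Fourier inversion for test functions, with a rapidly decaying transform. -/
lemma TestFn.fourier {f : ℝ → ℝ} (hf : TestFn f) : ∃ g : ℝ → ℂ, Continuous g ∧
    (∀ n : ℕ, Integrable (fun t => (|t| + 1) ^ n * ‖g t‖)) ∧
    ∀ u : ℝ, (f u : ℂ) = ∫ t, g t * eR (t * u) := by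
  have hc : HasCompactSupport (fun u => (f u : ℂ)) := hf.2.comp_left (g := fun x : ℝ => (x:ℂ)) (by simp)
  have hs : ContDiff ℝ ∞ (fun u => (f u : ℂ)) := Complex.ofRealCLM.contDiff.comp hf.1
  set F := hc.toSchwartzMap hs with hF
  refine ⟨⇑(𝓕 F : SchwartzMap ℝ ℂ), (𝓕 F).continuous, fun n => ?_, fun u => ?_⟩
  · have h0 : Integrable (fun t : ℝ => (2:ℝ) ^ n * (‖t‖ ^ n * ‖(𝓕 F) t‖ + ‖t‖ ^ 0 * ‖(𝓕 F) t‖)) :=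
      (((𝓕 F).integrable_pow_mul volume n).add ((𝓕 F).integrable_pow_mul volume 0)).const_mul _
    refine h0.mono' ?_ (Filter.Eventually.of_forall fun t => ?_)
    · have := (𝓕 F).continuous
      exact (by fun_prop : Continuous fun t : ℝ => (|t| + 1) ^ n * ‖(𝓕 F) t‖).aestronglyMeasurable
    · rw [Real.norm_of_nonneg (by positivity), pow_zero, ← add_mul, ← mul_assoc, Real.norm_eq_abs]
      gcongr
      have h1 := add_pow_le (abs_nonneg t) zero_le_one n
      rw [one_pow] at h1
      refine h1.trans ?_
      gcongr
      · norm_num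
      · omega
  · have h1 : (𝓕⁻ (𝓕 F)) u = F u := by rw [FourierTransform.fourierInv_fourier_eq]
    have h2 : F u = (f u : ℂ) := rfl
    rw [← h2, ← h1, SchwartzMap.fourierInv_coe, Real.fourierInv_eq']
    refine integral_congr_ae (Filter.Eventually.of_forall fun t => ?_)
    simp only [smul_eq_mul, eR]
    rw [mul_comm]
    congr 2
    simp
    ring

/-- The condition that `|L(1 + δ, χ)| ≥ m` for `0 < δ ≤ 1` in case `χ` is real (and `χ ≠ 1`). -/
def LowerBd {k : ℕ} (χ : DirichletCharacter ℂ k) (m : ℝ) : Prop :=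
  χ ≠ 1 ∧ 0 < m ∧ m ≤ 1 ∧
    (χ ^ 2 = 1 → ∀ δ : ℝ, 0 < δ → δ ≤ 1 → m ≤ ‖LSeries (fun n => χ n) (1 + δ : ℂ)‖)

/-- The coefficients `Λ(n) χ(n) (log n)^j`. -/
noncomputable def vmChar {k : ℕ} (χ : DirichletCharacter ℂ k) (j : ℕ) (n : ℕ) : ℂ :=
  (ArithmeticFunction.vonMangoldt n : ℂ) * (χ n * (Real.log n : ℂ) ^ j)

lemma norm_vmChar_le {k : ℕ} (χ : DirichletCharacter ℂ k) (j n : ℕ) :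
    ‖vmChar χ j n‖ ≤ Real.log n ^ (j + 1) := by
  rw [vmChar, norm_mul, pow_succ', Complex.norm_real,
    Real.norm_of_nonneg ArithmeticFunction.vonMangoldt_nonneg]
  exact mul_le_mul ArithmeticFunction.vonMangoldt_le_log (norm_logChar_le χ j n) (norm_nonneg _)
    (Real.log_natCast_nonneg n)

lemma summable_vmChar {k : ℕ} (χ : DirichletCharacter ℂ k) (j : ℕ) {s : ℂ} (hs : 1 < s.re) :
    LSeriesSummable (vmChar χ j) s := by
  obtain ⟨C, _, hC⟩ := log_pow_le_rpow (j + 1) (ε := (s.re - 1) / 2) (by linarith)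
  refine LSeriesSummable_of_le_const_mul_rpow (x := 1 + (s.re - 1) / 2) (by linarith)
    ⟨C, fun n hn => ?_⟩
  rw [add_sub_cancel_left]
  exact (norm_vmChar_le χ j n).trans (hC n hn)

/-- The Leibniz rule applied to `-L' = (-L'/L) L`, on the level of coefficients. -/
lemma logChar_succ {k : ℕ} (χ : DirichletCharacter ℂ k) (j : ℕ) :
    logChar χ (j + 1) = ∑ i ∈ range (j + 1),
      ((j.choose i : ℂ)) • LSeries.convolution (vmChar χ i) (logChar χ (j - i)) := by
  ext n
  simp only [Finset.sum_apply, Pi.smul_apply, smul_eq_mul, LSeries.convolution_def, Finset.mul_sum]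
  rw [Finset.sum_comm]
  rcases Nat.eq_zero_or_pos n with rfl | hn
  · simp [logChar]
  have h1 : ∀ p ∈ n.divisorsAntidiagonal, ∑ i ∈ range (j + 1),
      (j.choose i : ℂ) * (vmChar χ i p.1 * logChar χ (j - i) p.2) =
      (ArithmeticFunction.vonMangoldt p.1 : ℂ) * (χ n * (Real.log n : ℂ) ^ j) := by
    intro p hp
    have hp1 := Nat.mem_divisorsAntidiagonal.1 hp
    have ha : (p.1:ℝ) ≠ 0 := by
      have : p.1 ≠ 0 := by rintro h; rw [h] at hp1; simp at hp1; omega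
      exact_mod_cast this
    have hb : (p.2:ℝ) ≠ 0 := by
      have : p.2 ≠ 0 := by rintro h; rw [h] at hp1; simp at hp1; omega
      exact_mod_cast this
    have hl : (Real.log n : ℂ) = Real.log p.1 + Real.log p.2 := by
      rw [← hp1.1]; push_cast; rw [Real.log_mul ha hb]; push_cast; rfl
    have hc : χ n = χ p.1 * χ p.2 := by rw [← hp1.1]; push_cast; rw [map_mul]
    rw [hl, hc, add_pow, Finset.mul_sum, Finset.mul_sum]
    refine Finset.sum_congr rfl fun i _ => ?_
    rw [vmChar, logChar]; ring
  rw [Finset.sum_congr rfl h1, ← Finset.sum_mul]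
  have h2 : ∑ p ∈ n.divisorsAntidiagonal, (ArithmeticFunction.vonMangoldt p.1 : ℂ) = Real.log n := by
    rw [← ArithmeticFunction.vonMangoldt_sum (n := n)]
    push_cast
    rw [Nat.sum_divisorsAntidiagonal (fun a _ => (ArithmeticFunction.vonMangoldt a : ℂ))]
  rw [h2, logChar, pow_succ]; ring

lemma LSeries_logChar_succ {k : ℕ} (χ : DirichletCharacter ℂ k) (j : ℕ) {s : ℂ} (hs : 1 < s.re) :
    LSeries (logChar χ (j + 1)) s = ∑ i ∈ range (j + 1),
      (j.choose i : ℂ) * (LSeries (vmChar χ i) s * LSeries (logChar χ (j - i)) s) := by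
  rw [logChar_succ, LSeries_sum]
  · refine Finset.sum_congr rfl fun i _ => ?_
    rw [LSeries_smul, LSeries_convolution' (summable_vmChar χ i hs) (summable_logChar χ _ hs)]
  · intro i _
    exact ((summable_vmChar χ i hs).convolution (summable_logChar χ _ hs)).smul _

/-- Bounds for all derivatives of `L'/L`. -/
lemma norm_LSeries_vmChar_le (J : ℕ) : ∃ C : ℝ, 1 ≤ C ∧ ∀ j ≤ J, ∀ (k : ℕ) [NeZero k]
    (χ : DirichletCharacter ℂ k) (m : ℝ), LowerBd χ m → ∀ s : ℂ, 1 < s.re → s.re ≤ 2 →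
    ‖LSeries (vmChar χ j) s‖ ≤
      C * ((|s.im| + 1) * ((1 + Real.log k) ^ 3 / m)) ^ (6 * (j + 1)) := by
  obtain ⟨c, hc0, hc1, hc⟩ := norm_LSeries_ge
  choose B hB1 hB using norm_LSeries_logChar_le
  induction J using Nat.strong_induction_on with
  | _ J ih =>
  have hprev : ∃ C : ℝ, 1 ≤ C ∧ ∀ j < J, ∀ (k : ℕ) [NeZero k]
    (χ : DirichletCharacter ℂ k) (m : ℝ), LowerBd χ m → ∀ s : ℂ, 1 < s.re → s.re ≤ 2 →
    ‖LSeries (vmChar χ j) s‖ ≤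
      C * ((|s.im| + 1) * ((1 + Real.log k) ^ 3 / m)) ^ (6 * (j + 1)) := by
    rcases Nat.eq_zero_or_pos J with h | h
    · exact ⟨1, le_rfl, fun j hj => by omega⟩
    · obtain ⟨C, hC1, hC⟩ := ih (J - 1) (by omega)
      exact ⟨C, hC1, fun j hj => hC j (by omega)⟩
  obtain ⟨C, hC1, hC⟩ := hprev
  obtain ⟨S, hS⟩ : ∃ S, S = ∑ i ∈ range J, (J.choose i : ℝ) * (C * B (J - i)) := ⟨_, rfl⟩
  have hS0 : 0 ≤ S := by
    rw [hS]; exact Finset.sum_nonneg fun i _ => by have := hB1 (J - i); positivity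
  have hBJ := hB1 (J + 1)
  have hA : 1 ≤ (B (J + 1) + S) / c := by rw [le_div_iff₀ hc0]; linarith
  refine ⟨C + (B (J + 1) + S) / c, by linarith, fun j hj k _ χ m hm s hs1 hs2 => ?_⟩
  have hk1 : (1:ℝ) ≤ k := by exact_mod_cast NeZero.one_le
  have hlk := Real.log_nonneg hk1
  obtain ⟨hχ, hm0, hm1, hmm⟩ := id hm
  have hcs := hc k χ hχ m hm0 hm1 hmm s hs1 hs2
  have hPb : ∀ i, ‖LSeries (logChar χ i) s‖ ≤
      B i * ((|s.im| + 1) * ((1 + Real.log k) ^ 3 / m)) ^ (i + 1) := by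
    intro i
    refine (hB i k χ hχ s hs1 hs2).trans ?_
    rw [mul_assoc, mul_pow]
    have hB' := hB1 i
    gcongr
    · exact le_self_pow₀ (by have := abs_nonneg s.im; linarith) (by omega)
    · rw [le_div_iff₀ hm0]
      have a1 : (1 + Real.log k) ≤ (1 + Real.log k) ^ 3 := le_self_pow₀ (by linarith) (by norm_num)
      nlinarith
  have hD := fun i hi => hC i hi k χ m hm s hs1 hs2
  have hZ1 : 1 ≤ (|s.im| + 1) * ((1 + Real.log k) ^ 3 / m) := by
    refine one_le_mul_of_one_le_of_one_le (by have := abs_nonneg s.im; linarith) ?_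
    rw [one_le_div hm0]
    exact hm1.trans (one_le_pow₀ (by linarith))
  have hrec := LSeries_logChar_succ χ J hs1
  generalize (|s.im| + 1) * ((1 + Real.log k) ^ 3 / m) = Z at *
  rcases hj.lt_or_eq with hj | rfl
  · refine (hD j hj).trans ?_
    gcongr; linarith
  rw [Finset.sum_range_succ] at hrec
  simp only [Nat.choose_self, Nat.cast_one, one_mul, Nat.sub_self] at hrec
  have hrec' : LSeries (vmChar χ j) s * LSeries (logChar χ 0) s = LSeries (logChar χ (j + 1)) s -
      ∑ i ∈ range j, (j.choose i : ℂ) * (LSeries (vmChar χ i) s * LSeries (logChar χ (j - i)) s) := by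
    rw [hrec]; ring
  have hup : ‖LSeries (vmChar χ j) s‖ * ‖LSeries (logChar χ 0) s‖ ≤ (B (j + 1) + S) * Z ^ (6 * j + 2) := by
    rw [← norm_mul, hrec', add_mul]
    refine (norm_sub_le _ _).trans (add_le_add ?_ ?_)
    · refine (hPb (j + 1)).trans ?_
      exact mul_le_mul_of_nonneg_left (pow_le_pow_right₀ hZ1 (by omega)) (by linarith)
    · rw [hS, Finset.sum_mul]
      refine norm_sum_le_of_le _ fun i hi => ?_
      have hi := mem_range.1 hi
      rw [norm_mul, norm_mul, Complex.norm_natCast]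
      have hB' := hB1 (j - i)
      calc (j.choose i : ℝ) * (‖LSeries (vmChar χ i) s‖ * ‖LSeries (logChar χ (j - i)) s‖)
          ≤ (j.choose i : ℝ) * ((C * Z ^ (6 * (i + 1))) * (B (j - i) * Z ^ (j - i + 1))) := by
            gcongr
            · exact hD i hi
            · exact hPb _
        _ = (j.choose i : ℝ) * (C * B (j - i)) * Z ^ (6 * (i + 1) + (j - i + 1)) := by
            rw [pow_add]; ring
        _ ≤ _ := by
            exact mul_le_mul_of_nonneg_left (pow_le_pow_right₀ hZ1 (by omega)) (by positivity)
  rw [logChar_zero] at hup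
  have h1 : ‖LSeries (vmChar χ j) s‖ * c ≤ (B (j + 1) + S) * Z ^ (6 * j + 6) := by
    calc ‖LSeries (vmChar χ j) s‖ * c
        ≤ ‖LSeries (vmChar χ j) s‖ * (‖LSeries (fun n => χ n) s‖ * Z ^ 4) := by gcongr
      _ = (‖LSeries (vmChar χ j) s‖ * ‖LSeries (fun n => χ n) s‖) * Z ^ 4 := by ring
      _ ≤ ((B (j + 1) + S) * Z ^ (6 * j + 2)) * Z ^ 4 := by gcongr
      _ = _ := by ring
  rw [← le_div_iff₀ hc0] at h1
  refine h1.trans ?_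
  rw [show 6 * (j + 1) = 6 * j + 6 by ring, add_mul, div_eq_mul_inv, div_eq_mul_inv]
  have : 0 ≤ C * Z ^ (6 * j + 6) := by positivity
  nlinarith

/-- The smooth weight `n ^ (-1 - 1/L) f(log n - L)`, concentrated at `log n = L + O(1)`. -/
noncomputable def wt (f : ℝ → ℝ) (L y : ℝ) : ℝ := y ^ (-(1 + 1 / L)) * f (Real.log y - L)

lemma TestFn.finite_support {f : ℝ → ℝ} (hf : TestFn f) (L : ℝ) :
    {n : ℕ | wt f L n ≠ 0}.Finite := by
  obtain ⟨R, hR⟩ := hf.2.isCompact.isBounded.subset_closedBall 0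
  refine (Set.finite_le_nat ⌊Real.exp (L + R)⌋₊).subset fun n hn => ?_
  simp only [Set.mem_ofPred_eq, wt, ne_eq, mul_eq_zero, not_or] at hn ⊢
  have h1 := hR (subset_tsupport f hn.2)
  rw [mem_closedBall_zero_iff, Real.norm_eq_abs, abs_le] at h1
  refine Nat.le_floor ?_
  rcases Nat.eq_zero_or_pos n with rfl | h0
  · simp; positivity
  · rw [← Real.log_le_iff_le_exp (by exact_mod_cast h0)]; linarith [h1.2]

lemma TestFn.summable_mul {f : ℝ → ℝ} (hf : TestFn f) (L : ℝ) (a : ℕ → ℂ) :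
    Summable (fun n : ℕ => a n * (wt f L n : ℂ)) := by
  refine summable_of_hasFiniteSupport ((hf.finite_support L).subset fun n hn => ?_)
  simp only [Function.mem_support, ne_eq, mul_eq_zero, not_or, Complex.ofReal_eq_zero] at hn
  exact hn.2

open MeasureTheory in
lemma norm_tsum_vmChar_le {f : ℝ → ℝ} (hf : TestFn f) (i : ℕ) : ∃ C : ℝ, 1 ≤ C ∧ ∀ (L : ℝ), 1 ≤ L →
    ∀ (k : ℕ) [NeZero k] (χ : DirichletCharacter ℂ k) (m : ℝ), LowerBd χ m →
    ‖∑' n : ℕ, vmChar χ i n * (wt f L n : ℂ)‖ ≤ C * ((1 + Real.log k) ^ 3 / m) ^ (6 * (i + 1)) := by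
  obtain ⟨g, hgc, hgi, hg⟩ := hf.fourier
  obtain ⟨C, hC1, hC⟩ := norm_LSeries_vmChar_le i
  have hI0 := hgi 0
  simp only [pow_zero, one_mul] at hI0
  obtain ⟨I, hI⟩ : ∃ I, I = ∫ t, (|t| + 1) ^ (6 * (i + 1)) * ‖g t‖ := ⟨_, rfl⟩
  have hI' : 0 ≤ I := by rw [hI]; exact integral_nonneg fun t => by positivity
  refine ⟨C * (2 * Real.pi) ^ (6 * (i + 1)) * I + 1, by
    have : 0 ≤ C * (2 * Real.pi) ^ (6 * (i + 1)) * I := by positivity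
    linarith, fun L hL k _ χ m hm => ?_⟩
  have hk1 : (1:ℝ) ≤ k := by exact_mod_cast NeZero.one_le
  have hlk := Real.log_nonneg hk1
  have hm0 := hm.2.1
  have hW0 : 0 ≤ (1 + Real.log k) ^ 3 / m := by positivity
  have hL0 : 0 < L := by linarith
  obtain ⟨s, hs⟩ : ∃ s : ℝ → ℂ, s = fun t => 1 + (1 / L : ℝ) - (2 * Real.pi * t : ℝ) * Complex.I := ⟨_, rfl⟩
  have hsre : ∀ t, (s t).re = 1 + 1 / L := fun t => by simp [hs]
  have hsim : ∀ t, (s t).im = -(2 * Real.pi * t) := fun t => by simp [hs]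
  have hs1 : ∀ t, 1 < (s t).re := fun t => by
    rw [hsre]; have : 0 < 1 / L := by positivity
    linarith
  have hs2 : ∀ t, (s t).re ≤ 2 := fun t => by
    rw [hsre]; have : 1 / L ≤ 1 := by rw [div_le_one hL0]; exact hL
    linarith
  have hterm : ∀ n t, LSeries.term (vmChar χ i) (s t) n * eR (-(t * L)) =
      vmChar χ i n * ((n:ℝ) ^ (-(1 + 1 / L)) : ℝ) * eR (t * (Real.log n - L)) := by
    intro n t
    rcases Nat.eq_zero_or_pos n with rfl | hn
    · simp [vmChar]
    · have hn' : (n:ℂ) ≠ 0 := by exact_mod_cast hn.ne'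
      rw [LSeries.term_of_ne_zero hn.ne', div_eq_mul_inv, ← Complex.cpow_neg, mul_assoc, mul_assoc]
      congr 1
      rw [Complex.ofReal_cpow (by positivity), Complex.ofReal_natCast, Complex.cpow_def_of_ne_zero hn',
        Complex.cpow_def_of_ne_zero hn', eR, eR, ← Complex.exp_add, ← Complex.exp_add,
        ← Complex.natCast_log, hs]
      congr 1
      push_cast
      ring
  have hmeasure : ∀ n, Integrable (fun t => g t * (LSeries.term (vmChar χ i) (s t) n * eR (-(t * L)))) := by
    intro n
    simp only [hterm]
    have hcont : Continuous fun t : ℝ => eR (t * (Real.log n - L)) := by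
      unfold eR; fun_prop
    refine (hI0.mul_const ‖vmChar χ i n * ((n:ℝ) ^ (-(1 + 1 / L)) : ℝ)‖).mono'
      (by fun_prop) (Filter.Eventually.of_forall fun t => ?_)
    rw [norm_mul, norm_mul, norm_eR, mul_one]
  have hnorm : ∀ n t, ‖g t * (LSeries.term (vmChar χ i) (s t) n * eR (-(t * L)))‖ =
      ‖LSeries.term (vmChar χ i) (s 0) n‖ * ‖g t‖ := by
    intro n t
    rw [norm_mul, norm_mul, norm_eR, mul_one, mul_comm, LSeries.norm_term_eq, LSeries.norm_term_eq,
      hsre, hsre]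
  have hsum := hasSum_integral_of_summable_integral_norm hmeasure (by
    simp only [hnorm, integral_const_mul]
    exact ((summable_vmChar χ i (hs1 0)).norm).mul_right _)
  have hA : ∑' n : ℕ, vmChar χ i n * (wt f L n : ℂ) =
      ∫ t, g t * (LSeries (vmChar χ i) (s t) * eR (-(t * L))) := by
    have e1 : (fun n : ℕ => vmChar χ i n * (wt f L n : ℂ)) = fun n =>
        ∫ t, g t * (LSeries.term (vmChar χ i) (s t) n * eR (-(t * L))) := by
      ext n
      simp only [hterm]
      rw [wt, Complex.ofReal_mul, hg, ← integral_const_mul, ← integral_const_mul]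
      refine integral_congr_ae (Filter.Eventually.of_forall fun t => ?_)
      simp only
      ring
    rw [e1, hsum.tsum_eq]
    refine integral_congr_ae (Filter.Eventually.of_forall fun t => ?_)
    simp only
    rw [tsum_mul_left, tsum_mul_right, LSeries]
  rw [hA]
  refine (norm_integral_le_integral_norm _).trans ?_
  calc ∫ t, ‖g t * (LSeries (vmChar χ i) (s t) * eR (-(t * L)))‖
      ≤ ∫ t, (C * (2 * Real.pi) ^ (6 * (i + 1)) * ((1 + Real.log k) ^ 3 / m) ^ (6 * (i + 1))) *
          ((|t| + 1) ^ (6 * (i + 1)) * ‖g t‖) := by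
        refine integral_mono_of_nonneg (Filter.Eventually.of_forall fun t => norm_nonneg _)
          ((hgi _).const_mul _) (Filter.Eventually.of_forall fun t => ?_)
        simp only
        rw [norm_mul, norm_mul, norm_eR, mul_one]
        have h := hC i le_rfl k χ m hm (s t) (hs1 t) (hs2 t)
        have h2 : |(s t).im| + 1 ≤ 2 * Real.pi * (|t| + 1) := by
          rw [hsim, abs_neg, abs_mul, abs_of_pos (by positivity)]
          have := Real.pi_gt_three
          linarith
        have h3 : C * ((|(s t).im| + 1) * ((1 + Real.log k) ^ 3 / m)) ^ (6 * (i + 1)) ≤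
          C * (2 * Real.pi * (|t| + 1) * ((1 + Real.log k) ^ 3 / m)) ^ (6 * (i + 1)) := by gcongr
        calc ‖g t‖ * ‖LSeries (vmChar χ i) (s t)‖
            ≤ ‖g t‖ * (C * (2 * Real.pi * (|t| + 1) * ((1 + Real.log k) ^ 3 / m)) ^ (6 * (i + 1))) := by
              gcongr; exact h.trans h3
          _ = _ := by rw [mul_pow, mul_pow]; ring
    _ = C * (2 * Real.pi) ^ (6 * (i + 1)) * I * ((1 + Real.log k) ^ 3 / m) ^ (6 * (i + 1)) := by
        rw [integral_const_mul, ← hI]; ring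
    _ ≤ _ := by gcongr; linarith

/-- Repeated use of `log n · f(log n - L) = L f(log n - L) + (u f)(log n - L)` turns the bounds for
the derivatives of `L'/L` into an arbitrary power saving in `L`. -/
lemma norm_tsum_vmChar_le_pow (j : ℕ) : ∀ (i : ℕ) {f : ℝ → ℝ}, TestFn f → ∃ C : ℝ, 1 ≤ C ∧
    ∀ (L : ℝ), 1 ≤ L → ∀ (k : ℕ) [NeZero k] (χ : DirichletCharacter ℂ k) (m : ℝ), LowerBd χ m →
    ‖∑' n : ℕ, vmChar χ i n * (wt f L n : ℂ)‖ ≤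
      C * ((1 + Real.log k) ^ 3 / m) ^ (6 * (i + j + 1)) / L ^ j := by
  induction j with
  | zero =>
    intro i f hf
    obtain ⟨C, hC1, hC⟩ := norm_tsum_vmChar_le hf i
    refine ⟨C, hC1, fun L hL k _ χ m hm => ?_⟩
    simpa using hC L hL k χ m hm
  | succ j ih =>
    intro i f hf
    obtain ⟨C, hC1, hC⟩ := ih (i + 1) hf
    obtain ⟨D, hD1, hD⟩ := ih i hf.mul_id
    refine ⟨C + D, by linarith, fun L hL k _ χ m hm => ?_⟩
    have hL0 : (0:ℝ) < L := by linarith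
    have hLc : (L:ℂ) ≠ 0 := by exact_mod_cast hL0.ne'
    have hk1 : (1:ℝ) ≤ k := by exact_mod_cast NeZero.one_le
    have hlk := Real.log_nonneg hk1
    have hm0 := hm.2.1
    have hW1 : 1 ≤ (1 + Real.log k) ^ 3 / m := by
      rw [one_le_div hm0]
      exact hm.2.2.1.trans (one_le_pow₀ (by linarith))
    have h1 := hC L hL k χ m hm
    have h2 := hD L hL k χ m hm
    have e : ∑' n : ℕ, vmChar χ (i + 1) n * (wt f L n : ℂ) =
        L * ∑' n : ℕ, vmChar χ i n * (wt f L n : ℂ) +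
        ∑' n : ℕ, vmChar χ i n * (wt (fun u => u * f u) L n : ℂ) := by
      rw [← tsum_mul_left, ← ((hf.summable_mul L _).mul_left _).tsum_add (hf.mul_id.summable_mul L _)]
      refine tsum_congr fun n => ?_
      simp only [vmChar, wt]
      push_cast
      ring
    have e2 : ∑' n : ℕ, vmChar χ i n * (wt f L n : ℂ) =
        (∑' n : ℕ, vmChar χ (i + 1) n * (wt f L n : ℂ) -
        ∑' n : ℕ, vmChar χ i n * (wt (fun u => u * f u) L n : ℂ)) / L := by
      rw [e]; field_simp; ring
    rw [e2, norm_div, Complex.norm_real, Real.norm_of_nonneg hL0.le, pow_succ L j, ← div_div]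
    gcongr
    refine (norm_sub_le _ _).trans ?_
    rw [add_mul, add_div]
    refine add_le_add (h1.trans ?_) (h2.trans ?_)
    · rw [show i + 1 + j + 1 = i + (j + 1) + 1 by ring]
    · refine div_le_div_of_nonneg_right ?_ (by positivity)
      exact mul_le_mul_of_nonneg_left (pow_le_pow_right₀ hW1 (by omega)) (by linarith)

end OmegaSq

namespace OmegaSq

open Finset

/-! ### Scales without exceptional real characters -/

/-- The Lipschitz bound extended to the point `1`. -/
lemma norm_LFunction_one_sub_le : ∃ C : ℝ, 1 ≤ C ∧ ∀ (k : ℕ) [NeZero k]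
    (χ : DirichletCharacter ℂ k), χ ≠ 1 → ∀ δ : ℝ, 0 < δ → δ ≤ 1 →
    ‖χ.LFunction 1 - LSeries (fun n => χ n) (1 + δ : ℂ)‖ ≤ C * (1 + Real.log k) ^ 2 * δ := by
  obtain ⟨C, hC1, hC⟩ := norm_LSeries_sub_le
  refine ⟨C, hC1, fun k _ χ hχ δ h0 h1 => ?_⟩
  have hcont : Filter.Tendsto (fun η : ℝ => ‖χ.LFunction (1 + η : ℂ) - LSeries (fun n => χ n) (1 + δ : ℂ)‖)
      (nhdsWithin 0 (Set.Ioi 0)) (nhds ‖χ.LFunction 1 - LSeries (fun n => χ n) (1 + δ : ℂ)‖) := by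
    have hc : Continuous (fun η : ℝ => ‖χ.LFunction (1 + η : ℂ) - LSeries (fun n => χ n) (1 + δ : ℂ)‖) := by
      have := (DirichletCharacter.differentiable_LFunction hχ).continuous
      fun_prop
    have := hc.tendsto 0
    simp only [Complex.ofReal_zero, add_zero] at this
    exact this.mono_left nhdsWithin_le_nhds
  refine le_of_tendsto hcont ?_
  have hmem : Set.Ioo (0:ℝ) δ ∈ nhdsWithin 0 (Set.Ioi 0) := Ioo_mem_nhdsGT h0
  filter_upwards [hmem] with η hη
  rw [DirichletCharacter.LFunction_eq_LSeries χ (by simp [hη.1])]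
  have h := hC k χ hχ 0 (1 + η) (1 + δ) (by simp [hη.1]) (by simp; linarith [hη.2]) (by simp [h0])
    (by simp; linarith) (by simp) (by simp)
  refine h.trans ?_
  have hn : ‖((1:ℂ) + η) - (1 + δ)‖ ≤ δ := by
    rw [show ((1:ℂ) + η) - (1 + δ) = ((η - δ : ℝ) : ℂ) by push_cast; ring, Complex.norm_real,
      Real.norm_eq_abs, abs_le]
    constructor <;> linarith [hη.1, hη.2]
  simp only [abs_zero, zero_add, mul_one]
  gcongr

lemma real_char_value {k : ℕ} {χ : DirichletCharacter ℂ k} (h : χ ^ 2 = 1) (n : ℕ)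
    (hn : IsUnit (n : ZMod k)) : χ n = 1 ∨ χ n = -1 := by
  have h1 : (χ n) ^ 2 = 1 := by
    have := congrArg (fun ψ : DirichletCharacter ℂ k => ψ n) h
    simp only [MulChar.pow_apply' χ (two_ne_zero)] at this
    rw [this, MulChar.one_apply hn]
  rw [← sub_eq_zero, show χ n ^ 2 - 1 = (χ n - 1) * (χ n + 1) by ring, mul_eq_zero] at h1
  exact h1.imp (fun h => sub_eq_zero.1 h) (fun h => eq_neg_of_add_eq_zero_left h)

/-- The Euler product of `L(s, 1) L(s, χ₁) L(s, χ₂) L(s, χ₁ χ₂)` for real `χ₁`, `χ₂` and real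
`s > 1` has all its factors at least `1`. -/
lemma one_le_norm_four_LSeries {N : ℕ} [NeZero N] {χ₁ χ₂ : DirichletCharacter ℂ N}
    (h₁ : χ₁ ^ 2 = 1) (h₂ : χ₂ ^ 2 = 1) {δ : ℝ} (hδ : 0 < δ) :
    1 ≤ ‖LSeries (fun n => (1 : DirichletCharacter ℂ N) n) (1 + δ : ℂ) * LSeries (fun n => χ₁ n) (1 + δ : ℂ) *
      (LSeries (fun n => χ₂ n) (1 + δ : ℂ) * LSeries (fun n => (χ₁ * χ₂) n) (1 + δ : ℂ))‖ := by
  have hs : 1 < (1 + δ : ℂ).re := by simp [hδ]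
  have hp := ((DirichletCharacter.LSeries_eulerProduct_hasProd (1 : DirichletCharacter ℂ N) hs).mul
    (DirichletCharacter.LSeries_eulerProduct_hasProd χ₁ hs)).mul
    ((DirichletCharacter.LSeries_eulerProduct_hasProd χ₂ hs).mul
    (DirichletCharacter.LSeries_eulerProduct_hasProd (χ₁ * χ₂) hs))
  refine ge_of_tendsto hp.norm (Filter.Eventually.of_forall fun S => ?_)
  simp only
  rw [← Finset.prod_const_one (s := S)]
  refine Finset.prod_le_prod (fun _ _ => zero_le_one) fun p _ => ?_
  by_cases hu : IsUnit ((p : ℕ) : ZMod N)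
  · have hx : ((p:ℕ) : ℂ) ^ (-(1 + δ) : ℂ) = (((p:ℕ):ℝ) ^ (-(1 + δ)) : ℝ) := by
      rw [Complex.ofReal_cpow (by positivity)]; push_cast; rfl
    have hp2 : (1:ℝ) < ((p:ℕ):ℝ) := by exact_mod_cast p.2.one_lt
    have hx1 : ((p:ℕ):ℝ) ^ (-(1 + δ)) < 1 := Real.rpow_lt_one_of_one_lt_of_neg hp2 (by linarith)
    have hx0 : 0 < ((p:ℕ):ℝ) ^ (-(1 + δ)) := by positivity
    rw [hx, MulChar.one_apply hu, MulChar.mul_apply]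
    generalize ((p:ℕ):ℝ) ^ (-(1 + δ)) = x at hx0 hx1
    have hy : ∀ y : ℝ, 0 < y → y ≤ 1 → 1 ≤ ‖((y:ℂ))⁻¹‖ := by
      intro y hy0 hy1
      rw [norm_inv, Complex.norm_real, Real.norm_of_nonneg hy0.le]
      exact (one_le_inv₀ hy0).2 hy1
    have h1x : 0 < 1 - x := by linarith
    rcases real_char_value h₁ p hu with ha | ha <;> rcases real_char_value h₂ p hu with hb | hb <;>
      rw [ha, hb]
    · have := hy ((1 - x) * (1 - x) * ((1 - x) * (1 - x))) (by positivity) (by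
        have : (1 - x) * (1 - x) ≤ 1 := by nlinarith
        nlinarith [mul_pos h1x h1x])
      push_cast at this
      simpa [mul_inv] using this
    all_goals
      have := hy ((1 - x) * (1 + x) * ((1 - x) * (1 + x))) (by positivity) (by
        have : (1 - x) * (1 + x) ≤ 1 := by nlinarith
        have : 0 < (1 - x) * (1 + x) := by positivity
        nlinarith)
      push_cast at this
      refine this.trans (le_of_eq ?_)
      congr 1
      simp only [mul_inv]
      ring_nf
  · have hz : ∀ χ : DirichletCharacter ℂ N, χ (p : ℕ) = 0 := fun χ => χ.map_nonunit hu
    rw [hz, hz, hz, hz]; simp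

lemma repulsion : ∃ c : ℝ, 0 < c ∧ ∀ (N : ℕ) [NeZero N] (χ₁ χ₂ : DirichletCharacter ℂ N),
    χ₁ ≠ 1 → χ₂ ≠ 1 → χ₁ * χ₂ ≠ 1 → χ₁ ^ 2 = 1 → χ₂ ^ 2 = 1 →
    c / (1 + Real.log N) ^ 3 ≤ ‖χ₁.LFunction 1‖ ∨ c / (1 + Real.log N) ^ 3 ≤ ‖χ₂.LFunction 1‖ := by
  obtain ⟨C, hC1, hC⟩ := norm_LFunction_one_sub_le
  obtain ⟨B, hB1, hB⟩ := norm_LSeries_logChar_le 0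
  refine ⟨1 / (48 * B * C), by positivity, fun N _ χ₁ χ₂ h1 h2 h3 h4 h5 => ?_⟩
  by_contra! hcon
  obtain ⟨hl1, hl2⟩ := hcon
  have hk1 : (1:ℝ) ≤ N := by exact_mod_cast NeZero.one_le
  have hlk := Real.log_nonneg hk1
  obtain ⟨Y, hY⟩ : ∃ Y, Y = 1 + Real.log N := ⟨_, rfl⟩
  have hY1 : 1 ≤ Y := by linarith
  obtain ⟨δ, hδ⟩ : ∃ δ : ℝ, δ = 1 / (48 * B * C ^ 2 * Y ^ 5) := ⟨_, rfl⟩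
  have hδ0 : 0 < δ := by rw [hδ]; positivity
  have hδ1 : δ ≤ 1 := by
    rw [hδ, div_le_one (by positivity)]
    have a1 : 1 ≤ B * C ^ 2 := one_le_mul_of_one_le_of_one_le hB1 (one_le_pow₀ hC1)
    have a2 : 1 ≤ B * C ^ 2 * Y ^ 5 := one_le_mul_of_one_le_of_one_le a1 (one_le_pow₀ hY1)
    linarith
  have hb : 1 / (48 * B * C) / Y ^ 3 = C * Y ^ 2 * δ := by rw [hδ]; field_simp
  have hup : ∀ χ : DirichletCharacter ℂ N, χ ≠ 1 → ‖χ.LFunction 1‖ < 1 / (48 * B * C) / (1 + Real.log N) ^ 3 →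
      ‖LSeries (fun n => χ n) (1 + δ : ℂ)‖ ≤ 2 * (C * Y ^ 2 * δ) := by
    intro χ hχ hl
    have := hC N χ hχ δ hδ0 hδ1
    rw [← hY] at this hl
    rw [hb] at hl
    have h := norm_sub_norm_le (LSeries (fun n => χ n) (1 + δ : ℂ)) (χ.LFunction 1)
    rw [norm_sub_rev] at h
    linarith
  have h12 : ‖LSeries (fun n => (χ₁ * χ₂) n) (1 + δ : ℂ)‖ ≤ B * Y := by
    have := hB N (χ₁ * χ₂) h3 (1 + δ : ℂ) (by simp [hδ0]) (by simp; linarith)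
    rw [logChar_zero, ← hY] at this
    simpa using this
  have h0 := norm_LSeries_char_le (1 : DirichletCharacter ℂ N) hδ0 hδ1
  have hfour := one_le_norm_four_LSeries h4 h5 hδ0
  rw [norm_mul, norm_mul, norm_mul] at hfour
  have hfin : (1:ℝ) ≤ 6 / δ * (2 * (C * Y ^ 2 * δ)) * (2 * (C * Y ^ 2 * δ) * (B * Y)) := by
    refine hfour.trans ?_
    gcongr
    · exact hup χ₁ h1 hl1
    · exact hup χ₂ h2 hl2
  have e : 6 / δ * (2 * (C * Y ^ 2 * δ)) * (2 * (C * Y ^ 2 * δ) * (B * Y)) = 1 / 2 := by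
    rw [hδ]; field_simp; norm_num
  rw [e] at hfin
  norm_num at hfin

lemma norm_LFunction_changeLevel_le {M N : ℕ} [NeZero M] [NeZero N] (hMN : M ∣ N)
    (χ : DirichletCharacter ℂ M) (hχ : χ ≠ 1) :
    ‖(DirichletCharacter.changeLevel hMN χ).LFunction 1‖ ≤ (1 + Real.log N) * ‖χ.LFunction 1‖ ∧
    ‖χ.LFunction 1‖ ≤ N.divisors.card * ‖(DirichletCharacter.changeLevel hMN χ).LFunction 1‖ := by
  rw [DirichletCharacter.LFunction_changeLevel hMN χ (Or.inl hχ), norm_mul, norm_prod]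
  have hp : ∀ p ∈ N.primeFactors, ‖χ p * (p:ℂ) ^ (-1 : ℂ)‖ ≤ 1 / (p:ℝ) := by
    intro p hp
    rw [Complex.cpow_neg_one, norm_mul, norm_inv, Complex.norm_natCast, one_div]
    exact mul_le_of_le_one_left (by positivity) (χ.norm_le_one _)
  constructor
  · rw [mul_comm]
    gcongr
    refine le_trans ?_ (prod_one_add_inv_le (NeZero.ne N))
    refine Finset.prod_le_prod (fun _ _ => norm_nonneg _) fun p hpp => ?_
    refine (norm_sub_le _ _).trans ?_
    rw [norm_one]; linarith [hp p hpp]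
  · have hlow : 1 / (N.divisors.card : ℝ) ≤ ∏ p ∈ N.primeFactors, ‖1 - χ p * (p:ℂ) ^ (-1 : ℂ)‖ := by
      have ht : ((N.totient : ℚ) : ℝ) = ((N * ∏ p ∈ N.primeFactors, (1 - (p:ℚ)⁻¹) : ℚ) : ℝ) := by
        rw [Nat.totient_eq_mul_prod_factors]
      push_cast at ht
      have hN0 : (0:ℝ) < N := by exact_mod_cast NeZero.pos N
      have h1 := inv_totient_le N NeZero.one_le
      have hd0 : (0:ℝ) < N.divisors.card := by
        exact_mod_cast Finset.card_pos.2 ⟨1, by simp [NeZero.ne N]⟩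
      have hφ0 : (0:ℝ) < N.totient := by exact_mod_cast Nat.totient_pos.2 (NeZero.pos N)
      rw [div_le_div_iff₀ hφ0 hN0, ht] at h1
      have h2 : 1 / (N.divisors.card : ℝ) ≤ ∏ p ∈ N.primeFactors, (1 - (p:ℝ)⁻¹) := by
        rw [div_le_iff₀ hd0]
        refine le_of_mul_le_mul_left ?_ hN0
        linarith
      refine h2.trans (Finset.prod_le_prod (fun p hpp => ?_) fun p hpp => ?_)
      · have : (1:ℝ) ≤ p := by exact_mod_cast (Nat.prime_of_mem_primeFactors hpp).one_le
        rw [sub_nonneg]; exact inv_le_one_of_one_le₀ this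
      · have := norm_sub_norm_le (1:ℂ) (χ p * (p:ℂ) ^ (-1 : ℂ))
        rw [norm_one] at this
        have := hp p hpp
        rw [one_div] at this
        linarith
    have hd0 : (0:ℝ) < N.divisors.card := by
      exact_mod_cast Finset.card_pos.2 ⟨1, by simp [NeZero.ne N]⟩
    calc ‖χ.LFunction 1‖ = N.divisors.card * (‖χ.LFunction 1‖ * (1 / N.divisors.card)) := by field_simp
      _ ≤ _ := by gcongr

/-- Two real characters cannot both have a very small value at `1`, unless they are induced by the
same primitive character, and then the values at `1` are comparable. -/
lemma real_pair : ∃ c : ℝ, 0 < c ∧ ∀ (k₁ k₂ : ℕ) [NeZero k₁] [NeZero k₂]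
    (χ₁ : DirichletCharacter ℂ k₁) (χ₂ : DirichletCharacter ℂ k₂),
    χ₁ ≠ 1 → χ₂ ≠ 1 → χ₁ ^ 2 = 1 → χ₂ ^ 2 = 1 →
    ‖χ₁.LFunction 1‖ ≤ (k₁ * k₂).divisors.card * (1 + Real.log (k₁ * k₂ : ℕ)) * ‖χ₂.LFunction 1‖ ∨
    c / (1 + Real.log (k₁ * k₂ : ℕ)) ^ 4 ≤ ‖χ₁.LFunction 1‖ ∨
    c / (1 + Real.log (k₁ * k₂ : ℕ)) ^ 4 ≤ ‖χ₂.LFunction 1‖ := by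
  obtain ⟨c, hc0, hc⟩ := repulsion
  refine ⟨c, hc0, fun k₁ k₂ _ _ χ₁ χ₂ h1 h2 h3 h4 => ?_⟩
  have hN : NeZero (k₁ * k₂) := ⟨mul_ne_zero (NeZero.ne _) (NeZero.ne _)⟩
  have hk1 : (1:ℝ) ≤ (k₁ * k₂ : ℕ) := by exact_mod_cast NeZero.one_le
  have hlk := Real.log_nonneg hk1
  obtain ⟨u1, l1⟩ := norm_LFunction_changeLevel_le (Dvd.intro _ rfl : k₁ ∣ k₁ * k₂) χ₁ h1
  obtain ⟨u2, l2⟩ := norm_LFunction_changeLevel_le (Dvd.intro_left _ rfl : k₂ ∣ k₁ * k₂) χ₂ h2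
  have n1 : DirichletCharacter.changeLevel (Dvd.intro _ rfl : k₁ ∣ k₁ * k₂) χ₁ ≠ 1 :=
    h1 ∘ (DirichletCharacter.changeLevel_eq_one_iff _).mp
  have n2 : DirichletCharacter.changeLevel (Dvd.intro_left _ rfl : k₂ ∣ k₁ * k₂) χ₂ ≠ 1 :=
    h2 ∘ (DirichletCharacter.changeLevel_eq_one_iff _).mp
  have s1 : (DirichletCharacter.changeLevel (Dvd.intro _ rfl : k₁ ∣ k₁ * k₂) χ₁) ^ 2 = 1 := by
    rw [← map_pow, h3, map_one]
  have s2 : (DirichletCharacter.changeLevel (Dvd.intro_left _ rfl : k₂ ∣ k₁ * k₂) χ₂) ^ 2 = 1 := by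
    rw [← map_pow, h4, map_one]
  generalize DirichletCharacter.changeLevel (Dvd.intro _ rfl : k₁ ∣ k₁ * k₂) χ₁ = ψ₁ at *
  generalize DirichletCharacter.changeLevel (Dvd.intro_left _ rfl : k₂ ∣ k₁ * k₂) χ₂ = ψ₂ at *
  have hstep : ∀ {a b : ℝ}, a ≤ (1 + Real.log (k₁ * k₂ : ℕ)) * b →
      c / (1 + Real.log (k₁ * k₂ : ℕ)) ^ 3 ≤ a → c / (1 + Real.log (k₁ * k₂ : ℕ)) ^ 4 ≤ b := by
    intro a b hab ha
    have hY : 0 < 1 + Real.log (k₁ * k₂ : ℕ) := by linarith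
    generalize 1 + Real.log (k₁ * k₂ : ℕ) = Y at *
    rw [div_le_iff₀ (by positivity)] at ha ⊢
    calc c ≤ a * Y ^ 3 := ha
      _ ≤ Y * b * Y ^ 3 := by gcongr
      _ = b * Y ^ 4 := by ring
  by_cases h12 : ψ₁ * ψ₂ = 1
  · left
    have he : ψ₁ = ψ₂ := by
      calc ψ₁ = ψ₁ * (ψ₂ ^ 2) := by rw [s2, mul_one]
        _ = (ψ₁ * ψ₂) * ψ₂ := by rw [sq, mul_assoc]
        _ = ψ₂ := by rw [h12, one_mul]
    rw [he] at l1
    refine l1.trans ?_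
    rw [mul_assoc]
    gcongr
  · rcases hc _ ψ₁ ψ₂ n1 n2 h12 s1 s2 with h | h
    · exact Or.inr (Or.inl (hstep u1 h))
    · exact Or.inr (Or.inr (hstep u2 h))

/-- A lower bound at `1` yields one to the right of `1`. -/
lemma lowerBd_of_norm_LFunction_one : ∃ c : ℝ, 0 < c ∧ c ≤ 1 ∧ ∀ (k : ℕ) [NeZero k]
    (χ : DirichletCharacter ℂ k) (b : ℝ), χ ≠ 1 → 0 < b → b ≤ 1 →
    (χ ^ 2 = 1 → b ≤ ‖χ.LFunction 1‖) → LowerBd χ (c * b / (1 + Real.log k) ^ 2) := by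
  obtain ⟨C, hC1, hC⟩ := norm_LFunction_one_sub_le
  refine ⟨1 / (12 * C), by positivity, by rw [div_le_one (by positivity)]; linarith,
    fun k _ χ b hχ hb0 hb1 hb => ?_⟩
  have hk1 : (1:ℝ) ≤ k := by exact_mod_cast NeZero.one_le
  have hlk := Real.log_nonneg hk1
  have hY1 : 1 ≤ (1 + Real.log k) ^ 2 := one_le_pow₀ (by linarith)
  have hc1 : 1 / (12 * C) ≤ 1 := by rw [div_le_one (by positivity)]; linarith
  have hcb : 1 / (12 * C) * b ≤ 1 := mul_le_one₀ hc1 hb0.le hb1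
  refine ⟨hχ, by positivity, (div_le_one (by positivity)).2 (hcb.trans hY1), fun h2 δ h0 h1 => ?_⟩
  have hL := hC k χ hχ δ h0 h1
  generalize (1 + Real.log k) ^ 2 = Y at *
  rcases le_or_gt δ (b / (2 * C * Y)) with h | h
  · rw [le_div_iff₀ (by positivity)] at h
    have := norm_sub_norm_le (χ.LFunction 1) (LSeries (fun n => χ n) (1 + δ : ℂ))
    have h3 : 1 / (12 * C) * b / Y ≤ b / 2 := by
      rw [div_le_iff₀ (by positivity), one_div_mul_eq_div, div_le_iff₀ (by positivity)]
      nlinarith [mul_le_mul hC1 hY1 zero_le_one (by linarith)]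
    have := hb h2
    nlinarith
  · rw [div_lt_iff₀ (by positivity)] at h
    have h3 := DirichletCharacter.norm_LSeries_product_ge_one χ h0 0
    simp only [Complex.ofReal_zero, mul_zero, add_zero] at h3
    rw [h2, norm_mul, norm_mul, norm_pow, norm_pow] at h3
    have h4 := norm_LSeries_char_le (1 : DirichletCharacter ℂ k) h0 h1
    have h5 : 1 ≤ (6 / δ * ‖LSeries (fun n => χ n) (1 + δ : ℂ)‖) ^ 4 := by
      calc (1:ℝ) ≤ _ := h3
        _ ≤ (6 / δ) ^ 3 * ‖LSeries (fun n => χ n) (1 + δ : ℂ)‖ ^ 4 * (6 / δ) := by gcongr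
        _ = _ := by ring
    have h6 : 1 ≤ 6 / δ * ‖LSeries (fun n => χ n) (1 + δ : ℂ)‖ := by
      by_contra! hlt
      exact absurd h5 (not_le.2 (pow_lt_one₀ (by positivity) hlt (by norm_num)))
    rw [div_mul_eq_mul_div, le_div_iff₀ h0, one_mul] at h6
    have h7 : 1 / (12 * C) * b / Y ≤ δ / 6 := by
      rw [div_le_iff₀ (by positivity), one_div_mul_eq_div, div_le_iff₀ (by positivity)]
      nlinarith
    linarith

/-- Arbitrarily large scales `Q` at which no real character of conductor at most `Q` has a small
value `L(1, χ)`: if some real `χ₁` is bad at the scale `Q₁`, then by repulsion nothing else is bad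
at the much larger scale `Q = ‖L(1, χ₁)‖ ^ (-2/ε)`, and there `χ₁` itself is harmless. -/
lemma exists_scale_LFunction_one {ε : ℝ} (hε : 0 < ε) (Q₀ : ℝ) : ∃ Q : ℝ, Q₀ ≤ Q ∧ 1 ≤ Q ∧
    ∀ (k : ℕ) [NeZero k], (k : ℝ) ≤ Q → ∀ χ : DirichletCharacter ℂ k, χ ≠ 1 → χ ^ 2 = 1 →
    Q ^ (-ε) ≤ ‖χ.LFunction 1‖ := by
  obtain ⟨c, hc, hpair⟩ := real_pair
  obtain ⟨C₁, hC₁, hτ⟩ := card_divisors_pow_le 1 (show 0 < ε / 16 by positivity)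
  obtain ⟨C₂, hC₂, hl⟩ := one_add_log_pow_le 1 (show 0 < ε / 16 by positivity)
  obtain ⟨C₃, hC₃, hl4⟩ := one_add_log_pow_le 4 (show 0 < ε / 8 by positivity)
  obtain ⟨B, hB⟩ : ∃ B, B = C₁ * C₂ + C₃ / c + 1 := ⟨_, rfl⟩
  have hB0 : 1 ≤ B := by rw [hB]; have : 0 < C₁ * C₂ + C₃ / c := by positivity
                         linarith
  obtain ⟨Q₁, hQ₁⟩ : ∃ Q₁, Q₁ = max (max Q₀ 1) (B ^ (4 / ε)) := ⟨_, rfl⟩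
  have hQ₁1 : 1 ≤ Q₁ := by rw [hQ₁]; exact (le_max_right _ _).trans (le_max_left _ _)
  have hQ₁0 : Q₀ ≤ Q₁ := by rw [hQ₁]; exact (le_max_left _ _).trans (le_max_left _ _)
  have hbig : ∀ Q, Q₁ ≤ Q → B ≤ Q ^ (ε / 4) := by
    intro Q hQ
    have h : B ^ (4 / ε) ≤ Q := by refine le_trans ?_ hQ; rw [hQ₁]; exact le_max_right _ _
    calc B = (B ^ (4 / ε)) ^ (ε / 4) := by
          rw [← Real.rpow_mul (by linarith)]; field_simp; simp
      _ ≤ _ := by gcongr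
  by_cases hall : ∀ (k : ℕ) [NeZero k], (k : ℝ) ≤ Q₁ → ∀ χ : DirichletCharacter ℂ k, χ ≠ 1 →
      χ ^ 2 = 1 → Q₁ ^ (-ε) ≤ ‖χ.LFunction 1‖
  · exact ⟨Q₁, hQ₁0, hQ₁1, hall⟩
  push Not at hall
  obtain ⟨k₁, _, hk₁, χ₁, hχ₁, hχ₁2, hlt⟩ := hall
  have hpos : 0 < ‖χ₁.LFunction 1‖ :=
    norm_pos_iff.2 (DirichletCharacter.LFunction_apply_one_ne_zero hχ₁)
  obtain ⟨l, hl1⟩ : ∃ l, l = ‖χ₁.LFunction 1‖ := ⟨_, rfl⟩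
  rw [← hl1] at hpos hlt
  obtain ⟨Q, hQ⟩ : ∃ Q, Q = l ^ (-(2 / ε)) := ⟨_, rfl⟩
  have hQQ : Q₁ ≤ Q := by
    have h1 : (Q₁ ^ (-ε)) ^ (-(2 / ε)) ≤ Q := by
      rw [hQ]; exact Real.rpow_le_rpow_of_nonpos hpos hlt.le (by
        rw [neg_nonpos]; positivity)
    rw [← Real.rpow_mul (by linarith), show -ε * -(2 / ε) = (2:ℝ) by field_simp, Real.rpow_two] at h1
    nlinarith
  have hQ1 : 1 ≤ Q := hQ₁1.trans hQQ
  have hQhalf : Q ^ (ε / 2) = l⁻¹ := by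
    rw [hQ, ← Real.rpow_mul hpos.le, show -(2 / ε) * (ε / 2) = (-1:ℝ) by field_simp,
      Real.rpow_neg_one]
  have hQneg : Q ^ (-ε) = l ^ 2 := by
    rw [hQ, ← Real.rpow_mul hpos.le, show -(2 / ε) * -ε = (2:ℝ) by field_simp, Real.rpow_two]
  refine ⟨Q, hQ₁0.trans hQQ, hQ1, fun k _ hk χ hχ hχ2 => ?_⟩
  have hN1 : 1 ≤ k₁ * k := Nat.mul_pos (NeZero.pos k₁) (NeZero.pos k)
  have hNr1 : (1:ℝ) ≤ ((k₁ * k : ℕ) : ℝ) := by exact_mod_cast hN1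
  have hNQ : ((k₁ * k : ℕ) : ℝ) ≤ Q ^ (2:ℝ) := by
    rw [Real.rpow_two]; push_cast; nlinarith [(k:ℕ).cast_nonneg (α := ℝ), hk₁.trans hQQ]
  have h1 := hτ _ hN1
  have h2 := hl _ hNr1
  have h3 := hl4 _ hNr1
  have hp := hpair k₁ k χ₁ χ hχ₁ hχ hχ₁2 hχ2
  rw [← hl1] at hp
  generalize ((k₁ * k : ℕ).divisors.card : ℝ) = τ at *
  have hY : 1 ≤ 1 + Real.log ((k₁ * k : ℕ) : ℝ) := by linarith [Real.log_nonneg hNr1]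
  generalize 1 + Real.log ((k₁ * k : ℕ) : ℝ) = Y at *
  generalize ((k₁ * k : ℕ) : ℝ) = N at *
  rw [pow_one] at h1 h2
  have hpw : ∀ e : ℝ, 0 ≤ e → N ^ e ≤ Q ^ (2 * e) := fun e he => by
    rw [Real.rpow_mul (by linarith)]; exact Real.rpow_le_rpow (by linarith) hNQ he
  have hBQ := hbig Q hQQ
  have hq0 : 0 < Q ^ (ε / 4) := by positivity
  have hsplit : Q ^ (ε / 4) * Q ^ (ε / 4) = Q ^ (ε / 2) := by
    rw [← Real.rpow_add (by linarith)]; congr 1; ring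
  have hs8 : Q ^ (ε / 8) * Q ^ (ε / 8) = Q ^ (ε / 4) := by
    rw [← Real.rpow_add (by linarith)]; congr 1; ring
  have hc3 : C₃ / c < B := by rw [hB]; have : 0 < C₁ * C₂ := by positivity
                              linarith
  have hc12 : C₁ * C₂ ≤ B := by rw [hB]; have : 0 < C₃ / c := by positivity
                                linarith
  have hY4 : l < c / Y ^ 4 := by
    have h4 : Y ^ 4 ≤ C₃ * Q ^ (ε / 4) := h3.trans (by
      have := hpw (ε / 8) (by positivity)
      rw [show 2 * (ε / 8) = ε / 4 by ring] at this
      gcongr)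
    rw [lt_div_iff₀ (by positivity)]
    have h5 : l * (Q ^ (ε / 4) * Q ^ (ε / 4)) = 1 := by
      rw [hsplit, hQhalf]; exact mul_inv_cancel₀ hpos.ne'
    have h6 : C₃ < c * Q ^ (ε / 4) := by
      rw [div_lt_iff₀ hc] at hc3; nlinarith
    calc l * Y ^ 4 ≤ l * (C₃ * Q ^ (ε / 4)) := by gcongr
      _ < l * (c * Q ^ (ε / 4) * Q ^ (ε / 4)) := by gcongr
      _ = c * (l * (Q ^ (ε / 4) * Q ^ (ε / 4))) := by ring
      _ = c := by rw [h5, mul_one]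
  have hl1' : l ≤ 1 := by
    have : (1:ℝ) ≤ l⁻¹ := by rw [← hQhalf]; exact Real.one_le_rpow hQ1 (by positivity)
    exact (one_le_inv₀ hpos).1 this
  rw [hQneg]
  rcases hp with hp | hp | hp
  · have h7 : τ * Y ≤ l⁻¹ := by
      have h8 := hpw (ε / 16) (by positivity)
      rw [show 2 * (ε / 16) = ε / 8 by ring] at h8
      calc τ * Y ≤ (C₁ * Q ^ (ε / 8)) * (C₂ * Q ^ (ε / 8)) := by
            refine mul_le_mul (h1.trans ?_) (h2.trans ?_) (by linarith) (by positivity) <;> gcongr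
        _ = C₁ * C₂ * Q ^ (ε / 4) := by rw [← hs8]; ring
        _ ≤ Q ^ (ε / 4) * Q ^ (ε / 4) := by gcongr; linarith
        _ = l⁻¹ := by rw [hsplit, hQhalf]
    have h9 : l ≤ l⁻¹ * ‖χ.LFunction 1‖ := hp.trans (by gcongr)
    calc l ^ 2 = l * l := by ring
      _ ≤ l * (l⁻¹ * ‖χ.LFunction 1‖) := by gcongr
      _ = _ := by field_simp
  · linarith
  · nlinarith

lemma good_scales {ε : ℝ} (hε : 0 < ε) (Q₀ : ℝ) : ∃ Q : ℝ, Q₀ ≤ Q ∧ 1 ≤ Q ∧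
    ∀ (k : ℕ) [NeZero k], (k : ℝ) ≤ Q → ∀ χ : DirichletCharacter ℂ k, χ ≠ 1 →
    ∃ m, LowerBd χ m ∧ Q ^ (-ε) ≤ m := by
  obtain ⟨c, hc, hc1, hlow⟩ := lowerBd_of_norm_LFunction_one
  obtain ⟨C, hC, hl⟩ := one_add_log_pow_le 2 (show 0 < ε / 4 by positivity)
  obtain ⟨Q, hQ0, hQ1, hQ⟩ := exists_scale_LFunction_one (show 0 < ε / 4 by positivity)
    (max Q₀ ((C / c) ^ (2 / ε)))
  refine ⟨Q, (le_max_left _ _).trans hQ0, hQ1, fun k _ hk χ hχ => ?_⟩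
  have hk1 : (1:ℝ) ≤ k := by exact_mod_cast NeZero.one_le
  have hY : 1 ≤ 1 + Real.log k := by linarith [Real.log_nonneg hk1]
  have hb1 : Q ^ (-(ε / 4)) ≤ 1 := Real.rpow_le_one_of_one_le_of_nonpos hQ1 (by linarith)
  refine ⟨_, hlow k χ (Q ^ (-(ε / 4))) hχ (by positivity) hb1 (hQ k hk χ hχ), ?_⟩
  have h1 : (1 + Real.log k) ^ 2 ≤ C * Q ^ (ε / 4) := (hl k hk1).trans (by gcongr)
  have h2 : C / c ≤ Q ^ (ε / 2) := by
    have h : (C / c) ^ (2 / ε) ≤ Q := (le_max_right _ _).trans hQ0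
    calc C / c = ((C / c) ^ (2 / ε)) ^ (ε / 2) := by
          rw [← Real.rpow_mul (by positivity), show 2 / ε * (ε / 2) = 1 by field_simp, Real.rpow_one]
      _ ≤ _ := by gcongr
  rw [div_le_iff₀ hc] at h2
  rw [le_div_iff₀ (by positivity)]
  have e1 : Q ^ (-(ε / 4)) = Q ^ (-ε) * (Q ^ (ε / 2) * Q ^ (ε / 4)) := by
    rw [← Real.rpow_add (by linarith), ← Real.rpow_add (by linarith)]; congr 1; ring
  calc Q ^ (-ε) * (1 + Real.log k) ^ 2 ≤ Q ^ (-ε) * ((Q ^ (ε / 2) * c) * Q ^ (ε / 4)) := by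
        gcongr; exact h1.trans (by gcongr)
    _ = _ := by rw [e1]; ring

end OmegaSq

namespace OmegaSq

open Finset

/-! ### Linear and bilinear sums of characters against a smooth weight -/

/-- `B` bounds the support of `f` as well as the sizes of `f` and of its derivative. -/
def BddBy (f : ℝ → ℝ) (B : ℝ) : Prop :=
  1 ≤ B ∧ (∀ u, f u ≠ 0 → |u| ≤ B) ∧ (∀ u, |f u| ≤ B) ∧ ∀ u, |deriv f u| ≤ B

lemma BddBy.mono {f : ℝ → ℝ} {B B' : ℝ} (h : BddBy f B) (hB : B ≤ B') : BddBy f B' :=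
  ⟨h.1.trans hB, fun u hu => (h.2.1 u hu).trans hB, fun u => (h.2.2.1 u).trans hB,
    fun u => (h.2.2.2 u).trans hB⟩

lemma TestFn.exists_bddBy {f : ℝ → ℝ} (hf : TestFn f) : ∃ B, BddBy f B := by
  obtain ⟨R, hR⟩ := hf.2.isCompact.isBounded.subset_closedBall 0
  obtain ⟨C₁, h1⟩ := hf.2.exists_bound_of_continuous hf.1.continuous
  obtain ⟨C₂, h2⟩ := hf.2.deriv.exists_bound_of_continuous (hf.1.continuous_deriv (by simp))
  refine ⟨max 1 (max R (max C₁ C₂)), le_max_left _ _, fun u hu => ?_, fun u => ?_, fun u => ?_⟩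
  · have := hR (subset_tsupport f hu)
    rw [mem_closedBall_zero_iff, Real.norm_eq_abs] at this
    exact this.trans (by simp)
  · exact (h1 u).trans (by simp)
  · exact (h2 u).trans (by simp)

lemma wt_eq_zero {f : ℝ → ℝ} {B L y : ℝ} (hB : BddBy f B) (hy : 0 < y)
    (h : Real.exp (L + B) < y ∨ y < Real.exp (L - B)) : wt f L y = 0 := by
  rw [wt]
  by_contra hne
  have := abs_le.1 (hB.2.1 _ (right_ne_zero_of_mul hne))
  rcases h with h | h
  · have := (Real.lt_log_iff_exp_lt hy).2 h
    linarith [this]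
  · have := (Real.log_lt_iff_lt_exp hy).2 h
    linarith [this]

lemma abs_wt_le {f : ℝ → ℝ} {B L y : ℝ} (hB : BddBy f B) (hL : 1 ≤ L) (hy : 0 < y) :
    |wt f L y| ≤ B * Real.exp (2 * B) * Real.exp (-L) := by
  have hB1 := hB.1
  by_cases h : wt f L y = 0
  · rw [h, abs_zero]; positivity
  have h1 : Real.exp (L - B) ≤ y := by
    by_contra! hh; exact h (wt_eq_zero hB hy (Or.inr hh))
  have h2 : L - B ≤ Real.log y := (Real.le_log_iff_exp_le hy).2 h1
  have h3 : y ^ (-(1 + 1 / L)) ≤ Real.exp (2 * B) * Real.exp (-L) := by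
    rw [Real.rpow_def_of_pos hy, ← Real.exp_add, Real.exp_le_exp]
    have e : 1 / L ≤ 1 := by rw [div_le_one (by linarith)]; exact hL
    have e0 : 0 < 1 / L := by positivity
    have e2 : 1 / L * L = 1 := by field_simp
    nlinarith
  rw [wt, abs_mul, abs_of_pos (by positivity), mul_comm B, mul_right_comm]
  exact mul_le_mul h3 (hB.2.2.1 _) (abs_nonneg _) (by positivity)

lemma abs_wt_sub_le {f : ℝ → ℝ} (hf : TestFn f) {B L y z : ℝ} (hB : BddBy f B) (hL : 1 ≤ L)
    (hy : 0 < y) (hyz : y ≤ z) :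
    |wt f L z - wt f L y| ≤ 3 * B * Real.exp (3 * B) * Real.exp (-(2 * L)) * (z - y) := by
  have hB1 := hB.1
  have hd : ∀ t ∈ Set.Icc y z, HasDerivWithinAt (wt f L)
      (-(1 + 1 / L) * t ^ (-(1 + 1 / L) - 1) * f (Real.log t - L) +
        t ^ (-(1 + 1 / L)) * (deriv f (Real.log t - L) * t⁻¹)) (Set.Icc y z) t := by
    intro t ht
    have ht0 : 0 < t := hy.trans_le ht.1
    have d1 := Real.hasDerivAt_rpow_const (x := t) (p := -(1 + 1 / L)) (Or.inl ht0.ne')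
    have d2 : HasDerivAt (fun t => Real.log t - L) t⁻¹ t := (Real.hasDerivAt_log ht0.ne').sub_const L
    have d3 : HasDerivAt f (deriv f (Real.log t - L)) (Real.log t - L) :=
      (hf.1.differentiable (by simp)).differentiableAt.hasDerivAt
    exact (d1.mul (d3.comp t d2)).hasDerivWithinAt
  have hb : ∀ t ∈ Set.Icc y z, ‖-(1 + 1 / L) * t ^ (-(1 + 1 / L) - 1) * f (Real.log t - L) +
        t ^ (-(1 + 1 / L)) * (deriv f (Real.log t - L) * t⁻¹)‖ ≤
        3 * B * Real.exp (3 * B) * Real.exp (-(2 * L)) := by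
    intro t ht
    have ht0 : 0 < t := hy.trans_le ht.1
    have e : 1 / L ≤ 1 := by rw [div_le_one (by linarith)]; exact hL
    have e0 : 0 < 1 / L := by positivity
    have e2 : 1 / L * L = 1 := by field_simp
    rw [show t ^ (-(1 + 1 / L)) * (deriv f (Real.log t - L) * t⁻¹) =
      t ^ (-(1 + 1 / L) - 1) * deriv f (Real.log t - L) by
        rw [Real.rpow_sub_one ht0.ne']; ring]
    by_cases h : |Real.log t - L| ≤ B
    · have h2 := (abs_le.1 h).1
      have h3 : t ^ (-(1 + 1 / L) - 1) ≤ Real.exp (3 * B) * Real.exp (-(2 * L)) := by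
        rw [Real.rpow_def_of_pos ht0, ← Real.exp_add, Real.exp_le_exp]
        nlinarith
      have h4 : ‖-(1 + 1 / L) * f (Real.log t - L) + deriv f (Real.log t - L)‖ ≤ 3 * B := by
        have hf1 := hB.2.2.1 (Real.log t - L)
        have hf2 := hB.2.2.2 (Real.log t - L)
        rw [Real.norm_eq_abs]
        refine (abs_add_le _ _).trans ?_
        rw [abs_mul, abs_neg, abs_of_pos (by positivity : 0 < 1 + 1 / L)]
        nlinarith [abs_nonneg (f (Real.log t - L))]
      calc _ = ‖t ^ (-(1 + 1 / L) - 1) * (-(1 + 1 / L) * f (Real.log t - L) +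
            deriv f (Real.log t - L))‖ := by congr 1; ring
        _ = t ^ (-(1 + 1 / L) - 1) * ‖-(1 + 1 / L) * f (Real.log t - L) +
            deriv f (Real.log t - L)‖ := by
          rw [norm_mul, Real.norm_of_nonneg (by positivity)]
        _ ≤ Real.exp (3 * B) * Real.exp (-(2 * L)) * (3 * B) := by gcongr
        _ = _ := by ring
    · have hz : ∀ᶠ u in nhds (Real.log t - L), f u = 0 := by
        have : ∀ᶠ u in nhds (Real.log t - L), B < |u| :=
          (continuous_abs.tendsto _).eventually_const_lt (not_le.1 h)
        filter_upwards [this] with u hu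
        by_contra hne
        exact absurd (hB.2.1 u hne) (not_le.2 hu)
      have hdz : deriv f (Real.log t - L) = 0 := by
        rw [Filter.EventuallyEq.deriv_eq (f := fun _ => (0:ℝ)) hz, deriv_const]
      rw [hz.self_of_nhds, hdz]; simp only [mul_zero, add_zero, norm_zero]; positivity
  have := (convex_Icc y z).norm_image_sub_le_of_norm_hasDerivWithin_le hd hb
    (Set.left_mem_Icc.2 hyz) (Set.right_mem_Icc.2 hyz)
  rwa [Real.norm_eq_abs, Real.norm_of_nonneg (sub_nonneg.2 hyz)] at this

/-- Partial summation gives a saving of a full power of `exp L` over the trivial bound `1 / m`. -/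
lemma norm_sum_char_wt_le {f : ℝ → ℝ} (hf : TestFn f) {B : ℝ} (hB : BddBy f B) {L : ℝ} (hL : 1 ≤ L)
    {k : ℕ} [NeZero k] {χ : DirichletCharacter ℂ k} (hχ : χ ≠ 1) {m N : ℕ} (hm : 1 ≤ m)
    (hN : Real.exp (L + B) < N) :
    ‖∑ n ∈ Ico 1 N, χ n * (wt f L ((m * n : ℕ) : ℝ) : ℂ)‖ ≤
      6 * B * Real.exp (4 * B) * k * Real.exp (-L) := by
  have hB1 := hB.1
  have hNpos : 1 ≤ N := by
    have : (0:ℝ) < N := (Real.exp_pos _).trans hN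
    exact_mod_cast this
  have hm0 : (0:ℝ) < m := by exact_mod_cast hm
  refine (norm_sum_Ico_mul_le (norm_sum_range_char_le hχ)
    (fun n : ℕ => (wt f L ((m * n : ℕ) : ℝ) : ℂ)) hNpos).trans ?_
  have hlast : wt f L ((m * N : ℕ) : ℝ) = 0 := by
    refine wt_eq_zero hB (by positivity) (Or.inl (hN.trans_le ?_))
    exact_mod_cast Nat.le_mul_of_pos_left N hm
  have hterm : ∀ n ∈ Ico 1 N, ‖(wt f L ((m * n : ℕ) : ℝ) : ℂ) - (wt f L ((m * (n + 1) : ℕ) : ℝ) : ℂ)‖ ≤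
      if (n : ℝ) ≤ Real.exp (L + B) / m then 3 * B * Real.exp (3 * B) * Real.exp (-(2 * L)) * m else 0 := by
    intro n hn
    have hn1 : (1:ℝ) ≤ n := by exact_mod_cast (mem_Ico.1 hn).1
    rw [← Complex.ofReal_sub, Complex.norm_real, norm_sub_rev, Real.norm_eq_abs]
    push_cast
    split_ifs with h
    · have := abs_wt_sub_le hf hB hL (show 0 < (m:ℝ) * n by positivity)
        (show (m:ℝ) * n ≤ m * (n + 1) by nlinarith)
      rwa [show (m:ℝ) * (n + 1) - m * n = m by ring] at this
    · rw [not_le, div_lt_iff₀ hm0] at h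
      rw [wt_eq_zero hB (by positivity) (Or.inl (show _ < (m:ℝ) * n by linarith)),
        wt_eq_zero hB (by positivity) (Or.inl (show _ < (m:ℝ) * (n+1) by linarith)), sub_zero, abs_zero]
  have hsum := Finset.sum_le_sum hterm
  rw [← Finset.sum_filter, Finset.sum_const, nsmul_eq_mul] at hsum
  have hcard : ((#{n ∈ Ico 1 N | ((n : ℕ) : ℝ) ≤ Real.exp (L + B) / m} : ℕ) : ℝ) ≤
      Real.exp (L + B) / m := by
    have hsub : {n ∈ Ico 1 N | ((n : ℕ) : ℝ) ≤ Real.exp (L + B) / m} ⊆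
        Ioc 0 ⌊Real.exp (L + B) / m⌋₊ := by
      intro n hn
      rw [mem_filter, mem_Ico] at hn
      exact mem_Ioc.2 ⟨hn.1.1, Nat.le_floor hn.2⟩
    calc _ ≤ ((#(Ioc 0 ⌊Real.exp (L + B) / m⌋₊) : ℕ) : ℝ) := by exact_mod_cast card_le_card hsub
      _ = (⌊Real.exp (L + B) / m⌋₊ : ℝ) := by simp
      _ ≤ _ := Nat.floor_le (by positivity)
  simp only [hlast, Complex.ofReal_zero, norm_zero, add_zero]
  have hexp : Real.exp (L + B) * (Real.exp (3 * B) * Real.exp (-(2 * L))) =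
      Real.exp (4 * B) * Real.exp (-L) := by
    rw [← Real.exp_add, ← Real.exp_add, ← Real.exp_add]; congr 1; ring
  calc _ ≤ 2 * (k:ℝ) * (Real.exp (L + B) / m * (3 * B * Real.exp (3 * B) * Real.exp (-(2 * L)) * m)) := by
        gcongr
        exact hsum.trans (by gcongr)
    _ = 6 * B * k * (Real.exp (L + B) * (Real.exp (3 * B) * Real.exp (-(2 * L)))) := by
        field_simp; ring
    _ = _ := by rw [hexp]; ring

open MeasureTheory in
/-- Bilinear sums: the smooth weight is separated by Fourier inversion, after which
Cauchy's inequality and the large sieve apply to the two factors. -/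
lemma bilinear_block {f : ℝ → ℝ} (hf : TestFn f) : ∃ C : ℝ, 1 ≤ C ∧ ∀ (L : ℝ), 1 ≤ L →
    ∀ (Q : ℕ), 1 ≤ Q → ∀ (a b : ℕ → ℝ) (M M' N N' : ℕ), 1 ≤ M → 1 ≤ N →
    ∑ q ∈ Icc 1 Q, ∑ χ ∈ primChars q, ‖∑ m ∈ Ico M (M + M'), ∑ n ∈ Ico N (N + N'),
      ((a m * b n : ℝ) : ℂ) * (χ m * χ n) * (wt f L ((m * n : ℕ) : ℝ) : ℂ)‖ ≤
    C * (√((2 * M' + Q ^ 2 * (1 + 2 * Real.log Q)) * ∑ m ∈ Ico M (M + M'), (a m / m) ^ 2) *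
      √((2 * N' + Q ^ 2 * (1 + 2 * Real.log Q)) * ∑ n ∈ Ico N (N + N'), (b n / n) ^ 2)) := by
  obtain ⟨g, hgc, hgi, hg⟩ := hf.fourier
  have hgint : Integrable g := by
    have := hgi 0
    simp only [pow_zero, one_mul] at this
    exact (integrable_norm_iff hgc.aestronglyMeasurable).1 this
  refine ⟨1 + ∫ t, ‖g t‖, by
    have : 0 ≤ ∫ t, ‖g t‖ := integral_nonneg fun t => norm_nonneg _
    linarith, fun L hL Q hQ a b M M' N N' hM hN => ?_⟩
  -- the twisted coefficients
  obtain ⟨α, hα⟩ : ∃ α : (ℕ → ℝ) → ℝ → ℕ → ℂ, α = fun (c : ℕ → ℝ) (t : ℝ) (m : ℕ) =>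
      ((c m * (m : ℝ) ^ (-(1 + 1 / L)) : ℝ) : ℂ) * eR (t * Real.log m) := ⟨_, rfl⟩
  obtain ⟨A, hA⟩ : ∃ A : (ℕ → ℝ) → ℕ → ℕ → ℝ → (q : ℕ) → DirichletCharacter ℂ q → ℂ,
      A = fun (c : ℕ → ℝ) (M M' : ℕ) (t : ℝ) (q : ℕ) (χ : DirichletCharacter ℂ q) => ∑ m ∈ Ico M (M + M'), α c t m * χ m := ⟨_, rfl⟩
  have hαn : ∀ c t m, 1 ≤ m → ‖α c t m‖ ^ 2 ≤ (c m / m) ^ 2 := by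
    intro c t m hm
    have hm1 : (1:ℝ) ≤ m := by exact_mod_cast hm
    rw [hα]
    simp only
    rw [norm_mul, norm_eR, mul_one, Complex.norm_real, Real.norm_eq_abs, sq_abs]
    rw [mul_pow, div_pow, div_eq_mul_inv (c m ^ 2)]
    refine mul_le_mul_of_nonneg_left ?_ (sq_nonneg _)
    rw [← inv_pow]
    refine pow_le_pow_left₀ (by positivity) ?_ 2
    rw [← Real.rpow_neg_one (m:ℝ)]
    refine Real.rpow_le_rpow_of_exponent_le hm1 ?_
    have : 0 ≤ 1 / L := by positivity
    linarith
  have hLS : ∀ (c : ℕ → ℝ) (M M' : ℕ), 1 ≤ M → ∀ t, ∑ q ∈ Icc 1 Q, ∑ χ ∈ primChars q, ‖A c M M' t q χ‖ ^ 2 ≤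
      (2 * M' + Q ^ 2 * (1 + 2 * Real.log Q)) * ∑ m ∈ Ico M (M + M'), (c m / m) ^ 2 := by
    intro c M M' hM t
    rw [hA]
    refine (large_sieve Q hQ (α c t) M M').trans ?_
    have hl : 0 ≤ Real.log Q := Real.log_natCast_nonneg Q
    refine mul_le_mul_of_nonneg_left ?_ (by positivity)
    exact sum_le_sum fun m hm => hαn c t m (hM.trans (mem_Ico.1 hm).1)
  have hcont : ∀ c M M' q χ, Continuous fun t => A c M M' t q χ := by
    intro c M M' q χ
    rw [hA, hα]
    simp only [eR]
    fun_prop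
  obtain ⟨K, hK⟩ : ∃ K, K = √((2 * M' + Q ^ 2 * (1 + 2 * Real.log Q)) * ∑ m ∈ Ico M (M + M'), (a m / m) ^ 2) *
      √((2 * N' + Q ^ 2 * (1 + 2 * Real.log Q)) * ∑ n ∈ Ico N (N + N'), (b n / n) ^ 2) := ⟨_, rfl⟩
  have hK0 : 0 ≤ K := by rw [hK]; positivity
  rw [← hK]
  have hCS : ∀ t, ∑ q ∈ Icc 1 Q, ∑ χ ∈ primChars q, ‖A a M M' t q χ‖ * ‖A b N N' t q χ‖ ≤ K := by
    intro t
    rw [hK, Finset.sum_sigma']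
    refine (Real.sum_mul_le_sqrt_mul_sqrt _ _ _).trans ?_
    rw [Finset.sum_sigma (f := fun i => ‖A a M M' t i.1 i.2‖ ^ 2),
      Finset.sum_sigma (f := fun i => ‖A b N N' t i.1 i.2‖ ^ 2)]
    exact mul_le_mul (Real.sqrt_le_sqrt (hLS a M M' hM t)) (Real.sqrt_le_sqrt (hLS b N N' hN t))
      (Real.sqrt_nonneg _) (Real.sqrt_nonneg _)
  have hid : ∀ q (χ : DirichletCharacter ℂ q), ∑ m ∈ Ico M (M + M'), ∑ n ∈ Ico N (N + N'),
      ((a m * b n : ℝ) : ℂ) * (χ m * χ n) * (wt f L ((m * n : ℕ) : ℝ) : ℂ) =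
      ∫ t, g t * eR (-(t * L)) * (A a M M' t q χ * A b N N' t q χ) := by
    intro q χ
    have hexp : ∀ t, g t * eR (-(t * L)) * (A a M M' t q χ * A b N N' t q χ) =
        ∑ m ∈ Ico M (M + M'), ∑ n ∈ Ico N (N + N'),
        (g t * (eR (-(t * L)) * eR (t * Real.log m) * eR (t * Real.log n))) * (((a m * b n : ℝ) : ℂ) * (χ m * χ n) *
          ((((m:ℝ) ^ (-(1 + 1 / L)) * (n:ℝ) ^ (-(1 + 1 / L)) : ℝ)) : ℂ)) := by
      intro t
      rw [hA, hα]
      simp only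
      rw [Finset.sum_mul_sum, Finset.mul_sum]
      refine sum_congr rfl fun m _ => ?_
      rw [Finset.mul_sum]
      refine sum_congr rfl fun n _ => ?_
      push_cast; ring
    simp_rw [hexp]
    have hintg : ∀ m n : ℕ, Integrable (fun t => (g t * (eR (-(t * L)) * eR (t * Real.log m) * eR (t * Real.log n))) *
        (((a m * b n : ℝ) : ℂ) * (χ m * χ n) *
          ((((m:ℝ) ^ (-(1 + 1 / L)) * (n:ℝ) ^ (-(1 + 1 / L)) : ℝ)) : ℂ))) := by
      intro m n
      refine Integrable.mul_const ?_ _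
      refine hgint.mul_bdd (c := 1) ?_ (Filter.Eventually.of_forall fun t => ?_)
      · refine Continuous.aestronglyMeasurable ?_
        simp only [eR]; fun_prop
      · simp [norm_eR]
    rw [integral_finsetSum _ fun m _ => integrable_finsetSum _ fun n _ => hintg m n]
    refine sum_congr rfl fun m hm => ?_
    rw [integral_finsetSum _ fun n _ => hintg m n]
    refine sum_congr rfl fun n hn => ?_
    have hm0 : (0:ℝ) < m := by exact_mod_cast hM.trans (mem_Ico.1 hm).1
    have hn0 : (0:ℝ) < n := by exact_mod_cast hN.trans (mem_Ico.1 hn).1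
    rw [integral_mul_const]
    have h1 : ∀ t, g t * (eR (-(t * L)) * eR (t * Real.log m) * eR (t * Real.log n)) =
        g t * eR (t * (Real.log ((m * n : ℕ) : ℝ) - L)) := by
      intro t
      rw [← eR_add, ← eR_add]
      push_cast
      rw [Real.log_mul hm0.ne' hn0.ne']
      congr 2; ring
    simp_rw [h1]
    rw [← hg, wt]
    push_cast
    rw [Real.mul_rpow hm0.le hn0.le]
    push_cast; ring
  simp_rw [hid]
  have hint2 : ∀ q (χ : DirichletCharacter ℂ q), Integrable (fun t => ‖g t‖ * (‖A a M M' t q χ‖ * ‖A b N N' t q χ‖)) := by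
    intro q χ
    have hbd : ∀ c M M', 1 ≤ M → ∀ t, ‖A c M M' t q χ‖ ≤ ∑ m ∈ Ico M (M + M'), (1 + (c m / m) ^ 2) := by
      intro c M M' hM t
      rw [hA]
      refine norm_sum_le_of_le _ fun m hm => ?_
      rw [norm_mul]
      have h1 := hαn c t m (hM.trans (mem_Ico.1 hm).1)
      have h2 : ‖χ m‖ ≤ 1 := χ.norm_le_one _
      nlinarith [norm_nonneg (α c t m), norm_nonneg (χ m), sq_nonneg (‖α c t m‖ - 1)]
    refine hgint.norm.mul_bdd (c := (∑ m ∈ Ico M (M + M'), (1 + (a m / m) ^ 2)) *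
      (∑ m ∈ Ico N (N + N'), (1 + (b m / m) ^ 2))) ?_ (Filter.Eventually.of_forall fun t => ?_)
    · exact ((hcont a M M' q χ).norm.mul (hcont b N N' q χ).norm).aestronglyMeasurable
    · rw [Real.norm_of_nonneg (by positivity)]
      exact mul_le_mul (hbd a M M' hM t) (hbd b N N' hN t) (norm_nonneg _)
        (sum_nonneg fun m _ => by positivity)
  calc _ ≤ ∑ q ∈ Icc 1 Q, ∑ χ ∈ primChars q, ∫ t, ‖g t‖ * (‖A a M M' t q χ‖ * ‖A b N N' t q χ‖) := by
        refine sum_le_sum fun q _ => sum_le_sum fun χ _ => ?_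
        refine (norm_integral_le_integral_norm _).trans (le_of_eq ?_)
        congr 1; ext t
        rw [norm_mul, norm_mul, norm_mul, norm_eR, mul_one]
    _ = ∫ t, ‖g t‖ * ∑ q ∈ Icc 1 Q, ∑ χ ∈ primChars q, ‖A a M M' t q χ‖ * ‖A b N N' t q χ‖ := by
        simp_rw [Finset.mul_sum]
        rw [integral_finsetSum _ fun q _ => integrable_finsetSum _ fun χ _ => hint2 q χ]
        refine sum_congr rfl fun q _ => ?_
        rw [integral_finsetSum _ fun χ _ => hint2 q χ]
    _ ≤ ∫ t, ‖g t‖ * K := by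
        refine integral_mono_of_nonneg (Filter.Eventually.of_forall fun t => by positivity)
          (hgint.norm.mul_const K) (Filter.Eventually.of_forall fun t => ?_)
        exact mul_le_mul_of_nonneg_left (hCS t) (norm_nonneg _)
    _ = (∫ t, ‖g t‖) * K := integral_mul_const _ _
    _ ≤ _ := by gcongr; linarith

end OmegaSq

namespace OmegaSq

open Finset

/-! ### Vaughan's identity and the mean value of `Ψ` over primitive characters -/

/-- The sum of `Λ(n) χ(n)` against the smooth weight living near `exp L`. -/
noncomputable def Psi (f : ℝ → ℝ) (L : ℝ) {k : ℕ} (χ : DirichletCharacter ℂ k) : ℂ :=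
  ∑' n : ℕ, (ArithmeticFunction.vonMangoldt n : ℂ) * χ n * (wt f L n : ℂ)

lemma tsum_wt_eq_sum {f : ℝ → ℝ} {B : ℝ} (hB : BddBy f B) {L : ℝ}
    {N : ℕ} (hN : Real.exp (L + B) < N) (a : ℕ → ℂ) (ha : a 0 = 0) :
    ∑' n : ℕ, a n * (wt f L n : ℂ) = ∑ n ∈ Ico 1 N, a n * (wt f L n : ℂ) := by
  refine tsum_eq_sum fun n hn => ?_
  rcases Nat.eq_zero_or_pos n with rfl | h0
  · rw [ha, zero_mul]
  · rw [wt_eq_zero hB (by exact_mod_cast h0) (Or.inl (hN.trans_le ?_))]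
    · simp
    · rw [mem_Ico, not_and, not_lt] at hn
      exact_mod_cast hn h0

lemma sum_Ico_mul_eq (u v : ArithmeticFunction ℝ) (F : ℕ → ℂ) {N : ℕ} (hF : ∀ n, N ≤ n → F n = 0) :
    ∑ n ∈ Ico 1 N, ((u * v) n : ℂ) * F n =
      ∑ m ∈ Ico 1 N, ∑ n ∈ Ico 1 N, ((u m * v n : ℝ) : ℂ) * F (m * n) := by
  rw [← Finset.sum_product' (f := fun m n => ((u m * v n : ℝ) : ℂ) * F (m * n))]
  have h1 : ∑ x ∈ Ico 1 N ×ˢ Ico 1 N, ((u x.1 * v x.2 : ℝ) : ℂ) * F (x.1 * x.2) =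
      ∑ x ∈ (Ico 1 N ×ˢ Ico 1 N).filter (fun x => x.1 * x.2 < N), ((u x.1 * v x.2 : ℝ) : ℂ) * F (x.1 * x.2) := by
    rw [Finset.sum_filter]
    refine sum_congr rfl fun x _ => ?_
    split_ifs with h
    · rfl
    · rw [hF _ (not_lt.1 h), mul_zero]
  rw [h1, ← Finset.sum_fiberwise_of_maps_to (g := fun x : ℕ × ℕ => x.1 * x.2) (t := Ico 1 N)]
  · refine sum_congr rfl fun n hn => ?_
    rw [ArithmeticFunction.mul_apply]
    push_cast
    rw [Finset.sum_mul]
    refine Finset.sum_congr ?_ ?_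
    · ext x
      simp only [mem_filter, mem_product, mem_Ico, Nat.mem_divisorsAntidiagonal] at hn ⊢
      constructor
      · rintro ⟨h, _⟩
        have hx1 : 1 ≤ x.1 := Nat.pos_of_ne_zero fun h0 => by rw [h0] at h; omega
        have hx2 : 1 ≤ x.2 := Nat.pos_of_ne_zero fun h0 => by rw [h0] at h; omega
        have := Nat.le_mul_of_pos_right x.1 hx2
        have := Nat.le_mul_of_pos_left x.2 hx1
        refine ⟨⟨⟨⟨hx1, ?_⟩, hx2, ?_⟩, ?_⟩, h⟩ <;> omega
      · rintro ⟨⟨_, _⟩, h⟩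
        exact ⟨h, by omega⟩
    · intro x hx
      rw [(mem_filter.1 hx).2]
  · intro x hx
    simp only [mem_filter, mem_product, mem_Ico] at hx ⊢
    exact ⟨Nat.mul_pos hx.1.1.1 hx.1.2.1, hx.2⟩

/-- `Λ` cut off at `U`. -/
noncomputable def vmTrunc (U : ℕ) : ArithmeticFunction ℝ :=
  ⟨fun n => if n ≤ U then ArithmeticFunction.vonMangoldt n else 0, by simp⟩

/-- The Möbius function cut off at `U`. -/
noncomputable def muTrunc (U : ℕ) : ArithmeticFunction ℝ :=
  ⟨fun n => if n ≤ U then (ArithmeticFunction.moebius n : ℝ) else 0, by simp⟩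

lemma vmTrunc_apply (U n : ℕ) : vmTrunc U n = if n ≤ U then ArithmeticFunction.vonMangoldt n else 0 := rfl

lemma muTrunc_apply (U n : ℕ) : muTrunc U n =
  if n ≤ U then (ArithmeticFunction.moebius n : ℝ) else 0 := rfl

/-- Complementary factor `δ - μ_{≤ U} * 1` in Vaughan's identity. -/
noncomputable def vaughanB (U : ℕ) : ArithmeticFunction ℝ :=
  1 - muTrunc U * (ArithmeticFunction.zeta : ArithmeticFunction ℝ)

lemma vaughan (U : ℕ) : ArithmeticFunction.vonMangoldt = vmTrunc U + muTrunc U * ArithmeticFunction.log -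
    (vmTrunc U * muTrunc U) * (ArithmeticFunction.zeta : ArithmeticFunction ℝ) +
    (ArithmeticFunction.vonMangoldt - vmTrunc U) * vaughanB U := by
  rw [vaughanB, ← ArithmeticFunction.vonMangoldt_mul_zeta]
  ring

lemma abs_muTrunc_le (U n : ℕ) : |muTrunc U n| ≤ 1 := by
  rw [muTrunc_apply]
  split_ifs
  · exact_mod_cast ArithmeticFunction.abs_moebius_le_one
  · simp

lemma muTrunc_mul_zeta (U n : ℕ) :
    (muTrunc U * (ArithmeticFunction.zeta : ArithmeticFunction ℝ)) n = ∑ d ∈ n.divisors, muTrunc U d :=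
  ArithmeticFunction.coe_mul_zeta_apply

lemma vaughanB_eq_zero {U n : ℕ} (h : n ≤ U) : vaughanB U n = 0 := by
  have h1 : (muTrunc U * (ArithmeticFunction.zeta : ArithmeticFunction ℝ)) n =
      (1 : ArithmeticFunction ℝ) n := by
    have h2 : ((ArithmeticFunction.moebius : ArithmeticFunction ℝ) *
      (ArithmeticFunction.zeta : ArithmeticFunction ℝ)) = 1 :=
      ArithmeticFunction.coe_moebius_mul_coe_zeta
    rw [← h2, muTrunc_mul_zeta, ArithmeticFunction.coe_mul_zeta_apply]
    refine sum_congr rfl fun d hd => ?_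
    rw [muTrunc_apply, if_pos ((Nat.divisor_le hd).trans h)]
    rfl
  rw [vaughanB, sub_eq_add_neg, ArithmeticFunction.add_apply]
  change _ + -((muTrunc U * (ArithmeticFunction.zeta : ArithmeticFunction ℝ)) n) = 0
  rw [h1]; ring

lemma abs_vaughanB_le {U n : ℕ} (hn : 1 ≤ n) : |vaughanB U n| ≤ 2 * n.divisors.card := by
  rw [vaughanB, sub_eq_add_neg, ArithmeticFunction.add_apply]
  change |_ + -((muTrunc U * (ArithmeticFunction.zeta : ArithmeticFunction ℝ)) n)| ≤ _
  rw [muTrunc_mul_zeta]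
  have h1 : |∑ d ∈ n.divisors, muTrunc U d| ≤ n.divisors.card := by
    refine (abs_sum_le_sum_abs _ _).trans ?_
    refine (sum_le_sum fun d _ => abs_muTrunc_le U d).trans ?_
    simp
  have h2 : |(1 : ArithmeticFunction ℝ) n| ≤ n.divisors.card := by
    have : (1:ℝ) ≤ n.divisors.card := by
      exact_mod_cast Finset.card_pos.2 ⟨1, Nat.one_mem_divisors.2 (by omega)⟩
    rw [ArithmeticFunction.one_apply]
    split_ifs
    · simpa using this
    · simp
  refine (abs_add_le _ _).trans ?_
  rw [abs_neg]; linarith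

lemma abs_vmTrunc_mul_muTrunc_le (U m : ℕ) : |(vmTrunc U * muTrunc U) m| ≤ Real.log m := by
  rw [ArithmeticFunction.mul_apply]
  refine (abs_sum_le_sum_abs _ _).trans ?_
  rw [← ArithmeticFunction.vonMangoldt_sum,
    ← Nat.sum_divisorsAntidiagonal (fun a _ => ArithmeticFunction.vonMangoldt a)]
  refine sum_le_sum fun x _ => ?_
  rw [abs_mul]
  have h1 : |vmTrunc U x.1| ≤ ArithmeticFunction.vonMangoldt x.1 := by
    have := ArithmeticFunction.vonMangoldt_nonneg (n := x.1)
    rw [vmTrunc_apply]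
    split_ifs
    · rw [abs_of_nonneg this]
    · simp
  have := abs_muTrunc_le U x.2
  nlinarith [abs_nonneg (vmTrunc U x.1), abs_nonneg (muTrunc U x.2)]

lemma vmTrunc_mul_muTrunc_eq_zero {U m : ℕ} (h : U * U < m) : (vmTrunc U * muTrunc U) m = 0 := by
  rw [ArithmeticFunction.mul_apply]
  refine sum_eq_zero fun x hx => ?_
  rw [vmTrunc_apply, muTrunc_apply]
  split_ifs with h1 h2
  · have := Nat.mul_le_mul h1 h2
    rw [(Nat.mem_divisorsAntidiagonal.1 hx).1] at this
    omega
  all_goals simp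

/-- The linear part of Vaughan's identity. -/
lemma type_one_le {f : ℝ → ℝ} (hf : TestFn f) : ∃ B : ℝ, BddBy f B ∧ ∀ (L : ℝ), 1 ≤ L →
    ∀ (U N k : ℕ) [NeZero k] (χ : DirichletCharacter ℂ k), χ ≠ 1 → 1 ≤ U →
    Real.exp (L + B) < N → Real.log U ≤ L / 2 →
    ‖∑ n ∈ Ico 1 N, ((muTrunc U * ArithmeticFunction.log) n : ℂ) * (χ n * (wt f L n : ℂ))‖ +
    ‖∑ n ∈ Ico 1 N, (((vmTrunc U * muTrunc U) * (ArithmeticFunction.zeta : ArithmeticFunction ℝ)) n : ℂ) *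
      (χ n * (wt f L n : ℂ))‖ ≤ 18 * B * Real.exp (4 * B) * L * U ^ 2 * k * Real.exp (-L) := by
  obtain ⟨B₁, hB₁⟩ := hf.exists_bddBy
  obtain ⟨B₂, hB₂⟩ := hf.mul_id.exists_bddBy
  obtain ⟨B, hBdef⟩ : ∃ B, B = max B₁ B₂ := ⟨_, rfl⟩
  have hB : BddBy f B := hB₁.mono (hBdef ▸ le_max_left _ _)
  have hB' : BddBy (fun u => u * f u) B := hB₂.mono (hBdef ▸ le_max_right _ _)
  have hB1 := hB.1
  refine ⟨B, hB, fun L hL U N k _ χ hχ hU hN hUL => ?_⟩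
  obtain ⟨K, hK⟩ : ∃ K, K = 6 * B * Real.exp (4 * B) * k * Real.exp (-L) := ⟨_, rfl⟩
  have hK0 : 0 ≤ K := by rw [hK]; positivity
  have hUr : (1:ℝ) ≤ U := by exact_mod_cast hU
  have hlU := Real.log_nonneg hUr
  have hz : ∀ g : ℝ → ℝ, BddBy g B → ∀ n : ℕ, N ≤ n → χ n * (wt g L n : ℂ) = 0 := by
    intro g hg n hn
    have : Real.exp (L + B) < n := hN.trans_le (by exact_mod_cast hn)
    rw [wt_eq_zero hg ((Real.exp_pos _).trans this) (Or.inl this)]; simp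
  have h1 : ∀ m, 1 ≤ m → ‖∑ n ∈ Ico 1 N, χ n * (wt f L ((m * n : ℕ) : ℝ) : ℂ)‖ ≤ K := fun m hm => by
    rw [hK]; exact norm_sum_char_wt_le hf hB hL hχ hm hN
  have h2 : ∀ m, 1 ≤ m → ‖∑ n ∈ Ico 1 N, χ n * (wt (fun u => u * f u) L ((m * n : ℕ) : ℝ) : ℂ)‖ ≤ K :=
    fun m hm => by rw [hK]; exact norm_sum_char_wt_le hf.mul_id hB' hL hχ hm hN
  have hcardU : ∀ W : ℕ, ∀ c : ℝ, 0 ≤ c → ∑ m ∈ Ico 1 N, (if m ≤ W then c else 0) ≤ W * c := by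
    intro W c hc
    rw [← Finset.sum_filter, Finset.sum_const, nsmul_eq_mul]
    have hsub : {m ∈ Ico 1 N | m ≤ W} ⊆ Ioc 0 W := by
      intro n hn
      rw [mem_filter, mem_Ico] at hn
      exact mem_Ioc.2 ⟨hn.1.1, hn.2⟩
    have : ((#{m ∈ Ico 1 N | m ≤ W} : ℕ) : ℝ) ≤ W := by
      have := card_le_card hsub
      rw [Nat.card_Ioc] at this
      exact_mod_cast this
    gcongr
  have hA : ‖∑ n ∈ Ico 1 N, ((muTrunc U * ArithmeticFunction.log) n : ℂ) * (χ n * (wt f L n : ℂ))‖ ≤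
      U * (2 * L * K) := by
    rw [sum_Ico_mul_eq _ _ (fun n : ℕ => χ n * (wt f L n : ℂ)) (hz f hB)]
    refine (norm_sum_le_of_le _ fun m hm => ?_).trans (hcardU U (2 * L * K) (by positivity))
    have hm1 := (mem_Ico.1 hm).1
    have hm0 : (0:ℝ) < m := by exact_mod_cast hm1
    rw [muTrunc_apply]
    split_ifs with hmU
    · have hlm0 : 0 ≤ Real.log m := Real.log_natCast_nonneg m
      have hlm : Real.log m ≤ L := by
        have : Real.log m ≤ Real.log U := Real.log_le_log hm0 (by exact_mod_cast hmU)
        linarith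
      have hid : ∑ n ∈ Ico 1 N, (((ArithmeticFunction.moebius m : ℝ) * ArithmeticFunction.log n : ℝ) : ℂ) *
          (χ ((m * n : ℕ)) * (wt f L ((m * n : ℕ) : ℝ) : ℂ)) =
          ((ArithmeticFunction.moebius m : ℝ) : ℂ) * χ m * (((L - Real.log m : ℝ) : ℂ) * ∑ n ∈ Ico 1 N, χ n * (wt f L ((m * n : ℕ) : ℝ) : ℂ) +
            ∑ n ∈ Ico 1 N, χ n * (wt (fun u => u * f u) L ((m * n : ℕ) : ℝ) : ℂ)) := by
        rw [mul_add, Finset.mul_sum, Finset.mul_sum, Finset.mul_sum, ← Finset.sum_add_distrib]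
        refine sum_congr rfl fun n hn => ?_
        have hn0 : (0:ℝ) < n := by exact_mod_cast (mem_Ico.1 hn).1
        rw [wt, wt, ArithmeticFunction.log_apply]
        push_cast
        rw [map_mul, Real.log_mul hm0.ne' hn0.ne']
        push_cast; ring
      rw [hid, norm_mul, norm_mul]
      have e1 : ‖((ArithmeticFunction.moebius m : ℝ) : ℂ)‖ ≤ 1 := by
        rw [Complex.norm_real, Real.norm_eq_abs]; exact_mod_cast ArithmeticFunction.abs_moebius_le_one
      have e2 : ‖χ m‖ ≤ 1 := χ.norm_le_one _
      refine (mul_le_of_le_one_left (norm_nonneg _) (mul_le_one₀ e1 (norm_nonneg _) e2)).trans ?_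
      refine (norm_add_le _ _).trans ?_
      rw [norm_mul, Complex.norm_real, Real.norm_of_nonneg (by linarith)]
      have := h1 m hm1
      have := h2 m hm1
      nlinarith [norm_nonneg (∑ n ∈ Ico 1 N, χ n * (wt f L ((m * n : ℕ) : ℝ) : ℂ))]
    · simp
  have hC : ‖∑ n ∈ Ico 1 N, (((vmTrunc U * muTrunc U) * (ArithmeticFunction.zeta : ArithmeticFunction ℝ)) n : ℂ) *
      (χ n * (wt f L n : ℂ))‖ ≤ (U * U : ℕ) * (L * K) := by
    rw [sum_Ico_mul_eq _ _ (fun n : ℕ => χ n * (wt f L n : ℂ)) (hz f hB)]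
    refine (norm_sum_le_of_le _ fun m hm => ?_).trans (hcardU (U * U) (L * K) (by positivity))
    have hm1 := (mem_Ico.1 hm).1
    have hm0 : (0:ℝ) < m := by exact_mod_cast hm1
    split_ifs with hmU
    · have hlm : Real.log m ≤ L := by
        have : Real.log m ≤ Real.log (U * U : ℕ) := Real.log_le_log hm0 (by exact_mod_cast hmU)
        push_cast at this
        rw [Real.log_mul (by linarith) (by linarith)] at this
        linarith
      have hid : ∑ n ∈ Ico 1 N, (((vmTrunc U * muTrunc U) m * (ArithmeticFunction.zeta : ArithmeticFunction ℝ) n : ℝ) : ℂ) *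
          (χ ((m * n : ℕ)) * (wt f L ((m * n : ℕ) : ℝ) : ℂ)) =
          ((vmTrunc U * muTrunc U) m : ℂ) * χ m * ∑ n ∈ Ico 1 N, χ n * (wt f L ((m * n : ℕ) : ℝ) : ℂ) := by
        rw [Finset.mul_sum]
        refine sum_congr rfl fun n hn => ?_
        have hn0 : n ≠ 0 := by have := (mem_Ico.1 hn).1; omega
        rw [ArithmeticFunction.natCoe_apply, ArithmeticFunction.zeta_apply, if_neg hn0]
        push_cast
        rw [map_mul]
        ring
      rw [hid, norm_mul, norm_mul, Complex.norm_real, Real.norm_eq_abs]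
      have e1 := (abs_vmTrunc_mul_muTrunc_le U m).trans hlm
      have e2 : ‖χ m‖ ≤ 1 := χ.norm_le_one _
      exact mul_le_mul ((mul_le_of_le_one_right (abs_nonneg _) e2).trans e1) (h1 m hm1)
        (norm_nonneg _) (by linarith)
    · rw [vmTrunc_mul_muTrunc_eq_zero (not_le.1 hmU)]; simp
  refine (add_le_add hA hC).trans ?_
  push_cast
  have hKL : 0 ≤ L * K := by positivity
  calc (U:ℝ) * (2 * L * K) + U * U * (L * K) ≤ 3 * (U ^ 2 * (L * K)) := by
        have : (U:ℝ) ≤ U ^ 2 := by nlinarith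
        have := mul_le_mul_of_nonneg_right this hKL
        nlinarith
    _ = _ := by rw [hK]; ring

lemma sqrt_le_of_block {x t A y : ℝ} (h : x * t ≤ (A * y) ^ 2) (hA : 0 ≤ A) (hy : 0 ≤ y) :
    √(x * t) ≤ A * y := by
  rw [← Real.sqrt_sq (mul_nonneg hA hy)]; exact Real.sqrt_le_sqrt h

lemma two_add_sq_le {L z : ℝ} (hL : 1 ≤ L) (hz : 0 ≤ z) :
    2 + 3 * L * z ^ 2 ≤ (2 * L) ^ 2 * (1 + z) ^ 2 := by
  have h4 : L * z ^ 2 ≤ L ^ 2 * z ^ 2 := by gcongr; nlinarith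
  nlinarith [mul_nonneg (sq_nonneg L) hz, mul_nonneg (sq_nonneg L) (sq_nonneg z)]

lemma six_add_sq_le {E L z : ℝ} (hE : 1 ≤ E) (hL : 1 ≤ L) (hz : 0 ≤ z) :
    6 * E + 3 * L * z ^ 2 ≤ (3 * E * L) ^ 2 * (1 + z) ^ 2 := by
  have h5 : 1 ≤ E * L := one_le_mul_of_one_le_of_one_le hE hL
  have h2 : E ≤ (E * L) ^ 2 := by nlinarith
  have h3 : L ≤ (E * L) ^ 2 := by nlinarith
  have h4 : L * z ^ 2 ≤ (E * L) ^ 2 * z ^ 2 := by gcongr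
  nlinarith [mul_nonneg (sq_nonneg (E * L)) hz, mul_nonneg (sq_nonneg (E * L)) (sq_nonneg z)]

lemma block_parameters {B L U M N Q μ ν : ℝ} (hB1 : 1 ≤ B) (hUr : 1 ≤ U) (hM1 : 1 ≤ M)
    (hN1 : 1 ≤ N) (hMU : U ≤ 2 * M) (hNUr : U ≤ N) (hMN : Real.exp (L - B) ≤ 2 * (M * N))
    (hμ2 : M * μ ^ 2 = 1) (hν2 : N * ν ^ 2 = 1) (hQ : 0 ≤ Q) :
    (1 + Q * μ) * (1 + Q * ν) ≤
      3 * Real.exp (2 * B) * (1 + Q / √U + Q ^ 2 * Real.exp (-(L / 2))) := by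
  obtain ⟨E, hE⟩ : ∃ E, E = Real.exp (2 * B) := ⟨_, rfl⟩
  have hE1 : 1 ≤ E := by rw [hE]; exact Real.one_le_exp (by linarith)
  rw [← hE]
  obtain ⟨t, ht⟩ : ∃ t, t = 1 / √U := ⟨_, rfl⟩
  have ht0 : 0 < t := by rw [ht]; positivity
  have ht2 : U * t ^ 2 = 1 := by
    rw [ht, div_pow, Real.sq_sqrt (by linarith)]; field_simp
  have hμt : μ ≤ 2 * t := by
    refine le_of_sq_le_sq ?_ (by positivity)
    by_contra! hlt
    have : 2 * M * (2 * t) ^ 2 < 2 * M * μ ^ 2 := by gcongr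
    nlinarith
  have hνt : ν ≤ t := by
    refine le_of_sq_le_sq ?_ (by positivity)
    by_contra! hlt
    have : N * t ^ 2 < N * ν ^ 2 := by gcongr
    nlinarith
  have hμν : μ * ν ≤ 2 * E * Real.exp (-(L / 2)) := by
    refine le_of_sq_le_sq ?_ (by positivity)
    have h1 : Real.exp (L - B) * Real.exp (-(L / 2)) ^ 2 * E ^ 2 = Real.exp (3 * B) := by
      rw [hE, sq, sq, ← Real.exp_add, ← Real.exp_add, ← Real.exp_add, ← Real.exp_add]; congr 1; ring
    have h2 : 1 ≤ Real.exp (3 * B) := Real.one_le_exp (by linarith)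
    have h3 : M * N * (μ * ν) ^ 2 = 1 := by
      rw [mul_pow]; linear_combination N * ν ^ 2 * hμ2 + hν2
    have h4 : 1 ≤ 2 * (M * N) * (Real.exp (-(L / 2)) ^ 2 * E ^ 2) := by
      refine h2.trans ?_
      rw [← h1, mul_assoc]; gcongr
    have h5 : 0 < M * N := by positivity
    refine le_of_mul_le_mul_left ?_ h5
    rw [h3]; nlinarith
  rw [div_eq_mul_one_div Q, ← ht]
  have h1 : Q * μ ≤ Q * (2 * t) := by gcongr
  have h2 : Q * ν ≤ Q * t := by gcongr
  have h3 : Q ^ 2 * (μ * ν) ≤ Q ^ 2 * (2 * E * Real.exp (-(L / 2))) := by gcongr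
  have h4 : Q * t ≤ E * (Q * t) := le_mul_of_one_le_left (by positivity) hE1
  have h5 : 0 ≤ E * (Q ^ 2 * Real.exp (-(L / 2))) := by positivity
  nlinarith

set_option maxHeartbeats 800000 in
/-- One dyadic block of the bilinear part of Vaughan's identity. -/
lemma type_two_block {f : ℝ → ℝ} (hf : TestFn f) : ∃ C : ℝ, 1 ≤ C ∧ ∀ B, BddBy f B → ∀ (L : ℝ), 1 ≤ L →
    ∀ (Q U I i : ℕ), 1 ≤ Q → (Q : ℝ) ≤ Real.exp L → 1 ≤ U → Real.exp (L + B) < (2:ℝ) ^ I →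
    (2:ℝ) ^ I ≤ 2 * Real.exp (L + B) → i < I →
    ∑ q ∈ Icc 1 Q, ∑ χ ∈ primChars q, ‖∑ m ∈ Ico (2 ^ i) (2 ^ (i + 1)), ∑ n ∈ Ico 1 (2 ^ I),
      (((ArithmeticFunction.vonMangoldt - vmTrunc U) m * vaughanB U n : ℝ) : ℂ) * (χ m * χ n) *
        (wt f L ((m * n : ℕ) : ℝ) : ℂ)‖ ≤
    C * (1728 * B ^ 3 * Real.exp (4 * B)) * L ^ 5 *
      (1 + Q / √U + Q ^ 2 * Real.exp (-(L / 2))) := by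
  obtain ⟨C, hC1, hC⟩ := bilinear_block hf
  refine ⟨C, hC1, fun B hB L hL Q U I i hQ hQL hU hI1 hI2 hi => ?_⟩
  have hB1 := hB.1
  have hUr : (1:ℝ) ≤ U := by exact_mod_cast hU
  have hav : ∀ m, (ArithmeticFunction.vonMangoldt - vmTrunc U) m =
      if m ≤ U then 0 else ArithmeticFunction.vonMangoldt m := by
    intro m
    rw [sub_eq_add_neg, ArithmeticFunction.add_apply]
    change _ + -(vmTrunc U m) = _
    rw [vmTrunc_apply]
    split_ifs <;> simp
  rcases le_or_gt (2 ^ (i + 1)) U with hUi | hUi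
  · -- the block lies below the cut-off
    have : ∀ q, ∀ χ ∈ primChars q, ‖∑ m ∈ Ico (2 ^ i) (2 ^ (i + 1)), ∑ n ∈ Ico 1 (2 ^ I),
      (((ArithmeticFunction.vonMangoldt - vmTrunc U) m * vaughanB U n : ℝ) : ℂ) * (χ m * χ n) *
        (wt f L ((m * n : ℕ) : ℝ) : ℂ)‖ = 0 := by
      intro q χ _
      rw [norm_eq_zero]
      refine sum_eq_zero fun m hm => sum_eq_zero fun n _ => ?_
      rw [hav, if_pos ((mem_Ico.1 hm).2.le.trans hUi)]; simp
    rw [sum_eq_zero fun q _ => sum_eq_zero (this q)]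
    positivity
  obtain ⟨N, hNdef⟩ : ∃ N : ℕ, N = max U ⌈Real.exp (L - B) / 2 ^ (i + 1)⌉₊ := ⟨_, rfl⟩
  obtain ⟨T, hT⟩ : ∃ T : ℕ, T = ⌊Real.exp (L + B) / 2 ^ i⌋₊ + 1 := ⟨_, rfl⟩
  have hNU : U ≤ N := hNdef ▸ le_max_left _ _
  have hNe : Real.exp (L - B) / 2 ^ (i + 1) ≤ N :=
    (Nat.le_ceil _).trans (by exact_mod_cast hNdef ▸ le_max_right _ _)
  have hNUr : (U:ℝ) ≤ N := by exact_mod_cast hNU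
  have hN1 : (1:ℝ) ≤ N := hUr.trans hNUr
  have h2i : (1:ℝ) ≤ 2 ^ i := one_le_pow₀ (by norm_num)
  have hTI : T ≤ 2 ^ I := by
    rw [hT]
    have : (⌊Real.exp (L + B) / 2 ^ i⌋₊ : ℝ) < (2:ℝ) ^ I :=
      (Nat.floor_le (by positivity)).trans_lt ((div_le_self (by positivity) h2i).trans_lt hI1)
    exact_mod_cast this
  have hrestrict : ∀ q (χ : DirichletCharacter ℂ q), ∑ m ∈ Ico (2 ^ i) (2 ^ (i + 1)), ∑ n ∈ Ico 1 (2 ^ I),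
      (((ArithmeticFunction.vonMangoldt - vmTrunc U) m * vaughanB U n : ℝ) : ℂ) * (χ m * χ n) *
        (wt f L ((m * n : ℕ) : ℝ) : ℂ) =
      ∑ m ∈ Ico (2 ^ i) (2 ^ i + 2 ^ i), ∑ n ∈ Ico N (N + (T - N)),
      (((ArithmeticFunction.vonMangoldt - vmTrunc U) m * vaughanB U n : ℝ) : ℂ) * (χ m * χ n) *
        (wt f L ((m * n : ℕ) : ℝ) : ℂ) := by
    intro q χ
    rw [show 2 ^ (i + 1) = 2 ^ i + 2 ^ i by ring]
    refine sum_congr rfl fun m hm => ?_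
    symm
    refine sum_subset (fun n hn => ?_) fun n hn hn' => ?_
    · rw [mem_Ico] at hn ⊢; omega
    · rw [mem_Ico] at hn hm
      have hmr : (2:ℝ) ^ i ≤ m := by exact_mod_cast hm.1
      have hmr2 : (m:ℝ) ≤ 2 ^ (i + 1) := by
        have : m ≤ 2 ^ (i + 1) := by rw [pow_succ]; omega
        exact_mod_cast this
      have hn0 : (0:ℝ) < n := by exact_mod_cast hn.1
      have hm0 : (0:ℝ) < m := lt_of_lt_of_le (by positivity) hmr
      rcases lt_or_ge n N with hlt | hge
      · rw [hNdef, lt_max_iff] at hlt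
        rcases hlt with hlt | hlt
        · rw [vaughanB_eq_zero hlt.le]; simp
        · rw [Nat.lt_ceil, lt_div_iff₀ (by positivity)] at hlt
          rw [wt_eq_zero hB (by push_cast; positivity) (Or.inr ?_)]
          · simp
          · push_cast
            refine lt_of_le_of_lt ?_ hlt
            rw [mul_comm]; gcongr
      · have hTn : T ≤ n := by
          by_contra! hh
          exact hn' (mem_Ico.2 (by omega))
        rw [wt_eq_zero hB (by push_cast; positivity) (Or.inl ?_)]
        · simp
        · have : Real.exp (L + B) / 2 ^ i < n := by
            rw [hT] at hTn
            exact (Nat.lt_floor_add_one _).trans_le (by exact_mod_cast hTn)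
          rw [div_lt_iff₀ (by positivity)] at this
          push_cast
          refine this.trans_le ?_
          rw [mul_comm]; gcongr
  simp_rw [hrestrict]
  refine (hC L hL Q hQ (fun m => (ArithmeticFunction.vonMangoldt - vmTrunc U) m) (fun n => vaughanB U n) (2 ^ i) (2 ^ i) N (T - N)
    Nat.one_le_two_pow (hU.trans hNU)).trans ?_
  have hQr : (1:ℝ) ≤ Q := by exact_mod_cast hQ
  have hlQ0 := Real.log_nonneg hQr
  have hlQ : Real.log Q ≤ L := by rw [Real.log_le_iff_le_exp (by linarith)]; exact hQL
  have hlI : Real.log ((2:ℝ) ^ I) ≤ 3 * B * L := by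
    have h1 : Real.log ((2:ℝ) ^ I) ≤ Real.log (2 * Real.exp (L + B)) := Real.log_le_log (by positivity) hI2
    rw [Real.log_mul (by norm_num) (Real.exp_ne_zero _), Real.log_exp] at h1
    have := Real.log_two_lt_d9
    nlinarith
  obtain ⟨E, hE⟩ : ∃ E, E = Real.exp (2 * B) := ⟨_, rfl⟩
  have hE1 : 1 ≤ E := by rw [hE]; exact Real.one_le_exp (by linarith)
  obtain ⟨M, hM⟩ : ∃ M : ℝ, M = 2 ^ i := ⟨_, rfl⟩
  have hM1 : 1 ≤ M := hM ▸ h2i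
  have hMU : (U:ℝ) ≤ 2 * M := by
    have : (U:ℝ) ≤ 2 ^ (i + 1) := by exact_mod_cast hUi.le
    rw [hM, mul_comm]; exact this
  have hMN : Real.exp (L - B) ≤ 2 * (M * N) := by
    rw [div_le_iff₀ (by positivity), pow_succ, ← hM] at hNe
    linarith
  have hTN : ((T - N : ℕ) : ℝ) ≤ 3 * E * N := by
    have h1 : ((T - N : ℕ) : ℝ) ≤ T := by exact_mod_cast Nat.sub_le _ _
    have h2 : (T : ℝ) ≤ Real.exp (L + B) / M + 1 := by
      rw [hT, hM]; push_cast; gcongr; exact Nat.floor_le (by positivity)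
    have h3 : Real.exp (L + B) / M ≤ 2 * E * N := by
      rw [div_le_iff₀ (by positivity)]
      have : Real.exp (L + B) = E * Real.exp (L - B) := by
        rw [hE, ← Real.exp_add]; congr 1; ring
      rw [this]
      calc E * Real.exp (L - B) ≤ E * (2 * (M * N)) := by gcongr
        _ = 2 * E * N * M := by ring
    have h4 : (1:ℝ) ≤ E * N := one_le_mul_of_one_le_of_one_le hE1 hN1
    linarith
  -- the two coefficient sums
  have hs1 : ∑ m ∈ Ico (2 ^ i) (2 ^ i + 2 ^ i), ((ArithmeticFunction.vonMangoldt - vmTrunc U) m / m) ^ 2 ≤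
      (3 * B * L) ^ 2 / M := by
    have hb : ∀ m ∈ Ico (2 ^ i) (2 ^ i + 2 ^ i), ((ArithmeticFunction.vonMangoldt - vmTrunc U) m / m) ^ 2 ≤
        (3 * B * L) ^ 2 / M ^ 2 := by
      intro m hm
      rw [mem_Ico] at hm
      have hmr : M ≤ m := by rw [hM]; exact_mod_cast hm.1
      have hm0 : (0:ℝ) < m := by linarith
      have hmI : (m:ℝ) ≤ 2 ^ I := by
        have : m ≤ 2 ^ (i + 1) := by rw [pow_succ]; omega
        have := this.trans (Nat.pow_le_pow_right (by norm_num) hi)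
        exact_mod_cast this
      have h1 : |(ArithmeticFunction.vonMangoldt - vmTrunc U) m| ≤ 3 * B * L := by
        have hl := (Real.log_le_log hm0 hmI).trans hlI
        rw [hav]
        split_ifs
        · rw [abs_zero]; positivity
        · rw [abs_of_nonneg ArithmeticFunction.vonMangoldt_nonneg]
          exact ArithmeticFunction.vonMangoldt_le_log.trans hl
      rw [div_pow, ← sq_abs (_ : ℝ)]
      gcongr
    refine (sum_le_card_nsmul _ _ _ hb).trans (le_of_eq ?_)
    rw [Nat.card_Ico, Nat.add_sub_cancel_left, nsmul_eq_mul]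
    push_cast
    rw [← hM]; field_simp
  have hs2 : ∑ n ∈ Ico N (N + (T - N)), (vaughanB U n / n) ^ 2 ≤ 4 * (4 * B * L) ^ 4 / N := by
    have hb : ∀ n ∈ Ico N (N + (T - N)), (vaughanB U n / n) ^ 2 ≤
        4 / N * ((n.divisors.card : ℝ) ^ 2 / n) := by
      intro n hn
      rw [mem_Ico] at hn
      have hnr : (N:ℝ) ≤ n := by exact_mod_cast hn.1
      have hn0 : (0:ℝ) < n := by linarith
      have h1 := abs_vaughanB_le (U := U) (n := n) (by exact_mod_cast hn0)
      rw [div_pow, ← sq_abs (vaughanB U n)]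
      calc |vaughanB U n| ^ 2 / (n:ℝ) ^ 2 ≤ (2 * n.divisors.card) ^ 2 / (N * n) := by
            gcongr; rw [sq]; gcongr
        _ = _ := by field_simp; ring
    refine (sum_le_sum hb).trans ?_
    rw [← Finset.mul_sum]
    have h2 : ∑ n ∈ Ico N (N + (T - N)), (n.divisors.card : ℝ) ^ 2 / n ≤ (4 * B * L) ^ 4 := by
      refine (sum_le_sum_of_subset_of_nonneg (t := Icc 1 (2 ^ I)) (fun n hn => ?_)
        fun n _ _ => by positivity).trans ((sum_card_divisors_pow_div_le 2 (2 ^ I)).trans ?_)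
      · rw [mem_Ico] at hn; rw [mem_Icc]; omega
      · push_cast
        have : 0 ≤ Real.log ((2:ℝ) ^ I) := Real.log_nonneg (one_le_pow₀ (by norm_num))
        have : 1 + Real.log ((2:ℝ) ^ I) ≤ 4 * B * L := by nlinarith
        calc (1 + Real.log ((2:ℝ) ^ I)) ^ (2 ^ 2) ≤ (4 * B * L) ^ (2 ^ 2) := by gcongr
          _ = _ := by norm_num
    calc _ ≤ 4 / (N:ℝ) * (4 * B * L) ^ 4 := by gcongr
      _ = _ := by ring
  obtain ⟨μ, hμ⟩ : ∃ μ, μ = 1 / √M := ⟨_, rfl⟩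
  obtain ⟨ν, hν⟩ : ∃ ν, ν = 1 / √(N:ℝ) := ⟨_, rfl⟩
  have hμ0 : 0 < μ := by rw [hμ]; positivity
  have hν0 : 0 < ν := by rw [hν]; have : (0:ℝ) < N := by linarith
                         positivity
  have hμ2 : M * μ ^ 2 = 1 := by
    rw [hμ, div_pow, Real.sq_sqrt (by linarith)]; field_simp
  have hν2 : (N:ℝ) * ν ^ 2 = 1 := by
    rw [hν, div_pow, Real.sq_sqrt (by linarith)]; field_simp
  have hr1 : √((2 * (2 ^ i : ℕ) + Q ^ 2 * (1 + 2 * Real.log Q)) *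
      ∑ m ∈ Ico (2 ^ i) (2 ^ i + 2 ^ i), ((ArithmeticFunction.vonMangoldt - vmTrunc U) m / m) ^ 2) ≤
      (6 * B * L ^ 2) * (1 + Q * μ) := by
    refine sqrt_le_of_block ?_ (by positivity) (by positivity)
    push_cast
    rw [← hM]
    calc _ ≤ (2 * M + Q ^ 2 * (3 * L)) * ((3 * B * L) ^ 2 / M) := by gcongr; linarith
      _ = (3 * B * L) ^ 2 * (2 + 3 * L * Q ^ 2 * μ ^ 2) := by
        have : (1:ℝ) / M = μ ^ 2 := by field_simp; linarith
        rw [div_eq_mul_one_div ((3 * B * L) ^ 2) M, this]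
        linear_combination 2 * (3 * B * L) ^ 2 * hμ2
      _ ≤ (3 * B * L) ^ 2 * ((2 * L) ^ 2 * (1 + Q * μ) ^ 2) := by
        rw [mul_assoc (3 * L), ← mul_pow (Q:ℝ)]
        exact mul_le_mul_of_nonneg_left (two_add_sq_le hL (by positivity)) (sq_nonneg _)
      _ = _ := by ring
  have hr2 : √((2 * (T - N : ℕ) + Q ^ 2 * (1 + 2 * Real.log Q)) *
      ∑ n ∈ Ico N (N + (T - N)), (vaughanB U n / n) ^ 2) ≤ (96 * B ^ 2 * E * L ^ 3) * (1 + Q * ν) := by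
    refine sqrt_le_of_block ?_ (by positivity) (by positivity)
    calc _ ≤ (2 * (3 * E * N) + Q ^ 2 * (3 * L)) * (4 * (4 * B * L) ^ 4 / N) := by
          gcongr; linarith
      _ = 4 * (4 * B * L) ^ 4 * (6 * E + 3 * L * Q ^ 2 * ν ^ 2) := by
        have : (1:ℝ) / N = ν ^ 2 := by field_simp; linarith
        rw [div_eq_mul_one_div (4 * (4 * B * L) ^ 4) (N:ℝ), this]
        linear_combination 6 * E * (4 * (4 * B * L) ^ 4) * hν2
      _ ≤ 4 * (4 * B * L) ^ 4 * ((3 * E * L) ^ 2 * (1 + Q * ν) ^ 2) := by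
        rw [mul_assoc (3 * L), ← mul_pow (Q:ℝ)]
        exact mul_le_mul_of_nonneg_left (six_add_sq_le hE1 hL (by positivity)) (by positivity)
      _ = _ := by ring
  have hfin : (1 + Q * μ) * (1 + Q * ν) ≤ 3 * E * (1 + Q / √U + Q ^ 2 * Real.exp (-(L / 2))) := by
    rw [hE]
    exact block_parameters hB1 hUr hM1 hN1 hMU hNUr hMN hμ2 hν2 (by linarith)
  calc _ ≤ C * ((6 * B * L ^ 2) * (1 + Q * μ) * ((96 * B ^ 2 * E * L ^ 3) * (1 + Q * ν))) := by
        refine mul_le_mul_of_nonneg_left ?_ (by linarith)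
        exact mul_le_mul hr1 hr2 (Real.sqrt_nonneg _) (by positivity)
    _ = C * (576 * B ^ 3 * E * L ^ 5) * ((1 + Q * μ) * (1 + Q * ν)) := by ring
    _ ≤ C * (576 * B ^ 3 * E * L ^ 5) * (3 * E * (1 + Q / √U + Q ^ 2 * Real.exp (-(L / 2)))) := by
        gcongr
    _ = C * (1728 * B ^ 3 * (E * E)) * L ^ 5 * (1 + Q / √U + Q ^ 2 * Real.exp (-(L / 2))) := by ring
    _ = _ := by rw [hE, ← Real.exp_add]; congr 4; ring_nf

end OmegaSq

namespace OmegaSq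

open Finset

lemma sum_Ico_two_pow {M : Type*} [AddCommMonoid M] (g : ℕ → M) (I : ℕ) :
    ∑ n ∈ Ico 1 (2 ^ I), g n = ∑ i ∈ range I, ∑ n ∈ Ico (2 ^ i) (2 ^ (i + 1)), g n := by
  induction I with
  | zero => simp
  | succ I ih =>
    rw [sum_range_succ, ← ih]
    exact (sum_Ico_consecutive g Nat.one_le_two_pow (Nat.pow_le_pow_right (by norm_num) (by omega))).symm

lemma card_char_le (q : ℕ) [NeZero q] : (Fintype.card (DirichletCharacter ℂ q) : ℝ) ≤ q := by
  rw [← Nat.card_eq_fintype_card, DirichletCharacter.card_eq_totient_of_hasEnoughRootsOfUnity]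
  exact_mod_cast Nat.totient_le q

lemma ne_one_of_mem_primChars {q : ℕ} (hq : 2 ≤ q) {χ : DirichletCharacter ℂ q} (h : χ ∈ primChars q) :
    χ ≠ 1 := by
  have : NeZero q := ⟨by omega⟩
  rintro rfl
  rw [mem_primChars, DirichletCharacter.isPrimitive_def, DirichletCharacter.conductor_one] at h
  omega

/-- Vaughan's identity applied to a single `Ψ`. -/
lemma norm_Psi_le {f : ℝ → ℝ} {B L : ℝ} (hB : BddBy f B) {U I : ℕ} (hI : Real.exp (L + B) < (2:ℝ) ^ I)
    (hU : (U:ℝ) < Real.exp (L - B)) {k : ℕ} (χ : DirichletCharacter ℂ k) :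
    ‖Psi f L χ‖ ≤ (‖∑ n ∈ Ico 1 (2 ^ I), ((muTrunc U * ArithmeticFunction.log) n : ℂ) *
        (χ n * (wt f L n : ℂ))‖ + ‖∑ n ∈ Ico 1 (2 ^ I), (((vmTrunc U * muTrunc U) *
        (ArithmeticFunction.zeta : ArithmeticFunction ℝ)) n : ℂ) * (χ n * (wt f L n : ℂ))‖) +
      ∑ i ∈ range I, ‖∑ m ∈ Ico (2 ^ i) (2 ^ (i + 1)), ∑ n ∈ Ico 1 (2 ^ I),
        (((ArithmeticFunction.vonMangoldt - vmTrunc U) m * vaughanB U n : ℝ) : ℂ) * (χ m * χ n) *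
          (wt f L ((m * n : ℕ) : ℝ) : ℂ)‖ := by
  have hN : Real.exp (L + B) < ((2 ^ I : ℕ) : ℝ) := by push_cast; exact hI
  have h0 : Psi f L χ = ∑ n ∈ Ico 1 (2 ^ I), (ArithmeticFunction.vonMangoldt n : ℂ) * (χ n * (wt f L n : ℂ)) := by
    rw [Psi, tsum_wt_eq_sum hB hN _ (by simp)]
    exact sum_congr rfl fun n _ => by ring
  have hF : ∀ n : ℕ, 2 ^ I ≤ n → (χ n * (wt f L n : ℂ)) = 0 := by
    intro n hn
    have h1 : ((2 ^ I : ℕ) : ℝ) ≤ n := by exact_mod_cast hn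
    rw [wt_eq_zero hB (by linarith [Real.exp_pos (L + B)]) (Or.inl (by linarith))]
    simp
  have h1 := sum_Ico_mul_eq (ArithmeticFunction.vonMangoldt - vmTrunc U) (vaughanB U)
    (fun n => χ n * (wt f L n : ℂ)) hF
  have h2 : Psi f L χ = ∑ n ∈ Ico 1 (2 ^ I), ((muTrunc U * ArithmeticFunction.log) n : ℂ) *
        (χ n * (wt f L n : ℂ)) - ∑ n ∈ Ico 1 (2 ^ I), (((vmTrunc U * muTrunc U) *
        (ArithmeticFunction.zeta : ArithmeticFunction ℝ)) n : ℂ) * (χ n * (wt f L n : ℂ)) +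
      ∑ n ∈ Ico 1 (2 ^ I), (((ArithmeticFunction.vonMangoldt - vmTrunc U) * vaughanB U) n : ℂ) *
        (χ n * (wt f L n : ℂ)) := by
    rw [h0, ← sum_sub_distrib, ← sum_add_distrib]
    refine sum_congr rfl fun n hn => ?_
    conv_lhs => rw [vaughan U]
    have h3 : ((vmTrunc U n : ℝ) : ℂ) * (χ n * (wt f L n : ℂ)) = 0 := by
      rw [vmTrunc_apply]
      split_ifs with h
      · have : (n:ℝ) ≤ U := by exact_mod_cast h
        rw [wt_eq_zero hB (by exact_mod_cast (mem_Ico.1 hn).1) (Or.inr (by linarith))]; simp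
      · simp
    have hsub : ∀ a b : ArithmeticFunction ℝ, (a - b) n = a n - b n := fun a b => rfl
    simp only [ArithmeticFunction.add_apply, hsub, Complex.ofReal_add, Complex.ofReal_sub]
    linear_combination h3
  rw [h2, h1, sum_Ico_two_pow (fun m => ∑ n ∈ Ico 1 (2 ^ I), _)]
  refine (norm_add_le _ _).trans (add_le_add (norm_sub_le _ _) ?_)
  refine (norm_sum_le _ _).trans (sum_le_sum fun i _ => le_of_eq ?_)
  congr 1
  refine sum_congr rfl fun m _ => sum_congr rfl fun n _ => ?_
  rw [Nat.cast_mul, map_mul]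
  ring

lemma exists_two_pow {y : ℝ} (hy : 1 ≤ y) : ∃ I : ℕ, y < (2:ℝ) ^ I ∧ (2:ℝ) ^ I ≤ 2 * y := by
  obtain ⟨n, h1, h2⟩ := exists_nat_pow_near hy (one_lt_two)
  exact ⟨n + 1, h2, by rw [pow_succ]; linarith⟩

/-- Mean value of `Ψ` over all primitive characters of conductor at most `Q`. -/
theorem sum_Psi_le {f : ℝ → ℝ} (hf : TestFn f) : ∃ C : ℝ, 1 ≤ C ∧ ∃ L₀ : ℝ, 1 ≤ L₀ ∧ ∀ L, L₀ ≤ L →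
    ∀ Q : ℕ, 1 ≤ Q → (Q:ℝ) ≤ Real.exp L → ∑ q ∈ Icc 2 Q, ∑ χ ∈ primChars q, ‖Psi f L χ‖ ≤
      C * L ^ 6 * (1 + Q * Real.exp (-(L / 20)) + Q ^ 2 * Real.exp (-(L / 2)) +
        Q ^ 3 * Real.exp (-(4 / 5 * L))) := by
  obtain ⟨B, hB, h1⟩ := type_one_le hf
  obtain ⟨C, hC, h2⟩ := type_two_block hf
  have hB1 := hB.1
  refine ⟨18 * B * Real.exp (4 * B) + 6 * B * (C * (1728 * B ^ 3 * Real.exp (4 * B))) * 2, ?_, 2 * B + 10, by linarith, ?_⟩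
  · have : 1 ≤ Real.exp (4 * B) := Real.one_le_exp (by linarith)
    have : 1 ≤ 18 * B * Real.exp (4 * B) := by nlinarith
    have : 0 ≤ 6 * B * (C * (1728 * B ^ 3 * Real.exp (4 * B))) * 2 := by positivity
    linarith
  intro L hL Q hQ hQL
  have hL1 : 1 ≤ L := by linarith
  obtain ⟨I, hI1, hI2⟩ := exists_two_pow (y := Real.exp (L + B)) (Real.one_le_exp (by linarith))
  obtain ⟨U, hU⟩ : ∃ U, U = ⌊Real.exp (L / 10)⌋₊ := ⟨_, rfl⟩
  have hUle : (U:ℝ) ≤ Real.exp (L / 10) := hU ▸ Nat.floor_le (Real.exp_pos _).le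
  have hUgt : Real.exp (L / 10) < U + 1 := hU ▸ Nat.lt_floor_add_one _
  have hU1 : 1 ≤ U := by rw [hU, Nat.one_le_floor_iff]; exact Real.one_le_exp (by linarith)
  have hU1r : (1:ℝ) ≤ U := by exact_mod_cast hU1
  have hlogU : Real.log U ≤ L / 2 := by
    have := Real.log_le_log (by linarith) hUle
    rw [Real.log_exp] at this; linarith
  have hUB : (U:ℝ) < Real.exp (L - B) := hUle.trans_lt (Real.exp_lt_exp.2 (by linarith))
  have hIle : (I:ℝ) ≤ 6 * B * L := by
    have := Real.log_le_log (by positivity) hI2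
    rw [Real.log_pow, Real.log_mul (by norm_num) (Real.exp_pos _).ne', Real.log_exp] at this
    have h3 := Real.log_two_gt_d9
    have h4 := Real.log_two_lt_d9
    have h5 : L + B ≤ 2 * (B * L) := by nlinarith
    have h6 : 1 ≤ B * L := by nlinarith
    have h7 : (0:ℝ) ≤ I := Nat.cast_nonneg _
    nlinarith
  have hsqrt : (Q:ℝ) / √U ≤ 2 * (Q * Real.exp (-(L / 20))) := by
    rw [Real.exp_neg]
    have : Real.exp (L / 20) / 2 ≤ √U := by
      apply Real.le_sqrt_of_sq_le
      rw [div_pow, ← Real.exp_nat_mul]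
      have : Real.exp ((2:ℕ) * (L / 20)) = Real.exp (L / 10) := by congr 1; push_cast; ring
      rw [this]; linarith
    rw [div_le_iff₀ (by positivity)]
    have hQ0 : (0:ℝ) ≤ Q := Nat.cast_nonneg _
    calc (Q:ℝ) = 2 * (Q * (Real.exp (L / 20))⁻¹) * (Real.exp (L / 20) / 2) := by field_simp
      _ ≤ _ := by gcongr
  have hU2 : (U:ℝ) ^ 2 * Real.exp (-L) ≤ Real.exp (-(4 / 5 * L)) := by
    calc (U:ℝ) ^ 2 * Real.exp (-L) ≤ (Real.exp (L / 10)) ^ 2 * Real.exp (-L) := by gcongr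
      _ = _ := by rw [← Real.exp_nat_mul, ← Real.exp_add]; congr 1; push_cast; ring
  -- type I contribution
  have hI' : ∀ q ∈ Icc 2 Q, ∑ χ ∈ primChars q, (‖∑ n ∈ Ico 1 (2 ^ I), ((muTrunc U * ArithmeticFunction.log) n : ℂ) *
        (χ n * (wt f L n : ℂ))‖ + ‖∑ n ∈ Ico 1 (2 ^ I), (((vmTrunc U * muTrunc U) *
        (ArithmeticFunction.zeta : ArithmeticFunction ℝ)) n : ℂ) * (χ n * (wt f L n : ℂ))‖) ≤
        Q * (18 * B * Real.exp (4 * B) * L * Q * Real.exp (-(4 / 5 * L))) := by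
    intro q hq
    rw [mem_Icc] at hq
    have : NeZero q := ⟨by omega⟩
    have hqQ : (q:ℝ) ≤ Q := by exact_mod_cast hq.2
    have hb : ∀ χ ∈ primChars q, (‖∑ n ∈ Ico 1 (2 ^ I), ((muTrunc U * ArithmeticFunction.log) n : ℂ) *
        (χ n * (wt f L n : ℂ))‖ + ‖∑ n ∈ Ico 1 (2 ^ I), (((vmTrunc U * muTrunc U) *
        (ArithmeticFunction.zeta : ArithmeticFunction ℝ)) n : ℂ) * (χ n * (wt f L n : ℂ))‖) ≤
        18 * B * Real.exp (4 * B) * L * Q * Real.exp (-(4 / 5 * L)) := by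
      intro χ hχ
      refine (h1 L hL1 U (2 ^ I) q χ (ne_one_of_mem_primChars hq.1 hχ) hU1 (by push_cast; exact hI1) hlogU).trans ?_
      calc _ = 18 * B * Real.exp (4 * B) * L * q * ((U:ℝ) ^ 2 * Real.exp (-L)) := by ring
        _ ≤ _ := by gcongr
    refine (sum_le_card_nsmul _ _ _ hb).trans ?_
    rw [nsmul_eq_mul]
    have : ((primChars q).card : ℝ) ≤ Q := by
      refine le_trans ?_ ((card_char_le q).trans hqQ)
      exact_mod_cast card_le_univ _
    gcongr
  have hI'' := (sum_le_card_nsmul _ _ _ hI')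
  rw [nsmul_eq_mul] at hI''
  have hcard : ((Icc 2 Q).card : ℝ) ≤ Q := by
    rw [Nat.card_Icc]; exact_mod_cast (by omega)
  -- type II contribution
  have hII : ∑ q ∈ Icc 2 Q, ∑ χ ∈ primChars q, ∑ i ∈ range I, ‖∑ m ∈ Ico (2 ^ i) (2 ^ (i + 1)), ∑ n ∈ Ico 1 (2 ^ I),
        (((ArithmeticFunction.vonMangoldt - vmTrunc U) m * vaughanB U n : ℝ) : ℂ) * (χ m * χ n) *
          (wt f L ((m * n : ℕ) : ℝ) : ℂ)‖ ≤
      I * (C * (1728 * B ^ 3 * Real.exp (4 * B)) * L ^ 5 * (1 + Q / √U + Q ^ 2 * Real.exp (-(L / 2)))) := by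
    simp_rw [sum_comm (s := primChars _)]
    rw [sum_comm]
    have hb : ∀ i ∈ range I, ∑ q ∈ Icc 2 Q, ∑ χ ∈ primChars q, ‖∑ m ∈ Ico (2 ^ i) (2 ^ (i + 1)), ∑ n ∈ Ico 1 (2 ^ I),
        (((ArithmeticFunction.vonMangoldt - vmTrunc U) m * vaughanB U n : ℝ) : ℂ) * (χ m * χ n) *
          (wt f L ((m * n : ℕ) : ℝ) : ℂ)‖ ≤
        C * (1728 * B ^ 3 * Real.exp (4 * B)) * L ^ 5 * (1 + Q / √U + Q ^ 2 * Real.exp (-(L / 2))) := by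
      intro i hi
      refine le_trans (sum_le_sum_of_subset_of_nonneg (Icc_subset_Icc_left (by norm_num)) fun q _ _ =>
        sum_nonneg fun χ _ => norm_nonneg _) (h2 B hB L hL1 Q U I i hQ hQL hU1 hI1 hI2 (mem_range.1 hi))
    refine (sum_le_card_nsmul _ _ _ hb).trans (le_of_eq ?_)
    rw [card_range, nsmul_eq_mul]
  have hall : ∑ q ∈ Icc 2 Q, ∑ χ ∈ primChars q, ‖Psi f L χ‖ ≤ _ :=
    sum_le_sum fun q _ => sum_le_sum fun χ _ => norm_Psi_le hB hI1 hUB χ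
  simp_rw [sum_add_distrib (s := primChars _)] at hall
  rw [sum_add_distrib] at hall
  simp_rw [sum_add_distrib (s := primChars _)] at hI''
  refine hall.trans ((add_le_add hI'' hII).trans ?_)
  obtain ⟨E, hE⟩ : ∃ E, E = Real.exp (4 * B) := ⟨_, rfl⟩
  obtain ⟨K, hK⟩ : ∃ K, K = C * (1728 * B ^ 3 * E) := ⟨_, rfl⟩
  have hE0 : 0 < E := hE ▸ Real.exp_pos _
  have hK0 : 0 < K := hK ▸ by positivity
  rw [← hE, ← hK]
  obtain ⟨a, ha⟩ : ∃ a, a = (Q:ℝ) * Real.exp (-(L / 20)) := ⟨_, rfl⟩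
  obtain ⟨b, hb⟩ : ∃ a, a = (Q:ℝ) ^ 2 * Real.exp (-(L / 2)) := ⟨_, rfl⟩
  obtain ⟨c, hc⟩ : ∃ a, a = (Q:ℝ) ^ 3 * Real.exp (-(4 / 5 * L)) := ⟨_, rfl⟩
  have ha0 : 0 ≤ a := ha ▸ by positivity
  have hb0 : 0 ≤ b := hb ▸ by positivity
  have hc0 : 0 ≤ c := hc ▸ by positivity
  have t1 : (((Icc 2 Q).card : ℕ) : ℝ) * (Q * (18 * B * E * L * Q * Real.exp (-(4 / 5 * L)))) ≤
      18 * B * E * L ^ 6 * c := by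
    calc _ ≤ (Q:ℝ) * (Q * (18 * B * E * L * Q * Real.exp (-(4 / 5 * L)))) := by gcongr
      _ = 18 * B * E * L ^ 1 * c := by rw [hc]; ring
      _ ≤ _ := mul_le_mul_of_nonneg_right (mul_le_mul_of_nonneg_left
        (pow_le_pow_right₀ hL1 (by norm_num)) (by positivity)) hc0
  have t2 : (I:ℝ) * (K * L ^ 5 * (1 + Q / √U + Q ^ 2 * Real.exp (-(L / 2)))) ≤
      6 * B * K * 2 * L ^ 6 * (1 + a + b) := by
    calc _ ≤ (6 * B * L) * (K * L ^ 5 * (2 * (1 + a + b))) := by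
          have : 1 + (Q:ℝ) / √U + Q ^ 2 * Real.exp (-(L / 2)) ≤ 2 * (1 + a + b) := by
            rw [← hb]; rw [← ha] at hsqrt; linarith
          gcongr
      _ = _ := by ring
  refine (add_le_add t1 t2).trans ?_
  rw [← ha, ← hb, ← hc]
  have hL6 : 0 ≤ L ^ 6 := by positivity
  have t3 : 0 ≤ 18 * B * E * L ^ 6 * (1 + a + b) := by positivity
  have t4 : 0 ≤ 6 * B * K * 2 * L ^ 6 * c := by positivity
  linear_combination t3 + t4

end OmegaSq

namespace OmegaSq

open Finset

/-! ### A mean value theorem of Bombieri–Vinogradov type -/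

open Classical in
/-- The nonprincipal Dirichlet characters of modulus `d`. -/
noncomputable def nontrivChars (d : ℕ) : Finset (DirichletCharacter ℂ d) :=
  univ.filter fun χ => χ ≠ 1

lemma mem_nontrivChars {d : ℕ} {χ : DirichletCharacter ℂ d} : χ ∈ nontrivChars d ↔ χ ≠ 1 := by
  simp [nontrivChars]

lemma sum_vonMangoldt_not_coprime_le {d : ℕ} (hd : 1 ≤ d) (I : ℕ) :
    ∑ n ∈ Ico 1 (2 ^ I) with ¬ n.Coprime d, ArithmeticFunction.vonMangoldt n ≤ d * I * I := by
  classical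
  -- only the powers `p ^ k` with `p ∣ d` and `k < I` contribute
  have h1 : ((Ico 1 (2 ^ I)).filter fun n => ¬ n.Coprime d ∧ IsPrimePow n) ⊆
      (d.primeFactors ×ˢ range I).image (fun x => x.1 ^ x.2) := by
    intro n hn
    rw [mem_filter, mem_Ico] at hn
    obtain ⟨⟨hn1, hn2⟩, hn3, hn4⟩ := hn
    obtain ⟨p, k, hp, hk, rfl⟩ := (isPrimePow_nat_iff n).1 hn4
    rw [mem_image]
    refine ⟨(p, k), ?_, rfl⟩
    rw [mem_product, Nat.mem_primeFactors, mem_range]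
    refine ⟨⟨hp, ?_, by omega⟩, ?_⟩
    · by_contra hpd
      exact hn3 (((Nat.Prime.coprime_iff_not_dvd hp).2 hpd).pow_left k)
    · exact (Nat.pow_lt_pow_iff_right (by norm_num : 1 < 2)).1
        ((Nat.pow_le_pow_left hp.two_le k).trans_lt hn2)
  have h2 : ((Ico 1 (2 ^ I)).filter fun n => ¬ n.Coprime d ∧ IsPrimePow n).card ≤ d * I := by
    refine (card_le_card h1).trans (card_image_le.trans ?_)
    rw [card_product, card_range]
    refine Nat.mul_le_mul_right _ ?_
    refine (card_le_card (fun p hp => Nat.mem_divisors.2 ⟨(Nat.mem_primeFactors.1 hp).2.1, by omega⟩)).trans (Nat.card_divisors_le_self d)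
  have h3 : ∑ n ∈ Ico 1 (2 ^ I) with ¬ n.Coprime d, ArithmeticFunction.vonMangoldt n =
      ∑ n ∈ Ico 1 (2 ^ I) with ¬ n.Coprime d ∧ IsPrimePow n, ArithmeticFunction.vonMangoldt n := by
    rw [← filter_filter, sum_filter_of_ne (s := filter _ _)]
    intro n _ hn
    exact ArithmeticFunction.vonMangoldt_ne_zero_iff.1 hn
  rw [h3]
  have h4 : ∀ n ∈ (Ico 1 (2 ^ I)).filter (fun n => ¬ n.Coprime d ∧ IsPrimePow n),
      ArithmeticFunction.vonMangoldt n ≤ (I:ℝ) := by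
    intro n hn
    rw [mem_filter, mem_Ico] at hn
    refine ArithmeticFunction.vonMangoldt_le_log.trans ?_
    have h5 : (n:ℝ) ≤ 2 ^ I := by exact_mod_cast hn.1.2.le
    have h6 := Real.log_le_log (by exact_mod_cast hn.1.1) h5
    rw [Real.log_pow] at h6
    have h7 := Real.log_two_lt_d9
    have h8 : (0:ℝ) ≤ I := Nat.cast_nonneg _
    nlinarith
  refine (sum_le_card_nsmul _ _ _ h4).trans ?_
  rw [nsmul_eq_mul]
  have : (((Ico 1 (2 ^ I)).filter fun n => ¬ n.Coprime d ∧ IsPrimePow n).card : ℝ) ≤ d * I := by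
    exact_mod_cast h2
  gcongr

/-- The terms of `Ψ` that are not coprime to a given modulus contribute very little. -/
lemma norm_tsum_not_coprime_le {f : ℝ → ℝ} (hf : TestFn f) : ∃ C : ℝ, 1 ≤ C ∧ ∀ L : ℝ, 1 ≤ L →
    ∀ d : ℕ, 1 ≤ d → ∀ a : ℕ → ℂ, (∀ n, ‖a n‖ ≤ 1) → (∀ n, n.Coprime d → a n = 0) →
    ‖∑' n : ℕ, (ArithmeticFunction.vonMangoldt n : ℂ) * a n * (wt f L n : ℂ)‖ ≤
      C * d * L ^ 2 * Real.exp (-L) := by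
  obtain ⟨B, hB⟩ := hf.exists_bddBy
  have hB1 := hB.1
  refine ⟨B * Real.exp (2 * B) * (6 * B) ^ 2, ?_, fun L hL d hd a ha h0 => ?_⟩
  · have h1 : 1 ≤ Real.exp (2 * B) := Real.one_le_exp (by linarith)
    have h2 : 1 ≤ B * Real.exp (2 * B) := by nlinarith
    have h3 : 1 ≤ (6 * B) ^ 2 := by nlinarith
    nlinarith
  obtain ⟨I, hI1, hI2⟩ := exists_two_pow (y := Real.exp (L + B)) (Real.one_le_exp (by linarith))
  have hIle : (I:ℝ) ≤ 6 * B * L := by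
    have := Real.log_le_log (by positivity) hI2
    rw [Real.log_pow, Real.log_mul (by norm_num) (Real.exp_pos _).ne', Real.log_exp] at this
    have h3 := Real.log_two_gt_d9
    have h4 := Real.log_two_lt_d9
    have h5 : L + B ≤ 2 * (B * L) := by nlinarith
    have h6 : 1 ≤ B * L := by nlinarith
    have h7 : (0:ℝ) ≤ I := Nat.cast_nonneg _
    nlinarith
  rw [tsum_wt_eq_sum hB (N := 2 ^ I) (by push_cast; exact hI1) _ (by simp)]
  have h1 : ‖∑ n ∈ Ico 1 (2 ^ I), (ArithmeticFunction.vonMangoldt n : ℂ) * a n * (wt f L n : ℂ)‖ ≤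
      ∑ n ∈ Ico 1 (2 ^ I) with ¬ n.Coprime d, ArithmeticFunction.vonMangoldt n *
        (B * Real.exp (2 * B) * Real.exp (-L)) := by
    rw [sum_filter]
    refine (norm_sum_le _ _).trans (sum_le_sum fun n hn => ?_)
    by_cases h : ¬ n.Coprime d
    · rw [if_pos h]
      rw [norm_mul, norm_mul, Complex.norm_real, Complex.norm_real, Real.norm_eq_abs, Real.norm_eq_abs,
        abs_of_nonneg ArithmeticFunction.vonMangoldt_nonneg]
      have h2 := abs_wt_le hB hL (show (0:ℝ) < n by exact_mod_cast (mem_Ico.1 hn).1)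
      calc _ ≤ ArithmeticFunction.vonMangoldt n * 1 * (B * Real.exp (2 * B) * Real.exp (-L)) := by
            have := ArithmeticFunction.vonMangoldt_nonneg (n := n)
            have := ha n
            gcongr
        _ = _ := by ring
    · rw [if_neg h, h0 n (not_not.1 h)]; simp
  refine h1.trans ?_
  rw [← sum_mul]
  calc _ ≤ (d * I * I : ℝ) * (B * Real.exp (2 * B) * Real.exp (-L)) := by
        have := sum_vonMangoldt_not_coprime_le hd I
        gcongr
    _ ≤ (d * (6 * B * L) * (6 * B * L) : ℝ) * (B * Real.exp (2 * B) * Real.exp (-L)) := by gcongr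
    _ = _ := by ring

lemma norm_Psi_sub_primitive_le {f : ℝ → ℝ} (hf : TestFn f) : ∃ C : ℝ, 1 ≤ C ∧ ∀ L : ℝ, 1 ≤ L →
    ∀ d : ℕ, 1 ≤ d → ∀ χ : DirichletCharacter ℂ d,
    ‖Psi f L χ - Psi f L χ.primitiveCharacter‖ ≤ C * d * L ^ 2 * Real.exp (-L) := by
  obtain ⟨C, hC, h⟩ := norm_tsum_not_coprime_le hf
  refine ⟨C, hC, fun L hL d hd χ => ?_⟩
  rw [Psi, Psi, ← (hf.summable_mul L _).tsum_sub (hf.summable_mul L _)]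
  have key := h L hL d hd (fun n => χ n - χ.primitiveCharacter n) (fun n => ?_) fun n hn => ?_
  · refine le_trans (le_of_eq ?_) key
    congr 1
    exact tsum_congr fun n => by ring
  · by_cases hn : n.Coprime d
    · have h1 : χ n = χ.primitiveCharacter n := by
        have := χ.primitiveCharacter_apply_of_isCoprime (a := n) (Nat.isCoprime_iff_coprime.2 hn)
        simpa using this.symm
      rw [h1]; simp
    · have h1 : χ n = 0 := χ.map_nonunit (by rwa [ZMod.isUnit_iff_coprime])
      rw [h1, zero_sub, norm_neg]
      exact χ.primitiveCharacter.norm_le_one _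
  · have := χ.primitiveCharacter_apply_of_isCoprime (a := n) (Nat.isCoprime_iff_coprime.2 hn)
    have : χ n = χ.primitiveCharacter n := by simpa using this.symm
    rw [this]; simp

/-- Reduction of a sum over nonprincipal characters to a sum over primitive ones. -/
lemma sum_nontriv_le {f : ℝ → ℝ} {L E : ℝ} {d : ℕ} (hd : 1 ≤ d)
    (hE : ∀ χ : DirichletCharacter ℂ d, ‖Psi f L χ - Psi f L χ.primitiveCharacter‖ ≤ E) :
    ∑ χ ∈ nontrivChars d, ‖Psi f L χ‖ ≤
      ∑ e ∈ d.divisors.erase 1, ∑ χ ∈ primChars e, ‖Psi f L χ‖ + d.totient * E := by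
  classical
  have : NeZero d := ⟨by omega⟩
  have h1 : ∑ χ ∈ nontrivChars d, ‖Psi f L χ‖ ≤
      ∑ χ ∈ nontrivChars d, ‖Psi f L χ.primitiveCharacter‖ + ∑ χ ∈ nontrivChars d, E := by
    rw [← sum_add_distrib]
    refine sum_le_sum fun χ _ => ?_
    have := norm_add_le (Psi f L χ - Psi f L χ.primitiveCharacter) (Psi f L χ.primitiveCharacter)
    rw [sub_add_cancel] at this
    linarith [hE χ]
  refine h1.trans (add_le_add ?_ ?_)
  · rw [sum_sigma' (f := fun e χ => ‖Psi f L χ‖)]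
    obtain ⟨φ, hφ⟩ : ∃ φ : DirichletCharacter ℂ d → Σ e, DirichletCharacter ℂ e,
      φ = fun χ => ⟨χ.conductor, χ.primitiveCharacter⟩ := ⟨_, rfl⟩
    have hinj : Function.Injective φ := by
      refine Function.LeftInverse.injective
        (g := fun x => if h : x.1 ∣ d then DirichletCharacter.changeLevel h x.2 else 1) fun χ => ?_
      rw [hφ]
      simp only [χ.conductor_dvd_level, dite_true]
      exact χ.changeLevel_primitiveCharacter
    have h2 : ∑ χ ∈ nontrivChars d, ‖Psi f L χ.primitiveCharacter‖ =
        ∑ x ∈ (nontrivChars d).image φ, ‖Psi f L x.2‖ := by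
      rw [sum_image fun a _ b _ h => hinj h, hφ]
    rw [h2]
    refine sum_le_sum_of_subset_of_nonneg (fun x hx => ?_) fun _ _ _ => norm_nonneg _
    obtain ⟨χ, hχ, rfl⟩ := mem_image.1 hx
    rw [mem_sigma, hφ, mem_erase, Nat.mem_divisors]
    refine ⟨⟨?_, χ.conductor_dvd_level, by omega⟩, mem_primChars.2 χ.primitiveCharacter_isPrimitive⟩
    exact fun h => mem_nontrivChars.1 hχ (χ.eq_one_iff_conductor_eq_one.2 h)
  · rw [sum_const, nsmul_eq_mul]
    have h2 : ((nontrivChars d).card : ℝ) ≤ d.totient := by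
      rw [← DirichletCharacter.card_eq_totient_of_hasEnoughRootsOfUnity ℂ d, Nat.card_eq_fintype_card]
      exact_mod_cast card_le_univ _
    have h3 : 0 ≤ E := (norm_nonneg _).trans (hE 1)
    gcongr

lemma sum_weight_le (J : ℕ) : ∃ C : ℝ, 1 ≤ C ∧ ∀ D e : ℕ, 1 ≤ e →
    ∑ d ∈ Icc 1 D with e ∣ d, (d.divisors.card : ℝ) ^ J / d.totient ≤
      C * (e:ℝ) ^ (-(7 / 8) : ℝ) * (1 + Real.log D) ^ (2 ^ (J + 1)) := by
  classical
  obtain ⟨C, hC, h⟩ := card_divisors_pow_le (J + 1) (ε := 1 / 8) (by norm_num)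
  refine ⟨C, hC, fun D e he => ?_⟩
  have he0 : (0:ℝ) < e := by exact_mod_cast he
  have h1 : ((Icc 1 D).filter fun d => e ∣ d) ⊆ (Icc 1 D).image fun k => e * k := by
    intro d hd
    rw [mem_filter, mem_Icc] at hd
    obtain ⟨⟨hd1, hd2⟩, k, rfl⟩ := hd
    have hk : 0 < k := Nat.pos_of_ne_zero (by rintro rfl; simp at hd1)
    exact mem_image.2 ⟨k, mem_Icc.2 ⟨hk, (Nat.le_mul_of_pos_left k he).trans hd2⟩, rfl⟩
  refine (sum_le_sum_of_subset_of_nonneg h1 fun _ _ _ => by positivity).trans ?_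
  rw [sum_image fun a _ b _ hab => Nat.eq_of_mul_eq_mul_left he hab]
  have h2 : ∀ k ∈ Icc 1 D, ((e * k).divisors.card : ℝ) ^ J / (e * k).totient ≤
      C * (e:ℝ) ^ (-(7 / 8) : ℝ) * ((k.divisors.card : ℝ) ^ (J + 1) / k) := by
    intro k hk
    have hk1 := (mem_Icc.1 hk).1
    have hk0 : (0:ℝ) < k := by exact_mod_cast hk1
    have h3 := inv_totient_le (e * k) (Nat.mul_pos he hk1)
    have h4 : ((e * k).divisors.card : ℝ) ≤ e.divisors.card * k.divisors.card := by
      exact_mod_cast card_divisors_mul_le e k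
    have h5 : (e:ℝ) ^ (-(7 / 8) : ℝ) = (e:ℝ) ^ (1 / 8 : ℝ) / e := by
      rw [← Real.rpow_sub_one he0.ne']; norm_num
    calc ((e * k).divisors.card : ℝ) ^ J / (e * k).totient
        = ((e * k).divisors.card : ℝ) ^ J * (1 / (e * k).totient) := by ring
      _ ≤ ((e * k).divisors.card : ℝ) ^ J * ((e * k).divisors.card / (e * k : ℕ)) := by gcongr
      _ = ((e * k).divisors.card : ℝ) ^ (J + 1) / (e * k) := by push_cast; ring
      _ ≤ (e.divisors.card * k.divisors.card : ℝ) ^ (J + 1) / (e * k) := by gcongr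
      _ = (e.divisors.card : ℝ) ^ (J + 1) / e * ((k.divisors.card : ℝ) ^ (J + 1) / k) := by
        rw [mul_pow]; field_simp
      _ ≤ (C * (e:ℝ) ^ (1 / 8 : ℝ)) / e * ((k.divisors.card : ℝ) ^ (J + 1) / k) := by
        gcongr; exact h e he
      _ = _ := by rw [h5]; ring
  refine (sum_le_sum h2).trans ?_
  rw [← mul_sum]
  exact mul_le_mul_of_nonneg_left (sum_card_divisors_pow_div_le (J + 1) D) (by positivity)

open Filter in
lemma eventually_exp_small (C c : ℝ) (hc : 0 < c) (n A : ℕ) :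
    ∀ᶠ L : ℝ in atTop, C * L ^ n * Real.exp (-(c * L)) ≤ 1 / L ^ A := by
  have h1 : Tendsto (fun L : ℝ => (c * L) ^ (n + A) * Real.exp (-(c * L))) atTop (nhds 0) :=
    (Real.tendsto_pow_mul_exp_neg_atTop_nhds_zero (n + A)).comp (tendsto_id.const_mul_atTop hc)
  have h2 : 0 < c ^ (n + A) / (|C| + 1) := by positivity
  filter_upwards [h1.eventually_lt_const h2, eventually_ge_atTop 1] with L hL hL1
  rw [lt_div_iff₀ (by positivity), mul_pow] at hL
  rw [le_div_iff₀ (by positivity)]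
  have h3 : c ^ (n + A) * (L ^ (n + A) * Real.exp (-(c * L)) * (|C| + 1)) < c ^ (n + A) * 1 := by
    linarith
  have h4 := (lt_of_mul_lt_mul_left h3 (by positivity)).le
  have h5 : 0 ≤ L ^ (n + A) * Real.exp (-(c * L)) := by positivity
  calc C * L ^ n * Real.exp (-(c * L)) * L ^ A = C * (L ^ (n + A) * Real.exp (-(c * L))) := by
        rw [pow_add]; ring
    _ ≤ (|C| + 1) * (L ^ (n + A) * Real.exp (-(c * L))) := by
        gcongr; linarith [le_abs_self C]
    _ ≤ 1 := by linarith

lemma rpow_mul_exp_le {M L a b c : ℝ} (hM : 1 ≤ M) (hML : M ≤ Real.exp (33 / 100 * L)) (ha : 0 ≤ a)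
    (hL : 0 ≤ L) (hc : 33 / 100 * a - b ≤ -c) : M ^ a * Real.exp (-(b * L)) ≤ Real.exp (-(c * L)) := by
  calc M ^ a * Real.exp (-(b * L)) ≤ Real.exp (33 / 100 * L) ^ a * Real.exp (-(b * L)) := by gcongr
    _ = Real.exp ((33 / 100 * a - b) * L) := by
      rw [← Real.exp_mul, ← Real.exp_add]; congr 1; ring
    _ ≤ _ := by rw [← neg_mul]; gcongr

/-- The contribution of the primitive characters of large conductor. -/
lemma large_part {f : ℝ → ℝ} (hf : TestFn f) : ∃ C : ℝ, 1 ≤ C ∧ ∃ L₀ : ℝ, 1 ≤ L₀ ∧ ∀ L, L₀ ≤ L →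
    ∀ Q : ℝ, 1 ≤ Q → ∑ e ∈ Icc 2 ⌊Real.exp (33 / 100 * L)⌋₊ with ((Q:ℝ) < (e:ℕ)),
      (e:ℝ) ^ (-(7 / 8) : ℝ) * ∑ χ ∈ primChars e, ‖Psi f L χ‖ ≤
      C * L ^ 7 * (Q ^ (-(1 / 2) : ℝ) + Real.exp (-(1 / 125 * L))) := by
  classical
  obtain ⟨C, hC, L₀, hL₀, h⟩ := sum_Psi_le hf
  refine ⟨28 * C, by linarith, max L₀ 2, le_max_of_le_left hL₀, fun L hL Q hQ => ?_⟩
  have hL1 : 2 ≤ L := (le_max_right _ _).trans hL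
  obtain ⟨D, hD⟩ : ∃ D, D = ⌊Real.exp (33 / 100 * L)⌋₊ := ⟨_, rfl⟩
  have hDle : (D:ℝ) ≤ Real.exp (33 / 100 * L) := hD ▸ Nat.floor_le (Real.exp_pos _).le
  have hD1 : 1 ≤ D := by rw [hD, Nat.one_le_floor_iff]; exact Real.one_le_exp (by linarith)
  rw [← hD]
  obtain ⟨P, hP⟩ : ∃ P : ℕ → ℝ, P = fun e => ∑ χ ∈ primChars e, ‖Psi f L χ‖ := ⟨_, rfl⟩
  have hP0 : ∀ e, 0 ≤ P e := fun e => hP ▸ sum_nonneg fun _ _ => norm_nonneg _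
  have hPe : ∀ e, ∑ χ ∈ primChars e, ‖Psi f L χ‖ = P e := fun e => by rw [hP]
  simp_rw [hPe]
  obtain ⟨I, hI⟩ : ∃ I, I = Nat.log 2 D + 1 := ⟨_, rfl⟩
  have hDI : D < 2 ^ I := hI ▸ Nat.lt_pow_succ_log_self (by norm_num) D
  have hiD : ∀ i < I, 2 ^ i ≤ D := fun i hi => Nat.pow_le_of_le_log (by omega) (by omega)
  have hIL : (I:ℝ) ≤ 2 * L := by
    have h1 : ((2 ^ (Nat.log 2 D) : ℕ) : ℝ) ≤ Real.exp (33 / 100 * L) :=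
      le_trans (by exact_mod_cast Nat.pow_log_le_self 2 (by omega)) hDle
    have h2 := Real.log_le_log (by positivity) h1
    rw [Real.log_exp] at h2
    push_cast at h2
    rw [Real.log_pow] at h2
    have h3 := Real.log_two_gt_d9
    rw [hI]; push_cast
    have h4 : (0:ℝ) ≤ Nat.log 2 D := Nat.cast_nonneg _
    nlinarith
  have h1 : ∑ e ∈ Icc 2 D with ((Q:ℝ) < (e:ℕ)), (e:ℝ) ^ (-(7 / 8) : ℝ) * P e ≤
      ∑ e ∈ Ico (1:ℕ) (2 ^ I), if 2 ≤ e ∧ Q < (e:ℕ) then (e:ℝ) ^ (-(7 / 8) : ℝ) * P e else 0 := by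
    rw [← sum_filter]
    refine sum_le_sum_of_subset_of_nonneg (fun e he => ?_) fun e _ _ =>
      mul_nonneg (by positivity) (hP0 e)
    rw [mem_filter, mem_Icc] at he
    rw [mem_filter, mem_Ico]
    exact ⟨by omega, he.1.1, he.2⟩
  refine h1.trans ?_
  rw [sum_Ico_two_pow]
  have h2 : ∀ i ∈ range I, ∑ e ∈ Ico (2 ^ i : ℕ) (2 ^ (i + 1)),
      (if 2 ≤ e ∧ Q < (e:ℕ) then (e:ℝ) ^ (-(7 / 8) : ℝ) * P e else 0) ≤
      C * L ^ 6 * (14 * (Q ^ (-(1 / 2) : ℝ) + Real.exp (-(1 / 125 * L)))) := by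
    intro i hi
    obtain ⟨M, hM⟩ : ∃ M : ℝ, M = 2 ^ i := ⟨_, rfl⟩
    have hM1 : 1 ≤ M := hM ▸ one_le_pow₀ (by norm_num)
    have hM0 : 0 < M := by linarith
    have hMD : M ≤ Real.exp (33 / 100 * L) := by
      rw [hM]; exact le_trans (by exact_mod_cast hiD i (mem_range.1 hi)) hDle
    obtain ⟨w, hw⟩ : ∃ w, w = min (Q ^ (-(1 / 2) : ℝ)) (M ^ (-(7 / 8) : ℝ)) := ⟨_, rfl⟩
    have hw0 : 0 ≤ w := by rw [hw]; positivity
    have hw1 : w ≤ Q ^ (-(1 / 2) : ℝ) := hw ▸ min_le_left _ _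
    have hw2 : w ≤ M ^ (-(7 / 8) : ℝ) := hw ▸ min_le_right _ _
    have h3 : ∑ e ∈ Ico (2 ^ i : ℕ) (2 ^ (i + 1)),
        (if 2 ≤ e ∧ Q < (e:ℕ) then (e:ℝ) ^ (-(7 / 8) : ℝ) * P e else 0) ≤ w * ∑ e ∈ Icc 2 (2 ^ (i + 1)), P e := by
      rw [← sum_filter, mul_sum]
      refine (sum_le_sum (g := fun e => w * P e) fun e he => ?_).trans
        (sum_le_sum_of_subset_of_nonneg (fun e he => ?_) fun e _ _ => mul_nonneg hw0 (hP0 e))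
      · rw [mem_filter, mem_Ico] at he
        have hMe : M ≤ e := by rw [hM]; exact_mod_cast he.1.1
        refine mul_le_mul_of_nonneg_right ?_ (hP0 e)
        rw [hw]
        refine le_min ?_ (Real.rpow_le_rpow_of_nonpos hM0 hMe (by norm_num))
        exact (Real.rpow_le_rpow_of_nonpos (by linarith) he.2.2.le (by norm_num)).trans
          (Real.rpow_le_rpow_of_exponent_le hQ (by norm_num))
      · rw [mem_filter, mem_Ico] at he
        rw [mem_Icc]; omega
    have hQL : ((2 ^ (i + 1) : ℕ) : ℝ) ≤ Real.exp L := by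
      push_cast
      rw [pow_succ, ← hM]
      have h5 : (2:ℝ) ≤ Real.exp (2 / 3 * L) := by
        linarith [Real.add_one_le_exp (2 / 3 * L)]
      calc M * 2 ≤ Real.exp (33 / 100 * L) * Real.exp (2 / 3 * L) := by gcongr
        _ ≤ _ := by rw [← Real.exp_add]; gcongr; linarith
    have h4 := h L ((le_max_left _ _).trans hL) (2 ^ (i + 1)) Nat.one_le_two_pow hQL
    simp_rw [hPe] at h4
    refine h3.trans ((mul_le_mul_of_nonneg_left h4 hw0).trans ?_)
    push_cast
    rw [pow_succ (2:ℝ) i, ← hM]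
    have e1 : w * (M * 2 * Real.exp (-(L / 20))) ≤ 2 * Real.exp (-(1 / 125 * L)) := by
      calc w * (M * 2 * Real.exp (-(L / 20))) ≤ M ^ (-(7 / 8) : ℝ) * (M * 2 * Real.exp (-(L / 20))) := by gcongr
        _ = 2 * (M ^ (1 / 8 : ℝ) * Real.exp (-(1 / 20 * L))) := by
          rw [show (1 / 8 : ℝ) = -(7 / 8) + 1 by norm_num, Real.rpow_add_one hM0.ne']
          ring_nf
        _ ≤ _ := mul_le_mul_of_nonneg_left (rpow_mul_exp_le hM1 hMD (by norm_num) (by linarith) (by norm_num)) (by norm_num)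
    have e2 : w * ((M * 2) ^ 2 * Real.exp (-(L / 2))) ≤ 4 * Real.exp (-(1 / 125 * L)) := by
      calc w * ((M * 2) ^ 2 * Real.exp (-(L / 2))) ≤ M ^ (-(7 / 8) : ℝ) * ((M * 2) ^ 2 * Real.exp (-(L / 2))) := by gcongr
        _ = 4 * (M ^ (9 / 8 : ℝ) * Real.exp (-(1 / 2 * L))) := by
          rw [show (9 / 8 : ℝ) = -(7 / 8) + (2:ℕ) by norm_num, Real.rpow_add_natCast hM0.ne']
          ring_nf
        _ ≤ _ := mul_le_mul_of_nonneg_left (rpow_mul_exp_le hM1 hMD (by norm_num) (by linarith) (by norm_num)) (by norm_num)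
    have e3 : w * ((M * 2) ^ 3 * Real.exp (-(4 / 5 * L))) ≤ 8 * Real.exp (-(1 / 125 * L)) := by
      calc w * ((M * 2) ^ 3 * Real.exp (-(4 / 5 * L))) ≤ M ^ (-(7 / 8) : ℝ) * ((M * 2) ^ 3 * Real.exp (-(4 / 5 * L))) := by gcongr
        _ = 8 * (M ^ (17 / 8 : ℝ) * Real.exp (-(4 / 5 * L))) := by
          rw [show (17 / 8 : ℝ) = -(7 / 8) + (3:ℕ) by norm_num, Real.rpow_add_natCast hM0.ne']
          ring_nf
        _ ≤ _ := mul_le_mul_of_nonneg_left (rpow_mul_exp_le hM1 hMD (by norm_num) (by linarith) (by norm_num)) (by norm_num)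
    have e4 : 0 ≤ Q ^ (-(1 / 2) : ℝ) := by positivity
    calc _ = C * L ^ 6 * (w + w * (M * 2 * Real.exp (-(L / 20))) + w * ((M * 2) ^ 2 * Real.exp (-(L / 2))) +
          w * ((M * 2) ^ 3 * Real.exp (-(4 / 5 * L)))) := by ring
      _ ≤ _ := by
        refine mul_le_mul_of_nonneg_left ?_ (by positivity)
        linarith
  refine (sum_le_card_nsmul _ _ _ h2).trans ?_
  rw [card_range, nsmul_eq_mul]
  calc _ ≤ (2 * L) * (C * L ^ 6 * (14 * (Q ^ (-(1 / 2) : ℝ) + Real.exp (-(1 / 125 * L))))) := by gcongr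
    _ = _ := by ring

end OmegaSq

namespace OmegaSq

open Finset

/-- The contribution of the primitive characters of small conductor, at a good scale `Q = L ^ (2k)`. -/
lemma small_part {f : ℝ → ℝ} (hf : TestFn f) (k A : ℕ) (hk : 1 ≤ k) : ∃ C : ℝ, 1 ≤ C ∧ ∀ L Q : ℝ, 1 ≤ L → 1 ≤ Q →
    Q = L ^ (2 * k) → (∀ (e : ℕ) [NeZero e], (e:ℝ) ≤ Q → ∀ χ : DirichletCharacter ℂ e, χ ≠ 1 →
      ∃ m, LowerBd χ m ∧ Q ^ (-(1 / (48 * k) : ℝ)) ≤ m) → ∀ D : ℕ,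
    ∑ e ∈ Icc 2 D with ((e:ℕ):ℝ) ≤ Q, (e:ℝ) ^ (-(7 / 8) : ℝ) * ∑ χ ∈ primChars e, ‖Psi f L χ‖ ≤
      C / L ^ A := by
  have hkr : (1:ℝ) ≤ k := by exact_mod_cast hk
  obtain ⟨t, ht⟩ : ∃ t, t = 4 * k + 1 + A := ⟨_, rfl⟩
  obtain ⟨C₁, hC₁, h1⟩ := norm_tsum_vmChar_le_pow (2 * t - 1) 0 hf
  obtain ⟨C₂, hC₂, h2⟩ := one_add_log_pow_le 3 (ε := 1 / (48 * k)) (by positivity)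
  refine ⟨C₁ * C₂ ^ (12 * t), by nlinarith [one_le_pow₀ hC₂ (n := 12 * t)], fun L Q hL hQ hQL hg D => ?_⟩
  have hL0 : 0 < L := by linarith
  have hQ0 : 0 < Q := by linarith
  have hpow : (Q ^ (1 / (48 * k) : ℝ) * Q ^ (1 / (48 * k) : ℝ)) ^ (12 * t) = L ^ t := by
    rw [← Real.rpow_add hQ0, pow_mul, ← Real.rpow_mul_natCast hQ0.le, hQL, ← Real.rpow_natCast L (2 * k),
      ← Real.rpow_mul hL0.le]
    congr 1
    convert Real.rpow_one L using 2
    push_cast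
    field_simp
    norm_num
  have hterm : ∀ e ∈ (Icc 2 D).filter (fun e : ℕ => (e:ℝ) ≤ Q),
      (e:ℝ) ^ (-(7 / 8) : ℝ) * ∑ χ ∈ primChars e, ‖Psi f L χ‖ ≤
        Q * (C₁ * C₂ ^ (12 * t) * L ^ t / L ^ (2 * t - 1)) := by
    intro e he
    rw [mem_filter, mem_Icc] at he
    obtain ⟨⟨he2, _⟩, heQ⟩ := he
    have : NeZero e := ⟨by omega⟩
    have he1 : (1:ℝ) ≤ e := by exact_mod_cast (by omega : 1 ≤ e)
    have hb : ∀ χ ∈ primChars e, ‖Psi f L χ‖ ≤ C₁ * C₂ ^ (12 * t) * L ^ t / L ^ (2 * t - 1) := by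
      intro χ hχ
      obtain ⟨m, hm, hmQ⟩ := hg e heQ χ (ne_one_of_mem_primChars he2 hχ)
      have h3 := h1 L hL e χ m hm
      have h4 : Psi f L χ = ∑' n : ℕ, vmChar χ 0 n * (wt f L n : ℂ) := by
        rw [Psi]; exact tsum_congr fun n => by rw [vmChar]; ring
      rw [h4]
      refine h3.trans ?_
      have h5 : 6 * (0 + (2 * t - 1) + 1) = 12 * t := by omega
      rw [h5]
      have hlog : 0 ≤ Real.log e := Real.log_nonneg he1
      have hr : (1 + Real.log e) ^ 3 / m ≤ C₂ * (Q ^ (1 / (48 * k) : ℝ) * Q ^ (1 / (48 * k) : ℝ)) := by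
        have h6 : (1 + Real.log e) ^ 3 ≤ C₂ * Q ^ (1 / (48 * k) : ℝ) := by
          refine le_trans ?_ (h2 Q hQ)
          gcongr
        have h7 : 1 / m ≤ Q ^ (1 / (48 * k) : ℝ) := by
          rw [Real.rpow_neg hQ0.le] at hmQ
          rw [one_div]
          exact inv_le_of_inv_le₀ (by positivity) hmQ
        rw [div_eq_mul_one_div, ← mul_assoc]
        have := hm.2.1
        gcongr
      have hm0 := hm.2.1
      calc _ ≤ C₁ * (C₂ * (Q ^ (1 / (48 * k) : ℝ) * Q ^ (1 / (48 * k) : ℝ))) ^ (12 * t) / L ^ (2 * t - 1) := by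
            gcongr
        _ = _ := by rw [mul_pow, hpow]; ring
    have h8 := sum_le_card_nsmul _ _ _ hb
    rw [nsmul_eq_mul] at h8
    have h9 : ((primChars e).card : ℝ) ≤ Q := by
      refine le_trans ?_ ((card_char_le e).trans heQ)
      exact_mod_cast card_le_univ _
    have h10 : (e:ℝ) ^ (-(7 / 8) : ℝ) ≤ 1 := Real.rpow_le_one_of_one_le_of_nonpos he1 (by norm_num)
    have h11 : 0 ≤ ∑ χ ∈ primChars e, ‖Psi f L χ‖ := sum_nonneg fun _ _ => norm_nonneg _
    calc _ ≤ 1 * ∑ χ ∈ primChars e, ‖Psi f L χ‖ := by gcongr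
      _ ≤ _ := by
        rw [one_mul]; refine h8.trans ?_
        gcongr
  refine (sum_le_card_nsmul _ _ _ hterm).trans ?_
  rw [nsmul_eq_mul]
  have hcard : (((Icc 2 D).filter (fun e : ℕ => (e:ℝ) ≤ Q)).card : ℝ) ≤ Q := by
    have : ((Icc 2 D).filter (fun e : ℕ => (e:ℝ) ≤ Q)) ⊆ Icc 1 ⌊Q⌋₊ := by
      intro e he
      rw [mem_filter, mem_Icc] at he
      exact mem_Icc.2 ⟨by omega, Nat.le_floor he.2⟩
    have := card_le_card this
    rw [Nat.card_Icc, Nat.add_sub_cancel] at this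
    exact le_trans (by exact_mod_cast this) (Nat.floor_le hQ0.le)
  calc _ ≤ Q * (Q * (C₁ * C₂ ^ (12 * t) * L ^ t / L ^ (2 * t - 1))) := by gcongr
    _ = C₁ * C₂ ^ (12 * t) / L ^ A := by
      have h12 : L ^ (2 * t - 1) = L ^ (2 * k) * L ^ (2 * k) * L ^ t * L ^ A := by
        rw [← pow_add, ← pow_add, ← pow_add]; congr 1; omega
      rw [hQL, h12]
      field_simp

lemma sum_primitive_small {f : ℝ → ℝ} (hf : TestFn f) (A : ℕ) : ∃ C : ℝ, 1 ≤ C ∧ ∀ L₀ : ℝ, ∃ L, L₀ ≤ L ∧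
    ∑ e ∈ Icc 2 ⌊Real.exp (33 / 100 * L)⌋₊, (e:ℝ) ^ (-(7 / 8) : ℝ) * ∑ χ ∈ primChars e, ‖Psi f L χ‖ ≤
      C / L ^ A := by
  obtain ⟨k, hk⟩ : ∃ k, k = A + 7 := ⟨_, rfl⟩
  have hk1 : 1 ≤ k := by omega
  have hkr : (1:ℝ) ≤ k := by exact_mod_cast hk1
  obtain ⟨C₁, hC₁, h1⟩ := small_part hf k A hk1
  obtain ⟨C₂, hC₂, L₁, hL₁, h2⟩ := large_part hf
  obtain ⟨L₂, h3⟩ := Filter.eventually_atTop.1 (eventually_exp_small (C₂ ) (1 / 125) (by norm_num) 7 A)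
  refine ⟨C₁ + C₂ + 1, by linarith, fun L₀ => ?_⟩
  obtain ⟨M, hM⟩ : ∃ M, M = max (max L₀ L₁) (max L₂ 1) := ⟨_, rfl⟩
  have hM1 : L₀ ≤ M := by rw [hM]; simp
  have hM2 : L₁ ≤ M := by rw [hM]; simp
  have hM3 : L₂ ≤ M := by rw [hM]; simp
  have hM4 : 1 ≤ M := by rw [hM]; simp
  obtain ⟨Q, hQ1, hQ2, hQ3⟩ := good_scales (ε := 1 / (48 * k)) (by positivity) (M ^ (2 * k))
  have hQ0 : 0 < Q := by linarith
  obtain ⟨L, hL⟩ : ∃ L, L = Q ^ (1 / ((2 * k : ℕ) : ℝ)) := ⟨_, rfl⟩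
  have hLQ : Q = L ^ (2 * k) := by
    rw [hL, one_div, Real.rpow_inv_natCast_pow hQ0.le (by omega)]
  have hLM : M ≤ L := by
    rw [hL]
    calc M = (M ^ (2 * k)) ^ (1 / ((2 * k : ℕ) : ℝ)) := by
          rw [one_div, Real.pow_rpow_inv_natCast (by linarith) (by omega)]
      _ ≤ _ := by gcongr
  have hL1 : 1 ≤ L := hM4.trans hLM
  refine ⟨L, hM1.trans hLM, ?_⟩
  have e1 := h1 L Q hL1 hQ2 hLQ hQ3 ⌊Real.exp (33 / 100 * L)⌋₊
  have e2 := h2 L (hM2.trans hLM) Q hQ2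
  rw [← sum_filter_add_sum_filter_not (Icc 2 ⌊Real.exp (33 / 100 * L)⌋₊) (fun e : ℕ => (e:ℝ) ≤ Q)]
  simp_rw [not_le]
  have e3 : Q ^ (-(1 / 2) : ℝ) = 1 / L ^ k := by
    rw [hLQ, ← Real.rpow_natCast L (2 * k), ← Real.rpow_mul (by linarith),
      show ((2 * k : ℕ) : ℝ) * -(1 / 2) = -(k:ℝ) by push_cast; ring, Real.rpow_neg (by linarith),
      Real.rpow_natCast, ← one_div]
  rw [e3, mul_add] at e2
  have e4 := h3 L (hM3.trans hLM)
  have e5 : C₂ * L ^ 7 * (1 / L ^ k) = C₂ / L ^ A := by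
    rw [hk, pow_add]; field_simp
  rw [e5] at e2
  calc _ ≤ C₁ / L ^ A + (C₂ / L ^ A + 1 / L ^ A) := by linarith
    _ = _ := by ring

/-- Mean value theorem: along a sequence of scales `L → ∞` the sums `Ψ` over nonprincipal characters of
modulus up to `exp (0.33 L)` save an arbitrary power of `L`, even with divisor-bounded weights. -/
theorem mean_value {f : ℝ → ℝ} (hf : TestFn f) (A J : ℕ) (L₀ : ℝ) : ∃ L, L₀ ≤ L ∧
    ∑ d ∈ Icc 1 ⌊Real.exp (33 / 100 * L)⌋₊, (d.divisors.card : ℝ) ^ J / d.totient *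
      ∑ χ ∈ nontrivChars d, ‖Psi f L χ‖ ≤ 1 / L ^ A := by
  classical
  obtain ⟨N, hN⟩ : ∃ N, N = 2 ^ (J + 1) := ⟨_, rfl⟩
  obtain ⟨C₁, hC₁, h1⟩ := norm_Psi_sub_primitive_le hf
  obtain ⟨C₂, hC₂, h2⟩ := sum_weight_le J
  obtain ⟨C₃, hC₃, h3⟩ := sum_primitive_small hf (N + A + 1)
  obtain ⟨C₄, hC₄, h4⟩ := card_divisors_pow_le J (ε := 1 / 10) (by norm_num)
  obtain ⟨L₁, h5⟩ := Filter.eventually_atTop.1 (eventually_exp_small (C₄ * C₁) (3 / 10) (by norm_num) 2 (A + 1))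
  obtain ⟨L, hL, h6⟩ := h3 (max (max L₀ L₁) (C₂ * 2 ^ N * C₃ + 1))
  have hL0 : L₀ ≤ L := by simp at hL; exact hL.1.1
  have hL1 : L₁ ≤ L := by simp at hL; exact hL.1.2
  have hL2 : C₂ * 2 ^ N * C₃ + 1 ≤ L := by simp at hL; exact hL.2
  have hLone : 1 ≤ L := by
    have : 0 ≤ C₂ * 2 ^ N * C₃ := by positivity
    linarith
  refine ⟨L, hL0, ?_⟩
  obtain ⟨D, hD⟩ : ∃ D, D = ⌊Real.exp (33 / 100 * L)⌋₊ := ⟨_, rfl⟩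
  have hDle : (D:ℝ) ≤ Real.exp (33 / 100 * L) := hD ▸ Nat.floor_le (Real.exp_pos _).le
  have hD1 : 1 ≤ D := by rw [hD, Nat.one_le_floor_iff]; exact Real.one_le_exp (by linarith)
  have hD1r : (1:ℝ) ≤ D := by exact_mod_cast hD1
  rw [← hD] at h6 ⊢
  obtain ⟨P, hP⟩ : ∃ P : ℕ → ℝ, P = fun e => ∑ χ ∈ primChars e, ‖Psi f L χ‖ := ⟨_, rfl⟩
  have hP0 : ∀ e, 0 ≤ P e := fun e => hP ▸ sum_nonneg fun _ _ => norm_nonneg _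
  have hPe : ∀ e, ∑ χ ∈ primChars e, ‖Psi f L χ‖ = P e := fun e => by rw [hP]
  simp_rw [hPe] at h6
  have h7 : ∀ d ∈ Icc 1 D, (d.divisors.card : ℝ) ^ J / d.totient * ∑ χ ∈ nontrivChars d, ‖Psi f L χ‖ ≤
      ∑ e ∈ Icc 2 D, (if e ∣ d then (d.divisors.card : ℝ) ^ J / d.totient else 0) * P e +
        (C₄ * (D:ℝ) ^ (1 / 10 : ℝ)) * (C₁ * D * L ^ 2 * Real.exp (-L)) := by
    intro d hd
    rw [mem_Icc] at hd
    have hdD : (d:ℝ) ≤ D := by exact_mod_cast hd.2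
    have hφ : (0:ℝ) < d.totient := by exact_mod_cast Nat.totient_pos.2 hd.1
    have h8 := sum_nontriv_le hd.1 (h1 L hLone d hd.1)
    simp_rw [hPe] at h8
    have h9 : ∑ e ∈ d.divisors.erase 1, P e ≤ ∑ e ∈ Icc 2 D with e ∣ d, P e := by
      refine sum_le_sum_of_subset_of_nonneg (fun e he => ?_) fun e _ _ => hP0 e
      rw [mem_erase, Nat.mem_divisors] at he
      have h10 := Nat.le_of_dvd (by omega) he.2.1
      have h11 := Nat.pos_of_dvd_of_pos he.2.1 (by omega)
      rw [mem_filter, mem_Icc]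
      exact ⟨by omega, he.2.1⟩
    have h10 : (d.divisors.card : ℝ) ^ J ≤ C₄ * (D:ℝ) ^ (1 / 10 : ℝ) :=
      (h4 d hd.1).trans (by gcongr)
    calc _ ≤ (d.divisors.card : ℝ) ^ J / d.totient * (∑ e ∈ Icc 2 D with e ∣ d, P e +
          d.totient * (C₁ * d * L ^ 2 * Real.exp (-L))) :=
          mul_le_mul_of_nonneg_left (h8.trans (add_le_add_left h9 _))
            (div_nonneg (pow_nonneg (Nat.cast_nonneg _) _) hφ.le)
      _ = (d.divisors.card : ℝ) ^ J / d.totient * ∑ e ∈ Icc 2 D with e ∣ d, P e +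
          (d.divisors.card : ℝ) ^ J * (C₁ * d * L ^ 2 * Real.exp (-L)) := by
        rw [mul_add, ← mul_assoc (_ / _), div_mul_cancel₀ _ hφ.ne']
      _ ≤ _ := by
        have h12 : C₁ * d * L ^ 2 * Real.exp (-L) ≤ C₁ * D * L ^ 2 * Real.exp (-L) := by gcongr
        refine add_le_add (le_of_eq ?_) (mul_le_mul h10 h12 (by positivity) (by positivity))
        rw [sum_filter, mul_sum]
        exact sum_congr rfl fun e _ => by split_ifs <;> ring
  refine (sum_le_sum h7).trans ?_
  rw [sum_add_distrib, sum_comm, sum_const, Nat.card_Icc, nsmul_eq_mul, Nat.add_sub_cancel]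
  have h8 : ∑ e ∈ Icc 2 D, ∑ d ∈ Icc 1 D, (if e ∣ d then (d.divisors.card : ℝ) ^ J / d.totient else 0) * P e ≤
      (C₂ * (2 * L) ^ N) * (C₃ / L ^ (N + A + 1)) := by
    have h9 : ∀ e ∈ Icc 2 D, ∑ d ∈ Icc 1 D, (if e ∣ d then (d.divisors.card : ℝ) ^ J / d.totient else 0) * P e ≤
        (C₂ * (2 * L) ^ N) * ((e:ℝ) ^ (-(7 / 8) : ℝ) * P e) := by
      intro e he
      rw [← sum_mul, ← sum_filter, ← mul_assoc]
      refine mul_le_mul_of_nonneg_right ?_ (hP0 e)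
      refine (h2 D e (by rw [mem_Icc] at he; omega)).trans ?_
      rw [← hN, mul_right_comm]
      have h10 : Real.log D ≤ 33 / 100 * L := by
        have := Real.log_le_log (by linarith) hDle
        rwa [Real.log_exp] at this
      have h11 : 0 ≤ Real.log D := Real.log_nonneg hD1r
      gcongr
      linarith
    refine (sum_le_sum h9).trans ?_
    rw [← mul_sum]
    gcongr
  have h9 : (C₂ * (2 * L) ^ N) * (C₃ / L ^ (N + A + 1)) = C₂ * 2 ^ N * C₃ / L * (1 / L ^ A) := by
    rw [mul_pow, pow_add, pow_add]; field_simp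
  have h10 : (D:ℝ) * ((C₄ * (D:ℝ) ^ (1 / 10 : ℝ)) * (C₁ * D * L ^ 2 * Real.exp (-L))) ≤ 1 / L ^ (A + 1) := by
    have h11 := rpow_mul_exp_le (a := 21 / 10) (b := 1) (c := 3 / 10) hD1r hDle (by norm_num)
      (by linarith) (by norm_num)
    refine le_trans ?_ (h5 L hL1)
    calc _ = C₄ * C₁ * L ^ 2 * ((D:ℝ) ^ (21 / 10 : ℝ) * Real.exp (-(1 * L))) := by
          rw [show (21 / 10 : ℝ) = 1 / 10 + (2:ℕ) by norm_num, Real.rpow_add_natCast (by linarith), one_mul]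
          ring
      _ ≤ _ := by gcongr
  have h12 : 1 / L ^ (A + 1) = 1 / L * (1 / L ^ A) := by rw [pow_succ]; field_simp
  have h13 : 0 ≤ 1 / L ^ A := by positivity
  calc _ ≤ C₂ * 2 ^ N * C₃ / L * (1 / L ^ A) + 1 / L * (1 / L ^ A) := by linarith
    _ = (C₂ * 2 ^ N * C₃ + 1) / L * (1 / L ^ A) := by ring
    _ ≤ 1 * (1 / L ^ A) := by
      gcongr
      rw [div_le_one (by linarith)]; exact hL2
    _ = _ := one_mul _

end OmegaSq

namespace OmegaSq

open Finset

/-! ### Primes in the residue classes with `d ∣ n ^ 2 - 1` -/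

lemma card_sq_eq_one_mul {m n : ℕ} (h : m.Coprime n) :
    Nat.card {b : ZMod (m * n) // b ^ 2 = 1} =
      Nat.card {b : ZMod m // b ^ 2 = 1} * Nat.card {b : ZMod n // b ^ 2 = 1} := by
  rw [← Nat.card_prod]
  refine Nat.card_congr (((ZMod.chineseRemainder h).toEquiv.subtypeEquiv
    (q := fun b : ZMod m × ZMod n => b.1 ^ 2 = 1 ∧ b.2 ^ 2 = 1) fun b => ?_).trans
      (Equiv.subtypeProdEquivProd (p := fun b : ZMod m => b ^ 2 = 1) (q := fun b : ZMod n => b ^ 2 = 1)))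
  rw [← (ZMod.chineseRemainder h).injective.eq_iff, map_pow, map_one, Prod.ext_iff]
  rfl

lemma card_sq_eq_one_prime_pow {p k : ℕ} (hp : p.Prime) (hp2 : p ≠ 2) (hk : 0 < k) :
    Nat.card {b : ZMod (p ^ k) // b ^ 2 = 1} = 2 := by
  have : Fact p.Prime := ⟨hp⟩
  have hlt : 2 < p := lt_of_le_of_ne hp.two_le (Ne.symm hp2)
  have h2 : (1 : ZMod (p ^ k)) ≠ -1 := by
    intro h
    have h3 : ((2:ℕ) : ZMod (p ^ k)) = 0 := by
      push_cast
      linear_combination h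
    rw [ZMod.natCast_eq_zero_iff] at h3
    have := Nat.le_of_dvd (by norm_num) ((dvd_pow_self p hk.ne').trans h3)
    omega
  have hset : {b : ZMod (p ^ k) | b ^ 2 = 1} = {1, -1} := by
    ext b
    simp only [Set.mem_ofPred_eq, Set.mem_insert_iff, Set.mem_singleton_iff]
    constructor
    · intro hb
      obtain ⟨z, rfl⟩ := ZMod.intCast_surjective b
      have h3 : ((p ^ k : ℕ) : ℤ) ∣ (z - 1) * (z + 1) := by
        rw [← ZMod.intCast_zmod_eq_zero_iff_dvd]
        push_cast
        linear_combination hb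
      have hpz : Prime (p : ℤ) := Nat.prime_iff_prime_int.1 hp
      push_cast at h3
      by_cases h4 : (p:ℤ) ∣ z - 1
      · left
        have h5 : ¬ (p:ℤ) ∣ z + 1 := by
          intro h5
          have h6 : (p:ℤ) ∣ 2 := by
            have := dvd_sub h5 h4
            rwa [show z + 1 - (z - 1) = 2 by ring] at this
          have := Int.le_of_dvd (by norm_num) h6
          omega
        have h6 := (IsCoprime.pow_left ((Prime.coprime_iff_not_dvd hpz).2 h5)
          (m := k)).dvd_of_dvd_mul_right h3
        have h7 := (ZMod.intCast_zmod_eq_zero_iff_dvd (z - 1) (p ^ k)).2 (by exact_mod_cast h6)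
        push_cast at h7
        linear_combination h7
      · right
        have h6 := (IsCoprime.pow_left ((Prime.coprime_iff_not_dvd hpz).2 h4)
          (m := k)).dvd_of_dvd_mul_left h3
        have h7 := (ZMod.intCast_zmod_eq_zero_iff_dvd (z + 1) (p ^ k)).2 (by exact_mod_cast h6)
        push_cast at h7
        linear_combination h7
    · rintro (rfl | rfl) <;> simp
  have h3 : Nat.card {b : ZMod (p ^ k) // b ^ 2 = 1} = Set.ncard {b : ZMod (p ^ k) | b ^ 2 = 1} := rfl
  rw [h3, hset, Set.ncard_pair h2]

lemma card_sq_eq_one {d : ℕ} (hd : 1 ≤ d) (hodd : d.Coprime 2) :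
    Nat.card {b : ZMod d // b ^ 2 = 1} = 2 ^ d.primeFactors.card := by
  induction d using Nat.recOnPosPrimePosCoprime with
  | zero => omega
  | one => simp
  | prime_pow p k hp hk =>
    have hp2 : p ≠ 2 := by
      rintro rfl
      have := Nat.Coprime.coprime_dvd_left (dvd_pow_self 2 hk.ne') hodd
      simp at this
    rw [card_sq_eq_one_prime_pow hp hp2 hk, Nat.primeFactors_prime_pow hk.ne' hp]
    simp
  | coprime a b ha hb hab iha ihb =>
    rw [card_sq_eq_one_mul hab, iha (by omega) (hodd.coprime_dvd_left ⟨b, rfl⟩),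
      ihb (by omega) (hodd.coprime_dvd_left ⟨a, mul_comm _ _⟩), hab.primeFactors_mul,
      card_union_of_disjoint hab.disjoint_primeFactors, pow_add]

/-- The integers on which the weight `wt f L` lives. -/
noncomputable def wtSupp {f : ℝ → ℝ} (hf : TestFn f) (L : ℝ) : Finset ℕ :=
  (hf.finite_support L).toFinset

lemma mem_wtSupp {f : ℝ → ℝ} {hf : TestFn f} {L : ℝ} {n : ℕ} : n ∈ wtSupp hf L ↔ wt f L n ≠ 0 := by
  simp [wtSupp]

/-- The total mass `∑ Λ(n) wt(n)`. -/
noncomputable def totalMass {f : ℝ → ℝ} (hf : TestFn f) (L : ℝ) : ℝ :=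
  ∑ n ∈ wtSupp hf L, ArithmeticFunction.vonMangoldt n * wt f L n

lemma tsum_wtSupp {f : ℝ → ℝ} (hf : TestFn f) (L : ℝ) (a : ℕ → ℂ) :
    ∑' n : ℕ, a n * (wt f L n : ℂ) = ∑ n ∈ wtSupp hf L, a n * (wt f L n : ℂ) :=
  tsum_eq_sum fun n hn => by
    rw [mem_wtSupp, not_not] at hn
    rw [hn]; simp

/-- The mass in a set of reduced classes modulo `N`, detected by characters. -/
lemma abs_sum_classes_sub_le {f : ℝ → ℝ} (hf : TestFn f) : ∃ C : ℝ, 1 ≤ C ∧ ∀ L : ℝ, 1 ≤ L →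
    ∀ N : ℕ, 1 ≤ N → ∀ A : Finset (ZMod N), (∀ a ∈ A, IsUnit a) →
    |∑ n ∈ wtSupp hf L with ((n:ℕ) : ZMod N) ∈ A, ArithmeticFunction.vonMangoldt n * wt f L n -
        A.card / N.totient * totalMass hf L| ≤
      A.card / N.totient * (∑ χ ∈ nontrivChars N, ‖Psi f L χ‖ + C * N * L ^ 2 * Real.exp (-L)) := by
  classical
  obtain ⟨C, hC, h1⟩ := norm_tsum_not_coprime_le hf
  refine ⟨C, hC, fun L hL N hN A hA => ?_⟩
  have : NeZero N := ⟨by omega⟩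
  have hφ : (0:ℝ) < N.totient := by exact_mod_cast Nat.totient_pos.2 hN
  have hφc : (N.totient : ℂ) ≠ 0 := by exact_mod_cast hφ.ne'
  have hPsi : ∀ χ : DirichletCharacter ℂ N, Psi f L χ =
      ∑ n ∈ wtSupp hf L, (ArithmeticFunction.vonMangoldt n : ℂ) * χ n * (wt f L n : ℂ) := fun χ =>
    tsum_wtSupp hf L _
  have hX : ‖Psi f L (1 : DirichletCharacter ℂ N) - (totalMass hf L : ℂ)‖ ≤
      C * N * L ^ 2 * Real.exp (-L) := by
    have h2 := h1 L hL N hN (fun n => (1 : DirichletCharacter ℂ N) n - 1) (fun n => ?_) (fun n hn => ?_)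
    · rw [tsum_wtSupp hf] at h2
      convert h2 using 2
      rw [hPsi, totalMass]
      push_cast
      rw [← sum_sub_distrib]
      exact sum_congr rfl fun n _ => by ring
    · by_cases hu : IsUnit (n : ZMod N)
      · rw [MulChar.one_apply hu]; simp
      · rw [MulChar.map_nonunit _ hu]; simp
    · rw [MulChar.one_apply ((ZMod.isUnit_iff_coprime n N).2 hn), sub_self]
  have hind : ∀ n : ℕ, (N.totient : ℂ) * (if (n : ZMod N) ∈ A then 1 else 0) =
      ∑ a ∈ A, ∑ χ : DirichletCharacter ℂ N, χ n * (starRingEnd ℂ) (χ a) := by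
    intro n
    simp_rw [sum_char_mul_conj]
    have h3 : ∀ a ∈ A, (if (n : ZMod N) = a ∧ IsUnit (n : ZMod N) then (N.totient : ℂ) else 0) =
        if (n : ZMod N) = a then (N.totient : ℂ) else 0 := by
      intro a ha
      by_cases h : (n : ZMod N) = a
      · rw [if_pos h, if_pos ⟨h, h ▸ hA a ha⟩]
      · rw [if_neg h, if_neg fun h' => h h'.1]
    rw [sum_congr rfl h3, sum_ite_eq]
    simp
  have hmain : (N.totient : ℂ) * ((∑ n ∈ wtSupp hf L with ((n:ℕ) : ZMod N) ∈ A,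
      ArithmeticFunction.vonMangoldt n * wt f L n : ℝ) : ℂ) =
      ∑ a ∈ A, ∑ χ : DirichletCharacter ℂ N, (starRingEnd ℂ) (χ a) * Psi f L χ := by
    rw [sum_filter]
    push_cast
    simp_rw [hPsi, mul_sum]
    have h4 : ∀ n ∈ wtSupp hf L, (N.totient : ℂ) * (((if ((n:ℕ) : ZMod N) ∈ A then
        ArithmeticFunction.vonMangoldt n * wt f L n else 0 : ℝ)) : ℂ) =
        ∑ a ∈ A, ∑ χ : DirichletCharacter ℂ N, (starRingEnd ℂ) (χ a) *
          ((ArithmeticFunction.vonMangoldt n : ℂ) * χ n * (wt f L n : ℂ)) := by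
      intro n _
      calc _ = ((N.totient : ℂ) * (if (n : ZMod N) ∈ A then 1 else 0)) *
            ((ArithmeticFunction.vonMangoldt n : ℂ) * (wt f L n : ℂ)) := by
            split_ifs <;> push_cast <;> ring
        _ = _ := by
          rw [hind, sum_mul]
          refine sum_congr rfl fun a _ => ?_
          rw [sum_mul]
          exact sum_congr rfl fun χ _ => by ring
    rw [sum_congr rfl h4, sum_comm]
    refine sum_congr rfl fun a _ => ?_
    rw [sum_comm]
  have hdiff : (N.totient : ℂ) * ((∑ n ∈ wtSupp hf L with ((n:ℕ) : ZMod N) ∈ A,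
      ArithmeticFunction.vonMangoldt n * wt f L n -
        A.card / N.totient * totalMass hf L : ℝ) : ℂ) =
      ∑ a ∈ A, (∑ χ ∈ nontrivChars N, (starRingEnd ℂ) (χ a) * Psi f L χ +
        (Psi f L (1 : DirichletCharacter ℂ N) - (totalMass hf L : ℂ))) := by
    rw [Complex.ofReal_sub, mul_sub, hmain, sum_add_distrib, sum_const, nsmul_eq_mul]
    have h5 : ∀ a ∈ A, ∑ χ : DirichletCharacter ℂ N, (starRingEnd ℂ) (χ a) * Psi f L χ =
        ∑ χ ∈ nontrivChars N, (starRingEnd ℂ) (χ a) * Psi f L χ + Psi f L (1 : DirichletCharacter ℂ N) := by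
      intro a ha
      have h6 : nontrivChars N = univ.erase 1 := by ext χ; simp [mem_nontrivChars]
      rw [h6, ← sum_erase_add _ _ (mem_univ (1 : DirichletCharacter ℂ N)), MulChar.one_apply (hA a ha)]
      simp
    rw [sum_congr rfl h5, sum_add_distrib, sum_const, nsmul_eq_mul]
    push_cast
    field_simp
    ring
  have h7 := congrArg norm hdiff
  rw [norm_mul, Complex.norm_natCast, Complex.norm_real, Real.norm_eq_abs] at h7
  have h8 : ‖∑ a ∈ A, (∑ χ ∈ nontrivChars N, (starRingEnd ℂ) (χ a) * Psi f L χ +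
        (Psi f L (1 : DirichletCharacter ℂ N) - (totalMass hf L : ℂ)))‖ ≤
      A.card * (∑ χ ∈ nontrivChars N, ‖Psi f L χ‖ + C * N * L ^ 2 * Real.exp (-L)) := by
    refine (norm_sum_le _ _).trans ?_
    rw [← nsmul_eq_mul]
    refine sum_le_card_nsmul _ _ _ fun a ha => (norm_add_le _ _).trans (add_le_add ?_ hX)
    refine (norm_sum_le _ _).trans (sum_le_sum fun χ _ => ?_)
    rw [norm_mul, RCLike.norm_conj]
    exact mul_le_of_le_one_left (norm_nonneg _) (χ.norm_le_one a)
  rw [← h7] at h8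
  rw [div_mul_eq_mul_div _ _ (∑ χ ∈ nontrivChars N, ‖Psi f L χ‖ + C * N * L ^ 2 * Real.exp (-L)),
    le_div_iff₀ hφ, mul_comm]
  exact h8

/-- The density of the integers with `d ∣ n ^ 2 - 1` among those coprime to `d`. -/
noncomputable def dens (d : ℕ) : ℝ := 2 ^ d.primeFactors.card / d.totient

lemma dens_mul {a b : ℕ} (h : a.Coprime b) : dens (a * b) = dens a * dens b := by
  rw [dens, dens, dens, h.primeFactors_mul, card_union_of_disjoint h.disjoint_primeFactors, pow_add,
    Nat.totient_mul h]
  push_cast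
  rw [div_mul_div_comm]

lemma dens_one : dens 1 = 1 := by simp [dens]

lemma dens_prime {p : ℕ} (hp : p.Prime) : dens p = 2 / (p - 1) := by
  rw [dens, hp.primeFactors, Nat.totient_prime hp, Nat.cast_sub hp.one_le]
  simp

lemma dens_prime_sq {p : ℕ} (hp : p.Prime) : dens (p ^ 2) = 2 / (p * (p - 1)) := by
  rw [dens, Nat.primeFactors_prime_pow (by norm_num) hp, Nat.totient_prime_pow hp (by norm_num)]
  push_cast [Nat.cast_sub hp.one_le]
  simp

/-- The mass of the `n ≡ 29` modulo `72` with `d ∣ n ^ 2 - 1`. -/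
noncomputable def divMass {f : ℝ → ℝ} (hf : TestFn f) (L : ℝ) (d : ℕ) : ℝ :=
  ∑ n ∈ wtSupp hf L with (n % 72 = 29 ∧ d ∣ n ^ 2 - 1), ArithmeticFunction.vonMangoldt n * wt f L n

lemma natCast_sq_eq_one_iff {n d : ℕ} (hn : 1 ≤ n) : ((n : ZMod d)) ^ 2 = 1 ↔ d ∣ n ^ 2 - 1 := by
  rw [← ZMod.natCast_eq_zero_iff, Nat.cast_sub (Nat.one_le_pow _ _ hn)]
  push_cast
  rw [sub_eq_zero]

lemma abs_divMass_sub_le {f : ℝ → ℝ} (hf : TestFn f) : ∃ C : ℝ, 1 ≤ C ∧ ∀ L : ℝ, 1 ≤ L →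
    ∀ d : ℕ, 1 ≤ d → d.Coprime 6 →
    |divMass hf L d - totalMass hf L / 24 * dens d| ≤
      2 ^ d.primeFactors.card / (72 * d).totient * (∑ χ ∈ nontrivChars (72 * d), ‖Psi f L χ‖ +
        C * ((72 * d : ℕ) : ℝ) * L ^ 2 * Real.exp (-L)) := by
  classical
  obtain ⟨C, hC, h1⟩ := abs_sum_classes_sub_le hf
  refine ⟨C, hC, fun L hL d hd hd6 => ?_⟩
  have hd2 : d.Coprime 2 := hd6.coprime_dvd_right (by norm_num)
  have hd3 : d.Coprime 3 := hd6.coprime_dvd_right (by norm_num)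
  have hcop : Nat.Coprime 72 d := by
    rw [show 72 = 2 ^ 3 * 3 ^ 2 by norm_num]
    exact Nat.Coprime.symm (Nat.Coprime.mul_right (hd2.pow_right 3) (hd3.pow_right 2))
  have : NeZero d := ⟨by omega⟩
  obtain ⟨e, he⟩ : ∃ e : ZMod (72 * d) ≃+* ZMod 72 × ZMod d, e = ZMod.chineseRemainder hcop := ⟨_, rfl⟩
  obtain ⟨A, hA⟩ : ∃ A : Finset (ZMod (72 * d)), A = univ.filter
    (fun a => (e a).1 = 29 ∧ (e a).2 ^ 2 = 1) := ⟨_, rfl⟩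
  have hunit : ∀ a ∈ A, IsUnit a := by
    intro a ha
    rw [hA, mem_filter] at ha
    have h2 : e a * (5, (e a).2) = 1 := by
      refine Prod.ext ?_ ?_
      · rw [Prod.fst_mul, ha.2.1]; change (29 : ZMod 72) * 5 = 1; decide
      · rw [Prod.snd_mul, ← sq, ha.2.2]; rfl
    have h3 : IsUnit (e a) := IsUnit.of_mul_eq_one _ h2
    exact (MulEquiv.isUnit_map e.toMulEquiv).1 h3
  have hcard : A.card = 2 ^ d.primeFactors.card := by
    rw [← card_sq_eq_one hd hd2, hA, ← Fintype.card_subtype, ← Nat.card_eq_fintype_card]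
    refine Nat.card_congr ((e.toEquiv.subtypeEquiv
      (q := fun b : ZMod 72 × ZMod d => b.1 = 29 ∧ b.2 ^ 2 = 1) fun b => Iff.rfl).trans
      ((Equiv.subtypeProdEquivProd (p := fun b : ZMod 72 => b = 29)
        (q := fun b : ZMod d => b ^ 2 = 1)).trans (Equiv.uniqueProd _ {b : ZMod 72 // b = 29})))
  have hmem : ∀ n : ℕ, (n : ZMod (72 * d)) ∈ A ↔ n % 72 = 29 ∧ d ∣ n ^ 2 - 1 := by
    intro n
    have h29 : ((n : ℕ) : ZMod 72) = 29 ↔ n % 72 = 29 := by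
      have := ZMod.natCast_eq_natCast_iff' n 29 72
      simpa using this
    rw [hA, mem_filter, map_natCast, Prod.fst_natCast, Prod.snd_natCast, h29]
    simp only [mem_univ, true_and]
    refine and_congr_right fun hn => natCast_sq_eq_one_iff (by omega)
  have h2 := h1 L hL (72 * d) (by omega) A hunit
  have h3 : (Nat.totient 72) = 24 := by decide
  have hφ : (0:ℝ) < d.totient := by exact_mod_cast Nat.totient_pos.2 hd
  rw [hcard] at h2
  simp_rw [hmem] at h2
  have h4 : totalMass hf L / 24 * dens d =
      ((2 ^ d.primeFactors.card : ℕ) : ℝ) / (72 * d).totient * totalMass hf L := by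
    rw [dens, Nat.totient_mul hcop, h3]
    push_cast
    field_simp
  rw [divMass, h4]
  push_cast at h2 ⊢
  exact h2

end OmegaSq

namespace OmegaSq

open Finset

/-! ### The quadratic form of the Selberg sieve -/

/-- The density `h = g / (1 - g)` dual to `g`, extended multiplicatively to sets of primes. -/
noncomputable def hprod {ι : Type*} (g : ι → ℝ) (U : Finset ι) : ℝ := ∏ p ∈ U, g p / (1 - g p)

/-- Selberg's weights attached to the diagonal variables `y`; squarefree integers are encoded by their sets
of prime factors, taken inside `P`. -/
noncomputable def lam {ι : Type*} [DecidableEq ι] (P : Finset ι) (g : ι → ℝ) (y : Finset ι → ℝ)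
    (S : Finset ι) : ℝ :=
  (-1) ^ S.card / (∏ p ∈ S, g p) * ∑ U ∈ P.powerset, if S ⊆ U then hprod g U * y U else 0

variable {ι : Type*} [DecidableEq ι]

lemma sum_interval_neg_one {P U V : Finset ι} (hU : U ⊆ P) :
    ∑ S ∈ P.powerset, (if V ⊆ S ∧ S ⊆ U then (-1 : ℝ) ^ S.card else 0) =
      if V = U then (-1) ^ V.card else 0 := by
  by_cases hVU : V ⊆ U
  · rw [← sum_filter]
    have h1 : P.powerset.filter (fun S => V ⊆ S ∧ S ⊆ U) = (U \ V).powerset.image (fun S => V ∪ S) := by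
      rw [← Finset.Icc_eq_image_powerset hVU]
      ext S
      simp only [mem_filter, mem_powerset, mem_Icc]
      exact ⟨fun h => h.2, fun h => ⟨h.2.trans hU, h⟩⟩
    rw [h1, sum_image]
    · have h2 : ∀ S ∈ (U \ V).powerset, (-1 : ℝ) ^ (V ∪ S).card = (-1) ^ V.card * (-1) ^ S.card := by
        intro S hS
        rw [mem_powerset] at hS
        rw [card_union_of_disjoint (disjoint_of_subset_right hS disjoint_sdiff), pow_add]
      rw [sum_congr rfl h2, ← mul_sum]
      have h3 : ∑ S ∈ (U \ V).powerset, (-1 : ℝ) ^ S.card = if U \ V = ∅ then 1 else 0 := by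
        have := sum_powerset_neg_one_pow_card (x := U \ V)
        exact_mod_cast this
      rw [h3]
      by_cases h : V = U
      · rw [if_pos h, if_pos (by rw [h]; simp), mul_one]
      · rw [if_neg h, if_neg, mul_zero]
        rw [sdiff_eq_empty_iff_subset]
        exact fun h' => h (hVU.antisymm h')
    · intro S hS T hT hST
      simp only [coe_powerset, Set.mem_preimage, Set.mem_powerset_iff, coe_subset] at hS hT
      have h4 := congrArg (· \ V) hST
      simp only [union_sdiff_distrib, sdiff_self, bot_eq_empty, empty_union] at h4
      rwa [sdiff_eq_self_of_disjoint (disjoint_of_subset_left hS sdiff_disjoint),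
        sdiff_eq_self_of_disjoint (disjoint_of_subset_left hT sdiff_disjoint)] at h4
  · rw [if_neg fun h => hVU h.subset]
    exact sum_eq_zero fun S _ => if_neg fun h => hVU (h.1.trans h.2)

/-- Möbius inversion recovers `y` from the weights. -/
lemma sum_lam_mul_prod {P : Finset ι} {g : ι → ℝ} (hg : ∀ p ∈ P, 0 < g p) (y : Finset ι → ℝ)
    {V : Finset ι} (hV : V ⊆ P) :
    ∑ S ∈ P.powerset, (if V ⊆ S then lam P g y S * ∏ p ∈ S, g p else 0) =
      (-1) ^ V.card * (hprod g V * y V) := by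
  have h1 : ∀ S ∈ P.powerset, (if V ⊆ S then lam P g y S * ∏ p ∈ S, g p else 0) =
      ∑ U ∈ P.powerset, (if V ⊆ S ∧ S ⊆ U then (-1 : ℝ) ^ S.card else 0) * (hprod g U * y U) := by
    intro S hS
    rw [mem_powerset] at hS
    have hne : ∏ p ∈ S, g p ≠ 0 := (prod_pos fun p hp => hg p (hS hp)).ne'
    by_cases h : V ⊆ S
    · rw [if_pos h, lam, mul_right_comm, div_mul_cancel₀ _ hne, mul_sum]
      refine sum_congr rfl fun U _ => ?_
      by_cases h' : S ⊆ U
      · rw [if_pos h', if_pos ⟨h, h'⟩]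
      · rw [if_neg h', if_neg fun hh => h' hh.2]; ring
    · rw [if_neg h]
      exact (sum_eq_zero fun U _ => by rw [if_neg fun hh => h hh.1, zero_mul]).symm
  rw [sum_congr rfl h1, sum_comm]
  have h2 : ∀ U ∈ P.powerset, ∑ S ∈ P.powerset,
      (if V ⊆ S ∧ S ⊆ U then (-1 : ℝ) ^ S.card else 0) * (hprod g U * y U) =
      if V = U then (-1) ^ V.card * (hprod g V * y V) else 0 := by
    intro U hU
    rw [← sum_mul, sum_interval_neg_one (mem_powerset.1 hU)]
    by_cases h : V = U
    · rw [if_pos h, if_pos h, h]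
    · rw [if_neg h, if_neg h, zero_mul]
  rw [sum_congr rfl h2, sum_ite_eq, if_pos (mem_powerset.2 hV)]

lemma prod_union_eq {P : Finset ι} {g : ι → ℝ} (hg : ∀ p ∈ P, 0 < g p) {S T : Finset ι} (hS : S ⊆ P) :
    ∏ p ∈ S ∪ T, g p = (∏ p ∈ S, g p) * (∏ p ∈ T, g p) *
      ∑ V ∈ P.powerset, if V ⊆ S ∧ V ⊆ T then 1 / hprod g V else 0 := by
  have h1 : ∑ V ∈ P.powerset, (if V ⊆ S ∧ V ⊆ T then 1 / hprod g V else 0) = ∏ p ∈ S ∩ T, 1 / g p := by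
    rw [← sum_filter]
    have h2 : P.powerset.filter (fun V => V ⊆ S ∧ V ⊆ T) = (S ∩ T).powerset := by
      ext V
      simp only [mem_filter, mem_powerset, subset_inter_iff]
      exact ⟨fun h => h.2, fun h => ⟨h.1.trans hS, h⟩⟩
    rw [h2]
    have h3 : ∏ p ∈ S ∩ T, 1 / g p = ∏ p ∈ S ∩ T, (1 + (1 - g p) / g p) := by
      refine prod_congr rfl fun p hp => ?_
      have := hg p (hS (mem_inter.1 hp).1)
      field_simp
      ring
    rw [h3, prod_one_add]
    refine sum_congr rfl fun V _ => ?_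
    rw [hprod, one_div, ← prod_inv_distrib]
    exact prod_congr rfl fun p _ => by rw [inv_div]
  rw [h1, ← prod_union_inter, mul_assoc, ← prod_mul_distrib]
  rw [prod_eq_one (s := S ∩ T), mul_one]
  intro p hp
  have hgp := (hg p (hS (mem_inter.1 hp).1)).ne'
  exact mul_one_div_cancel hgp

/-- The sieve form is diagonal in the variables `y`. -/
lemma sum_lam_lam {P : Finset ι} {g : ι → ℝ} (hg : ∀ p ∈ P, 0 < g p) (hg1 : ∀ p ∈ P, g p < 1)
    (y : Finset ι → ℝ) :
    ∑ S ∈ P.powerset, ∑ T ∈ P.powerset, lam P g y S * lam P g y T * ∏ p ∈ S ∪ T, g p =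
      ∑ V ∈ P.powerset, hprod g V * y V ^ 2 := by
  have h1 : ∀ S ∈ P.powerset, ∀ T, lam P g y S * lam P g y T * ∏ p ∈ S ∪ T, g p =
      ∑ V ∈ P.powerset, 1 / hprod g V * (if V ⊆ S then lam P g y S * ∏ p ∈ S, g p else 0) *
        (if V ⊆ T then lam P g y T * ∏ p ∈ T, g p else 0) := by
    intro S hS T
    rw [prod_union_eq hg (mem_powerset.1 hS), mul_sum, mul_sum]
    refine sum_congr rfl fun V _ => ?_
    by_cases h : V ⊆ S
    · by_cases h' : V ⊆ T
      · rw [if_pos h, if_pos h', if_pos ⟨h, h'⟩]; ring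
      · rw [if_neg h', if_neg fun hh => h' hh.2]; ring
    · rw [if_neg h, if_neg fun hh => h hh.1]; ring
  rw [sum_congr rfl fun S hS => sum_congr rfl fun T _ => h1 S hS T]
  rw [sum_congr rfl fun S _ => sum_comm, sum_comm]
  refine sum_congr rfl fun V hV => ?_
  have hV' := mem_powerset.1 hV
  have h2 : hprod g V ≠ 0 :=
    (prod_pos fun p hp => div_pos (hg p (hV' hp)) (by linarith [hg1 p (hV' hp)])).ne'
  have h3 := sum_lam_mul_prod hg y hV'
  have h4 : ∑ S ∈ P.powerset, ∑ T ∈ P.powerset,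
      1 / hprod g V * (if V ⊆ S then lam P g y S * ∏ p ∈ S, g p else 0) *
        (if V ⊆ T then lam P g y T * ∏ p ∈ T, g p else 0) =
      1 / hprod g V * ((∑ S ∈ P.powerset, if V ⊆ S then lam P g y S * ∏ p ∈ S, g p else 0) *
        ∑ T ∈ P.powerset, if V ⊆ T then lam P g y T * ∏ p ∈ T, g p else 0) := by
    rw [sum_mul_sum, mul_sum]
    refine sum_congr rfl fun S _ => ?_
    rw [mul_sum]
    exact sum_congr rfl fun T _ => by ring
  have h5 : ((-1 : ℝ) ^ V.card) * (-1) ^ V.card = 1 := by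
    rw [← mul_pow]; norm_num
  rw [h4, h3]
  calc _ = ((-1 : ℝ) ^ V.card * (-1) ^ V.card) * (1 / hprod g V * hprod g V) * (hprod g V * y V ^ 2) := by ring
    _ = _ := by rw [h5, one_div_mul_cancel h2]; ring

lemma hprod_insert {g : ι → ℝ} {q : ι} {U : Finset ι} (h : q ∉ U) :
    hprod g (insert q U) = g q / (1 - g q) * hprod g U := by
  rw [hprod, prod_insert h, hprod]

/-- Merging the two weights that differ by the prime `q` gives the weights for `y(U) - y(U ∪ {q})`. -/
lemma lam_add_lam_insert {Q : Finset ι} {g : ι → ℝ} {q : ι} (hq : q ∉ Q) (hgq : 0 < g q) (hgq1 : g q < 1)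
    (y : Finset ι → ℝ) {S : Finset ι} (hS : S ⊆ Q) :
    lam (insert q Q) g y S + lam (insert q Q) g y (insert q S) =
      lam Q g (fun U => y U - y (insert q U)) S := by
  have hqS : q ∉ S := fun h => hq (hS h)
  rw [lam, lam, lam, sum_powerset_insert hq, sum_powerset_insert hq, card_insert_of_notMem hqS,
    prod_insert hqS]
  have h1 : ∑ U ∈ Q.powerset, (if insert q S ⊆ U then hprod g U * y U else 0) = 0 := by
    refine sum_eq_zero fun U hU => if_neg fun h => hq (mem_powerset.1 hU (h (mem_insert_self q S)))
  have h2 : ∀ U ∈ Q.powerset, (if insert q S ⊆ insert q U then hprod g (insert q U) * y (insert q U) else 0) =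
      g q / (1 - g q) * if S ⊆ U then hprod g U * y (insert q U) else 0 := by
    intro U hU
    have hqU : q ∉ U := fun h => hq (mem_powerset.1 hU h)
    rw [hprod_insert hqU]
    by_cases h : S ⊆ U
    · rw [if_pos h, if_pos (insert_subset_insert q h)]; ring
    · rw [if_neg h, if_neg, mul_zero]
      exact fun h' => h ((insert_subset_insert_iff hqS).1 h')
  have h3 : ∀ U ∈ Q.powerset, (if S ⊆ insert q U then hprod g (insert q U) * y (insert q U) else 0) =
      g q / (1 - g q) * if S ⊆ U then hprod g U * y (insert q U) else 0 := by
    intro U hU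
    have hqU : q ∉ U := fun h => hq (mem_powerset.1 hU h)
    rw [hprod_insert hqU]
    by_cases h : S ⊆ U
    · rw [if_pos h, if_pos (h.trans (subset_insert q U))]; ring
    · rw [if_neg h, if_neg, mul_zero]
      exact fun h' => h ((subset_insert_iff_of_notMem hqS).1 h')
  have h4 : ∀ U ∈ Q.powerset, (if S ⊆ U then hprod g U * (y U - y (insert q U)) else 0) =
      (if S ⊆ U then hprod g U * y U else 0) - if S ⊆ U then hprod g U * y (insert q U) else 0 := by
    intro U _
    split_ifs <;> ring
  rw [h1, sum_congr rfl h2, sum_congr rfl h3, sum_congr rfl h4, sum_sub_distrib, ← mul_sum]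
  generalize ∑ U ∈ Q.powerset, (if S ⊆ U then hprod g U * y U else 0) = a
  generalize ∑ U ∈ Q.powerset, (if S ⊆ U then hprod g U * y (insert q U) else 0) = b
  have h5 : 1 - g q ≠ 0 := by linarith
  generalize ∏ p ∈ S, g p = c
  rw [pow_succ, zero_add]
  have h6 : (-1 : ℝ) ^ S.card * -1 / (g q * c) * (g q / (1 - g q) * b) =
      (-1 : ℝ) ^ S.card / c * (-(1 / (1 - g q)) * b) := by
    rw [mul_comm (g q) c, ← div_div]
    field_simp
  rw [h6, ← mul_add]
  congr 1
  field_simp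
  ring

/-- The sieve form restricted to multiples of the prime `q`. -/
lemma sum_lam_lam_erase {P : Finset ι} {g : ι → ℝ} (hg : ∀ p ∈ P, 0 < g p) (hg1 : ∀ p ∈ P, g p < 1)
    (y : Finset ι → ℝ) {q : ι} (hq : q ∈ P) :
    ∑ S ∈ P.powerset, ∑ T ∈ P.powerset, lam P g y S * lam P g y T * ∏ p ∈ (S ∪ T).erase q, g p =
      ∑ V ∈ (P.erase q).powerset, hprod g V * (y V - y (insert q V)) ^ 2 := by
  obtain ⟨Q, hQ⟩ : ∃ Q, Q = P.erase q := ⟨_, rfl⟩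
  have hqQ : q ∉ Q := by rw [hQ]; simp
  have hP : P = insert q Q := by rw [hQ, insert_erase hq]
  have hQP : Q ⊆ P := by rw [hQ]; exact erase_subset _ _
  rw [← hQ, ← sum_lam_lam (fun p hp => hg p (hQP hp)) (fun p hp => hg1 p (hQP hp))]
  have h1 : ∀ S ∈ Q.powerset, lam Q g (fun U => y U - y (insert q U)) S = lam P g y S + lam P g y (insert q S) := by
    intro S hS
    rw [hP, lam_add_lam_insert hqQ (hg q hq) (hg1 q hq) y (mem_powerset.1 hS)]
  have h2 : ∀ S ∈ Q.powerset, ∀ T ∈ Q.powerset, (S ∪ T).erase q = S ∪ T ∧ (insert q S ∪ T).erase q = S ∪ T ∧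
      (S ∪ insert q T).erase q = S ∪ T ∧ (insert q S ∪ insert q T).erase q = S ∪ T := by
    intro S hS T hT
    have h3 : q ∉ S ∪ T := fun h => hqQ (union_subset (mem_powerset.1 hS) (mem_powerset.1 hT) h)
    refine ⟨erase_eq_of_notMem h3, ?_, ?_, ?_⟩
    · rw [insert_union, erase_insert h3]
    · rw [union_insert, erase_insert h3]
    · rw [insert_union, union_insert, insert_idem, erase_insert h3]
  have h4 : ∀ F : Finset ι → ℝ, ∑ S ∈ P.powerset, F S = ∑ S ∈ Q.powerset, (F S + F (insert q S)) := by
    intro F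
    rw [hP, sum_powerset_insert hqQ, sum_add_distrib]
  rw [h4]
  refine sum_congr rfl fun S hS => ?_
  rw [h4, h4, ← sum_add_distrib]
  refine sum_congr rfl fun T hT => ?_
  obtain ⟨e1, e2, e3, e4⟩ := h2 S hS T hT
  rw [e1, e2, e3, e4, h1 S hS, h1 T hT]
  ring

end OmegaSq

namespace OmegaSq

open Finset

/-! ### The main terms of the sieve -/

lemma sum_log_sq_div_sq_le : ∃ C : ℝ, 0 < C ∧ ∀ s : Finset ℕ, ∑ n ∈ s, Real.log n ^ 2 / (n:ℝ) ^ 2 ≤ C := by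
  have h1 : Summable fun n : ℕ => 64 * (1 / (n:ℝ) ^ (3 / 2 : ℝ)) :=
    (Real.summable_one_div_nat_rpow.2 (by norm_num)).mul_left _
  have h2 : ∀ n : ℕ, Real.log n ^ 2 / (n:ℝ) ^ 2 ≤ 64 * (1 / (n:ℝ) ^ (3 / 2 : ℝ)) := by
    intro n
    rcases Nat.eq_zero_or_pos n with rfl | hn
    · simp
    have hn1 : (1:ℝ) ≤ n := by exact_mod_cast hn
    have hn0 : (0:ℝ) < n := by linarith
    have h3 : Real.log n ≤ 4 * (n:ℝ) ^ (1 / 4 : ℝ) := by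
      have := Real.log_le_rpow_div hn0.le (show (0:ℝ) < 1 / 4 by norm_num)
      linarith
    have h4 : Real.log n ^ 2 ≤ 16 * (n:ℝ) ^ (1 / 2 : ℝ) := by
      calc Real.log n ^ 2 ≤ (4 * (n:ℝ) ^ (1 / 4 : ℝ)) ^ 2 := by
            have := Real.log_nonneg hn1
            gcongr
        _ = _ := by
          rw [mul_pow, ← Real.rpow_mul_natCast hn0.le]; norm_num
    have h5 : (n:ℝ) ^ 2 = (n:ℝ) ^ (1 / 2 : ℝ) * (n:ℝ) ^ (3 / 2 : ℝ) := by
      rw [← Real.rpow_add hn0, ← Real.rpow_natCast]; norm_num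
    have h6 : 0 < (n:ℝ) ^ (1 / 2 : ℝ) := by positivity
    have h7 : 0 < (n:ℝ) ^ (3 / 2 : ℝ) := by positivity
    rw [h5, div_le_iff₀ (by positivity)]
    calc Real.log n ^ 2 ≤ 16 * (n:ℝ) ^ (1 / 2 : ℝ) := h4
      _ ≤ 64 * (n:ℝ) ^ (1 / 2 : ℝ) := by gcongr; norm_num
      _ = _ := by field_simp
  refine ⟨∑' n : ℕ, 64 * (1 / (n:ℝ) ^ (3 / 2 : ℝ)) + 1, ?_, fun s => ?_⟩
  · have : 0 ≤ ∑' n : ℕ, 64 * (1 / (n:ℝ) ^ (3 / 2 : ℝ)) := tsum_nonneg fun n => by positivity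
    linarith
  · refine (sum_le_sum fun n _ => h2 n).trans ((h1.sum_le_tsum s fun n _ => by positivity).trans (by linarith))

lemma one_le_log_of_five_le {p : ℕ} (hp : 5 ≤ p) : 1 ≤ Real.log p := by
  have h : (5:ℝ) ≤ p := by exact_mod_cast hp
  rw [Real.le_log_iff_exp_le (by linarith)]
  linarith [Real.exp_one_lt_d9]

lemma prime_weight_le {p l : ℝ} (hp : 5 ≤ p) (hl : 1 ≤ l) :
    2 / (p - 3) * l ≤ 2 * (l / p) + 15 * (l ^ 2 / p ^ 2) := by
  have h1 : l ≤ l ^ 2 := by nlinarith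
  have h2 : 2 / (p - 3) * l = 2 * (l / p) + 6 / (p * (p - 3)) * l := by
    have : p - 3 ≠ 0 := by linarith
    field_simp
    ring
  have h3 : 6 / (p * (p - 3)) ≤ 15 / p ^ 2 := by
    rw [div_le_div_iff₀ (by nlinarith) (by positivity)]
    nlinarith
  calc _ = 2 * (l / p) + 6 / (p * (p - 3)) * l := h2
    _ ≤ 2 * (l / p) + 15 / p ^ 2 * l ^ 2 := by gcongr
    _ = _ := by ring

/-- Mertens' theorem for the sieve densities, on the interval `(exp a, exp b]`. -/
lemma mertens_sieve : ∃ C : ℝ, 0 < C ∧ ∀ a b : ℝ, 0 ≤ a → a ≤ b →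
    ∑ p ∈ Ioc ⌊Real.exp a⌋₊ ⌊Real.exp b⌋₊ with (p.Prime ∧ 5 ≤ p), 2 / ((p:ℝ) - 3) * Real.log p ≤
      2 * (b - a) + C := by
  obtain ⟨C₁, hC₁, h1⟩ := mertens_prime_Ioc
  obtain ⟨C₂, hC₂, h2⟩ := sum_log_sq_div_sq_le
  refine ⟨2 * C₁ + 15 * C₂, by positivity, fun a b ha hab => ?_⟩
  have h3 := abs_le.1 (h1 (Real.exp a) (Real.exp b) (Real.one_le_exp ha) (Real.exp_le_exp.2 hab))
  rw [Real.log_div (Real.exp_pos _).ne' (Real.exp_pos _).ne', Real.log_exp, Real.log_exp] at h3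
  have h4 : ∑ p ∈ Ioc ⌊Real.exp a⌋₊ ⌊Real.exp b⌋₊ with (p.Prime ∧ 5 ≤ p), Real.log p / p ≤
      ∑ p ∈ Ioc ⌊Real.exp a⌋₊ ⌊Real.exp b⌋₊ with p.Prime, Real.log p / p := by
    refine sum_le_sum_of_subset_of_nonneg (fun p hp => ?_) fun p _ _ =>
      div_nonneg (Real.log_natCast_nonneg _) (Nat.cast_nonneg _)
    rw [mem_filter] at hp ⊢
    exact ⟨hp.1, hp.2.1⟩
  have h5 : ∑ p ∈ Ioc ⌊Real.exp a⌋₊ ⌊Real.exp b⌋₊ with (p.Prime ∧ 5 ≤ p), 2 / ((p:ℝ) - 3) * Real.log p ≤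
      ∑ p ∈ Ioc ⌊Real.exp a⌋₊ ⌊Real.exp b⌋₊ with (p.Prime ∧ 5 ≤ p),
        (2 * (Real.log p / p) + 15 * (Real.log p ^ 2 / (p:ℝ) ^ 2)) := by
    refine sum_le_sum fun p hp => ?_
    rw [mem_filter] at hp
    exact prime_weight_le (by exact_mod_cast hp.2.2) (one_le_log_of_five_le hp.2.2)
  rw [sum_add_distrib, ← mul_sum, ← mul_sum] at h5
  have h6 := h2 (filter (fun p => p.Prime ∧ 5 ≤ p) (Ioc ⌊Real.exp a⌋₊ ⌊Real.exp b⌋₊))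
  linarith [h3.2]

/-- The sieving primes: those in `[5, exp z]`. -/
noncomputable def sievePrimes (z : ℝ) : Finset ℕ := (Icc 5 ⌊Real.exp z⌋₊).filter Nat.Prime

lemma mem_sievePrimes {z : ℝ} {p : ℕ} : p ∈ sievePrimes z ↔ p.Prime ∧ 5 ≤ p ∧ Real.log p ≤ z := by
  rw [sievePrimes, mem_filter, mem_Icc, Nat.le_floor_iff (Real.exp_pos _).le]
  constructor
  · rintro ⟨⟨h1, h2⟩, h3⟩
    exact ⟨h3, h1, (Real.log_le_iff_le_exp (by exact_mod_cast h3.pos)).2 h2⟩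
  · rintro ⟨h1, h2, h3⟩
    exact ⟨⟨h2, (Real.log_le_iff_le_exp (by exact_mod_cast h1.pos)).1 h3⟩, h1⟩

/-- The logarithm of the integer encoded by a set of primes. -/
noncomputable def ell (U : Finset ℕ) : ℝ := ∑ p ∈ U, Real.log p

/-- The diagonal sieve variables `y(r) = max (0, 1 - log r / z)`. -/
noncomputable def yv (z : ℝ) (U : Finset ℕ) : ℝ := max 0 (1 - ell U / z)

/-- The mass of the sieve density up to `exp z`. -/
noncomputable def GG (z : ℝ) : ℝ :=
  ∑ U ∈ (sievePrimes z).powerset with ell U ≤ z, hprod dens U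

/-- The first moment of the sieve variables. -/
noncomputable def TT (z : ℝ) : ℝ := ∑ U ∈ (sievePrimes z).powerset, hprod dens U * yv z U

/-- The value of the sieve form. -/
noncomputable def HH (z : ℝ) : ℝ := ∑ U ∈ (sievePrimes z).powerset, hprod dens U * yv z U ^ 2

lemma ell_nonneg (U : Finset ℕ) : 0 ≤ ell U := sum_nonneg fun _ _ => Real.log_natCast_nonneg _

lemma ell_insert {q : ℕ} {U : Finset ℕ} (h : q ∉ U) : ell (insert q U) = Real.log q + ell U :=
  sum_insert h

lemma ell_mono {U V : Finset ℕ} (h : U ⊆ V) : ell U ≤ ell V :=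
  sum_le_sum_of_subset_of_nonneg h fun _ _ _ => Real.log_natCast_nonneg _

lemma yv_nonneg (z : ℝ) (U : Finset ℕ) : 0 ≤ yv z U := le_max_left _ _

lemma yv_le_one {z : ℝ} (hz : 0 < z) (U : Finset ℕ) : yv z U ≤ 1 :=
  max_le zero_le_one (by linarith [div_nonneg (ell_nonneg U) hz.le])

lemma yv_eq_zero {z : ℝ} (hz : 0 < z) {U : Finset ℕ} (h : z < ell U) : yv z U = 0 :=
  max_eq_left (by rw [sub_nonpos, one_le_div hz]; exact h.le)

lemma yv_eq {z : ℝ} (hz : 0 < z) {U : Finset ℕ} (h : ell U ≤ z) : yv z U = 1 - ell U / z :=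
  max_eq_right (by rw [sub_nonneg, div_le_one hz]; exact h)

lemma dens_pos {z : ℝ} {p : ℕ} (hp : p ∈ sievePrimes z) : 0 < dens p := by
  rw [mem_sievePrimes] at hp
  have : (5:ℝ) ≤ p := by exact_mod_cast hp.2.1
  rw [dens_prime hp.1]
  exact div_pos two_pos (by linarith)

lemma dens_lt_one {z : ℝ} {p : ℕ} (hp : p ∈ sievePrimes z) : dens p < 1 := by
  rw [mem_sievePrimes] at hp
  have : (5:ℝ) ≤ p := by exact_mod_cast hp.2.1
  rw [dens_prime hp.1, div_lt_one (by linarith)]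
  linarith

lemma dens_div {z : ℝ} {p : ℕ} (hp : p ∈ sievePrimes z) : dens p / (1 - dens p) = 2 / ((p:ℝ) - 3) := by
  rw [mem_sievePrimes] at hp
  have : (5:ℝ) ≤ p := by exact_mod_cast hp.2.1
  have h1 : (p:ℝ) - 1 ≠ 0 := by linarith
  have h3 : (p:ℝ) - 3 ≠ 0 := by linarith
  rw [dens_prime hp.1, div_div, mul_sub, mul_div_cancel₀ _ h1]
  congr 1
  ring

lemma hprod_pos {z : ℝ} {U : Finset ℕ} (hU : U ⊆ sievePrimes z) : 0 < hprod dens U :=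
  prod_pos fun p hp => div_pos (dens_pos (hU hp)) (by linarith [dens_lt_one (hU hp)])

lemma one_le_GG {z : ℝ} (hz : 0 ≤ z) : 1 ≤ GG z := by
  have h1 : ∅ ∈ (sievePrimes z).powerset.filter (fun U => ell U ≤ z) := by
    rw [mem_filter]; exact ⟨empty_mem_powerset _, by simpa [ell] using hz⟩
  have := single_le_sum (f := fun U => hprod dens U) (fun U hU =>
    (hprod_pos (mem_powerset.1 (mem_filter.1 hU).1)).le) h1
  have h2 : hprod dens ∅ = 1 := by simp [hprod]
  rw [GG, ← h2]
  exact this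

lemma TT_sq_le {z : ℝ} (hz : 0 < z) : TT z ^ 2 ≤ GG z * HH z := by
  have h1 : ∀ k : ℕ, k ≠ 0 → ∑ U ∈ (sievePrimes z).powerset, hprod dens U * yv z U ^ k =
      ∑ U ∈ (sievePrimes z).powerset with ell U ≤ z, hprod dens U * yv z U ^ k := by
    intro k hk
    refine (sum_filter_of_ne fun U _ h => ?_).symm
    by_contra h2
    exact h (by rw [yv_eq_zero hz (not_le.1 h2), zero_pow hk, mul_zero])
  have h2 := h1 1 one_ne_zero
  simp_rw [pow_one] at h2
  rw [TT, HH, GG, h1 2 two_ne_zero, h2]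
  have h3 : ∀ U ∈ (sievePrimes z).powerset.filter (fun U => ell U ≤ z), 0 ≤ hprod dens U :=
    fun U hU => (hprod_pos (mem_powerset.1 (mem_filter.1 hU).1)).le
  refine sum_sq_le_sum_mul_sum_of_sq_le_mul _ h3 (fun U hU => mul_nonneg (h3 U hU) (sq_nonneg _))
    fun U _ => le_of_eq (by ring)

lemma sum_hprod_mul_ell_le : ∃ C : ℝ, 0 < C ∧ ∀ z : ℝ, 0 < z →
    ∑ U ∈ (sievePrimes z).powerset with ell U ≤ z, hprod dens U * ell U ≤
      ∑ V ∈ (sievePrimes z).powerset with ell V ≤ z, hprod dens V * (2 * (z - ell V) + C) := by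
  obtain ⟨C, hC, h1⟩ := mertens_sieve
  refine ⟨C, hC, fun z hz => ?_⟩
  obtain ⟨F, hF⟩ : ∃ F, F = (sievePrimes z).powerset.filter (fun U => ell U ≤ z) := ⟨_, rfl⟩
  have hFsub : ∀ U ∈ F, U ⊆ sievePrimes z := fun U hU => by
    rw [hF] at hU; exact mem_powerset.1 (mem_filter.1 hU).1
  have hFell : ∀ U ∈ F, ell U ≤ z := fun U hU => by rw [hF] at hU; exact (mem_filter.1 hU).2
  rw [← hF]
  -- split off one prime `p` of `U` and write `U = V ∪ {p}`
  have h2 : ∀ U ∈ F, hprod dens U * ell U =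
      ∑ p ∈ sievePrimes z, if p ∈ U then hprod dens U * Real.log p else 0 := by
    intro U hU
    rw [ell, mul_sum, ← sum_filter, filter_mem_eq_inter, inter_eq_right.2 (hFsub U hU)]
  rw [sum_congr rfl h2, sum_comm]
  have h3 : ∀ p ∈ sievePrimes z, ∑ U ∈ F, (if p ∈ U then hprod dens U * Real.log p else 0) ≤
      ∑ V ∈ F, if Real.log p ≤ z - ell V then hprod dens V * (2 / ((p:ℝ) - 3) * Real.log p) else 0 := by
    intro p hp
    rw [← sum_filter, ← sum_filter]
    have h4 : ∀ U ∈ F.filter (fun U => p ∈ U), hprod dens U * Real.log p =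
        hprod dens (U.erase p) * (2 / ((p:ℝ) - 3) * Real.log p) := by
      intro U hU
      rw [mem_filter] at hU
      conv_lhs => rw [← insert_erase hU.2, hprod_insert (notMem_erase p U), dens_div hp]
      ring
    rw [sum_congr rfl h4]
    have hinj : Set.InjOn (fun U : Finset ℕ => U.erase p) (F.filter (fun U => p ∈ U)) := by
      intro U hU V hV hUV
      have hU' := (mem_filter.1 (mem_coe.1 hU)).2
      have hV' := (mem_filter.1 (mem_coe.1 hV)).2
      rw [← insert_erase hU', ← insert_erase hV']
      exact congrArg (insert p) hUV
    rw [← sum_image (f := fun V => hprod dens V * (2 / ((p:ℝ) - 3) * Real.log p)) hinj]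
    have hp5 : (5:ℝ) ≤ p := by exact_mod_cast (mem_sievePrimes.1 hp).2.1
    refine sum_le_sum_of_subset_of_nonneg (fun V hV => ?_) fun V hV _ => ?_
    · rw [mem_image] at hV
      obtain ⟨U, hU, rfl⟩ := hV
      rw [mem_filter] at hU
      have h5 : ell U = Real.log p + ell (U.erase p) := by
        rw [← ell_insert (notMem_erase p U), insert_erase hU.2]
      have h6 := hFell U hU.1
      have h7 : 0 ≤ Real.log p := Real.log_natCast_nonneg p
      rw [mem_filter, hF, mem_filter, mem_powerset]
      exact ⟨⟨(erase_subset p U).trans (hFsub U hU.1), by linarith⟩, by linarith⟩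
    · have := hprod_pos (hFsub V (mem_filter.1 hV).1)
      have h7 : 0 ≤ Real.log p := Real.log_natCast_nonneg p
      exact mul_nonneg this.le (mul_nonneg (div_nonneg two_pos.le (by linarith)) h7)
  refine (sum_le_sum h3).trans ?_
  rw [sum_comm]
  refine sum_le_sum fun V hV => ?_
  have h8 := h1 0 (z - ell V) le_rfl (by linarith [hFell V hV])
  rw [← sum_filter, ← mul_sum]
  refine mul_le_mul_of_nonneg_left ?_ (hprod_pos (hFsub V hV)).le
  rw [sub_zero] at h8
  refine le_trans (sum_le_sum_of_subset_of_nonneg (fun p hp => ?_) fun p hp _ => ?_) h8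
  · rw [mem_filter, mem_sievePrimes] at hp
    rw [mem_filter, mem_Ioc, Real.exp_zero, Nat.floor_one, Nat.le_floor_iff (Real.exp_pos _).le]
    exact ⟨⟨by omega, (Real.log_le_iff_le_exp (by exact_mod_cast hp.1.1.pos)).1 hp.2⟩, hp.1.1, hp.1.2.1⟩
  · rw [mem_filter] at hp
    have hp5 : (5:ℝ) ≤ p := by exact_mod_cast hp.2.2
    exact mul_nonneg (div_nonneg two_pos.le (by linarith)) (Real.log_natCast_nonneg p)

/-- The sieve dimension is `2`, so that the mean of `1 - log r / z` is at least `1 / 3` in the limit. -/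
lemma GG_mul_le : ∃ C : ℝ, 0 < C ∧ ∀ z : ℝ, 0 < z → GG z * (z - C) ≤ 3 * z * TT z := by
  obtain ⟨C, hC, h1⟩ := sum_hprod_mul_ell_le
  refine ⟨C, hC, fun z hz => ?_⟩
  have h2 := h1 z hz
  have h3 : z * TT z = ∑ U ∈ (sievePrimes z).powerset with ell U ≤ z, hprod dens U * (z - ell U) := by
    rw [TT, mul_sum, sum_filter]
    refine sum_congr rfl fun U _ => ?_
    by_cases h : ell U ≤ z
    · rw [if_pos h, yv_eq hz h]; field_simp
    · rw [if_neg h, yv_eq_zero hz (not_le.1 h)]; ring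
  have h4 : GG z * z = ∑ U ∈ (sievePrimes z).powerset with ell U ≤ z, hprod dens U * ell U +
      ∑ U ∈ (sievePrimes z).powerset with ell U ≤ z, hprod dens U * (z - ell U) := by
    rw [GG, sum_mul, ← sum_add_distrib]
    exact sum_congr rfl fun U _ => by ring
  have h5 : ∑ V ∈ (sievePrimes z).powerset with ell V ≤ z, hprod dens V * (2 * (z - ell V) + C) =
      2 * ∑ U ∈ (sievePrimes z).powerset with ell U ≤ z, hprod dens U * (z - ell U) + C * GG z := by
    rw [GG, mul_sum, mul_sum, ← sum_add_distrib]
    exact sum_congr rfl fun U _ => by ring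
  linarith

lemma nine_aux {z C G T : ℝ} (hz : 0 < z) (hG : 0 ≤ G) (hC : 300 * C ≤ z)
    (h : G * (z - C) ≤ 3 * z * T) : G ^ 2 ≤ 91 / 10 * T ^ 2 := by
  have h1 : G * (299 / 300) ≤ 3 * T := by
    have h2 : G * (299 / 300) * z ≤ 3 * T * z := by nlinarith
    exact le_of_mul_le_mul_right h2 hz
  have h3 : (G * (299 / 300)) ^ 2 ≤ (3 * T) ^ 2 := by
    apply pow_le_pow_left₀ (by positivity) h1
  nlinarith [sq_nonneg T]

lemma GG_le_HH : ∃ z₀ : ℝ, 1 ≤ z₀ ∧ ∀ z : ℝ, z₀ ≤ z → GG z ≤ 91 / 10 * HH z := by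
  obtain ⟨C, hC, h1⟩ := GG_mul_le
  refine ⟨300 * C + 1, by linarith, fun z hz => ?_⟩
  have hz0 : 0 < z := by linarith
  have hG := one_le_GG hz0.le
  have h2 := nine_aux hz0 (by linarith) (by linarith) (h1 z hz0)
  have h3 := TT_sq_le hz0
  nlinarith

/-- Imposing divisibility by `q` shrinks the sieve form by the factor `min (1, 9.1 (log q / z) ^ 2)`, besides
the density of `q`. -/
lemma sum_diff_le {z : ℝ} (hz : 0 < z) (hGH : GG z ≤ 91 / 10 * HH z) (q : ℕ) :
    ∑ V ∈ ((sievePrimes z).erase q).powerset, hprod dens V * (yv z V - yv z (insert q V)) ^ 2 ≤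
      min 1 (91 / 10 * (Real.log q / z) ^ 2) * HH z := by
  have hlog : 0 ≤ Real.log q / z := div_nonneg (Real.log_natCast_nonneg q) hz.le
  have hH : 0 ≤ HH z := by
    have := one_le_GG hz.le
    linarith
  have hsub : ((sievePrimes z).erase q).powerset ⊆ (sievePrimes z).powerset :=
    powerset_mono.2 (erase_subset _ _)
  have hV : ∀ V ∈ ((sievePrimes z).erase q).powerset, 0 ≤ yv z V - yv z (insert q V) ∧
      yv z V - yv z (insert q V) ≤ Real.log q / z := by
    intro V hV
    have hqV : q ∉ V := fun h => notMem_erase q _ (mem_powerset.1 hV h)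
    rw [yv, yv, ell_insert hqV, add_div]
    constructor
    · rw [sub_nonneg]
      exact max_le_max le_rfl (by linarith)
    · rcases max_cases 0 (1 - ell V / z) with h | h <;>
        rcases max_cases 0 (1 - (Real.log q / z + ell V / z)) with h' | h' <;> linarith
  rw [min_mul_of_nonneg _ _ hH]
  refine le_min ?_ ?_
  · rw [one_mul, HH]
    refine (sum_le_sum fun V hV' => ?_).trans (sum_le_sum_of_subset_of_nonneg hsub fun V hV' _ =>
      mul_nonneg (hprod_pos (mem_powerset.1 hV')).le (sq_nonneg _))
    refine mul_le_mul_of_nonneg_left ?_ (hprod_pos (mem_powerset.1 (hsub hV'))).le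
    exact pow_le_pow_left₀ (hV V hV').1 (by linarith [yv_nonneg z (insert q V)]) 2
  · have h1 : ∑ V ∈ ((sievePrimes z).erase q).powerset, hprod dens V * (yv z V - yv z (insert q V)) ^ 2 ≤
        (Real.log q / z) ^ 2 * GG z := by
      rw [GG, sum_filter, mul_sum]
      refine (sum_le_sum (g := fun V => (Real.log q / z) ^ 2 * if ell V ≤ z then hprod dens V else 0)
        fun V hV' => ?_).trans (sum_le_sum_of_subset_of_nonneg hsub fun V hV' _ => ?_)
      · have hqV : q ∉ V := fun h => notMem_erase q _ (mem_powerset.1 hV' h)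
        by_cases h : ell V ≤ z
        · rw [if_pos h, mul_comm]
          exact mul_le_mul_of_nonneg_right (pow_le_pow_left₀ (hV V hV').1 (hV V hV').2 2)
            (hprod_pos (mem_powerset.1 (hsub hV'))).le
        · rw [if_neg h, yv_eq_zero hz (not_le.1 h), yv_eq_zero hz (by
            rw [ell_insert hqV]; linarith [not_le.1 h, Real.log_natCast_nonneg q])]
          simp
      · have := (hprod_pos (mem_powerset.1 hV')).le
        split_ifs <;> positivity
    calc _ ≤ (Real.log q / z) ^ 2 * GG z := h1
      _ ≤ (Real.log q / z) ^ 2 * (91 / 10 * HH z) := by gcongr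
      _ = _ := by ring

end OmegaSq

namespace OmegaSq

open Finset

/-! ### Bounds for the sieve weights, and the numerical main term -/

lemma two_pow_card_primeFactors_le {m : ℕ} (hm : m ≠ 0) : 2 ^ m.primeFactors.card ≤ m.divisors.card := by
  rw [Nat.card_divisors hm, ← prod_const]
  refine prod_le_prod' fun p hp => ?_
  have := (Nat.prime_of_mem_primeFactors hp).factorization_pos_of_dvd hm (Nat.dvd_of_mem_primeFactors hp)
  omega

/-- The integer encoded by a set of primes. -/
def pr (U : Finset ℕ) : ℕ := ∏ p ∈ U, p

lemma prime_of_subset {z : ℝ} {U : Finset ℕ} (hU : U ⊆ sievePrimes z) : ∀ p ∈ U, p.Prime :=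
  fun _ hp => (mem_sievePrimes.1 (hU hp)).1

lemma pr_pos {U : Finset ℕ} (hU : ∀ p ∈ U, p.Prime) : 0 < pr U := prod_pos fun p hp => (hU p hp).pos

lemma primeFactors_pr {U : Finset ℕ} (hU : ∀ p ∈ U, p.Prime) : (pr U).primeFactors = U :=
  Nat.primeFactors_prod hU

lemma log_pr {U : Finset ℕ} (hU : ∀ p ∈ U, p.Prime) : Real.log (pr U) = ell U := by
  rw [pr, Nat.cast_prod, Real.log_prod, ell]
  exact fun p hp => by exact_mod_cast (hU p hp).ne_zero

lemma pr_le_exp {U : Finset ℕ} (hU : ∀ p ∈ U, p.Prime) {z : ℝ} (h : ell U ≤ z) : (pr U : ℝ) ≤ Real.exp z := by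
  rw [← log_pr hU] at h
  exact (Real.log_le_iff_le_exp (by exact_mod_cast pr_pos hU)).1 h

lemma pr_injOn {z : ℝ} : Set.InjOn pr ((sievePrimes z).powerset : Set (Finset ℕ)) := by
  intro U hU V hV h
  have h1 := primeFactors_pr (prime_of_subset (mem_powerset.1 (mem_coe.1 hU)))
  have h2 := primeFactors_pr (prime_of_subset (mem_powerset.1 (mem_coe.1 hV)))
  rw [← h1, ← h2, h]

lemma dens_pr {U : Finset ℕ} (hU : ∀ p ∈ U, p.Prime) : dens (pr U) = ∏ p ∈ U, dens p := by
  induction U using Finset.induction_on with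
  | empty => simp [pr, dens_one]
  | insert q U hq ih =>
    have h1 : pr (insert q U) = q * pr U := prod_insert hq
    have hU' : ∀ p ∈ U, p.Prime := fun p hp => hU p (mem_insert_of_mem hp)
    have hqp := hU q (mem_insert_self q U)
    have h2 : q.Coprime (pr U) := Nat.Coprime.prod_right fun p hp =>
      (Nat.coprime_primes hqp (hU' p hp)).2 fun h => hq (h ▸ hp)
    rw [h1, dens_mul h2, prod_insert hq, ih hU']

lemma hprod_le {z : ℝ} {U : Finset ℕ} (hU : U ⊆ sievePrimes z) :
    hprod dens U ≤ ((pr U).divisors.card : ℝ) ^ 3 / pr U := by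
  have hp := prime_of_subset hU
  have h1 : (2:ℝ) ^ U.card ≤ (pr U).divisors.card := by
    have := two_pow_card_primeFactors_le (pr_pos hp).ne'
    rw [primeFactors_pr hp] at this
    exact_mod_cast this
  have h2 : hprod dens U ≤ ∏ p ∈ U, (8 / (p:ℝ)) := by
    refine prod_le_prod (fun p hpU => ?_) fun p hpU => ?_
    · exact (div_pos (dens_pos (hU hpU)) (by linarith [dens_lt_one (hU hpU)])).le
    · have h5 : (5:ℝ) ≤ p := by exact_mod_cast (mem_sievePrimes.1 (hU hpU)).2.1
      rw [dens_div (hU hpU), div_le_div_iff₀ (by linarith) (by linarith)]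
      linarith
  have h3 : ∏ p ∈ U, (8 / (p:ℝ)) = ((2:ℝ) ^ U.card) ^ 3 / pr U := by
    rw [prod_div_distrib, prod_const, pr, Nat.cast_prod, ← pow_mul, mul_comm U.card 3, pow_mul]
    norm_num
  rw [h3] at h2
  refine h2.trans ?_
  gcongr

lemma GG_le {z : ℝ} (hz : 0 ≤ z) : GG z ≤ (1 + z) ^ 8 := by
  have h0 := sum_card_divisors_pow_div_le 3 ⌊Real.exp z⌋₊
  have h1 : Real.log ⌊Real.exp z⌋₊ ≤ z := by
    rcases Nat.eq_zero_or_pos ⌊Real.exp z⌋₊ with h | h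
    · rw [h]; simpa using hz
    · rw [Real.log_le_iff_le_exp (by exact_mod_cast h)]
      exact Nat.floor_le (Real.exp_pos _).le
  have h2 : (1 + Real.log ⌊Real.exp z⌋₊) ^ (2 ^ 3) ≤ (1 + z) ^ 8 :=
    pow_le_pow_left₀ (by linarith [Real.log_natCast_nonneg ⌊Real.exp z⌋₊]) (by linarith) 8
  refine le_trans ?_ (h0.trans h2)
  rw [GG]
  refine (sum_le_sum fun U hU => hprod_le (mem_powerset.1 (mem_filter.1 hU).1)).trans ?_
  rw [← sum_image (f := fun m : ℕ => (m.divisors.card : ℝ) ^ 3 / m)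
    (pr_injOn.mono (coe_subset.2 (filter_subset _ _)))]
  refine sum_le_sum_of_subset_of_nonneg (fun m hm => ?_) fun m _ _ => by positivity
  rw [mem_image] at hm
  obtain ⟨U, hU, rfl⟩ := hm
  rw [mem_filter, mem_powerset] at hU
  have hp := prime_of_subset hU.1
  rw [mem_Icc]
  exact ⟨pr_pos hp, Nat.le_floor (pr_le_exp hp hU.2)⟩

/-- The weights of the sieve by the primes of `[5, exp z]`. -/
noncomputable def sw (z : ℝ) (S : Finset ℕ) : ℝ := lam (sievePrimes z) dens (yv z) S

lemma sw_eq_zero {z : ℝ} (hz : 0 < z) {S : Finset ℕ} (h : z < ell S) : sw z S = 0 := by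
  rw [sw, lam, sum_eq_zero, mul_zero]
  intro U _
  by_cases hSU : S ⊆ U
  · rw [if_pos hSU, yv_eq_zero hz (h.trans_le (ell_mono hSU)), mul_zero]
  · rw [if_neg hSU]

lemma abs_sw_le {z : ℝ} (hz : 0 < z) {S : Finset ℕ} (hS : S ⊆ sievePrimes z) :
    |sw z S| ≤ 2 ^ S.card * (1 + z) ^ 8 := by
  have hg : 0 < ∏ p ∈ S, dens p := prod_pos fun p hp => dens_pos (hS hp)
  have h1 : ∑ U ∈ (sievePrimes z).powerset, (if S ⊆ U then hprod dens U * yv z U else 0) ≤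
      hprod dens S * GG z := by
    have h2 : ∀ U ∈ (sievePrimes z).powerset, (if S ⊆ U then hprod dens U * yv z U else 0) ≤
        if S ⊆ U ∧ ell U ≤ z then hprod dens S * hprod dens (U \ S) else 0 := by
      intro U hU
      have hU' := hprod_pos (mem_powerset.1 hU)
      by_cases hSU : S ⊆ U
      · by_cases hell : ell U ≤ z
        · rw [if_pos hSU, if_pos ⟨hSU, hell⟩]
          have : hprod dens S * hprod dens (U \ S) = hprod dens U := by
            rw [mul_comm]; exact prod_sdiff hSU
          rw [this]
          exact mul_le_of_le_one_right hU'.le (yv_le_one hz U)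
        · rw [if_pos hSU, if_neg fun h => hell h.2, yv_eq_zero hz (not_le.1 hell), mul_zero]
      · rw [if_neg hSU, if_neg fun h => hSU h.1]
    refine (sum_le_sum h2).trans ?_
    rw [← sum_filter, ← mul_sum]
    refine mul_le_mul_of_nonneg_left ?_ (hprod_pos hS).le
    have hinj : Set.InjOn (fun U => U \ S)
        ((sievePrimes z).powerset.filter (fun U => S ⊆ U ∧ ell U ≤ z) : Set (Finset ℕ)) := by
      intro U hU V hV hUV
      have hU' := (mem_filter.1 (mem_coe.1 hU)).2.1
      have hV' := (mem_filter.1 (mem_coe.1 hV)).2.1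
      rw [← sdiff_union_of_subset hU', ← sdiff_union_of_subset hV']
      exact congrArg (· ∪ S) hUV
    rw [← sum_image (f := fun V => hprod dens V) hinj, GG]
    refine sum_le_sum_of_subset_of_nonneg (fun V hV => ?_) fun V hV _ =>
      (hprod_pos (mem_powerset.1 (mem_filter.1 hV).1)).le
    rw [mem_image] at hV
    obtain ⟨U, hU, rfl⟩ := hV
    rw [mem_filter, mem_powerset] at hU ⊢
    exact ⟨sdiff_subset.trans hU.1, (ell_mono sdiff_subset).trans hU.2.2⟩
  have h3 : 0 ≤ ∑ U ∈ (sievePrimes z).powerset, (if S ⊆ U then hprod dens U * yv z U else 0) := by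
    refine sum_nonneg fun U hU => ?_
    have := (hprod_pos (mem_powerset.1 hU)).le
    have := yv_nonneg z U
    split_ifs <;> positivity
  have h4 : hprod dens S / ∏ p ∈ S, dens p ≤ 2 ^ S.card := by
    rw [hprod, ← prod_div_distrib, ← prod_const]
    refine prod_le_prod (fun p hp => ?_) fun p hp => ?_
    · have := dens_pos (hS hp)
      have := dens_lt_one (hS hp)
      exact div_nonneg (div_nonneg (by linarith) (by linarith)) (by linarith)
    · have hd := dens_pos (hS hp)
      have h5 : (5:ℝ) ≤ p := by exact_mod_cast (mem_sievePrimes.1 (hS hp)).2.1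
      have h6 : dens p ≤ 1 / 2 := by
        rw [dens_prime (prime_of_subset hS p hp), div_le_div_iff₀ (by linarith) (by norm_num)]
        linarith
      rw [div_div, div_le_iff₀ (mul_pos (by linarith) hd)]
      nlinarith
  rw [sw, lam, abs_mul, abs_div, abs_pow, abs_neg, abs_one, one_pow, abs_of_pos hg, abs_of_nonneg h3]
  calc _ ≤ 1 / (∏ p ∈ S, dens p) * (hprod dens S * GG z) := by gcongr
    _ = hprod dens S / (∏ p ∈ S, dens p) * GG z := by ring
    _ ≤ 2 ^ S.card * (1 + z) ^ 8 := mul_le_mul h4 (GG_le hz.le) (by linarith [one_le_GG hz.le]) (by positivity)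

lemma sum_abs_sw_le : ∃ C : ℝ, 1 ≤ C ∧ ∀ z : ℝ, 0 < z →
    ∑ S ∈ (sievePrimes z).powerset, |sw z S| ≤ C * Real.exp (11 / 10 * z) * (1 + z) ^ 8 := by
  obtain ⟨C, hC, h1⟩ := card_divisors_pow_le 1 (ε := 1 / 10) (by norm_num)
  refine ⟨C, hC, fun z hz => ?_⟩
  have h2 : ∑ S ∈ (sievePrimes z).powerset, |sw z S| =
      ∑ S ∈ (sievePrimes z).powerset with ell S ≤ z, |sw z S| := by
    refine (sum_filter_of_ne fun S _ h => ?_).symm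
    by_contra h2
    exact h (by rw [sw_eq_zero hz (not_le.1 h2), abs_zero])
  have h3 : ∀ S ∈ (sievePrimes z).powerset.filter (fun S => ell S ≤ z),
      |sw z S| ≤ C * Real.exp (1 / 10 * z) * (1 + z) ^ 8 := by
    intro S hS
    rw [mem_filter, mem_powerset] at hS
    refine (abs_sw_le hz hS.1).trans (mul_le_mul_of_nonneg_right ?_ (by positivity))
    have hp := prime_of_subset hS.1
    have h4 := h1 (pr S) (pr_pos hp)
    rw [pow_one] at h4
    have h5 := two_pow_card_primeFactors_le (pr_pos hp).ne'
    rw [primeFactors_pr hp] at h5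
    have h6 : (2:ℝ) ^ S.card ≤ (pr S).divisors.card := by exact_mod_cast h5
    refine h6.trans (h4.trans (mul_le_mul_of_nonneg_left ?_ (by linarith)))
    calc (pr S : ℝ) ^ (1 / 10 : ℝ) ≤ Real.exp z ^ (1 / 10 : ℝ) := by
          have := pr_le_exp hp hS.2
          gcongr
      _ = _ := by rw [← Real.exp_mul, mul_comm]
  have h7 : (((sievePrimes z).powerset.filter (fun S => ell S ≤ z)).card : ℝ) ≤ Real.exp z := by
    rw [← card_image_of_injOn (pr_injOn.mono (coe_subset.2 (filter_subset _ _)))]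
    have h8 : ((sievePrimes z).powerset.filter (fun S => ell S ≤ z)).image pr ⊆ Icc 1 ⌊Real.exp z⌋₊ := by
      intro m hm
      rw [mem_image] at hm
      obtain ⟨U, hU, rfl⟩ := hm
      rw [mem_filter, mem_powerset] at hU
      have hp := prime_of_subset hU.1
      rw [mem_Icc]
      exact ⟨pr_pos hp, Nat.le_floor (pr_le_exp hp hU.2)⟩
    have h9 := card_le_card h8
    rw [Nat.card_Icc, Nat.add_sub_cancel] at h9
    exact le_trans (by exact_mod_cast h9) (Nat.floor_le (Real.exp_pos _).le)
  rw [h2]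
  refine (sum_le_card_nsmul _ _ _ h3).trans ?_
  rw [nsmul_eq_mul]
  calc _ ≤ Real.exp z * (C * Real.exp (1 / 10 * z) * (1 + z) ^ 8) := by gcongr
    _ = C * (Real.exp z * Real.exp (1 / 10 * z)) * (1 + z) ^ 8 := by ring
    _ = _ := by rw [← Real.exp_add]; ring_nf

/-- On a block `a < u ≤ b` the summand is at most a constant times `u`. -/
lemma block_bound {u : ℝ} (h0 : 0 < u) (h6 : u ≤ 6) :
    (1 - u / 6) * min 1 (91 / 10 * u ^ 2) ≤
      (if 0 < u ∧ u ≤ 1 / 3 then 91 / 30 * u else 0) + (if 1 / 3 < u ∧ u ≤ 2 / 3 then 17 / 6 * u else 0) +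
      (if 2 / 3 < u ∧ u ≤ 4 / 3 then 4 / 3 * u else 0) + (if 4 / 3 < u ∧ u ≤ 8 / 3 then 7 / 12 * u else 0) +
      (if 8 / 3 < u ∧ u ≤ 6 then 5 / 24 * u else 0) := by
  have hm : 0 ≤ min 1 (91 / 10 * u ^ 2) := le_min zero_le_one (by positivity)
  have hm1 : min 1 (91 / 10 * u ^ 2) ≤ 1 := min_le_left _ _
  have hm2 : min 1 (91 / 10 * u ^ 2) ≤ 91 / 10 * u ^ 2 := min_le_right _ _
  generalize min 1 (91 / 10 * u ^ 2) = m at *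
  have h7 : (1 - u / 6) * m ≤ 1 - u / 6 := by nlinarith
  by_cases h1 : u ≤ 1 / 3
  · rw [if_pos ⟨h0, h1⟩, if_neg (by intro h; linarith [h.1]), if_neg (by intro h; linarith [h.1]),
      if_neg (by intro h; linarith [h.1]), if_neg (by intro h; linarith [h.1])]
    nlinarith
  by_cases h2 : u ≤ 2 / 3
  · rw [if_neg fun h => h1 h.2, if_pos ⟨not_le.1 h1, h2⟩, if_neg (by intro h; linarith [h.1]),
      if_neg (by intro h; linarith [h.1]), if_neg (by intro h; linarith [h.1])]
    linarith
  by_cases h3 : u ≤ 4 / 3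
  · rw [if_neg fun h => h1 h.2, if_neg fun h => h2 h.2, if_pos ⟨not_le.1 h2, h3⟩,
      if_neg (by intro h; linarith [h.1]), if_neg (by intro h; linarith [h.1])]
    linarith
  by_cases h4 : u ≤ 8 / 3
  · rw [if_neg fun h => h1 h.2, if_neg fun h => h2 h.2, if_neg fun h => h3 h.2, if_pos ⟨not_le.1 h3, h4⟩,
      if_neg (by intro h; linarith [h.1])]
    linarith
  · rw [if_neg fun h => h1 h.2, if_neg fun h => h2 h.2, if_neg fun h => h3 h.2, if_neg fun h => h4 h.2,
      if_pos ⟨not_le.1 h4, h6⟩]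
    linarith

/-- The expected weighted number of prime factors below `exp (6 z)` of a sifted `n ^ 2 - 1` is below `8.7`. -/
lemma main_numeric : ∃ z₀ : ℝ, 1 ≤ z₀ ∧ ∀ z : ℝ, z₀ ≤ z →
    ∑ q ∈ sievePrimes (6 * z), dens q * ((1 - Real.log q / (6 * z)) *
      min 1 (91 / 10 * (Real.log q / z) ^ 2)) ≤ 87 / 10 := by
  obtain ⟨C, hC, h1⟩ := mertens_sieve
  refine ⟨200 * C + 1, by linarith, fun z hz => ?_⟩
  have hz0 : 0 < z := by linarith
  have hblock : ∀ a b c : ℝ, 0 ≤ a → a ≤ b → 0 ≤ c → ∑ q ∈ sievePrimes (6 * z),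
      2 / ((q:ℝ) - 3) * (if a < Real.log q / z ∧ Real.log q / z ≤ b then c * (Real.log q / z) else 0) ≤
        c * (2 * (b - a)) + c * (C / z) := by
    intro a b c ha hab hc
    have h2 := h1 (a * z) (b * z) (by positivity) (by gcongr)
    have h3 : ∑ q ∈ sievePrimes (6 * z),
        2 / ((q:ℝ) - 3) * (if a < Real.log q / z ∧ Real.log q / z ≤ b then c * (Real.log q / z) else 0) =
        c / z * ∑ q ∈ sievePrimes (6 * z) with a < Real.log ((q:ℕ):ℝ) / z ∧ Real.log ((q:ℕ):ℝ) / z ≤ b,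
          2 / ((q:ℝ) - 3) * Real.log q := by
      rw [mul_sum, sum_filter]
      refine sum_congr rfl fun q _ => ?_
      split_ifs <;> ring
    rw [h3]
    have h4 : ∑ q ∈ sievePrimes (6 * z) with a < Real.log ((q:ℕ):ℝ) / z ∧ Real.log ((q:ℕ):ℝ) / z ≤ b,
          2 / ((q:ℝ) - 3) * Real.log q ≤ 2 * (b * z - a * z) + C := by
      refine le_trans (sum_le_sum_of_subset_of_nonneg (fun q hq => ?_) fun q hq _ => ?_) h2
      · rw [mem_filter, mem_sievePrimes, lt_div_iff₀ hz0, div_le_iff₀ hz0] at hq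
        have hq0 : (0:ℝ) < q := by exact_mod_cast hq.1.1.pos
        rw [mem_filter, mem_Ioc, Nat.le_floor_iff (Real.exp_pos _).le, Nat.floor_lt (Real.exp_pos _).le,
          ← Real.log_le_iff_le_exp hq0, ← Real.lt_log_iff_exp_lt hq0]
        exact ⟨hq.2, hq.1.1, hq.1.2.1⟩
      · rw [mem_filter] at hq
        have hp5 : (5:ℝ) ≤ q := by exact_mod_cast hq.2.2
        exact mul_nonneg (div_nonneg two_pos.le (by linarith)) (Real.log_natCast_nonneg q)
    calc _ ≤ c / z * (2 * (b * z - a * z) + C) := by gcongr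
      _ = _ := by field_simp
  have hCz : C / z ≤ 1 / 200 := by
    rw [div_le_div_iff₀ hz0 (by norm_num)]; linarith
  have hterm : ∀ q ∈ sievePrimes (6 * z), dens q * ((1 - Real.log q / (6 * z)) *
      min 1 (91 / 10 * (Real.log q / z) ^ 2)) ≤ 2 / ((q:ℝ) - 3) *
      ((if 0 < Real.log q / z ∧ Real.log q / z ≤ 1 / 3 then 91 / 30 * (Real.log q / z) else 0) +
      (if 1 / 3 < Real.log q / z ∧ Real.log q / z ≤ 2 / 3 then 17 / 6 * (Real.log q / z) else 0) +
      (if 2 / 3 < Real.log q / z ∧ Real.log q / z ≤ 4 / 3 then 4 / 3 * (Real.log q / z) else 0) +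
      (if 4 / 3 < Real.log q / z ∧ Real.log q / z ≤ 8 / 3 then 7 / 12 * (Real.log q / z) else 0) +
      (if 8 / 3 < Real.log q / z ∧ Real.log q / z ≤ 6 then 5 / 24 * (Real.log q / z) else 0)) := by
    intro q hq
    have hd := dens_pos hq
    rw [mem_sievePrimes] at hq
    have hlog := one_le_log_of_five_le hq.2.1
    have hp5 : (5:ℝ) ≤ q := by exact_mod_cast hq.2.1
    have h5 : Real.log q / (6 * z) = Real.log q / z / 6 := by
      rw [div_div, mul_comm]
    have h6 : Real.log q / z ≤ 6 := by rw [div_le_iff₀ hz0]; exact hq.2.2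
    have h7 : 0 < Real.log q / z := by positivity
    rw [h5]
    refine mul_le_mul ?_ (block_bound h7 h6) ?_ ?_
    · rw [dens_prime hq.1]
      exact div_le_div_of_nonneg_left (by norm_num) (by linarith) (by linarith)
    · exact mul_nonneg (by linarith) (le_min zero_le_one (by positivity))
    · exact div_nonneg two_pos.le (by linarith)
  refine (sum_le_sum hterm).trans ?_
  simp_rw [mul_add]
  rw [sum_add_distrib, sum_add_distrib, sum_add_distrib, sum_add_distrib]
  have b1 := hblock 0 (1 / 3) (91 / 30) (by norm_num) (by norm_num) (by norm_num)
  have b2 := hblock (1 / 3) (2 / 3) (17 / 6) (by norm_num) (by norm_num) (by norm_num)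
  have b3 := hblock (2 / 3) (4 / 3) (4 / 3) (by norm_num) (by norm_num) (by norm_num)
  have b4 := hblock (4 / 3) (8 / 3) (7 / 12) (by norm_num) (by norm_num) (by norm_num)
  have b5 := hblock (8 / 3) 6 (5 / 24) (by norm_num) (by norm_num) (by norm_num)
  linarith

/-- The squares of primes contribute negligibly. -/
lemma square_numeric : ∃ z₀ : ℝ, 1 ≤ z₀ ∧ ∀ z : ℝ, z₀ ≤ z →
    ∑ q ∈ sievePrimes (3 * z), dens (q ^ 2) * (91 / 10 * (Real.log q / z) ^ 2) ≤ 1 / 100 := by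
  obtain ⟨C, hC, h1⟩ := sum_log_sq_div_sq_le
  refine ⟨4000 * C + 1, by linarith, fun z hz => ?_⟩
  have hz0 : 0 < z := by linarith
  have hterm : ∀ q ∈ sievePrimes (3 * z), dens (q ^ 2) * (91 / 10 * (Real.log q / z) ^ 2) ≤
      40 / z ^ 2 * (Real.log q ^ 2 / (q:ℝ) ^ 2) := by
    intro q hq
    rw [mem_sievePrimes] at hq
    have hp5 : (5:ℝ) ≤ q := by exact_mod_cast hq.2.1
    have h2 : dens (q ^ 2) ≤ 4 / (q:ℝ) ^ 2 := by
      rw [dens_prime_sq hq.1, div_le_div_iff₀ (by nlinarith) (by positivity)]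
      nlinarith
    calc _ ≤ 4 / (q:ℝ) ^ 2 * (10 * (Real.log q / z) ^ 2) := by gcongr; norm_num
      _ = _ := by rw [div_pow]; ring
  refine (sum_le_sum hterm).trans ?_
  rw [← mul_sum]
  have h3 := h1 (sievePrimes (3 * z))
  calc _ ≤ 40 / z ^ 2 * C := by gcongr
    _ ≤ _ := by
      rw [div_mul_eq_mul_div, div_le_div_iff₀ (by positivity) (by norm_num)]
      nlinarith

end OmegaSq

namespace OmegaSq

open Finset

/-! ### Sieve sums over `n ^ 2 - 1` -/

/-- The modulus `lcm (e, pr S, pr T)` of a pair of sieve weights inside the multiples of `e`, when `e` is a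
power of a prime. -/
def md (e : ℕ) (S T : Finset ℕ) : ℕ := pr ((S ∪ T) \ e.primeFactors) * e

lemma pr_dvd_iff {U : Finset ℕ} (hU : ∀ p ∈ U, p.Prime) {m : ℕ} : pr U ∣ m ↔ ∀ p ∈ U, p ∣ m := by
  refine ⟨fun h p hp => (dvd_prod_of_mem _ hp).trans h, fun h => ?_⟩
  exact Finset.prod_primes_dvd m (fun p hp => (hU p hp).prime) h

lemma coprime_pr_sdiff {U : Finset ℕ} (hU : ∀ p ∈ U, p.Prime) {e : ℕ} (he : 1 ≤ e) :
    (pr (U \ e.primeFactors)).Coprime e := by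
  refine Nat.Coprime.prod_left fun p hp => ?_
  rw [mem_sdiff, Nat.mem_primeFactors] at hp
  rw [(hU p hp.1).coprime_iff_not_dvd]
  exact fun h => hp.2 ⟨hU p hp.1, h, by omega⟩

lemma md_dvd_iff {S T : Finset ℕ} (hS : ∀ p ∈ S, p.Prime) (hT : ∀ p ∈ T, p.Prime) {e : ℕ} (he : 1 ≤ e)
    {m : ℕ} : md e S T ∣ m ↔ e ∣ m ∧ pr S ∣ m ∧ pr T ∣ m := by
  have hST : ∀ p ∈ S ∪ T, p.Prime := fun p hp => (mem_union.1 hp).elim (hS p) (hT p)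
  have h0 : md e S T ∣ m ↔ pr ((S ∪ T) \ e.primeFactors) ∣ m ∧ e ∣ m :=
    ⟨fun h => ⟨(dvd_mul_right _ _).trans h, (dvd_mul_left _ _).trans h⟩,
      fun h => (coprime_pr_sdiff hST he).mul_dvd_of_dvd_of_dvd h.1 h.2⟩
  rw [h0, pr_dvd_iff hS, pr_dvd_iff hT, pr_dvd_iff fun p hp => hST p (mem_sdiff.1 hp).1]
  constructor
  · rintro ⟨h1, h2⟩
    have h3 : ∀ p ∈ S ∪ T, p ∣ m := by
      intro p hp
      by_cases hpe : p ∈ e.primeFactors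
      · exact (Nat.dvd_of_mem_primeFactors hpe).trans h2
      · exact h1 p (mem_sdiff.2 ⟨hp, hpe⟩)
    exact ⟨h2, fun p hp => h3 p (mem_union_left _ hp), fun p hp => h3 p (mem_union_right _ hp)⟩
  · rintro ⟨h1, h2, h3⟩
    exact ⟨fun p hp => (mem_union.1 (mem_sdiff.1 hp).1).elim (h2 p) (h3 p), h1⟩

/-- The sieve weight `w(n)`, a square. -/
noncomputable def sqw (z : ℝ) (n : ℕ) : ℝ :=
  (∑ S ∈ (sievePrimes z).powerset with pr S ∣ n ^ 2 - 1, sw z S) ^ 2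

/-- The sifted mass of the `n ≡ 29` modulo `72` with `e ∣ n ^ 2 - 1`. -/
noncomputable def sieveMass {f : ℝ → ℝ} (hf : TestFn f) (L z : ℝ) (e : ℕ) : ℝ :=
  ∑ n ∈ wtSupp hf L with (n % 72 = 29 ∧ e ∣ n ^ 2 - 1),
    ArithmeticFunction.vonMangoldt n * wt f L n * sqw z n

/-- The sieve form expected for `sieveMass`. -/
noncomputable def sieveForm (z : ℝ) (e : ℕ) : ℝ :=
  ∑ S ∈ (sievePrimes z).powerset, ∑ T ∈ (sievePrimes z).powerset, sw z S * sw z T * dens (md e S T)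

lemma sieveMass_eq {f : ℝ → ℝ} (hf : TestFn f) (L z : ℝ) {e : ℕ} (he : 1 ≤ e) :
    sieveMass hf L z e = ∑ S ∈ (sievePrimes z).powerset, ∑ T ∈ (sievePrimes z).powerset,
      sw z S * sw z T * divMass hf L (md e S T) := by
  simp_rw [sieveMass, divMass, mul_sum, sum_filter]
  rw [sum_congr rfl fun S _ => sum_comm, sum_comm]
  refine sum_congr rfl fun n _ => ?_
  have h1 : ∀ S ∈ (sievePrimes z).powerset, ∀ T ∈ (sievePrimes z).powerset,
      (if n % 72 = 29 ∧ md e S T ∣ n ^ 2 - 1 then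
        sw z S * sw z T * (ArithmeticFunction.vonMangoldt n * wt f L n) else 0) =
      (if n % 72 = 29 ∧ e ∣ n ^ 2 - 1 then ArithmeticFunction.vonMangoldt n * wt f L n else 0) *
        ((if pr S ∣ n ^ 2 - 1 then sw z S else 0) * (if pr T ∣ n ^ 2 - 1 then sw z T else 0)) := by
    intro S hS T hT
    have hd := md_dvd_iff (prime_of_subset (mem_powerset.1 hS)) (prime_of_subset (mem_powerset.1 hT)) he
      (m := n ^ 2 - 1)
    simp only [hd]
    by_cases h29 : n % 72 = 29 <;> by_cases h2 : e ∣ n ^ 2 - 1 <;> by_cases h3 : pr S ∣ n ^ 2 - 1 <;>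
      by_cases h4 : pr T ∣ n ^ 2 - 1 <;>
      simp only [h29, h2, h3, h4, and_self, and_true, and_false, if_true, if_false, mul_zero,
        zero_mul, mul_comm]
  rw [sum_congr rfl fun S hS => sum_congr rfl fun T hT => h1 S hS T hT]
  simp_rw [← mul_sum]
  rw [← sum_mul, sqw, sum_filter]
  split_ifs <;> ring

lemma one_le_md {S T : Finset ℕ} {z : ℝ} (hS : S ⊆ sievePrimes z) (hT : T ⊆ sievePrimes z) {e : ℕ}
    (he : 1 ≤ e) : 1 ≤ md e S T := by
  have := pr_pos (U := (S ∪ T) \ e.primeFactors) fun p hp =>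
    prime_of_subset (union_subset hS hT) p (mem_sdiff.1 hp).1
  exact Nat.mul_pos this (by omega)

lemma dens_md {S T : Finset ℕ} {z : ℝ} (hS : S ⊆ sievePrimes z) (hT : T ⊆ sievePrimes z) {e : ℕ}
    (he : 1 ≤ e) : dens (md e S T) = dens e * ∏ p ∈ (S ∪ T) \ e.primeFactors, dens p := by
  have h := prime_of_subset (union_subset hS hT)
  rw [md, dens_mul (coprime_pr_sdiff h he), dens_pr fun p hp => h p (mem_sdiff.1 hp).1, mul_comm]

lemma sieveForm_one (z : ℝ) : sieveForm z 1 = HH z := by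
  rw [HH, ← sum_lam_lam (fun p hp => dens_pos hp) (fun p hp => dens_lt_one hp), sieveForm]
  refine sum_congr rfl fun S hS => sum_congr rfl fun T hT => ?_
  rw [dens_md (mem_powerset.1 hS) (mem_powerset.1 hT) le_rfl, dens_one, one_mul]
  simp [sw]

/-- Selberg's form inside the multiples of a prime power, bounded in terms of the unrestricted one. -/
lemma sieveForm_prime_pow_le {z : ℝ} (hz : 0 < z) (hGH : GG z ≤ 91 / 10 * HH z) {q j : ℕ} (hq : q.Prime)
    (hq5 : 5 ≤ q) (hj : j ≠ 0) :
    sieveForm z (q ^ j) ≤ dens (q ^ j) * (min 1 (91 / 10 * (Real.log q / z) ^ 2) * HH z) := by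
  have hd : 0 ≤ dens (q ^ j) := by rw [dens]; positivity
  have h1 : sieveForm z (q ^ j) = dens (q ^ j) * ∑ S ∈ (sievePrimes z).powerset,
      ∑ T ∈ (sievePrimes z).powerset, sw z S * sw z T * ∏ p ∈ (S ∪ T).erase q, dens p := by
    simp_rw [mul_sum]
    refine sum_congr rfl fun S hS => sum_congr rfl fun T hT => ?_
    rw [dens_md (mem_powerset.1 hS) (mem_powerset.1 hT) (Nat.one_le_pow _ _ hq.pos),
      Nat.primeFactors_prime_pow hj hq, sdiff_singleton_eq_erase]
    ring
  rw [h1]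
  refine mul_le_mul_of_nonneg_left ?_ hd
  by_cases hqP : q ∈ sievePrimes z
  · refine le_trans (le_of_eq ?_) (sum_diff_le hz hGH q)
    exact sum_lam_lam_erase (fun p hp => dens_pos hp) (fun p hp => dens_lt_one hp) _ hqP
  · have h2 : z < Real.log q := by
      by_contra h
      exact hqP (mem_sievePrimes.2 ⟨hq, hq5, not_lt.1 h⟩)
    have h3 : 1 ≤ Real.log q / z := by rw [le_div_iff₀ hz]; linarith
    have h4 : min 1 (91 / 10 * (Real.log q / z) ^ 2) = 1 := min_eq_left (by nlinarith)
    rw [h4, one_mul, HH, ← sum_lam_lam (fun p hp => dens_pos hp) (fun p hp => dens_lt_one hp)]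
    refine le_of_eq (sum_congr rfl fun S hS => sum_congr rfl fun T hT => ?_)
    rw [erase_eq_of_notMem]
    · rfl
    · exact fun h => hqP (union_subset (mem_powerset.1 hS) (mem_powerset.1 hT) h)

lemma coprime_pr_six {S : Finset ℕ} {z : ℝ} (hS : S ⊆ sievePrimes z) : (pr S).Coprime 6 := by
  refine Nat.Coprime.prod_left fun p hp => ?_
  obtain ⟨h1, h2, -⟩ := mem_sievePrimes.1 (hS hp)
  rw [h1.coprime_iff_not_dvd]
  intro h
  have := Nat.le_of_dvd (by norm_num) h
  interval_cases p <;> revert h1 h <;> norm_num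

lemma two_pow_card_le {S : Finset ℕ} (hS : ∀ p ∈ S, p.Prime) {D : ℕ} (hD : D ≠ 0) (h : pr S ∣ D) :
    (2:ℝ) ^ S.card ≤ D.divisors.card := by
  have h1 := two_pow_card_primeFactors_le (pr_pos hS).ne'
  rw [primeFactors_pr hS] at h1
  exact_mod_cast h1.trans (card_le_card (Nat.divisors_subset_of_dvd hD h))

/-- A sum over pairs of sieve weights is regrouped according to the modulus. -/
lemma sum_md_le {z : ℝ} (hz : 0 < z) {Q : Finset ℕ}
    (hQ : ∀ e ∈ Q, 1 ≤ e ∧ e.Coprime 6 ∧ (e:ℝ) ≤ Real.exp (6 * z)) {F : ℕ → ℝ} (hF : ∀ D, 0 ≤ F D) :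
    ∑ e ∈ Q, ∑ S ∈ (sievePrimes z).powerset, ∑ T ∈ (sievePrimes z).powerset,
        |sw z S * sw z T| * F (md e S T) ≤
      (1 + z) ^ 16 * ∑ D ∈ Icc 1 ⌊Real.exp (8 * z)⌋₊ with D.Coprime 6, (D.divisors.card : ℝ) ^ 5 * F D := by
  classical
  obtain ⟨X, hX⟩ : ∃ X : Finset (ℕ × Finset ℕ × Finset ℕ), X =
    (Q ×ˢ ((sievePrimes z).powerset ×ˢ (sievePrimes z).powerset)).filter
      (fun x => ell x.2.1 ≤ z ∧ ell x.2.2 ≤ z) := ⟨_, rfl⟩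
  have hmem : ∀ x ∈ X, x.1 ∈ Q ∧ x.2.1 ⊆ sievePrimes z ∧ x.2.2 ⊆ sievePrimes z ∧ ell x.2.1 ≤ z ∧
      ell x.2.2 ≤ z := by
    intro x hx
    rw [hX, mem_filter, mem_product, mem_product, mem_powerset, mem_powerset] at hx
    tauto
  have hdvd : ∀ x ∈ X, x.1 ∣ md x.1 x.2.1 x.2.2 ∧ pr x.2.1 ∣ md x.1 x.2.1 x.2.2 ∧
      pr x.2.2 ∣ md x.1 x.2.1 x.2.2 := by
    intro x hx
    obtain ⟨h1, h2, h3, -, -⟩ := hmem x hx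
    exact (md_dvd_iff (prime_of_subset h2) (prime_of_subset h3) (hQ _ h1).1).1 dvd_rfl
  have hpos : ∀ x ∈ X, 1 ≤ md x.1 x.2.1 x.2.2 := by
    intro x hx
    obtain ⟨h1, h2, h3, -, -⟩ := hmem x hx
    exact one_le_md h2 h3 (hQ _ h1).1
  have hmaps : ∀ x ∈ X, md x.1 x.2.1 x.2.2 ∈ (Icc 1 ⌊Real.exp (8 * z)⌋₊).filter (fun D => D.Coprime 6) := by
    intro x hx
    obtain ⟨h1, h2, h3, h4, h5⟩ := hmem x hx
    obtain ⟨he, he6, hez⟩ := hQ _ h1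
    have hd : md x.1 x.2.1 x.2.2 ∣ x.1 * (pr x.2.1 * pr x.2.2) :=
      (md_dvd_iff (prime_of_subset h2) (prime_of_subset h3) he).2 ⟨dvd_mul_right _ _,
        (dvd_mul_right _ _).trans (dvd_mul_left _ _), (dvd_mul_left _ _).trans (dvd_mul_left _ _)⟩
    have hpr1 := pr_pos (prime_of_subset h2)
    have hpr2 := pr_pos (prime_of_subset h3)
    rw [mem_filter, mem_Icc]
    refine ⟨⟨hpos x hx, Nat.le_floor ?_⟩, Nat.Coprime.coprime_dvd_left hd
      (Nat.Coprime.mul_left he6 (Nat.Coprime.mul_left (coprime_pr_six h2) (coprime_pr_six h3)))⟩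
    have hle := Nat.le_of_dvd (Nat.mul_pos he (Nat.mul_pos hpr1 hpr2)) hd
    calc (md x.1 x.2.1 x.2.2 : ℝ) ≤ x.1 * (pr x.2.1 * pr x.2.2) := by exact_mod_cast hle
      _ ≤ Real.exp (6 * z) * (Real.exp z * Real.exp z) := by
        have := pr_le_exp (prime_of_subset h2) h4
        have := pr_le_exp (prime_of_subset h3) h5
        gcongr
      _ = Real.exp (8 * z) := by rw [← Real.exp_add, ← Real.exp_add]; congr 1; ring
  have hterm : ∀ x ∈ X, |sw z x.2.1 * sw z x.2.2| * F (md x.1 x.2.1 x.2.2) ≤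
      (1 + z) ^ 16 * (((md x.1 x.2.1 x.2.2).divisors.card : ℝ) ^ 2 * F (md x.1 x.2.1 x.2.2)) := by
    intro x hx
    obtain ⟨h1, h2, h3, h4, h5⟩ := hmem x hx
    obtain ⟨-, d2, d3⟩ := hdvd x hx
    have hne : md x.1 x.2.1 x.2.2 ≠ 0 := by have := hpos x hx; omega
    have b1 := two_pow_card_le (prime_of_subset h2) hne d2
    have b2 := two_pow_card_le (prime_of_subset h3) hne d3
    have a1 : |sw z x.2.1| ≤ (md x.1 x.2.1 x.2.2).divisors.card * (1 + z) ^ 8 :=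
      (abs_sw_le hz h2).trans (by gcongr)
    have a2 : |sw z x.2.2| ≤ (md x.1 x.2.1 x.2.2).divisors.card * (1 + z) ^ 8 :=
      (abs_sw_le hz h3).trans (by gcongr)
    have a3 := mul_le_mul a1 a2 (abs_nonneg _) (by positivity)
    rw [← abs_mul] at a3
    calc _ ≤ _ := mul_le_mul_of_nonneg_right a3 (hF _)
      _ = _ := by ring
  have hsum : ∑ e ∈ Q, ∑ S ∈ (sievePrimes z).powerset, ∑ T ∈ (sievePrimes z).powerset,
      |sw z S * sw z T| * F (md e S T) = ∑ x ∈ X, |sw z x.2.1 * sw z x.2.2| * F (md x.1 x.2.1 x.2.2) := by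
    rw [hX, sum_filter_of_ne, sum_product]
    · refine sum_congr rfl fun e _ => ?_
      rw [sum_product]
    · intro x _ hne
      constructor <;> by_contra h <;> apply hne
      · rw [sw_eq_zero hz (not_le.1 h)]; simp
      · rw [sw_eq_zero hz (not_le.1 h)]; simp
  rw [hsum]
  refine (sum_le_sum hterm).trans ?_
  rw [← mul_sum]
  refine mul_le_mul_of_nonneg_left ?_ (by positivity)
  rw [← sum_fiberwise_of_maps_to hmaps]
  refine sum_le_sum fun D hD => ?_
  have hD0 : D ≠ 0 := by
    rw [mem_filter, mem_Icc] at hD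
    omega
  have hcard : (X.filter fun x => md x.1 x.2.1 x.2.2 = D).card ≤
      (D.divisors ×ˢ (D.divisors ×ˢ D.divisors)).card := by
    refine card_le_card_of_injOn (fun x => (x.1, pr x.2.1, pr x.2.2)) (fun x hx => ?_) fun x hx y hy hxy => ?_
    · rw [mem_coe, mem_filter] at hx
      obtain ⟨d1, d2, d3⟩ := hdvd x hx.1
      rw [hx.2] at d1 d2 d3
      simp only [mem_coe, mem_product, Nat.mem_divisors]
      exact ⟨⟨d1, hD0⟩, ⟨d2, hD0⟩, d3, hD0⟩
    · rw [mem_coe, mem_filter] at hx hy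
      obtain ⟨-, h2, h3, -, -⟩ := hmem x hx.1
      obtain ⟨-, k2, k3, -, -⟩ := hmem y hy.1
      simp only [Prod.mk.injEq] at hxy
      exact Prod.ext hxy.1 (Prod.ext
        (pr_injOn (mem_coe.2 (mem_powerset.2 h2)) (mem_coe.2 (mem_powerset.2 k2)) hxy.2.1)
        (pr_injOn (mem_coe.2 (mem_powerset.2 h3)) (mem_coe.2 (mem_powerset.2 k3)) hxy.2.2))
  rw [card_product, card_product] at hcard
  have hcard' : ((X.filter fun x => md x.1 x.2.1 x.2.2 = D).card : ℝ) ≤ (D.divisors.card : ℝ) ^ 3 := by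
    calc _ ≤ ((D.divisors.card * (D.divisors.card * D.divisors.card) : ℕ) : ℝ) := by exact_mod_cast hcard
      _ = _ := by push_cast; ring
  rw [sum_congr rfl fun x hx => by rw [(mem_filter.1 hx).2], sum_const, nsmul_eq_mul]
  calc _ ≤ (D.divisors.card : ℝ) ^ 3 * ((D.divisors.card : ℝ) ^ 2 * F D) :=
        mul_le_mul_of_nonneg_right hcard' (mul_nonneg (by positivity) (hF D))
    _ = _ := by ring

/-- All moduli are at most `exp (8 L / 25)`, so the mean value theorem controls the total remainder. -/
lemma sieve_remainder {f : ℝ → ℝ} (hf : TestFn f) (L₀ : ℝ) : ∃ L : ℝ, L₀ ≤ L ∧ ∀ Q : Finset ℕ,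
    (∀ e ∈ Q, 1 ≤ e ∧ e.Coprime 6 ∧ (e:ℝ) ≤ Real.exp (6 * (L / 25))) →
    ∑ e ∈ Q, |sieveMass hf L (L / 25) e - totalMass hf L / 24 * sieveForm (L / 25) e| ≤ 1 / L := by
  obtain ⟨C, hC, h1⟩ := abs_divMass_sub_le hf
  obtain ⟨C', hC', h2⟩ := card_divisors_pow_le 7 (ε := 1) one_pos
  obtain ⟨L₁, hL₁⟩ := Filter.eventually_atTop.1 (eventually_exp_small (2 * (72 * C * C')) (36 / 100)
    (by norm_num) 18 1)
  obtain ⟨L, hL, hmv⟩ := mean_value hf 18 6 (max L₀ (max L₁ 1000))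
  have hLL₁ : L₁ ≤ L := (le_max_left _ _).trans ((le_max_right _ _).trans hL)
  have hL10 : 1000 ≤ L := (le_max_right _ _).trans ((le_max_right _ _).trans hL)
  refine ⟨L, (le_max_left _ _).trans hL, fun Q hQ => ?_⟩
  have hL0 : 0 < L := by linarith
  have hz : 0 < L / 25 := by positivity
  obtain ⟨F, hFdef⟩ : ∃ F : ℕ → ℝ, F = fun D => |divMass hf L D - totalMass hf L / 24 * dens D| := ⟨_, rfl⟩
  have hF : ∀ D, 0 ≤ F D := fun D => by rw [hFdef]; exact abs_nonneg _
  have hstep : ∑ e ∈ Q, |sieveMass hf L (L / 25) e - totalMass hf L / 24 * sieveForm (L / 25) e| ≤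
      ∑ e ∈ Q, ∑ S ∈ (sievePrimes (L / 25)).powerset, ∑ T ∈ (sievePrimes (L / 25)).powerset,
        |sw (L / 25) S * sw (L / 25) T| * F (md e S T) := by
    refine sum_le_sum fun e he => ?_
    rw [sieveMass_eq hf L _ (hQ e he).1, sieveForm, mul_sum, ← sum_sub_distrib]
    refine (abs_sum_le_sum_abs _ _).trans (sum_le_sum fun S _ => ?_)
    rw [mul_sum, ← sum_sub_distrib]
    refine (abs_sum_le_sum_abs _ _).trans (sum_le_sum fun T _ => ?_)
    rw [hFdef, ← abs_mul]
    exact le_of_eq (congrArg abs (by ring))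
  refine hstep.trans ((sum_md_le hz hQ hF).trans ?_)
  -- a single modulus
  have hterm : ∀ D ∈ (Icc 1 ⌊Real.exp (8 * (L / 25))⌋₊).filter (fun D => D.Coprime 6),
      (D.divisors.card : ℝ) ^ 5 * F D ≤
        ((72 * D).divisors.card : ℝ) ^ 6 / (72 * D).totient * ∑ χ ∈ nontrivChars (72 * D), ‖Psi f L χ‖ +
          72 * C * C' * Real.exp (8 * (L / 25)) * L ^ 2 * Real.exp (-L) := by
    intro D hD
    rw [mem_filter, mem_Icc, Nat.le_floor_iff (Real.exp_pos _).le] at hD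
    have b1 := h1 L (by linarith) D hD.1.1 hD.2
    have hφ : (0:ℝ) < (72 * D).totient := by
      exact_mod_cast Nat.totient_pos.2 (by omega)
    have b2 : (D.divisors.card : ℝ) ≤ (72 * D).divisors.card := by
      exact_mod_cast card_le_card (Nat.divisors_subset_of_dvd (by omega) (dvd_mul_left _ _))
    have b3 : (2:ℝ) ^ D.primeFactors.card ≤ (72 * D).divisors.card :=
      le_trans (by exact_mod_cast two_pow_card_primeFactors_le (by omega)) b2
    have b4 := inv_totient_le (72 * D) (by omega)
    have b5 := h2 (72 * D) (by omega)
    rw [Real.rpow_one] at b5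
    have hD0 : (0:ℝ) < ((72 * D : ℕ) : ℝ) := by exact_mod_cast (by omega : 0 < 72 * D)
    have b6 : ((72 * D : ℕ) : ℝ) ≤ 72 * Real.exp (8 * (L / 25)) := by push_cast; linarith [hD.1.2]
    have hΨ : 0 ≤ ∑ χ ∈ nontrivChars (72 * D), ‖Psi f L χ‖ := sum_nonneg fun _ _ => norm_nonneg _
    have hτ : (0:ℝ) ≤ (72 * D).divisors.card := Nat.cast_nonneg _
    have hF' : F D ≤ 2 ^ D.primeFactors.card / (72 * D).totient * (∑ χ ∈ nontrivChars (72 * D), ‖Psi f L χ‖ +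
        C * ((72 * D : ℕ) : ℝ) * L ^ 2 * Real.exp (-L)) := by rw [hFdef]; exact b1
    revert hF' b2 b3 b4 b5 b6 hφ hΨ hD0 hτ
    generalize ((72 * D : ℕ) : ℝ) = M
    generalize ((72 * D).divisors.card : ℝ) = τ
    generalize ((72 * D).totient : ℝ) = φ
    generalize ∑ χ ∈ nontrivChars (72 * D), ‖Psi f L χ‖ = Ψ
    intro hφ b2 b3 b4 b5 hD0 b6 hΨ hτ hF'
    have hE := Real.exp_pos (-L)
    have c1 : (D.divisors.card : ℝ) ^ 5 * F D ≤ τ ^ 5 * (τ / φ * (Ψ + C * M * L ^ 2 * Real.exp (-L))) := by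
      refine mul_le_mul (pow_le_pow_left₀ (Nat.cast_nonneg _) b2 5) (hF'.trans ?_) (hF D) (pow_nonneg hτ 5)
      refine mul_le_mul_of_nonneg_right (div_le_div_of_nonneg_right b3 hφ.le) ?_
      positivity
    have c2 : M / φ ≤ τ := by
      rw [le_div_iff₀ hD0] at b4
      calc M / φ = 1 / φ * M := by ring
        _ ≤ τ := b4
    have c3 : τ ^ 7 ≤ C' * (72 * Real.exp (8 * (L / 25))) := b5.trans (by gcongr)
    calc _ ≤ _ := c1
      _ = τ ^ 6 / φ * Ψ + τ ^ 6 * (M / φ) * (C * L ^ 2 * Real.exp (-L)) := by ring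
      _ ≤ τ ^ 6 / φ * Ψ + τ ^ 6 * τ * (C * L ^ 2 * Real.exp (-L)) := by gcongr
      _ = τ ^ 6 / φ * Ψ + τ ^ 7 * (C * L ^ 2 * Real.exp (-L)) := by ring
      _ ≤ τ ^ 6 / φ * Ψ + C' * (72 * Real.exp (8 * (L / 25))) * (C * L ^ 2 * Real.exp (-L)) := by gcongr
      _ = _ := by ring
  have hfirst : ∑ D ∈ Icc 1 ⌊Real.exp (8 * (L / 25))⌋₊ with D.Coprime 6,
      ((72 * D).divisors.card : ℝ) ^ 6 / (72 * D).totient * ∑ χ ∈ nontrivChars (72 * D), ‖Psi f L χ‖ ≤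
      1 / L ^ 18 := by
    refine le_trans ?_ hmv
    rw [← sum_image (f := fun d : ℕ => (d.divisors.card : ℝ) ^ 6 / d.totient *
      ∑ χ ∈ nontrivChars d, ‖Psi f L χ‖) (g := fun D => 72 * D) (fun a _ b _ h => by simpa using h)]
    refine sum_le_sum_of_subset_of_nonneg (fun d hd => ?_) fun d _ _ =>
      mul_nonneg (div_nonneg (pow_nonneg (Nat.cast_nonneg _) _) (Nat.cast_nonneg _))
        (sum_nonneg fun _ _ => norm_nonneg _)
    rw [mem_image] at hd
    obtain ⟨D, hD, rfl⟩ := hd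
    rw [mem_filter, mem_Icc, Nat.le_floor_iff (Real.exp_pos _).le] at hD
    rw [mem_Icc]
    refine ⟨by omega, Nat.le_floor ?_⟩
    have h72 : (72:ℝ) ≤ Real.exp (L / 100) := by
      have e1 := Real.add_one_le_exp (L / 200)
      have e2 : Real.exp (L / 100) = Real.exp (L / 200) ^ 2 := by
        rw [← Real.exp_nat_mul]; congr 1; push_cast; ring
      have e3 : Real.exp (L / 200) = Real.exp (L / 600) ^ 3 := by
        rw [← Real.exp_nat_mul]; congr 1; push_cast; ring
      have e4 := Real.add_one_le_exp (L / 600)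
      have e5 : (8 / 3 : ℝ) ≤ Real.exp (L / 600) := by linarith
      have e6 : (8 / 3 : ℝ) ^ 3 ≤ Real.exp (L / 600) ^ 3 := by gcongr
      rw [e2, e3]
      nlinarith
    calc ((72 * D : ℕ) : ℝ) = 72 * (D:ℝ) := by push_cast; ring
      _ ≤ Real.exp (L / 100) * Real.exp (8 * (L / 25)) := by have := hD.1.2; gcongr
      _ = Real.exp (33 / 100 * L) := by rw [← Real.exp_add]; congr 1; ring
  have hcard : (((Icc 1 ⌊Real.exp (8 * (L / 25))⌋₊).filter (fun D => D.Coprime 6)).card : ℝ) ≤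
      Real.exp (8 * (L / 25)) := by
    refine le_trans ?_ (Nat.floor_le (Real.exp_pos (8 * (L / 25))).le)
    exact_mod_cast (card_filter_le _ _).trans (by rw [Nat.card_Icc]; omega)
  have hsum : ∑ D ∈ Icc 1 ⌊Real.exp (8 * (L / 25))⌋₊ with D.Coprime 6, (D.divisors.card : ℝ) ^ 5 * F D ≤
      1 / L ^ 18 + Real.exp (8 * (L / 25)) *
        (72 * C * C' * Real.exp (8 * (L / 25)) * L ^ 2 * Real.exp (-L)) := by
    refine (sum_le_sum hterm).trans ?_
    rw [sum_add_distrib, sum_const, nsmul_eq_mul]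
    exact add_le_add hfirst (mul_le_mul_of_nonneg_right hcard (by positivity))
  have hexp : Real.exp (8 * (L / 25)) * Real.exp (8 * (L / 25)) * Real.exp (-L) =
      Real.exp (-(36 / 100 * L)) := by
    rw [← Real.exp_add, ← Real.exp_add]; congr 1; ring
  have hsmall := hL₁ L hLL₁
  have hzL : (1 + L / 25) ^ 16 ≤ L ^ 16 := pow_le_pow_left₀ (by positivity) (by linarith) 16
  have hfin : 1 / L ^ 2 ≤ 1 / (2 * L) := by
    rw [div_le_div_iff₀ (by positivity) (by positivity)]; nlinarith
  calc _ ≤ L ^ 16 * (1 / L ^ 18 + Real.exp (8 * (L / 25)) *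
        (72 * C * C' * Real.exp (8 * (L / 25)) * L ^ 2 * Real.exp (-L))) := by
        refine mul_le_mul hzL hsum (sum_nonneg fun D _ => mul_nonneg (by positivity) (hF D)) (by positivity)
    _ = L ^ 16 * (1 / L ^ 18) + 72 * C * C' * L ^ 18 *
        (Real.exp (8 * (L / 25)) * Real.exp (8 * (L / 25)) * Real.exp (-L)) := by ring
    _ = 1 / L ^ 2 + 2 * (72 * C * C') * L ^ 18 * Real.exp (-(36 / 100 * L)) / 2 := by
        rw [hexp]
        congr 1
        · field_simp
        · ring
    _ ≤ 1 / (2 * L) + 1 / L ^ 1 / 2 := by gcongr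
    _ = 1 / L := by field_simp; norm_num

end OmegaSq

namespace OmegaSq

open Finset

/-! ### The total mass, and the exceptional integers -/

/-- A nonnegative test function supported on a long interval captures a positive mass, by Mertens. -/
lemma exists_totalMass_ge : ∃ (f : ℝ → ℝ) (hf : TestFn f), (∀ u, 0 ≤ f u) ∧
    ∃ c : ℝ, 0 < c ∧ ∀ L : ℝ, 1 ≤ L → c ≤ totalMass hf L := by
  obtain ⟨C, hC, h1⟩ := mertens_vonMangoldt
  obtain ⟨a, ha⟩ : ∃ a : ℝ, a = 2 * C + 2 := ⟨_, rfl⟩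
  let g : ContDiffBump (0:ℝ) := ⟨a, a + 1, by linarith, by linarith⟩
  have hg : TestFn g := ⟨g.contDiff, g.hasCompactSupport⟩
  refine ⟨g, hg, fun u => g.nonneg, Real.exp (-(1 + a)), Real.exp_pos _, fun L hL => ?_⟩
  have hL0 : 0 < L := by linarith
  have hN1 : 1 ≤ ⌊Real.exp L⌋₊ := Nat.le_floor (by simpa using hL0.le)
  have hN12 : ⌊Real.exp L⌋₊ ≤ ⌊Real.exp (L + a)⌋₊ :=
    Nat.floor_le_floor (Real.exp_le_exp.2 (by linarith))
  -- the mass of `Λ(n) / n` on `(exp L, exp (L + a)]`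
  have hmass : 1 ≤ ∑ n ∈ Ioc ⌊Real.exp L⌋₊ ⌊Real.exp (L + a)⌋₊, ArithmeticFunction.vonMangoldt n / n := by
    have h2 := abs_le.1 (h1 _ hN1)
    have h3 := abs_le.1 (h1 _ (hN1.trans hN12))
    have h4 : ∑ n ∈ Ioc 0 ⌊Real.exp (L + a)⌋₊, ArithmeticFunction.vonMangoldt n / (n:ℝ) =
        ∑ n ∈ Ioc 0 ⌊Real.exp L⌋₊, ArithmeticFunction.vonMangoldt n / (n:ℝ) +
        ∑ n ∈ Ioc ⌊Real.exp L⌋₊ ⌊Real.exp (L + a)⌋₊, ArithmeticFunction.vonMangoldt n / (n:ℝ) :=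
      (sum_Ioc_consecutive _ (Nat.zero_le _) hN12).symm
    have h5 : Real.log ⌊Real.exp L⌋₊ ≤ L := by
      rw [Real.log_le_iff_le_exp (by exact_mod_cast hN1)]
      exact Nat.floor_le (Real.exp_pos _).le
    have h6 : L + a - 1 ≤ Real.log ⌊Real.exp (L + a)⌋₊ := by
      rw [Real.le_log_iff_exp_le (by exact_mod_cast hN1.trans hN12)]
      have e1 := Nat.lt_floor_add_one (Real.exp (L + a))
      have e2 : Real.exp (L + a) = Real.exp (L + a - 1) * Real.exp 1 := by
        rw [← Real.exp_add]; congr 1; ring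
      have e3 := Real.add_one_le_exp (1:ℝ)
      have e4 := Real.one_le_exp (x := L + a - 1) (by linarith)
      nlinarith
    linarith [h2.2, h3.1]
  have hterm : ∀ n ∈ Ioc ⌊Real.exp L⌋₊ ⌊Real.exp (L + a)⌋₊,
      Real.exp (-(1 + a)) * (1 / n) ≤ wt g L n := by
    intro n hn
    rw [mem_Ioc, Nat.floor_lt (Real.exp_pos _).le, Nat.le_floor_iff (Real.exp_pos _).le] at hn
    have hn0 : (0:ℝ) < n := (Real.exp_pos _).trans hn.1
    have l1 : L ≤ Real.log n := (Real.le_log_iff_exp_le hn0).2 hn.1.le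
    have l2 : Real.log n ≤ L + a := (Real.log_le_iff_le_exp hn0).2 hn.2
    have l3 : g (Real.log n - L) = 1 := by
      refine g.one_of_mem_closedBall ?_
      rw [mem_closedBall_zero_iff, Real.norm_eq_abs, abs_of_nonneg (by linarith)]
      change _ ≤ a
      linarith
    rw [wt, l3, mul_one, neg_add 1 (1 / L), Real.rpow_add hn0, Real.rpow_neg_one, mul_comm, one_div]
    refine mul_le_mul_of_nonneg_left ?_ (by positivity)
    rw [Real.rpow_def_of_pos hn0, Real.exp_le_exp]
    have l4 : Real.log n * (1 / L) ≤ 1 + a := by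
      rw [mul_one_div, div_le_iff₀ hL0]
      nlinarith
    linarith
  have hnn : ∀ n : ℕ, 0 ≤ ArithmeticFunction.vonMangoldt n * wt g L n := fun n =>
    mul_nonneg ArithmeticFunction.vonMangoldt_nonneg
      (mul_nonneg (Real.rpow_nonneg (Nat.cast_nonneg _) _) g.nonneg)
  calc Real.exp (-(1 + a)) ≤ Real.exp (-(1 + a)) *
        ∑ n ∈ Ioc ⌊Real.exp L⌋₊ ⌊Real.exp (L + a)⌋₊, ArithmeticFunction.vonMangoldt n / n :=
        le_mul_of_one_le_right (Real.exp_pos _).le hmass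
    _ ≤ ∑ n ∈ Ioc ⌊Real.exp L⌋₊ ⌊Real.exp (L + a)⌋₊, ArithmeticFunction.vonMangoldt n * wt g L n := by
        rw [mul_sum]
        refine sum_le_sum fun n hn => ?_
        calc _ = ArithmeticFunction.vonMangoldt n * (Real.exp (-(1 + a)) * (1 / n)) := by ring
          _ ≤ _ := mul_le_mul_of_nonneg_left (hterm n hn) ArithmeticFunction.vonMangoldt_nonneg
    _ ≤ totalMass hg L := by
        refine sum_le_sum_of_subset_of_nonneg (fun n hn => ?_) fun n _ _ => hnn n
        have hn0 : (0:ℝ) < n := by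
          rw [mem_Ioc] at hn
          exact_mod_cast (by omega : 0 < n)
        rw [mem_wtSupp]
        exact ((by positivity : 0 < Real.exp (-(1 + a)) * (1 / n)).trans_le (hterm n hn)).ne'

lemma sqw_nonneg (z : ℝ) (n : ℕ) : 0 ≤ sqw z n := sq_nonneg _

lemma sqw_le : ∃ C : ℝ, 1 ≤ C ∧ ∀ L : ℝ, 2 ≤ L → ∀ n : ℕ,
    sqw (L / 25) n ≤ C * Real.exp (11 / 125 * L) * L ^ 16 := by
  obtain ⟨C, hC, h1⟩ := sum_abs_sw_le
  refine ⟨C ^ 2, one_le_pow₀ hC, fun L hL n => ?_⟩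
  have hz : 0 < L / 25 := by positivity
  have h2 : |∑ S ∈ (sievePrimes (L / 25)).powerset with pr S ∣ n ^ 2 - 1, sw (L / 25) S| ≤
      C * Real.exp (11 / 10 * (L / 25)) * L ^ 8 := by
    refine (abs_sum_le_sum_abs _ _).trans ((sum_le_sum_of_subset_of_nonneg (filter_subset _ _)
      fun _ _ _ => abs_nonneg _).trans ((h1 _ hz).trans ?_))
    gcongr
    linarith
  rw [sqw, ← sq_abs]
  calc _ ≤ (C * Real.exp (11 / 10 * (L / 25)) * L ^ 8) ^ 2 := pow_le_pow_left₀ (abs_nonneg _) h2 2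
    _ = C ^ 2 * Real.exp (11 / 10 * (L / 25)) ^ 2 * L ^ 16 := by ring
    _ = _ := by rw [← Real.exp_nat_mul]; congr 3; push_cast; ring

lemma le_of_mem_wtSupp {f : ℝ → ℝ} {hf : TestFn f} {B L : ℝ} (hB : BddBy f B) {n : ℕ}
    (hn : n ∈ wtSupp hf L) (hn0 : 0 < n) : Real.exp (L - B) ≤ n ∧ (n:ℝ) ≤ Real.exp (L + B) := by
  rw [mem_wtSupp] at hn
  have hn0' : (0:ℝ) < n := by exact_mod_cast hn0
  constructor <;> by_contra h
  · exact hn (wt_eq_zero hB hn0' (Or.inr (not_le.1 h)))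
  · exact hn (wt_eq_zero hB hn0' (Or.inl (not_le.1 h)))

lemma wt_nonneg {f : ℝ → ℝ} (h0 : ∀ u, 0 ≤ f u) (L : ℝ) (n : ℕ) : 0 ≤ wt f L n :=
  mul_nonneg (Real.rpow_nonneg (Nat.cast_nonneg _) _) (h0 _)

/-- Proper prime powers carry a negligible sifted mass. -/
lemma not_prime_mass_le {f : ℝ → ℝ} (hf : TestFn f) : ∃ L₀ : ℝ, ∀ L : ℝ, L₀ ≤ L →
    ∑ n ∈ wtSupp hf L with ¬ n.Prime, ArithmeticFunction.vonMangoldt n * wt f L n * sqw (L / 25) n ≤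
      1 / L := by
  obtain ⟨B, hB⟩ := hf.exists_bddBy
  obtain ⟨C, hC, h1⟩ := sqw_le
  obtain ⟨K, hK⟩ := Chebyshev.psi_sub_theta_le_mul_sqrt
  have hB1 := hB.1
  obtain ⟨L₁, hL₁⟩ := Filter.eventually_atTop.1 (eventually_exp_small
    (B * Real.exp (2 * B) * C * (|K| * Real.exp (B / 2))) (2 / 5) (by norm_num) 16 1)
  refine ⟨max L₁ 2, fun L hL => ?_⟩
  have hL2 : 2 ≤ L := (le_max_right _ _).trans hL
  have hsmall := hL₁ L ((le_max_left _ _).trans hL)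
  have hK' : ∑ n ∈ Ioc 0 ⌊Real.exp (L + B)⌋₊ with ¬ n.Prime, ArithmeticFunction.vonMangoldt n ≤
      |K| * Real.exp ((L + B) / 2) := by
    have e1 := hK (Real.exp (L + B))
    have e2 : Chebyshev.psi (Real.exp (L + B)) - Chebyshev.theta (Real.exp (L + B)) =
        ∑ n ∈ Ioc 0 ⌊Real.exp (L + B)⌋₊ with ¬ n.Prime, ArithmeticFunction.vonMangoldt n := by
      rw [Chebyshev.psi, Chebyshev.theta, ← sum_filter_add_sum_filter_not (Ioc 0 ⌊Real.exp (L + B)⌋₊) Nat.Prime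
        ArithmeticFunction.vonMangoldt, sum_congr rfl fun p hp =>
          ArithmeticFunction.vonMangoldt_apply_prime (mem_filter.1 hp).2]
      ring
    rw [← e2, Real.exp_half]
    exact e1.trans (mul_le_mul_of_nonneg_right (le_abs_self K) (Real.sqrt_nonneg _))
  have hterm : ∀ n ∈ (wtSupp hf L).filter (fun n => ¬ n.Prime),
      ArithmeticFunction.vonMangoldt n * wt f L n * sqw (L / 25) n ≤ ArithmeticFunction.vonMangoldt n *
        (B * Real.exp (2 * B) * Real.exp (-L) * (C * Real.exp (11 / 125 * L) * L ^ 16)) := by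
    intro n hn
    rcases Nat.eq_zero_or_pos n with rfl | hn0
    · simp
    have := (le_abs_self _).trans (abs_wt_le hB (by linarith : 1 ≤ L) (by exact_mod_cast hn0 : (0:ℝ) < n))
    rw [mul_assoc]
    exact mul_le_mul_of_nonneg_left (mul_le_mul this (h1 L hL2 n) (sqw_nonneg _ _) (by positivity))
      ArithmeticFunction.vonMangoldt_nonneg
  refine (sum_le_sum hterm).trans ?_
  rw [← sum_mul]
  have hsub : ∑ n ∈ wtSupp hf L with ¬ n.Prime, ArithmeticFunction.vonMangoldt n ≤
      ∑ n ∈ Ioc 0 ⌊Real.exp (L + B)⌋₊ with ¬ n.Prime, ArithmeticFunction.vonMangoldt n := by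
    rw [← sum_filter_of_ne (p := fun n => 0 < n) fun n _ hne => Nat.pos_of_ne_zero fun h => hne (by rw [h]; simp)]
    refine sum_le_sum_of_subset_of_nonneg (fun n hn => ?_) fun _ _ _ => ArithmeticFunction.vonMangoldt_nonneg
    rw [mem_filter, mem_filter] at hn
    rw [mem_filter, mem_Ioc]
    exact ⟨⟨hn.2, Nat.le_floor (le_of_mem_wtSupp hB hn.1.1 hn.2).2⟩, hn.1.2⟩
  have hexp : Real.exp ((L + B) / 2) * (Real.exp (-L) * Real.exp (11 / 125 * L)) ≤
      Real.exp (B / 2) * Real.exp (-(2 / 5 * L)) := by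
    rw [← Real.exp_add, ← Real.exp_add, ← Real.exp_add, Real.exp_le_exp]; linarith
  calc _ ≤ |K| * Real.exp ((L + B) / 2) *
        (B * Real.exp (2 * B) * Real.exp (-L) * (C * Real.exp (11 / 125 * L) * L ^ 16)) :=
        mul_le_mul_of_nonneg_right (hsub.trans hK') (by positivity)
    _ = B * Real.exp (2 * B) * C * |K| * L ^ 16 *
        (Real.exp ((L + B) / 2) * (Real.exp (-L) * Real.exp (11 / 125 * L))) := by ring
    _ ≤ B * Real.exp (2 * B) * C * |K| * L ^ 16 * (Real.exp (B / 2) * Real.exp (-(2 / 5 * L))) :=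
        mul_le_mul_of_nonneg_left hexp (by positivity)
    _ = B * Real.exp (2 * B) * C * (|K| * Real.exp (B / 2)) * L ^ 16 * Real.exp (-(2 / 5 * L)) := by ring
    _ ≤ 1 / L := by rw [pow_one] at hsmall; exact hsmall

lemma sq_dvd_sub_or_add {q n : ℕ} (hq : q.Prime) (hq5 : 5 ≤ q) (hn : 1 ≤ n) (h : q ^ 2 ∣ n ^ 2 - 1) :
    q ^ 2 ∣ n - 1 ∨ q ^ 2 ∣ n + 1 := by
  have h1 : n ^ 2 - 1 = (n + 1) * (n - 1) := by simpa using Nat.sq_sub_sq n 1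
  rw [h1] at h
  by_cases hd : q ∣ n + 1
  · right
    refine Nat.Coprime.dvd_of_dvd_mul_right (Nat.Coprime.pow_left 2 ?_) h
    rw [hq.coprime_iff_not_dvd]
    intro h2
    have h3 := (Nat.dvd_sub hd h2)
    have h4 : n + 1 - (n - 1) = 2 := by omega
    rw [h4] at h3
    have := Nat.le_of_dvd two_pos h3
    omega
  · left
    refine Nat.Coprime.dvd_of_dvd_mul_left (Nat.Coprime.pow_left 2 ?_) h
    rwa [hq.coprime_iff_not_dvd]

lemma card_sq_dvd_le {q : ℕ} (hq : q.Prime) (hq5 : 5 ≤ q) (N : ℕ) :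
    ((Icc 2 N).filter (fun n => q ^ 2 ∣ n ^ 2 - 1)).card ≤ 2 * ((N + 1) / q ^ 2) := by
  have hq0 : 0 < q ^ 2 := pow_pos hq.pos 2
  have hsub : (Icc 2 N).filter (fun n => q ^ 2 ∣ n ^ 2 - 1) ⊆
      (Icc 1 ((N + 1) / q ^ 2)).image (fun k => q ^ 2 * k + 1) ∪
        (Icc 1 ((N + 1) / q ^ 2)).image (fun k => q ^ 2 * k - 1) := by
    intro n hn
    rw [mem_filter, mem_Icc] at hn
    rw [mem_union, mem_image, mem_image]
    rcases sq_dvd_sub_or_add hq hq5 (by omega) hn.2 with ⟨k, hk⟩ | ⟨k, hk⟩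
    · refine Or.inl ⟨k, mem_Icc.2 ⟨Nat.pos_of_ne_zero fun h => ?_, ?_⟩, by omega⟩
      · rw [h, mul_zero] at hk; omega
      · rw [Nat.le_div_iff_mul_le hq0, mul_comm]; omega
    · refine Or.inr ⟨k, mem_Icc.2 ⟨Nat.pos_of_ne_zero fun h => ?_, ?_⟩, by omega⟩
      · rw [h, mul_zero] at hk; omega
      · rw [Nat.le_div_iff_mul_le hq0, mul_comm]; omega
  refine (card_le_card hsub).trans ((card_union_le _ _).trans ?_)
  have h1 := card_image_le (s := Icc 1 ((N + 1) / q ^ 2)) (f := fun k => q ^ 2 * k + 1)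
  have h2 := card_image_le (s := Icc 1 ((N + 1) / q ^ 2)) (f := fun k => q ^ 2 * k - 1)
  rw [Nat.card_Icc] at h1 h2
  omega

/-- The primes beyond `exp (3 z)` whose square could divide `n ^ 2 - 1`, for `n` up to `N`. -/
noncomputable def bigPrimes (z : ℝ) (N : ℕ) : Finset ℕ :=
  (Icc 5 (N + 1)).filter (fun q => q.Prime ∧ 3 * z < Real.log q)

/-- The `n` such that `n ^ 2 - 1` is divisible by the square of a large prime carry a negligible mass. -/
lemma big_square_mass_le {f : ℝ → ℝ} (hf : TestFn f) {B : ℝ} (hB : BddBy f B) :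
    ∃ L₀ : ℝ, ∀ L : ℝ, L₀ ≤ L →
    ∑ q ∈ bigPrimes (L / 25) ⌊Real.exp (L + B)⌋₊, sieveMass hf L (L / 25) (q ^ 2) ≤ 1 / L := by
  obtain ⟨C, hC, h1⟩ := sqw_le
  have hB1 := hB.1
  obtain ⟨L₁, hL₁⟩ := Filter.eventually_atTop.1 (eventually_exp_small
    (16 * (B * Real.exp (2 * B) * C * Real.exp B)) (4 / 125) (by norm_num) 18 1)
  refine ⟨max L₁ (B + 2), fun L hL => ?_⟩
  have hLB : B + 2 ≤ L := (le_max_right _ _).trans hL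
  have hsmall := hL₁ L ((le_max_left _ _).trans hL)
  have hL0 : 0 < L := by linarith
  obtain ⟨N, hN⟩ : ∃ N : ℕ, N = ⌊Real.exp (L + B)⌋₊ := ⟨_, rfl⟩
  rw [← hN]
  have hNle : (N:ℝ) ≤ Real.exp (L + B) := hN ▸ Nat.floor_le (Real.exp_pos _).le
  have hexp1 : 1 ≤ Real.exp (L + B) := Real.one_le_exp (by linarith)
  obtain ⟨M, hM⟩ : ∃ M : ℝ, M = 2 * L * (B * Real.exp (2 * B) * Real.exp (-L)) *
    (C * Real.exp (11 / 125 * L) * L ^ 16) := ⟨_, rfl⟩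
  have hM0 : 0 ≤ M := by rw [hM]; positivity
  -- a single prime
  have hq : ∀ q ∈ bigPrimes (L / 25) N, sieveMass hf L (L / 25) (q ^ 2) ≤
      M * (4 * Real.exp (L + B)) * Real.exp (-(3 * (L / 25))) * (1 / q) := by
    intro q hq
    rw [bigPrimes, mem_filter, mem_Icc] at hq
    obtain ⟨⟨hq5, -⟩, hqp, hqz⟩ := hq
    have hq0 : (0:ℝ) < q := by exact_mod_cast hqp.pos
    have hterm : ∀ n ∈ (wtSupp hf L).filter (fun n => n % 72 = 29 ∧ q ^ 2 ∣ n ^ 2 - 1),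
        ArithmeticFunction.vonMangoldt n * wt f L n * sqw (L / 25) n ≤ M := by
      intro n hn
      rw [mem_filter] at hn
      have hn0 : 0 < n := by omega
      have hn0' : (0:ℝ) < n := by exact_mod_cast hn0
      have a1 := (le_abs_self _).trans (abs_wt_le hB (by linarith : 1 ≤ L) hn0')
      have a2 : ArithmeticFunction.vonMangoldt n ≤ 2 * L := by
        refine ArithmeticFunction.vonMangoldt_le_log.trans ?_
        have := (Real.log_le_iff_le_exp hn0').2 (le_of_mem_wtSupp hB hn.1 hn0).2
        linarith
      rw [hM]
      refine mul_le_mul ?_ (h1 L (by linarith) n) (sqw_nonneg _ _) (by positivity)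
      calc _ ≤ ArithmeticFunction.vonMangoldt n * (B * Real.exp (2 * B) * Real.exp (-L)) :=
            mul_le_mul_of_nonneg_left a1 ArithmeticFunction.vonMangoldt_nonneg
        _ ≤ _ := mul_le_mul_of_nonneg_right a2 (by positivity)
    have hcard : (((wtSupp hf L).filter (fun n => n % 72 = 29 ∧ q ^ 2 ∣ n ^ 2 - 1)).card : ℝ) ≤
        4 * Real.exp (L + B) / (q:ℝ) ^ 2 := by
      have c1 : ((wtSupp hf L).filter (fun n => n % 72 = 29 ∧ q ^ 2 ∣ n ^ 2 - 1)).card ≤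
          2 * ((N + 1) / q ^ 2) := by
        refine (card_le_card fun n hn => ?_).trans (card_sq_dvd_le hqp hq5 N)
        rw [mem_filter] at hn
        rw [mem_filter, mem_Icc, hN]
        exact ⟨⟨by omega, Nat.le_floor (le_of_mem_wtSupp hB hn.1 (by omega)).2⟩, hn.2.2⟩
      have c2 : (((N + 1) / q ^ 2 : ℕ) : ℝ) ≤ ((N + 1 : ℕ) : ℝ) / ((q ^ 2 : ℕ) : ℝ) := Nat.cast_div_le
      have c3 : ((N + 1 : ℕ) : ℝ) / ((q ^ 2 : ℕ) : ℝ) ≤ 2 * Real.exp (L + B) / (q:ℝ) ^ 2 := by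
        push_cast
        gcongr
        linarith
      calc _ ≤ ((2 * ((N + 1) / q ^ 2) : ℕ) : ℝ) := by exact_mod_cast c1
        _ = 2 * (((N + 1) / q ^ 2 : ℕ) : ℝ) := by push_cast; ring
        _ ≤ 2 * (2 * Real.exp (L + B) / (q:ℝ) ^ 2) := by linarith
        _ = _ := by ring
    have hinv : 1 / (q:ℝ) ≤ Real.exp (-(3 * (L / 25))) := by
      rw [Real.exp_neg, ← one_div]
      exact one_div_le_one_div_of_le (Real.exp_pos _) ((Real.lt_log_iff_exp_lt hq0).1 hqz).le
    have hs := sum_le_card_nsmul _ _ _ hterm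
    rw [nsmul_eq_mul] at hs
    calc _ ≤ _ := hs
      _ ≤ 4 * Real.exp (L + B) / (q:ℝ) ^ 2 * M := mul_le_mul_of_nonneg_right hcard hM0
      _ = M * (4 * Real.exp (L + B)) * (1 / q) * (1 / q) := by field_simp
      _ ≤ M * (4 * Real.exp (L + B)) * Real.exp (-(3 * (L / 25))) * (1 / q) := by gcongr
  refine (sum_le_sum hq).trans ?_
  rw [← mul_sum]
  have hharm : ∑ q ∈ bigPrimes (L / 25) N, (1:ℝ) / q ≤ 2 * L := by
    have e1 : ∑ q ∈ bigPrimes (L / 25) N, (1:ℝ) / q ≤ ∑ q ∈ Icc 1 (N + 1), (1:ℝ) / q := by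
      refine sum_le_sum_of_subset_of_nonneg (fun q hq => ?_) fun q _ _ => by positivity
      rw [bigPrimes, mem_filter, mem_Icc] at hq
      rw [mem_Icc]; omega
    have e2 := harmonic_Icc_le (N + 1)
    have e3 : Real.log ((N + 1 : ℕ) : ℝ) ≤ L + B + 1 := by
      rw [Real.log_le_iff_le_exp (by positivity), Real.exp_add (L + B) 1]
      push_cast
      nlinarith [Real.add_one_le_exp (1:ℝ)]
    linarith
  have hexp : Real.exp (-L) * Real.exp (11 / 125 * L) * Real.exp (L + B) * Real.exp (-(3 * (L / 25))) =
      Real.exp B * Real.exp (-(4 / 125 * L)) := by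
    simp only [← Real.exp_add]; congr 1; ring
  calc _ ≤ M * (4 * Real.exp (L + B)) * Real.exp (-(3 * (L / 25))) * (2 * L) :=
        mul_le_mul_of_nonneg_left hharm (by positivity)
    _ = 16 * (B * Real.exp (2 * B) * C) * L ^ 18 *
        (Real.exp (-L) * Real.exp (11 / 125 * L) * Real.exp (L + B) * Real.exp (-(3 * (L / 25)))) := by
        rw [hM]; ring
    _ = 16 * (B * Real.exp (2 * B) * C * Real.exp B) * L ^ 18 * Real.exp (-(4 / 125 * L)) := by
        rw [hexp]; ring
    _ ≤ 1 / L := by rw [pow_one] at hsmall; exact hsmall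

end OmegaSq

namespace OmegaSq

open Finset

/-! ### Conclusion -/

/-- If `n ≡ 29` modulo `72`, then `n ^ 2 - 1 = 24 m` with `m` coprime to `6`. If moreover no square of a prime `q ≥ 5`
divides `n ^ 2 - 1`, then `m` is squarefree, and `1 ≤ (1 - log q / (6 z)) + log q / (6 z)` summed over the primes
`q ∣ m` bounds their number by `19 / 2 + 17 / 2 = 18` strictly, hence `Ω(n ^ 2 - 1) ≤ 4 + 17`. -/
lemma cardFactors_le {n : ℕ} {z : ℝ} (hz : 0 < z) (hn : n % 72 = 29)
    (hlog : 2 * Real.log n ≤ 17 / 2 * (6 * z))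
    (hsq : ∀ q : ℕ, q.Prime → 5 ≤ q → ¬ q ^ 2 ∣ n ^ 2 - 1)
    (hsum : ∑ q ∈ sievePrimes (6 * z), (if q ∣ n ^ 2 - 1 then 1 - Real.log q / (6 * z) else 0) < 19 / 2) :
    ArithmeticFunction.cardFactors (n ^ 2 - 1) ≤ 21 := by
  obtain ⟨k, hk⟩ : ∃ k, n = 29 + 72 * k := ⟨n / 72, by omega⟩
  obtain ⟨m, hm⟩ : ∃ m, m = (7 + 18 * k) * (5 + 12 * k) := ⟨_, rfl⟩
  have hnm : n ^ 2 - 1 = 24 * m := by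
    have : n ^ 2 = 24 * m + 1 := by rw [hk, hm]; ring
    omega
  have hm0 : 0 < m := by rw [hm]; positivity
  have hm2 : ¬ 2 ∣ m := by
    rw [hm, Nat.prime_two.dvd_mul]; omega
  have hm3 : ¬ 3 ∣ m := by
    rw [hm, Nat.prime_three.dvd_mul]; omega
  have h5 : ∀ q : ℕ, q.Prime → q ∣ m → 5 ≤ q := by
    intro q hq hqm
    by_contra h
    have h2 := hq.two_le
    have : q < 5 := by omega
    interval_cases q
    · exact hm2 hqm
    · exact hm3 hqm
    · revert hq; norm_num
  have hsf : Squarefree m := by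
    rw [Nat.squarefree_iff_prime_squarefree]
    intro q hq hqm
    refine hsq q hq (h5 q hq ((dvd_mul_right _ _).trans hqm)) ?_
    rw [hnm, sq]
    exact hqm.trans (dvd_mul_left _ _)
  have hΩ : ArithmeticFunction.cardFactors m = m.primeFactors.card := by
    rw [← (ArithmeticFunction.cardDistinctFactors_eq_cardFactors_iff_squarefree hm0.ne').2 hsf,
      ArithmeticFunction.cardDistinctFactors_apply]
    rfl
  have h24 : ArithmeticFunction.cardFactors 24 = 4 := by
    rw [show 24 = 2 ^ 3 * 3 by norm_num, ArithmeticFunction.cardFactors_mul (by norm_num) (by norm_num),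
      ArithmeticFunction.cardFactors_apply_prime_pow Nat.prime_two,
      ArithmeticFunction.cardFactors_apply_prime Nat.prime_three]
  rw [hnm, ArithmeticFunction.cardFactors_mul (by norm_num) hm0.ne', h24, hΩ]
  have hlogm : ∑ q ∈ m.primeFactors, Real.log q = Real.log m := by
    rw [← Real.log_prod fun q hq => by exact_mod_cast (Nat.prime_of_mem_primeFactors hq).ne_zero,
      ← Nat.cast_prod, Nat.prod_primeFactors_of_squarefree hsf]
  have hlogle : Real.log m ≤ 2 * Real.log n := by
    rw [← Real.log_rpow (by exact_mod_cast (by omega : 0 < n))]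
    refine Real.log_le_log (by exact_mod_cast hm0) ?_
    norm_cast
    omega
  have hcount : (m.primeFactors.card : ℝ) = ∑ q ∈ m.primeFactors, (1 - Real.log q / (6 * z)) +
      Real.log m / (6 * z) := by
    rw [sum_sub_distrib, ← sum_div, hlogm]; simp
  have hpart : ∑ q ∈ m.primeFactors, (1 - Real.log q / (6 * z)) ≤
      ∑ q ∈ sievePrimes (6 * z), (if q ∣ n ^ 2 - 1 then 1 - Real.log q / (6 * z) else 0) := by
    rw [← sum_filter]
    have hsplit : ∑ q ∈ m.primeFactors, (1 - Real.log q / (6 * z)) ≤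
        ∑ q ∈ m.primeFactors with Real.log ((q:ℕ):ℝ) ≤ 6 * z, (1 - Real.log q / (6 * z)) := by
      rw [sum_filter]
      refine sum_le_sum fun q _ => ?_
      split_ifs with h
      · rfl
      · rw [sub_nonpos, le_div_iff₀ (by positivity)]; linarith
    refine hsplit.trans (sum_le_sum_of_subset_of_nonneg (fun q hq => ?_) fun q hq _ => ?_)
    · rw [mem_filter, Nat.mem_primeFactors] at hq
      rw [mem_filter, mem_sievePrimes, hnm]
      exact ⟨⟨hq.1.1, h5 q hq.1.1 hq.1.2.1, hq.2⟩, hq.1.2.1.trans (dvd_mul_left _ _)⟩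
    · rw [mem_filter, mem_sievePrimes] at hq
      rw [sub_nonneg, div_le_one (by positivity)]
      exact hq.1.2.2
  have hlast : Real.log m / (6 * z) ≤ 17 / 2 := by
    rw [div_le_iff₀ (by positivity)]; linarith
  have hlt : (m.primeFactors.card : ℝ) < 18 := by linarith
  have : m.primeFactors.card < 18 := by exact_mod_cast hlt
  omega

lemma sum_mul_indicator {f : ℝ → ℝ} (hf : TestFn f) (L z : ℝ) (A : Finset ℕ) (g : ℕ → ℕ) (c : ℕ → ℝ) :
    ∑ n ∈ wtSupp hf L with n % 72 = 29, ArithmeticFunction.vonMangoldt n * wt f L n * sqw z n *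
        ∑ q ∈ A, (if g q ∣ n ^ 2 - 1 then c q else 0) = ∑ q ∈ A, c q * sieveMass hf L z (g q) := by
  simp_rw [mul_sum]
  rw [sum_comm]
  refine sum_congr rfl fun q _ => ?_
  rw [sieveMass, ← filter_filter, mul_sum, sum_filter (p := fun n : ℕ => g q ∣ n ^ 2 - 1)]
  refine sum_congr rfl fun n _ => ?_
  split_ifs <;> ring

/-- The numbers `c q * sieveMass` sum to at most the expected value plus the remainders. -/
lemma sum_sieveMass_le {f : ℝ → ℝ} {hf : TestFn f} {L z X ε K : ℝ} (hX : 0 ≤ X) (hH : 0 ≤ HH z)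
    {A : Finset ℕ} {g : ℕ → ℕ} {c d : ℕ → ℝ} (hc : ∀ q ∈ A, 0 ≤ c q ∧ c q ≤ 1)
    (hform : ∀ q ∈ A, sieveForm z (g q) ≤ d q * HH z)
    (hrem : ∑ q ∈ A, |sieveMass hf L z (g q) - X * sieveForm z (g q)| ≤ ε)
    (hd : ∑ q ∈ A, c q * d q ≤ K) :
    ∑ q ∈ A, c q * sieveMass hf L z (g q) ≤ X * HH z * K + ε := by
  have h1 : ∀ q ∈ A, c q * sieveMass hf L z (g q) ≤ X * HH z * (c q * d q) +
      |sieveMass hf L z (g q) - X * sieveForm z (g q)| := by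
    intro q hq
    obtain ⟨hc0, hc1⟩ := hc q hq
    have a1 : c q * (sieveMass hf L z (g q) - X * sieveForm z (g q)) ≤
        |sieveMass hf L z (g q) - X * sieveForm z (g q)| :=
      (mul_le_mul_of_nonneg_left (le_abs_self _) hc0).trans (mul_le_of_le_one_left (abs_nonneg _) hc1)
    have a2 := mul_le_mul_of_nonneg_left (hform q hq) (mul_nonneg hc0 hX)
    linarith
  refine (sum_le_sum h1).trans ?_
  rw [sum_add_distrib, ← mul_sum]
  exact add_le_add (mul_le_mul_of_nonneg_left hd (mul_nonneg hX hH)) hrem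

lemma coprime_six {q : ℕ} (hq : q.Prime) (h5 : 5 ≤ q) : q.Coprime 6 := by
  rw [hq.coprime_iff_not_dvd]
  intro h
  have := Nat.le_of_dvd (by norm_num) h
  interval_cases q <;> revert hq h <;> norm_num

/-- The weight whose positivity detects an `n ≤ N` with few prime factors in `n ^ 2 - 1`. Each prime `q ≤ exp (6 z)`
dividing `n ^ 2 - 1` costs `1 - log q / (6 z)`; the factor `18 > 19 / 2` makes the weight negative as soon as
`q ^ 2 ∣ n ^ 2 - 1` for some prime `q ≥ 5`. -/
noncomputable def bracket (z : ℝ) (N n : ℕ) : ℝ :=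
  19 / 2 - ∑ q ∈ sievePrimes (6 * z), (if q ∣ n ^ 2 - 1 then 1 - Real.log q / (6 * z) else 0) -
    18 * ∑ q ∈ sievePrimes (3 * z), (if q ^ 2 ∣ n ^ 2 - 1 then 1 else 0) -
    18 * ∑ q ∈ bigPrimes z N, (if q ^ 2 ∣ n ^ 2 - 1 then 1 else 0)

lemma bracket_terms_nonneg {z : ℝ} (hz : 0 < z) (N n : ℕ) :
    0 ≤ ∑ q ∈ sievePrimes (6 * z), (if q ∣ n ^ 2 - 1 then 1 - Real.log q / (6 * z) else 0) ∧
    (0:ℝ) ≤ ∑ q ∈ sievePrimes (3 * z), (if q ^ 2 ∣ n ^ 2 - 1 then 1 else 0) ∧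
    (0:ℝ) ≤ ∑ q ∈ bigPrimes z N, (if q ^ 2 ∣ n ^ 2 - 1 then 1 else 0) := by
  refine ⟨sum_nonneg fun q hq => ?_, sum_nonneg fun q _ => ?_, sum_nonneg fun q _ => ?_⟩
  · rw [mem_sievePrimes] at hq
    split_ifs
    · rw [sub_nonneg, div_le_one (by positivity)]; exact hq.2.2
    · rfl
  · split_ifs <;> norm_num
  · split_ifs <;> norm_num

lemma cardFactors_le_of_bracket_pos {z : ℝ} (hz : 0 < z) {N n : ℕ} (hnN : n ≤ N) (hn : n % 72 = 29)
    (hlog : 2 * Real.log n ≤ 17 / 2 * (6 * z)) (hb : 0 < bracket z N n) :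
    ArithmeticFunction.cardFactors (n ^ 2 - 1) ≤ 21 := by
  obtain ⟨p1, p2, p3⟩ := bracket_terms_nonneg hz N n
  rw [bracket] at hb
  refine cardFactors_le hz hn hlog (fun q hq h5 hdvd => ?_) (by linarith)
  have hone : ∀ A : Finset ℕ, q ∈ A → (1:ℝ) ≤ ∑ q ∈ A, (if q ^ 2 ∣ n ^ 2 - 1 then 1 else 0) := by
    intro A hA
    have := single_le_sum (f := fun q => if q ^ 2 ∣ n ^ 2 - 1 then (1:ℝ) else 0)
      (fun q _ => by split_ifs <;> norm_num) hA
    simpa only [if_pos hdvd] using this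
  by_cases h : Real.log q ≤ 3 * z
  · have := hone _ (mem_sievePrimes.2 ⟨hq, h5, h⟩)
    linarith
  · have hle : q ≤ n := by
      have h1 : 29 ^ 2 ≤ n ^ 2 := Nat.pow_le_pow_left (by omega) 2
      have h2 := Nat.le_of_dvd (by omega) hdvd
      exact (Nat.pow_le_pow_iff_left two_ne_zero).1 (h2.trans (Nat.sub_le _ _))
    have := hone (bigPrimes z N) (by
      rw [bigPrimes, mem_filter, mem_Icc]
      exact ⟨⟨h5, by omega⟩, hq, not_le.1 h⟩)
    linarith

/-- The sum of `bracket` against the sieve weights exceeds what the proper prime powers can contribute, so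
`bracket` is positive at some prime. -/
lemma exists_prime_gt (M : ℝ) : ∃ n : ℕ, M < n ∧ n.Prime ∧
    ArithmeticFunction.cardFactors (n ^ 2 - 1) ≤ 21 := by
  obtain ⟨f, hf, h0, c, hc, hmass⟩ := exists_totalMass_ge
  obtain ⟨B, hB⟩ := hf.exists_bddBy
  obtain ⟨z₀, -, hGH⟩ := GG_le_HH
  obtain ⟨z₁, -, hmain⟩ := main_numeric
  obtain ⟨z₂, -, hsquare⟩ := square_numeric
  obtain ⟨L₁, hprime⟩ := not_prime_mass_le hf
  obtain ⟨L₂, hbig⟩ := big_square_mass_le hf hB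
  obtain ⟨L, hL, hrem⟩ := sieve_remainder hf (1 + |25 * z₀| + |25 * z₁| + |25 * z₂| + |L₁| + |L₂| + 100 * |B| +
    |M| + 100 * (24 * 91 / 10 / c))
  have hB1 := hB.1
  have hc' : 0 < 24 * 91 / 10 / c := by positivity
  have n0 := le_abs_self (25 * z₀)
  have n1 := le_abs_self (25 * z₁)
  have n2 := le_abs_self (25 * z₂)
  have n3 := le_abs_self L₁
  have n4 := le_abs_self L₂
  have n5 := le_abs_self B
  have n6 := le_abs_self M
  have p0 := abs_nonneg (25 * z₀)
  have p1 := abs_nonneg (25 * z₁)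
  have p2 := abs_nonneg (25 * z₂)
  have p3 := abs_nonneg L₁
  have p4 := abs_nonneg L₂
  have p5 := abs_nonneg M
  have hL1 : 1 ≤ L := by linarith
  have hL0 : 0 < L := by linarith
  have hLB : 100 * B ≤ L := by linarith
  have hLM : M + B + 1 ≤ L := by linarith
  have hLc : 100 * (24 * 91 / 10 / c) < L := by linarith
  have hprime' := hprime L (by linarith)
  have hbig' := hbig L (by linarith)
  have hX := hmass L hL1
  obtain ⟨z, hz⟩ : ∃ z, z = L / 25 := ⟨_, rfl⟩
  rw [← hz] at hrem hprime' hbig'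
  have hz0 : 0 < z := by rw [hz]; positivity
  have hGH' := hGH z (by rw [hz]; linarith)
  have hmain' := hmain z (by rw [hz]; linarith)
  have hsquare' := hsquare z (by rw [hz]; linarith)
  have hG1 := one_le_GG hz0.le
  have hH : 10 / 91 ≤ HH z := by linarith
  obtain ⟨N, hN⟩ : ∃ N : ℕ, N = ⌊Real.exp (L + B)⌋₊ := ⟨_, rfl⟩
  rw [← hN] at hbig'
  obtain ⟨X, hXdef⟩ : ∃ X, X = totalMass hf L / 24 := ⟨_, rfl⟩
  rw [← hXdef] at hrem
  have hXc : c / 24 ≤ X := by rw [hXdef]; linarith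
  have hX0 : 0 ≤ X := le_trans (by positivity) hXc
  -- the expected size of the unrestricted sieve sum beats every remainder
  have ha : 100 / L < X * HH z := by
    have e1 : c / 24 * (10 / 91) ≤ X * HH z := mul_le_mul hXc hH (by norm_num) hX0
    refine lt_of_lt_of_le ?_ e1
    rw [div_lt_iff₀ hL0]
    rw [← mul_div_assoc, div_lt_iff₀ hc] at hLc
    linarith
  -- the four sieve sums
  have s1 : X * HH z - 1 / L ≤ sieveMass hf L z 1 := by
    have := hrem {1} (by
      intro e he
      rw [mem_singleton] at he
      rw [he]
      exact ⟨le_rfl, Nat.coprime_one_left _, by simpa using by positivity⟩)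
    rw [sum_singleton, sieveForm_one] at this
    linarith [(abs_le.1 this).1]
  have s2 : ∑ q ∈ sievePrimes (6 * z), (1 - Real.log q / (6 * z)) * sieveMass hf L z q ≤
      X * HH z * (87 / 10) + 1 / L := by
    refine sum_sieveMass_le (g := fun q => q) (d := fun q => dens q * min 1 (91 / 10 * (Real.log q / z) ^ 2))
      hX0 (by linarith) (fun q hq => ?_) (fun q hq => ?_) (hrem _ fun q hq => ?_) (le_trans (le_of_eq ?_) hmain')
    · rw [mem_sievePrimes] at hq
      rw [sub_nonneg, div_le_one (by positivity)]
      refine ⟨hq.2.2, ?_⟩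
      have : 0 ≤ Real.log q / (6 * z) := div_nonneg (Real.log_natCast_nonneg q) (by positivity)
      linarith
    · rw [mem_sievePrimes] at hq
      have := sieveForm_prime_pow_le hz0 hGH' hq.1 hq.2.1 one_ne_zero
      rw [pow_one] at this
      rw [mul_assoc]
      exact this
    · rw [mem_sievePrimes] at hq
      exact ⟨by omega, coprime_six hq.1 hq.2.1,
        (Real.log_le_iff_le_exp (by exact_mod_cast hq.1.pos)).1 hq.2.2⟩
    · exact sum_congr rfl fun q _ => by ring
  have s3 : ∑ q ∈ sievePrimes (3 * z), 1 * sieveMass hf L z (q ^ 2) ≤ X * HH z * (1 / 100) + 1 / L := by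
    refine sum_sieveMass_le (g := fun q => q ^ 2) (c := fun _ => 1)
      (d := fun q => dens (q ^ 2) * (91 / 10 * (Real.log q / z) ^ 2))
      hX0 (by linarith) (fun q hq => ?_) (fun q hq => ?_) ?_ (le_trans (le_of_eq ?_) hsquare')
    · exact ⟨zero_le_one, le_rfl⟩
    · rw [mem_sievePrimes] at hq
      refine (sieveForm_prime_pow_le hz0 hGH' hq.1 hq.2.1 two_ne_zero).trans ?_
      rw [mul_assoc]
      refine mul_le_mul_of_nonneg_left (mul_le_mul_of_nonneg_right (min_le_right _ _) (by linarith)) ?_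
      rw [dens]; positivity
    · rw [← sum_image (f := fun e => |sieveMass hf L z e - X * sieveForm z e|) (g := fun q : ℕ => q ^ 2)
        (fun a _ b _ h => (Nat.pow_left_injective two_ne_zero) h)]
      refine hrem _ fun e he => ?_
      rw [mem_image] at he
      obtain ⟨q, hq, rfl⟩ := he
      rw [mem_sievePrimes] at hq
      have hq0 : (0:ℝ) < q := by exact_mod_cast hq.1.pos
      refine ⟨Nat.one_le_pow _ _ hq.1.pos, (coprime_six hq.1 hq.2.1).pow_left 2, ?_⟩
      push_cast
      calc (q:ℝ) ^ 2 ≤ Real.exp (3 * z) ^ 2 :=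
            pow_le_pow_left₀ hq0.le ((Real.log_le_iff_le_exp hq0).1 hq.2.2) 2
        _ = _ := by rw [← Real.exp_nat_mul]; congr 1; push_cast; ring
    · exact sum_congr rfl fun q _ => by rw [one_mul]
  have htotal : ∑ n ∈ wtSupp hf L with n % 72 = 29,
      ArithmeticFunction.vonMangoldt n * wt f L n * sqw z n * bracket z N n =
      19 / 2 * sieveMass hf L z 1 -
        ∑ q ∈ sievePrimes (6 * z), (1 - Real.log q / (6 * z)) * sieveMass hf L z q -
        18 * ∑ q ∈ sievePrimes (3 * z), 1 * sieveMass hf L z (q ^ 2) -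
        18 * ∑ q ∈ bigPrimes z N, 1 * sieveMass hf L z (q ^ 2) := by
    rw [← sum_mul_indicator hf L z _ (fun q => q) (fun q => 1 - Real.log q / (6 * z)),
      ← sum_mul_indicator hf L z _ (fun q => q ^ 2) (fun _ => 1),
      ← sum_mul_indicator hf L z _ (fun q => q ^ 2) (fun _ => 1), sieveMass]
    simp only [one_dvd, and_true, mul_sum (s := filter _ (wtSupp hf L)), ← sum_sub_distrib]
    refine sum_congr rfl fun n _ => ?_
    rw [bracket]
    ring
  have hW : ∀ n, 0 ≤ ArithmeticFunction.vonMangoldt n * wt f L n * sqw z n := fun n =>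
    mul_nonneg (mul_nonneg ArithmeticFunction.vonMangoldt_nonneg (wt_nonneg h0 L n)) (sqw_nonneg z n)
  obtain ⟨n, hnmem, hn29, hnp, hnb⟩ : ∃ n ∈ wtSupp hf L, n % 72 = 29 ∧ n.Prime ∧ 0 < bracket z N n := by
    by_contra hcon
    push Not at hcon
    have hup : ∑ n ∈ wtSupp hf L with n % 72 = 29,
        ArithmeticFunction.vonMangoldt n * wt f L n * sqw z n * bracket z N n ≤ 19 / 2 * (1 / L) := by
      refine le_trans ?_ (mul_le_mul_of_nonneg_left hprime' (by norm_num))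
      rw [sum_filter, sum_filter, mul_sum]
      refine sum_le_sum fun n hn => ?_
      have hWn := hW n
      obtain ⟨t1, t2, t3⟩ := bracket_terms_nonneg hz0 N n
      have hbr : bracket z N n ≤ 19 / 2 := by rw [bracket]; linarith
      by_cases h29 : n % 72 = 29
      · rw [if_pos h29]
        by_cases hnp : n.Prime
        · rw [if_neg (not_not.2 hnp), mul_zero]
          exact mul_nonpos_of_nonneg_of_nonpos hWn (hcon n hn h29 hnp)
        · rw [if_pos hnp, mul_comm]
          exact mul_le_mul_of_nonneg_right hbr hWn
      · rw [if_neg h29]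
        refine mul_nonneg (by norm_num) ?_
        split_ifs
        all_goals first | exact hWn | exact le_rfl
    rw [htotal] at hup
    simp only [one_mul] at hup s3
    have hinv : 100 / L = 100 * (1 / L) := by ring
    rw [hinv] at ha
    have hinvpos : 0 < 1 / L := one_div_pos.2 hL0
    linarith
  have hn0 : 0 < n := hnp.pos
  have hn0' : (0:ℝ) < n := by exact_mod_cast hn0
  obtain ⟨b1, b2⟩ := le_of_mem_wtSupp hB hnmem hn0
  refine ⟨n, ?_, hnp, cardFactors_le_of_bracket_pos hz0 (by rw [hN]; exact Nat.le_floor b2) hn29 ?_ hnb⟩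
  · have := Real.add_one_le_exp (L - B)
    linarith
  · have := (Real.log_le_iff_le_exp hn0').2 b2
    rw [hz]
    linarith

end OmegaSq

theorem infinite_primes_Omega_sq_sub_one_le_21 :
    {r : ℕ | r.Prime ∧ ArithmeticFunction.cardFactors (r ^ 2 - 1) ≤ 21}.Infinite := by
  refine Set.infinite_of_forall_exists_gt fun M => ?_
  obtain ⟨n, h1, h2, h3⟩ := OmegaSq.exists_prime_gt M
  exact ⟨n, ⟨h2, h3⟩, by exact_mod_cast h1⟩
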